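/- Let α, h ∈ ℝ with α > −2. Assume there exist an open set U ⊆ ℝ² containing (α,h) and a continuously differentiable map u* : U → (0,1) such that for every (a,b) ∈ U the point u*(a,b) is the unique maximizer over [0,1] of u ↦ (a/6)u³ + (b/2)u − (1/2)I(u), and such that (a,b) ↦ f_{a,b} is real analytic on U. Then lim_{n→∞} (6/n²)·V̂ar_{n;α,h}(⌊T(x)/n⌋) = 3·u*(α,h)²·∂_α u*(α,h). -/

import Mathlib

/-!
Write `P` for the edge-triangle Gibbs measure with Hamiltonian `(α/n) T + h E`, without the floor.
The measure of the theorem has density proportional to `e^{-α {T/n}}` with respect to `P`. The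
variance is computed under `P` first, and then the density is shown to be asymptotically
independent of `T / n²`. Throughout, `u = u*(α, h)`, `c_e` is the codegree of the edge `e`, and
`p_e = σ(h + α c_e / n)` is the conditional probability of `e`, where `σ` is the logistic function.

*Poincaré inequality.* `Var_P F ≤ C ∑_e E (D_e F)²` holds up to a negligible error
(`graph_poincare`), because heat-bath dynamics contracts the Hamming distance. For `|α| < 2` the
contraction holds everywhere. For `α ≥ 2` it holds on the set of quasirandom, nearly regular graphs
of density `u`, with rate governed by `1 - 2αu²(1-u) > 0`. The complement of this set is
exponentially unlikely: the mean-field upper bound `logZ_le` with an edge-dependent field, together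
with the lower bound `logZ_ge`, yields quasirandomness by a Chernoff argument (`CG_prob`), and the
law of a star given the rest of the graph yields the concentration of degrees. It suffices to have
the contraction on a typical set, since the norms of the iterates of a self-adjoint operator are
log-convex.

*Variance of `T` under `P`.* Exchangeability and the Poincaré inequality give a law of large numbers
for degrees and codegrees (`qn_tendsto`, `exists_Dev`). Hence `T ≈ u² n E` up to fluctuations of
order `o(n²)`, and the identity `E[(x_e - p_e) F] = E[p_e (1 - p_e) D_e F]` with `F = E`, summed over
`e` and linearized, gives `Var_P(E) / n² → u(1-u) / (2(1 - 2αu²(1-u)))`. This is `tendsto_VrT`.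

*Equidistribution.* For `θ = 2πk/n` with `k ≠ 0` and a test function `Y` of bounded second moment
and Dirichlet energy, `E_P[Y e^{iθT}] → 0` (`phase_tendsto`). Integration by parts compares the
martingale-like sum `M = ∑ (x_e - p_e) a_e` with the weight `V = ∑ p_e (1 - p_e) |e^{iθ c_e} - 1|²`
(`phase_identity`). Both `E|M|²` and `Var V` are small compared with `(E V)²` as soon as `E V` is at
least of order `n` (`phase_decay`), and this lower bound comes from testing `e^{iθ c_e}` against an
explicit function (`zeta_lower`). By density of trigonometric polynomials, `T / n` is
equidistributed modulo one, jointly with `Y` (`circle_tendsto`).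

*Conclusion.* The density, a function of `T / n` modulo one with a single jump, is asymptotically
uncorrelated with `Y = X` and `Y = X²`, `X = (T - E_P T) / n²` (`weight_cov`). So the variance of `X`
has the same limit under both measures, and replacing `T / n` by its floor costs `O(1)`
(`tendsto_varHat`). Differentiating `u = σ(h + α u²)` identifies the limit with
`3 u² ∂_α u*` (`deriv_ustar`). It also shows `1 - 2αu²(1-u) > 0` (`exists_Good`).
-/

open MeasureTheory Filter ProbabilityTheory Topology

noncomputable section

/-- The edge set of the complete graph on `n` vertices: unordered pairs of distinct vertices. -/
abbrev Edge (n : ℕ) := {e : Sym2 (Fin n) // ¬ e.IsDiag}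

/-- A configuration `x ∈ {0,1}^{E_n}`, i.e. a simple graph on `[n]`. -/
abbrev Config (n : ℕ) := Edge n → Bool

/-- `E(x)`: the number of edges of the configuration `x`. -/
def edgeCount (n : ℕ) (x : Config n) : ℕ :=
  (Finset.univ.filter fun e : Edge n => x e).card

/-- `T(x)`: the number of triangles of the configuration `x` (one for each 3-element
set of vertices all of whose connecting edges are present). -/
def triangleCount (n : ℕ) (x : Config n) : ℕ :=
  ((Finset.powersetCard 3 (Finset.univ : Finset (Fin n))).filter
    (fun s => ∀ e : Edge n, (∀ v ∈ (e : Sym2 (Fin n)), v ∈ s) → x e)).card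

/-- `⌊T(x)/n⌋` as a real number (natural division is floor division). -/
def floorTn (n : ℕ) (x : Config n) : ℝ := ((triangleCount n x / n : ℕ) : ℝ)

/-- `{T(x)/n}`: the fractional part of `T(x)/n`. -/
def fracTn (n : ℕ) (x : Config n) : ℝ :=
  (triangleCount n x : ℝ) / n - floorTn n x

/-- The modified Hamiltonian `Ĥ_{n;α,h}(x) = α⌊T(x)/n⌋ + h E(x)`. -/
def hamHat (n : ℕ) (α h : ℝ) (x : Config n) : ℝ :=
  α * floorTn n x + h * (edgeCount n x : ℝ)

/-- The edge-triangle Hamiltonian `H_{n;α,h}(x) = (α/n) T(x) + h E(x)`. -/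
def ham (n : ℕ) (α h : ℝ) (x : Config n) : ℝ :=
  (α / n) * (triangleCount n x : ℝ) + h * (edgeCount n x : ℝ)

/-- The partition function `Ẑ_{n;α,h}`. -/
def Zhat (n : ℕ) (α h : ℝ) : ℝ := ∑ x : Config n, Real.exp (hamHat n α h x)

/-- The partition function `Z_{n;α,h}`. -/
def Zet (n : ℕ) (α h : ℝ) : ℝ := ∑ x : Config n, Real.exp (ham n α h x)

/-- Expectation `Ê_{n;α,h}` with respect to the Gibbs measure of `Ĥ`. -/
def expHat (n : ℕ) (α h : ℝ) (f : Config n → ℝ) : ℝ :=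
  (∑ x : Config n, f x * Real.exp (hamHat n α h x)) / Zhat n α h

/-- Expectation `E_{n;α,h}` with respect to the Gibbs measure of `H`. -/
def expEt (n : ℕ) (α h : ℝ) (f : Config n → ℝ) : ℝ :=
  (∑ x : Config n, f x * Real.exp (ham n α h x)) / Zet n α h

/-- Variance `V̂ar_{n;α,h}` with respect to the Gibbs measure of `Ĥ`. -/
def varHat (n : ℕ) (α h : ℝ) (f : Config n → ℝ) : ℝ :=
  expHat n α h (fun x => (f x - expHat n α h f) ^ 2)

/-- Probability of an event under the Gibbs measure of `Ĥ`. -/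
def probHat (n : ℕ) (α h : ℝ) (A : Config n → Prop) : ℝ :=
  expHat n α h (fun x => Set.indicator {y | A y} (fun _ => (1 : ℝ)) x)

/-- `I(u) = u ln u + (1-u) ln (1-u)` (with the convention `ln 0 = 0`, so `I(0)=I(1)=0`). -/
def Ifun (u : ℝ) : ℝ := u * Real.log u + (1 - u) * Real.log (1 - u)

/-- The variational functional `u ↦ (a/6)u³ + (b/2)u − (1/2)I(u)`. -/
def phiET (a b u : ℝ) : ℝ := a / 6 * u ^ 3 + b / 2 * u - 1 / 2 * Ifun u

/-- The limiting free energy `f_{a,b} = sup_{u∈[0,1]} φ_{a,b}(u)`. -/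
def freeEnergy (a b : ℝ) : ℝ := sSup (phiET a b '' Set.Icc 0 1)

/-- `W_n` built from the integer part of the normalized triangle count. -/
def Wfl (n : ℕ) (α h : ℝ) (x : Config n) : ℝ :=
  Real.sqrt 6 * (floorTn n x - expHat n α h (floorTn n)) / n

/-- `√6 (T(x)/n − Ê(T/n))/n`, the normalized fluctuation of the triangle density. -/
def Wre (n : ℕ) (α h : ℝ) (x : Config n) : ℝ :=
  Real.sqrt 6 * ((triangleCount n x : ℝ) / n
    - expHat n α h (fun y => (triangleCount n y : ℝ) / n)) / n

/-- The scaled cumulant generating function of `⌊T/n⌋`. -/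
def cgf (n : ℕ) (α h : ℝ) (t : ℝ) : ℝ :=
  6 / (n : ℝ) ^ 2 * Real.log (expHat n α h (fun x => Real.exp (t * floorTn n x)))

namespace ETri

set_option linter.all false

/-! ### Expectations on a finite probability space -/

section Generic
variable {Ω : Type*} [Fintype Ω]

/-- Expectation of a vector-valued function under the weight `μ` on a finite type. -/
def EE {V : Type*} [AddCommGroup V] [Module ℝ V] (μ : Ω → ℝ) (f : Ω → V) : V := ∑ x, μ x • f x

/-- A strictly positive probability weight. -/
structure IsProb (μ : Ω → ℝ) : Prop where
  pos : ∀ x, 0 < μ x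
  one : ∑ x, μ x = 1

/-- Variance of a real function. -/
def Vr (μ : Ω → ℝ) (f : Ω → ℝ) : ℝ := EE μ (fun x => (f x - EE μ f) ^ 2)

section lin
variable {V : Type*} [AddCommGroup V] [Module ℝ V]

lemma EE_add (μ : Ω → ℝ) (f g : Ω → V) : EE μ (fun x => f x + g x) = EE μ f + EE μ g := by
  simp [EE, smul_add, Finset.sum_add_distrib]

lemma EE_sub (μ : Ω → ℝ) (f g : Ω → V) : EE μ (fun x => f x - g x) = EE μ f - EE μ g := by
  simp [EE, smul_sub, Finset.sum_sub_distrib]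

lemma EE_sum {ι : Type*} (s : Finset ι) (μ : Ω → ℝ) (f : ι → Ω → V) :
    EE μ (fun x => ∑ i ∈ s, f i x) = ∑ i ∈ s, EE μ (f i) := by
  simp only [EE, Finset.smul_sum]
  exact Finset.sum_comm

lemma EE_const {μ : Ω → ℝ} (hμ : IsProb μ) (c : V) : EE μ (fun _ => c) = c := by
  simp [EE, ← Finset.sum_smul, hμ.one]

lemma EE_congr {μ : Ω → ℝ} {f g : Ω → V} (h : ∀ x, f x = g x) : EE μ f = EE μ g := by
  have : f = g := funext h
  rw [this]

end lin

lemma EE_mul_left (μ : Ω → ℝ) (c : ℝ) (f : Ω → ℝ) : EE μ (fun x => c * f x) = c * EE μ f := by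
  simp only [EE, smul_eq_mul, Finset.mul_sum]
  exact Finset.sum_congr rfl fun x _ => by ring

lemma EE_div (μ : Ω → ℝ) (c : ℝ) (f : Ω → ℝ) : EE μ (fun x => f x / c) = EE μ f / c := by
  simp only [div_eq_inv_mul, EE_mul_left]

lemma EE_mul_leftC (μ : Ω → ℝ) (c : ℂ) (f : Ω → ℂ) : EE μ (fun x => c * f x) = c * EE μ f := by
  simp only [EE, Finset.mul_sum, mul_smul_comm]

lemma EE_mono {μ : Ω → ℝ} (hμ : IsProb μ) {f g : Ω → ℝ} (h : ∀ x, f x ≤ g x) :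
    EE μ f ≤ EE μ g :=
  Finset.sum_le_sum fun x _ => mul_le_mul_of_nonneg_left (h x) (hμ.pos x).le

lemma EE_nonneg {μ : Ω → ℝ} (hμ : IsProb μ) {f : Ω → ℝ} (h : ∀ x, 0 ≤ f x) : 0 ≤ EE μ f :=
  Finset.sum_nonneg fun x _ => mul_nonneg (hμ.pos x).le (h x)

lemma EE_le_const {μ : Ω → ℝ} (hμ : IsProb μ) {f : Ω → ℝ} {c : ℝ} (h : ∀ x, f x ≤ c) :
    EE μ f ≤ c := (EE_mono hμ h).trans (EE_const hμ c).le

lemma EE_ge_const {μ : Ω → ℝ} (hμ : IsProb μ) {f : Ω → ℝ} {c : ℝ} (h : ∀ x, c ≤ f x) :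
    c ≤ EE μ f := (EE_const hμ c).ge.trans (EE_mono hμ h)

lemma norm_EE_le {V : Type*} [NormedAddCommGroup V] [NormedSpace ℝ V] {μ : Ω → ℝ} (hμ : IsProb μ)
    (f : Ω → V) : ‖EE μ f‖ ≤ EE μ (fun x => ‖f x‖) := by
  refine (norm_sum_le _ _).trans (Finset.sum_le_sum fun x _ => ?_)
  rw [norm_smul, Real.norm_of_nonneg (hμ.pos x).le, smul_eq_mul]

lemma abs_EE_le {μ : Ω → ℝ} (hμ : IsProb μ) (f : Ω → ℝ) : |EE μ f| ≤ EE μ (fun x => |f x|) :=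
  norm_EE_le hμ f

/-- Cauchy–Schwarz. -/
lemma EE_mul_sq_le {μ : Ω → ℝ} (hμ : IsProb μ) (f g : Ω → ℝ) :
    (EE μ (fun x => f x * g x)) ^ 2 ≤ EE μ (fun x => f x ^ 2) * EE μ (fun x => g x ^ 2) := by
  have := Finset.sum_mul_sq_le_sq_mul_sq Finset.univ (fun x => Real.sqrt (μ x) * f x)
    (fun x => Real.sqrt (μ x) * g x)
  have e1 : ∀ x, Real.sqrt (μ x) * f x * (Real.sqrt (μ x) * g x) = μ x * (f x * g x) := fun x => by
    have := Real.mul_self_sqrt (hμ.pos x).le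
    linear_combination (f x * g x) * this
  simp only [e1, mul_pow, Real.sq_sqrt (hμ.pos _).le] at this
  simpa [EE] using this

lemma EE_mul_le {μ : Ω → ℝ} (hμ : IsProb μ) (f g : Ω → ℝ) :
    EE μ (fun x => f x * g x) ≤
      Real.sqrt (EE μ (fun x => f x ^ 2)) * Real.sqrt (EE μ (fun x => g x ^ 2)) := by
  rw [← Real.sqrt_mul (EE_nonneg hμ fun x => sq_nonneg _)]
  exact Real.le_sqrt_of_sq_le (EE_mul_sq_le hμ f g)

lemma EE_abs_mul_le {μ : Ω → ℝ} (hμ : IsProb μ) (f g : Ω → ℝ) :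
    |EE μ (fun x => f x * g x)| ≤
      Real.sqrt (EE μ (fun x => f x ^ 2)) * Real.sqrt (EE μ (fun x => g x ^ 2)) := by
  rw [← Real.sqrt_mul (EE_nonneg hμ fun x => sq_nonneg _)]
  exact Real.abs_le_sqrt (EE_mul_sq_le hμ f g)

lemma EE_sq_le {μ : Ω → ℝ} (hμ : IsProb μ) (f : Ω → ℝ) :
    (EE μ f) ^ 2 ≤ EE μ (fun x => f x ^ 2) := by
  have := EE_mul_sq_le hμ f (fun _ => 1)
  simpa [EE_const hμ] using this

lemma EE_abs_le_sqrt {μ : Ω → ℝ} (hμ : IsProb μ) (f : Ω → ℝ) :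
    EE μ (fun x => |f x|) ≤ Real.sqrt (EE μ (fun x => f x ^ 2)) := by
  apply Real.le_sqrt_of_sq_le
  have := EE_sq_le hμ (fun x => |f x|)
  simpa using this

lemma Vr_eq {μ : Ω → ℝ} (hμ : IsProb μ) (f : Ω → ℝ) :
    Vr μ f = EE μ (fun x => f x ^ 2) - (EE μ f) ^ 2 := by
  have : Vr μ f = EE μ (fun x => (f x ^ 2 - 2 * EE μ f * f x) + (EE μ f) ^ 2) :=
    EE_congr fun x => by ring
  rw [this, EE_add, EE_sub, EE_mul_left, EE_const hμ]; ring

lemma Vr_nonneg {μ : Ω → ℝ} (hμ : IsProb μ) (f : Ω → ℝ) : 0 ≤ Vr μ f :=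
  EE_nonneg hμ fun _ => sq_nonneg _

/-- Covariance of real functions. -/
def Cv (μ : Ω → ℝ) (f g : Ω → ℝ) : ℝ := EE μ (fun x => (f x - EE μ f) * (g x - EE μ g))

lemma Cv_eq {μ : Ω → ℝ} (hμ : IsProb μ) (f g : Ω → ℝ) :
    Cv μ f g = EE μ (fun x => f x * g x) - EE μ f * EE μ g := by
  have : Cv μ f g = EE μ (fun x => ((f x * g x - EE μ g * f x) - EE μ f * g x) + EE μ f * EE μ g) :=
    EE_congr fun x => by ring
  rw [this, EE_add, EE_sub, EE_sub, EE_mul_left, EE_mul_left, EE_const hμ]; ring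

lemma Cv_abs_le {μ : Ω → ℝ} (hμ : IsProb μ) (f g : Ω → ℝ) :
    |Cv μ f g| ≤ Real.sqrt (Vr μ f) * Real.sqrt (Vr μ g) :=
  EE_abs_mul_le hμ _ _

lemma Vr_add {μ : Ω → ℝ} (f g : Ω → ℝ) :
    Vr μ (fun x => f x + g x) = Vr μ f + 2 * Cv μ f g + Vr μ g := by
  have : Vr μ (fun x => f x + g x) = EE μ (fun x => ((f x - EE μ f) ^ 2 +
      2 * ((f x - EE μ f) * (g x - EE μ g))) + (g x - EE μ g) ^ 2) :=
    EE_congr fun x => by rw [EE_add]; ring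
  rw [this, EE_add, EE_add, EE_mul_left]; rfl

lemma Vr_mul_left {μ : Ω → ℝ} (c : ℝ) (f : Ω → ℝ) :
    Vr μ (fun x => c * f x) = c ^ 2 * Vr μ f := by
  have : Vr μ (fun x => c * f x) = EE μ (fun x => c ^ 2 * (f x - EE μ f) ^ 2) :=
    EE_congr fun x => by rw [EE_mul_left]; ring
  rw [this, EE_mul_left]; rfl

/-- Variance as half the mean square difference of two independent copies. -/
lemma Vr_eq_double {μ : Ω → ℝ} (hμ : IsProb μ) (f : Ω → ℝ) :
    2 * Vr μ f = EE μ (fun x => EE μ (fun y => (f x - f y) ^ 2)) := by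
  have h : ∀ x, EE μ (fun y => (f x - f y) ^ 2)
      = (f x ^ 2 - 2 * EE μ f * f x) + EE μ (fun y => f y ^ 2) := fun x => by
    have : EE μ (fun y => (f x - f y) ^ 2)
      = EE μ (fun y => (f x ^ 2 - 2 * f x * f y) + f y ^ 2) := EE_congr fun y => by ring
    rw [this, EE_add, EE_sub, EE_mul_left, EE_const hμ]; ring
  simp only [h]
  rw [EE_add, EE_sub, EE_mul_left, EE_const hμ, Vr_eq hμ]; ring

/-- Gibbs' inequality. -/
lemma gibbs_ineq {μ : Ω → ℝ} (hμ : IsProb μ) (Q : Ω → ℝ) (hQ : ∀ x, 0 < Q x)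
    (hQ1 : ∑ x, Q x ≤ 1) : EE μ (fun x => Real.log (Q x)) ≤ EE μ (fun x => Real.log (μ x)) := by
  have h : ∀ x, μ x * Real.log (Q x) - μ x * Real.log (μ x) ≤ Q x - μ x := fun x => by
    have hx := hμ.pos x
    have := Real.log_le_sub_one_of_pos (div_pos (hQ x) hx)
    rw [Real.log_div (hQ x).ne' hx.ne'] at this
    have h2 := mul_le_mul_of_nonneg_left this hx.le
    have h3 : μ x * (Q x / μ x - 1) = Q x - μ x := by field_simp
    linarith
  have := Finset.sum_le_sum fun x (_ : x ∈ Finset.univ) => h x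
  rw [Finset.sum_sub_distrib, Finset.sum_sub_distrib, hμ.one] at this
  simp only [EE, smul_eq_mul]
  linarith

end Generic

/-! ### Spin systems: heat-bath identities -/

section Spin
variable {E : Type*} [Fintype E] [DecidableEq E]

/-- The configuration `x` with coordinate `e` set to `b`. -/
abbrev up (x : E → Bool) (e : E) (b : Bool) : E → Bool := Function.update x e b

/-- Discrete derivative in the direction of the coordinate `e`. -/
def Dl {V : Type*} [AddCommGroup V] (e : E) (F : (E → Bool) → V) (x : E → Bool) : V :=
  F (up x e true) - F (up x e false)

/-- Conditional probability that coordinate `e` is `true` given the other coordinates. -/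
def pr (μ : (E → Bool) → ℝ) (e : E) (x : E → Bool) : ℝ :=
  μ (up x e true) / (μ (up x e true) + μ (up x e false))

/-- The coordinate `x e` as a real number. -/
def xr (x : E → Bool) (e : E) : ℝ := if x e then 1 else 0

@[simp] lemma xr_up_same (x : E → Bool) (e : E) (b : Bool) :
    xr (up x e b) e = if b then 1 else 0 := by simp [xr]

lemma xr_up_ne (x : E → Bool) {e f : E} (h : f ≠ e) (b : Bool) : xr (up x e b) f = xr x f := by
  simp [xr, Function.update_of_ne h]

lemma xr_nonneg (x : E → Bool) (e : E) : 0 ≤ xr x e := by unfold xr; split_ifs <;> norm_num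

lemma xr_le_one (x : E → Bool) (e : E) : xr x e ≤ 1 := by unfold xr; split_ifs <;> norm_num

@[simp] lemma pr_up (μ : (E → Bool) → ℝ) (e : E) (x : E → Bool) (b : Bool) :
    pr μ e (up x e b) = pr μ e x := by simp [pr]

lemma pr_pos {μ : (E → Bool) → ℝ} (hμ : IsProb μ) (e : E) (x : E → Bool) : 0 < pr μ e x :=
  div_pos (hμ.pos _) (add_pos (hμ.pos _) (hμ.pos _))

lemma pr_lt_one {μ : (E → Bool) → ℝ} (hμ : IsProb μ) (e : E) (x : E → Bool) : pr μ e x < 1 := by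
  rw [pr, div_lt_one (add_pos (hμ.pos _) (hμ.pos _))]
  linarith [hμ.pos (up x e false)]

lemma up_self (x : E → Bool) (e : E) : up x e (x e) = x := Function.update_eq_self e x

/-- Each configuration is met twice when both values are put at the coordinate `e`. -/
lemma sum_up {V : Type*} [AddCommMonoid V] (e : E) (f : (E → Bool) → V) :
    ∑ x, (f (up x e true) + f (up x e false)) = ∑ x, f x + ∑ x, f x := by
  have h1 : ∀ x : E → Bool, f (up x e true) + f (up x e false) = f x + f (up x e (!x e)) := by
    intro x
    have := up_self x e
    cases hx : x e <;> rw [hx] at this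
    · rw [this, add_comm]; rfl
    · rw [this]; rfl
  simp only [h1, Finset.sum_add_distrib]
  congr 1
  have inv : Function.Involutive (fun x : E → Bool => up x e (!x e)) := by
    intro x; simp [up]
  exact Equiv.sum_comp inv.toPerm f

lemma EE_eq_cond {V : Type*} [AddCommGroup V] [Module ℝ V] {μ : (E → Bool) → ℝ} (hμ : IsProb μ)
    (e : E) (F : (E → Bool) → V) :
    EE μ F = EE μ (fun x => pr μ e x • F (up x e true) + (1 - pr μ e x) • F (up x e false)) := by
  have key : ∀ G : (E → Bool) → V, (2 : ℝ) • EE μ G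
      = ∑ x, (μ (up x e true) • G (up x e true) + μ (up x e false) • G (up x e false)) := by
    intro G
    rw [sum_up e (fun x => μ x • G x), two_smul]; rfl
  have h2 : (2 : ℝ) • EE μ F = (2 : ℝ) • EE μ (fun x => pr μ e x • F (up x e true)
      + (1 - pr μ e x) • F (up x e false)) := by
    rw [key, key]
    refine Finset.sum_congr rfl fun x _ => ?_
    simp only [pr_up, up, Function.update_idem]
    have hne : μ (up x e true) + μ (up x e false) ≠ 0 := (add_pos (hμ.pos _) (hμ.pos _)).ne'
    rw [← add_smul, smul_add, smul_smul, smul_smul]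
    congr 2
    · rw [pr]; field_simp
    · rw [pr]; field_simp; ring
  have := congrArg (fun y => (2 : ℝ)⁻¹ • y) h2
  simpa [smul_smul] using this

/-- Heat-bath integration by parts. -/
lemma EE_ibp {V : Type*} [AddCommGroup V] [Module ℝ V] {μ : (E → Bool) → ℝ} (hμ : IsProb μ)
    (e : E) (F : (E → Bool) → V) :
    EE μ (fun x => (xr x e - pr μ e x) • F x)
      = EE μ (fun x => (pr μ e x * (1 - pr μ e x)) • Dl e F x) := by
  rw [EE_eq_cond hμ e]
  refine EE_congr fun x => ?_
  simp only [pr_up, xr_up_same, Dl, smul_smul, smul_sub]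
  simp only [if_true, Bool.false_eq_true, if_false]
  module

lemma EE_ibp_real {μ : (E → Bool) → ℝ} (hμ : IsProb μ) (e : E) (F : (E → Bool) → ℝ) :
    EE μ (fun x => (xr x e - pr μ e x) * F x)
      = EE μ (fun x => (pr μ e x * (1 - pr μ e x)) * Dl e F x) := EE_ibp hμ e F

end Spin

/-! ### Poincaré inequality from a contractive coupling on a typical set -/

section Poincare
variable {E : Type*} [Fintype E] [DecidableEq E]

/-- Conditional expectation of `F` given all coordinates but `e`. -/
def Ce (μ : (E → Bool) → ℝ) (e : E) (F : (E → Bool) → ℝ) (x : E → Bool) : ℝ :=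
  pr μ e x * F (up x e true) + (1 - pr μ e x) * F (up x e false)

/-- Transition operator of the heat-bath (Glauber) dynamics. -/
def KK (μ : (E → Bool) → ℝ) (F : (E → Bool) → ℝ) (x : E → Bool) : ℝ :=
  (1 / (Fintype.card E : ℝ)) * ∑ e, Ce μ e F x

/-- Hamming distance. -/
def Dh (x y : E → Bool) : ℝ := ∑ e, |xr x e - xr y e|

/-- Transition operator of the maximal coupling of two copies of the heat-bath dynamics. -/
def QQ (μ : (E → Bool) → ℝ) (W : (E → Bool) → (E → Bool) → ℝ) (x y : E → Bool) : ℝ :=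
  (1 / (Fintype.card E : ℝ)) * ∑ e,
    (min (pr μ e x) (pr μ e y) * W (up x e true) (up y e true)
      + (1 - pr μ e x - pr μ e y + min (pr μ e x) (pr μ e y)) * W (up x e false) (up y e false)
      + (pr μ e x - min (pr μ e x) (pr μ e y)) * W (up x e true) (up y e false)
      + (pr μ e y - min (pr μ e x) (pr μ e y)) * W (up x e false) (up y e true))

variable {μ : (E → Bool) → ℝ}

lemma QQ_mono (hμ : IsProb μ) {W W' : (E → Bool) → (E → Bool) → ℝ} (h : ∀ x y, W x y ≤ W' x y)
    (x y : E → Bool) : QQ μ W x y ≤ QQ μ W' x y := by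
  unfold QQ
  refine mul_le_mul_of_nonneg_left (Finset.sum_le_sum fun e _ => ?_) (by positivity)
  have h1 := pr_pos hμ e x
  have h2 := pr_pos hμ e y
  have h3 := pr_lt_one hμ e x
  have h4 := pr_lt_one hμ e y
  have a1 : 0 ≤ min (pr μ e x) (pr μ e y) := le_min h1.le h2.le
  have a3 : 0 ≤ pr μ e x - min (pr μ e x) (pr μ e y) := sub_nonneg.2 (min_le_left _ _)
  have a4 : 0 ≤ pr μ e y - min (pr μ e x) (pr μ e y) := sub_nonneg.2 (min_le_right _ _)
  have a2 : 0 ≤ 1 - pr μ e x - pr μ e y + min (pr μ e x) (pr μ e y) := by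
    rcases min_choice (pr μ e x) (pr μ e y) with h | h <;> rw [h] <;> linarith
  gcongr
  all_goals exact h _ _

lemma QQ_add (W W' : (E → Bool) → (E → Bool) → ℝ) (x y : E → Bool) :
    QQ μ (fun x y => W x y + W' x y) x y = QQ μ W x y + QQ μ W' x y := by
  unfold QQ
  rw [← mul_add, ← Finset.sum_add_distrib]
  congr 1
  exact Finset.sum_congr rfl fun e _ => by ring

lemma QQ_mul (c : ℝ) (W : (E → Bool) → (E → Bool) → ℝ) (x y : E → Bool) :
    QQ μ (fun x y => c * W x y) x y = c * QQ μ W x y := by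
  unfold QQ
  rw [mul_left_comm c]
  congr 1
  rw [Finset.mul_sum]
  exact Finset.sum_congr rfl fun e _ => by ring

lemma QQ_sum {ι : Type*} (s : Finset ι) (W : ι → (E → Bool) → (E → Bool) → ℝ) (x y : E → Bool) :
    QQ μ (fun x y => ∑ i ∈ s, W i x y) x y = ∑ i ∈ s, QQ μ (W i) x y := by
  classical
  induction s using Finset.induction_on with
  | empty => simp [QQ]
  | insert i s hi ih =>
    simp only [Finset.sum_insert hi]
    rw [QQ_add, ih]

lemma QQ_fst (F : (E → Bool) → ℝ) (x y : E → Bool) :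
    QQ μ (fun x _ => F x) x y = KK μ F x := by
  unfold QQ KK Ce
  congr 1
  exact Finset.sum_congr rfl fun e _ => by ring

lemma QQ_snd (F : (E → Bool) → ℝ) (x y : E → Bool) :
    QQ μ (fun _ y => F y) x y = KK μ F y := by
  unfold QQ KK Ce
  congr 1
  exact Finset.sum_congr rfl fun e _ => by ring

lemma Dh_up (x y : E → Bool) (e : E) (a b : Bool) :
    Dh (up x e a) (up y e b) = Dh x y - |xr x e - xr y e|
      + |(if a then (1 : ℝ) else 0) - (if b then 1 else 0)| := by
  unfold Dh
  rw [← Finset.add_sum_erase _ _ (Finset.mem_univ e),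
    ← Finset.add_sum_erase Finset.univ (fun e => |xr x e - xr y e|) (Finset.mem_univ e)]
  rw [xr_up_same, xr_up_same]
  have : ∑ f ∈ Finset.univ.erase e, |xr (up x e a) f - xr (up y e b) f|
      = ∑ f ∈ Finset.univ.erase e, |xr x f - xr y f| :=
    Finset.sum_congr rfl fun f hf => by
      rw [xr_up_ne _ (Finset.ne_of_mem_erase hf), xr_up_ne _ (Finset.ne_of_mem_erase hf)]
  rw [this]; ring

lemma QQ_Dh [Nonempty E] (x y : E → Bool) :
    QQ μ Dh x y = (1 - 1 / (Fintype.card E : ℝ)) * Dh x y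
      + (1 / (Fintype.card E : ℝ)) * ∑ e, |pr μ e x - pr μ e y| := by
  have hN : (Fintype.card E : ℝ) ≠ 0 := by exact_mod_cast Fintype.card_ne_zero
  have key : ∀ e, (min (pr μ e x) (pr μ e y) * Dh (up x e true) (up y e true)
      + (1 - pr μ e x - pr μ e y + min (pr μ e x) (pr μ e y)) * Dh (up x e false) (up y e false)
      + (pr μ e x - min (pr μ e x) (pr μ e y)) * Dh (up x e true) (up y e false)
      + (pr μ e y - min (pr μ e x) (pr μ e y)) * Dh (up x e false) (up y e true))
      = Dh x y - |xr x e - xr y e| + |pr μ e x - pr μ e y| := by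
    intro e
    simp only [Dh_up]
    simp only [if_true, Bool.false_eq_true, if_false, sub_self, abs_zero, sub_zero, abs_one,
      zero_sub, abs_neg]
    rcases le_total (pr μ e x) (pr μ e y) with h | h
    · rw [min_eq_left h, abs_of_nonpos (sub_nonpos.2 h)]; ring
    · rw [min_eq_right h, abs_of_nonneg (sub_nonneg.2 h)]; ring
  unfold QQ
  simp only [key, Finset.sum_add_distrib, Finset.sum_sub_distrib]
  have : ∑ e, |xr x e - xr y e| = Dh x y := rfl
  rw [this]
  simp only [Finset.sum_const, Finset.card_univ, nsmul_eq_mul]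
  field_simp

lemma Dh_nonneg (x y : E → Bool) : 0 ≤ Dh x y := Finset.sum_nonneg fun _ _ => abs_nonneg _

lemma Dh_le (x y : E → Bool) : Dh x y ≤ Fintype.card E := by
  unfold Dh
  calc ∑ e, |xr x e - xr y e| ≤ ∑ _e : E, (1 : ℝ) := Finset.sum_le_sum fun e _ => by
        rw [abs_le]
        constructor <;> linarith [xr_nonneg x e, xr_nonneg y e, xr_le_one x e, xr_le_one y e]
    _ = Fintype.card E := by simp

lemma one_le_Dh {x y : E → Bool} (h : x ≠ y) : 1 ≤ Dh x y := by
  obtain ⟨e, he⟩ := Function.ne_iff.1 h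
  unfold Dh
  refine le_trans ?_ (Finset.single_le_sum (f := fun e => |xr x e - xr y e|)
    (fun _ _ => abs_nonneg _) (Finset.mem_univ e))
  cases hx : x e <;> cases hy : y e <;> simp_all [xr]

lemma EE_Ce (hμ : IsProb μ) (e : E) (F : (E → Bool) → ℝ) : EE μ (Ce μ e F) = EE μ F :=
  (EE_eq_cond hμ e F).symm

lemma EE_KK [Nonempty E] (hμ : IsProb μ) (F : (E → Bool) → ℝ) : EE μ (KK μ F) = EE μ F := by
  have hN : (Fintype.card E : ℝ) ≠ 0 := by exact_mod_cast Fintype.card_ne_zero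
  unfold KK
  rw [EE_mul_left, EE_sum]
  simp only [EE_Ce hμ, Finset.sum_const, Finset.card_univ, nsmul_eq_mul]
  field_simp

lemma EE_mul_Ce (hμ : IsProb μ) (e : E) (F G : (E → Bool) → ℝ) :
    EE μ (fun x => F x * Ce μ e G x) = EE μ (fun x => Ce μ e F x * Ce μ e G x) := by
  rw [EE_eq_cond hμ e]
  refine EE_congr fun x => ?_
  simp only [Ce, pr_up, up, Function.update_idem, smul_eq_mul]
  ring

lemma EE_mul_KK (hμ : IsProb μ) (F G : (E → Bool) → ℝ) :
    EE μ (fun x => F x * KK μ G x) = EE μ (fun x => KK μ F x * G x) := by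
  have h1 : ∀ F G : (E → Bool) → ℝ, EE μ (fun x => F x * KK μ G x)
      = (1 / (Fintype.card E : ℝ)) * ∑ e, EE μ (fun x => Ce μ e F x * Ce μ e G x) := by
    intro F G
    simp only [← EE_mul_Ce hμ]
    rw [← EE_sum, ← EE_mul_left]
    refine EE_congr fun x => ?_
    rw [KK, mul_left_comm, Finset.mul_sum]
  rw [h1, show EE μ (fun x => KK μ F x * G x) = EE μ (fun x => G x * KK μ F x) from
    EE_congr fun x => mul_comm _ _, h1]
  congr 1
  exact Finset.sum_congr rfl fun e _ => EE_congr fun x => mul_comm _ _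

/-- The Dirichlet form of the heat-bath dynamics. -/
lemma EE_dirichlet [Nonempty E] (hμ : IsProb μ) (F : (E → Bool) → ℝ) :
    EE μ (fun x => F x ^ 2) - EE μ (fun x => F x * KK μ F x)
      ≤ (1 / (4 * (Fintype.card E : ℝ))) * ∑ e, EE μ (fun x => Dl e F x ^ 2) := by
  have hN : (0 : ℝ) < Fintype.card E := by exact_mod_cast Fintype.card_pos
  have h1 : ∀ e, EE μ (fun x => F x ^ 2) - EE μ (fun x => F x * Ce μ e F x)
      ≤ (1 / 4) * EE μ (fun x => Dl e F x ^ 2) := by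
    intro e
    rw [EE_mul_Ce hμ, EE_eq_cond hμ e (fun x => F x ^ 2), ← EE_sub, ← EE_mul_left]
    refine EE_mono hμ fun x => ?_
    simp only [Ce, Dl, smul_eq_mul]
    have : pr μ e x * (1 - pr μ e x) ≤ 1 / 4 := by nlinarith [sq_nonneg (pr μ e x - 1 / 2)]
    nlinarith [sq_nonneg (F (up x e true) - F (up x e false)), mul_le_mul_of_nonneg_right this
      (sq_nonneg (F (up x e true) - F (up x e false)))]
  have h2 : EE μ (fun x => F x * KK μ F x)
      = (1 / (Fintype.card E : ℝ)) * ∑ e, EE μ (fun x => F x * Ce μ e F x) := by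
    rw [← EE_sum, ← EE_mul_left]
    refine EE_congr fun x => ?_
    rw [KK, mul_left_comm, Finset.mul_sum]
  have h3 := Finset.sum_le_sum fun e (_ : e ∈ Finset.univ) => h1 e
  rw [Finset.sum_sub_distrib, ← Finset.mul_sum] at h3
  simp only [Finset.sum_const, Finset.card_univ, nsmul_eq_mul] at h3
  rw [h2, show (1 / (4 * (Fintype.card E : ℝ))) = (1 / (Fintype.card E : ℝ)) * (1 / 4) by
    field_simp, mul_assoc]
  calc _ = (1 / (Fintype.card E : ℝ)) * (Fintype.card E * EE μ (fun x => F x ^ 2)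
        - ∑ e, EE μ (fun x => F x * Ce μ e F x)) := by field_simp
    _ ≤ _ := mul_le_mul_of_nonneg_left h3 (by positivity)

lemma KK_iter_diff (F : (E → Bool) → ℝ) (t : ℕ) (x y : E → Bool) :
    (QQ μ)^[t] (fun x y => F x - F y) x y = (KK μ)^[t] F x - (KK μ)^[t] F y := by
  induction t generalizing x y with
  | zero => rfl
  | succ t ih =>
    rw [Function.iterate_succ_apply', Function.iterate_succ_apply',
      show (QQ μ)^[t] (fun x y => F x - F y)
        = fun x y => (KK μ)^[t] F x + (-1) * (KK μ)^[t] F y from by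
          funext x y; rw [ih]; ring, QQ_add, QQ_mul (-1) (fun _ y => (KK μ)^[t] F y), QQ_fst, QQ_snd]
    ring

lemma QQ_iter_mono (hμ : IsProb μ) {W W' : (E → Bool) → (E → Bool) → ℝ}
    (h : ∀ x y, W x y ≤ W' x y) (t : ℕ) (x y : E → Bool) :
    (QQ μ)^[t] W x y ≤ (QQ μ)^[t] W' x y := by
  induction t generalizing x y with
  | zero => exact h x y
  | succ t ih =>
    rw [Function.iterate_succ_apply', Function.iterate_succ_apply']
    exact QQ_mono hμ ih x y

lemma QQ_iter_mul (c : ℝ) (W : (E → Bool) → (E → Bool) → ℝ) (t : ℕ) (x y : E → Bool) :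
    (QQ μ)^[t] (fun x y => c * W x y) x y = c * (QQ μ)^[t] W x y := by
  induction t generalizing x y with
  | zero => rfl
  | succ t ih =>
    rw [Function.iterate_succ_apply', Function.iterate_succ_apply',
      show (QQ μ)^[t] (fun x y => c * W x y) = fun x y => c * (QQ μ)^[t] W x y from by
        funext x y; exact ih x y, QQ_mul]

/-- Contraction of the coupled dynamics up to the escape probability from `Γ`. -/
lemma QQ_iter_Dh [Nonempty E] (hμ : IsProb μ) {Γ : Set (E → Bool)} {κ : ℝ} (hκ0 : 0 < κ)
    (hκ1 : κ ≤ 1)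
    (hΓ : ∀ x ∈ Γ, ∀ y ∈ Γ, ∑ e, |pr μ e x - pr μ e y| ≤ (1 - κ) * Dh x y)
    (t : ℕ) (x y : E → Bool) :
    (QQ μ)^[t] Dh x y ≤ (1 - κ / Fintype.card E) ^ t * Dh x y
      + ∑ s ∈ Finset.range t, ((KK μ)^[s] (Γᶜ.indicator fun _ => 1) x
        + (KK μ)^[s] (Γᶜ.indicator fun _ => 1) y) := by
  have hN : (1 : ℝ) ≤ Fintype.card E := by exact_mod_cast Fintype.card_pos
  set N : ℝ := (Fintype.card E : ℝ) with hNdef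
  have hq0 : 0 ≤ 1 - κ / N := by
    rw [sub_nonneg, div_le_one (by linarith)]; linarith
  have hq1 : 1 - κ / N ≤ 1 := by
    have : 0 ≤ κ / N := by positivity
    linarith
  set φ : (E → Bool) → ℝ := Γᶜ.indicator fun _ => 1 with hφ
  have hφ0 : ∀ x, 0 ≤ φ x := fun x => Set.indicator_nonneg (fun _ _ => zero_le_one) x
  have step : ∀ x y, QQ μ Dh x y ≤ (1 - κ / N) * Dh x y + (φ x + φ y) := by
    intro x y
    rw [QQ_Dh]
    by_cases hxy : x ∈ Γ ∧ y ∈ Γ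
    · have h1 := mul_le_mul_of_nonneg_left (hΓ x hxy.1 y hxy.2) (by positivity : 0 ≤ 1 / N)
      have h2 : (1 - 1 / N) * Dh x y + 1 / N * ((1 - κ) * Dh x y) = (1 - κ / N) * Dh x y := by
        field_simp; ring
      linarith [hφ0 x, hφ0 y]
    · have h3 : 1 ≤ φ x + φ y := by
        by_cases hx : x ∈ Γ
        · have hy : y ∉ Γ := fun hy => hxy ⟨hx, hy⟩
          have : φ y = 1 := by simp [hφ, hy]
          linarith [hφ0 x]
        · have : φ x = 1 := by simp [hφ, hx]
          linarith [hφ0 y]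
      have h4 : ∑ e, |pr μ e x - pr μ e y| ≤ N := by
        calc _ ≤ ∑ _e : E, (1 : ℝ) := Finset.sum_le_sum fun e _ => by
              rw [abs_le]
              constructor <;> linarith [pr_pos hμ e x, pr_pos hμ e y, pr_lt_one hμ e x,
                pr_lt_one hμ e y]
          _ = N := by simp [hNdef]
      have h5 : 1 / N * ∑ e, |pr μ e x - pr μ e y| ≤ 1 := by
        rw [one_div, inv_mul_le_iff₀ (by linarith)]; linarith
      have h6 : (1 - 1 / N) * Dh x y ≤ (1 - κ / N) * Dh x y := by
        apply mul_le_mul_of_nonneg_right _ (Dh_nonneg x y)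
        have : κ / N ≤ 1 / N := by gcongr
        linarith
      linarith
  induction t generalizing x y with
  | zero => simp
  | succ t ih =>
    rw [Function.iterate_succ_apply']
    refine (QQ_mono hμ ih x y).trans ?_
    rw [QQ_add, QQ_mul, QQ_sum]
    have e1 : ∀ s, QQ μ (fun x y => (KK μ)^[s] φ x + (KK μ)^[s] φ y) x y
        = (KK μ)^[s + 1] φ x + (KK μ)^[s + 1] φ y := by
      intro s
      rw [QQ_add, QQ_fst, QQ_snd, Function.iterate_succ_apply']
    simp only [e1]
    rw [Finset.sum_range_succ' (fun s => (KK μ)^[s] φ x + (KK μ)^[s] φ y)]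
    have h1 := mul_le_mul_of_nonneg_left (step x y) (pow_nonneg hq0 t)
    have h2 : (1 - κ / N) ^ t * (φ x + φ y) ≤ 1 * (φ x + φ y) :=
      mul_le_mul_of_nonneg_right (pow_le_one₀ hq0 hq1) (add_nonneg (hφ0 x) (hφ0 y))
    rw [pow_succ]
    simp only [Function.iterate_zero, id]
    nlinarith

lemma EE_KK_iter [Nonempty E] (hμ : IsProb μ) (F : (E → Bool) → ℝ) (t : ℕ) :
    EE μ ((KK μ)^[t] F) = EE μ F := by
  induction t with
  | zero => rfl
  | succ t ih => rw [Function.iterate_succ_apply', EE_KK hμ, ih]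

/-- Iterating the coupling: the variance decays at the contraction rate, up to the chance of
leaving `Γ`. -/
lemma Vr_KK_iter [Nonempty E] (hμ : IsProb μ) {Γ : Set (E → Bool)} {κ : ℝ} (hκ0 : 0 < κ)
    (hκ1 : κ ≤ 1)
    (hΓ : ∀ x ∈ Γ, ∀ y ∈ Γ, ∑ e, |pr μ e x - pr μ e y| ≤ (1 - κ) * Dh x y)
    (t : ℕ) {F : (E → Bool) → ℝ} {B : ℝ} (hF : ∀ x, |F x| ≤ B) :
    Vr μ ((KK μ)^[t] F) ≤ 2 * B ^ 2 * ((1 - κ / Fintype.card E) ^ t * Fintype.card E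
      + 2 * t * EE μ (Γᶜ.indicator fun _ => (1 : ℝ))) := by
  have hB : 0 ≤ B := (abs_nonneg _).trans (hF fun _ => true)
  have hN : (1 : ℝ) ≤ Fintype.card E := by exact_mod_cast Fintype.card_pos
  have hq0 : 0 ≤ 1 - κ / (Fintype.card E : ℝ) := by
    rw [sub_nonneg, div_le_one (by linarith)]; linarith
  have hbd : ∀ x y, |F x - F y| ≤ 2 * B := fun x y => by
    have := abs_sub (F x) (F y)
    linarith [hF x, hF y]
  have hbd2 : ∀ x y, |F x - F y| ≤ 2 * B * Dh x y := fun x y => by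
    by_cases h : x = y
    · subst h; simp; positivity [Dh_nonneg x x]
    · exact (hbd x y).trans (le_mul_of_one_le_right (by positivity) (one_le_Dh h))
  have hone : ∀ t (x y : E → Bool), (QQ μ)^[t] (fun _ _ => (1 : ℝ)) x y = 1 := by
    intro t
    induction t with
    | zero => intro x y; rfl
    | succ t ih =>
      intro x y
      rw [Function.iterate_succ_apply', show (QQ μ)^[t] (fun _ _ => (1 : ℝ)) = fun _ _ => 1 from by
        funext x y; exact ih x y]
      unfold QQ
      have hN' : (Fintype.card E : ℝ) ≠ 0 := by linarith
      rw [Finset.sum_congr rfl (g := fun _ => (1 : ℝ)) fun e _ => by ring]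
      simp [hN']
  have hQ : ∀ W : (E → Bool) → (E → Bool) → ℝ, (∀ x y, |F x - F y| ≤ 2 * B * W x y) → ∀ x y,
      |(KK μ)^[t] F x - (KK μ)^[t] F y| ≤ 2 * B * (QQ μ)^[t] W x y := by
    intro W hW x y
    rw [← QQ_iter_mul, abs_le, ← KK_iter_diff]
    constructor
    · rw [neg_le, ← neg_one_mul, ← QQ_iter_mul]
      refine QQ_iter_mono hμ (fun x y => ?_) t x y
      have := (abs_le.1 (hW x y)).1
      linarith
    · exact QQ_iter_mono hμ (fun x y => (abs_le.1 (hW x y)).2) t x y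
  have h1 := hQ _ hbd2
  have h2 : ∀ x y, |(KK μ)^[t] F x - (KK μ)^[t] F y| ≤ 2 * B := fun x y => by
    have := hQ (fun _ _ => 1) (fun x y => by simpa using hbd x y) x y
    rwa [hone, mul_one] at this
  have h3 : ∀ x y, ((KK μ)^[t] F x - (KK μ)^[t] F y) ^ 2 ≤ 4 * B ^ 2 *
      ((1 - κ / Fintype.card E) ^ t * Fintype.card E
      + ∑ s ∈ Finset.range t, ((KK μ)^[s] (Γᶜ.indicator fun _ => 1) x
        + (KK μ)^[s] (Γᶜ.indicator fun _ => 1) y)) := by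
    intro x y
    have h4 := QQ_iter_Dh hμ hκ0 hκ1 hΓ t x y
    have h5 := mul_le_mul_of_nonneg_left (Dh_le x y) (pow_nonneg hq0 t)
    rw [← sq_abs, sq]
    calc _ ≤ (2 * B) * (2 * B * (QQ μ)^[t] Dh x y) :=
          mul_le_mul (h2 x y) (h1 x y) (abs_nonneg _) (by positivity)
      _ = 4 * B ^ 2 * (QQ μ)^[t] Dh x y := by ring
      _ ≤ _ := mul_le_mul_of_nonneg_left (by linarith) (by positivity)
  have h6 := Vr_eq_double hμ ((KK μ)^[t] F)
  have h7 : EE μ (fun x => EE μ (fun y => ((KK μ)^[t] F x - (KK μ)^[t] F y) ^ 2)) ≤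
      EE μ (fun x => EE μ (fun y => 4 * B ^ 2 *
      ((1 - κ / Fintype.card E) ^ t * Fintype.card E
      + ∑ s ∈ Finset.range t, ((KK μ)^[s] (Γᶜ.indicator fun _ => 1) x
        + (KK μ)^[s] (Γᶜ.indicator fun _ => 1) y)))) :=
    EE_mono hμ fun x => EE_mono hμ fun y => h3 x y
  have h8 : ∀ x, EE μ (fun y => 4 * B ^ 2 *
      ((1 - κ / Fintype.card E) ^ t * Fintype.card E
      + ∑ s ∈ Finset.range t, ((KK μ)^[s] (Γᶜ.indicator fun _ => 1) x
        + (KK μ)^[s] (Γᶜ.indicator fun _ => 1) y))) = 4 * B ^ 2 *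
      ((1 - κ / Fintype.card E) ^ t * Fintype.card E
      + ∑ s ∈ Finset.range t, ((KK μ)^[s] (Γᶜ.indicator fun _ => 1) x
        + EE μ (Γᶜ.indicator fun _ => (1 : ℝ)))) := fun x => by
    rw [EE_mul_left, EE_add, EE_const hμ, EE_sum]
    congr 2
    refine Finset.sum_congr rfl fun s _ => ?_
    rw [EE_add, EE_const hμ, EE_KK_iter hμ]
  simp only [h8] at h7
  rw [EE_mul_left, EE_add, EE_const hμ, EE_sum] at h7
  have h9 : ∀ s, EE μ (fun x => (KK μ)^[s] (Γᶜ.indicator fun _ => 1) x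
        + EE μ (Γᶜ.indicator fun _ => (1 : ℝ))) = 2 * EE μ (Γᶜ.indicator fun _ => (1 : ℝ)) :=
    fun s => by rw [EE_add, EE_const hμ, EE_KK_iter hμ]; ring
  simp only [h9, Finset.sum_const, Finset.card_range, nsmul_eq_mul] at h7
  nlinarith

/-- Log-convexity of the norms of the iterates of a self-adjoint operator. -/
lemma logconvex_pow {b : ℕ → ℝ} (hb : ∀ t, 0 ≤ b t) (h : ∀ t, b (t + 1) ^ 2 ≤ b t * b (t + 2))
    (h0 : 0 < b 0) (t : ℕ) : (b 1 / b 0) ^ t * b 0 ≤ b t := by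
  have h1 : ∀ t, b 1 * b t ≤ b (t + 1) * b 0 := by
    intro t
    induction t with
    | zero => simp
    | succ t ih =>
      rcases (hb t).eq_or_lt with h' | h'
      · have h2 := h t
        rw [← h', zero_mul] at h2
        have h3 : b (t + 1) = 0 := by
          have := sq_nonneg (b (t + 1)); exact pow_eq_zero_iff two_ne_zero |>.1 (le_antisymm h2 this)
        rw [h3, mul_zero]; exact mul_nonneg (hb _) (hb _)
      · have h2 := mul_le_mul_of_nonneg_right (h t) h0.le
        have h3 := mul_le_mul_of_nonneg_left ih (hb (t + 1))
        have : b t * (b 1 * b (t + 1)) ≤ b t * (b (t + 1 + 1) * b 0) := by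
          calc _ = b (t + 1) * (b 1 * b t) := by ring
            _ ≤ _ := h3
            _ = b (t + 1) ^ 2 * b 0 := by ring
            _ ≤ _ := h2
            _ = _ := by ring
        exact le_of_mul_le_mul_left this h'
  induction t with
  | zero => simp
  | succ t ih =>
    have h2 := h1 t
    rw [← div_le_iff₀ h0] at h2
    calc _ = b 1 / b 0 * ((b 1 / b 0) ^ t * b 0) := by ring
      _ ≤ b 1 / b 0 * b t := mul_le_mul_of_nonneg_left ih (div_nonneg (hb _) (hb _))
      _ = b 1 * b t / b 0 := by ring
      _ ≤ _ := h2

lemma KK_const [Nonempty E] (c : ℝ) (F : (E → Bool) → ℝ) :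
    KK μ (fun x => F x - c) = fun x => KK μ F x - c := by
  funext x
  have hN : (Fintype.card E : ℝ) ≠ 0 := by exact_mod_cast Fintype.card_ne_zero
  unfold KK Ce
  rw [Finset.sum_congr rfl (g := fun e => (pr μ e x * F (up x e true)
    + (1 - pr μ e x) * F (up x e false)) - c) fun e _ => by ring, Finset.sum_sub_distrib]
  simp only [Finset.sum_const, Finset.card_univ, nsmul_eq_mul]
  field_simp

/-- Poincaré inequality for bounded functions, up to a small additive error `η`. -/
theorem poincare [Nonempty E] (hμ : IsProb μ) {Γ : Set (E → Bool)} {κ : ℝ} (hκ0 : 0 < κ)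
    (hκ1 : κ ≤ 1)
    (hΓ : ∀ x ∈ Γ, ∀ y ∈ Γ, ∑ e, |pr μ e x - pr μ e y| ≤ (1 - κ) * Dh x y)
    (t : ℕ) {F : (E → Bool) → ℝ} {B s η : ℝ} (hF : ∀ x, |F x| ≤ B) (hs : 0 < s) (hst : s ≤ t)
    (hη : 0 < η)
    (hρ : 2 * B ^ 2 * ((1 - κ / Fintype.card E) ^ t * Fintype.card E
      + 2 * t * EE μ (Γᶜ.indicator fun _ => (1 : ℝ))) ≤ η * Real.exp (-s)) :
    Vr μ F ≤ η + t / (s * Fintype.card E) * ∑ e, EE μ (fun x => Dl e F x ^ 2) := by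
  have hN : (1 : ℝ) ≤ Fintype.card E := by exact_mod_cast Fintype.card_pos
  have ht : (0 : ℝ) < t := by linarith
  have hS : 0 ≤ ∑ e, EE μ (fun x => Dl e F x ^ 2) :=
    Finset.sum_nonneg fun e _ => EE_nonneg hμ fun x => sq_nonneg _
  by_cases hle : Vr μ F ≤ η
  · have : 0 ≤ t / (s * Fintype.card E) * ∑ e, EE μ (fun x => Dl e F x ^ 2) := by positivity
    linarith
  push Not at hle
  set F' : (E → Bool) → ℝ := fun x => F x - EE μ F with hF'
  have hK : ∀ t, (KK μ)^[t] F' = fun x => (KK μ)^[t] F x - EE μ F := by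
    intro t
    induction t with
    | zero => rfl
    | succ t ih => rw [Function.iterate_succ_apply', ih, KK_const, Function.iterate_succ_apply']
  set b : ℕ → ℝ := fun t => EE μ (fun x => (KK μ)^[t] F' x ^ 2) with hb
  have hb0 : b 0 = Vr μ F := rfl
  have hbt : b t = Vr μ ((KK μ)^[t] F) := by
    simp only [hb, Vr, EE_KK_iter hμ, hK]
  have hbn : ∀ t, 0 ≤ b t := fun t => EE_nonneg hμ fun x => sq_nonneg _
  have hlc : ∀ t, b (t + 1) ^ 2 ≤ b t * b (t + 2) := by
    intro t
    have : b (t + 1) = EE μ (fun x => (KK μ)^[t] F' x * (KK μ)^[t + 2] F' x) := by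
      rw [Function.iterate_succ_apply' (KK μ) (t + 1), EE_mul_KK hμ,
        ← Function.iterate_succ_apply' (KK μ) t]
      exact EE_congr fun x => sq _
    rw [this]
    exact EE_mul_sq_le hμ _ _
  have hpos : 0 < b 0 := by rw [hb0]; linarith
  have h1 := logconvex_pow hbn hlc hpos t
  have h2 : b t ≤ η * Real.exp (-s) := by
    rw [hbt]; exact (Vr_KK_iter hμ hκ0 hκ1 hΓ t hF).trans hρ
  have h3 : (b 1 / b 0) ^ t ≤ Real.exp (-s) := by
    have h4 : (b 1 / b 0) ^ t * b 0 ≤ Real.exp (-s) * b 0 := by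
      calc _ ≤ b t := h1
        _ ≤ η * Real.exp (-s) := h2
        _ ≤ b 0 * Real.exp (-s) := by gcongr; rw [hb0]; exact hle.le
        _ = _ := mul_comm _ _
    exact le_of_mul_le_mul_right h4 hpos
  have h5 : b 1 / b 0 ≤ 1 - (s / t) / 2 := by
    have h6 : Real.exp (-s) = Real.exp (-(s / t)) ^ t := by
      rw [← Real.exp_nat_mul]; congr 1; field_simp
    rw [h6] at h3
    have h7 := le_of_pow_le_pow_left₀ (by exact_mod_cast ht.ne') (Real.exp_pos _).le h3
    refine h7.trans ?_
    have hy0 : 0 ≤ s / t := by positivity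
    have hy1 : s / t ≤ 1 := by rw [div_le_one ht]; exact hst
    have h8 : Real.exp (-(s / t)) * (1 + s / t) ≤ 1 := by
      calc _ ≤ Real.exp (-(s / t)) * Real.exp (s / t) := by
            gcongr; linarith [Real.add_one_le_exp (s / t)]
        _ = 1 := by rw [← Real.exp_add]; simp
    have h9 : 1 ≤ (1 - s / t / 2) * (1 + s / t) := by nlinarith
    exact le_of_mul_le_mul_right (h8.trans h9) (by linarith)
  have h6 : b 0 - b 1 ≤ 2 * (b 0 - EE μ (fun x => F' x * KK μ F' x)) := by
    have : 0 ≤ EE μ (fun x => (F' x - KK μ F' x) ^ 2) := EE_nonneg hμ fun _ => sq_nonneg _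
    have e : EE μ (fun x => (F' x - KK μ F' x) ^ 2)
        = (b 0 - 2 * EE μ (fun x => F' x * KK μ F' x)) + b 1 := by
      have : ∀ x, (F' x - KK μ F' x) ^ 2 = (F' x ^ 2 - 2 * (F' x * KK μ F' x)) + KK μ F' x ^ 2 :=
        fun x => by ring
      simp only [this]
      rw [EE_add, EE_sub, EE_mul_left]; rfl
    linarith
  have h7 := EE_dirichlet hμ F'
  have h8 : ∀ e x, Dl e F' x = Dl e F x := fun e x => by simp only [Dl, hF']; ring
  simp only [h8] at h7
  have h9 : b 0 - b 1 ≤ 1 / (2 * (Fintype.card E : ℝ)) * ∑ e, EE μ (fun x => Dl e F x ^ 2) := by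
    have : b 0 = EE μ (fun x => F' x ^ 2) := rfl
    have e : 1 / (2 * (Fintype.card E : ℝ)) = 2 * (1 / (4 * (Fintype.card E : ℝ))) := by
      field_simp; norm_num
    rw [e, mul_assoc]
    linarith
  rw [div_le_iff₀ hpos] at h5
  have h10 : s / t / 2 * b 0 ≤ 1 / (2 * (Fintype.card E : ℝ)) * ∑ e, EE μ (fun x => Dl e F x ^ 2) := by
    linarith
  have h11 : b 0 ≤ t / (s * Fintype.card E) * ∑ e, EE μ (fun x => Dl e F x ^ 2) := by
    have := mul_le_mul_of_nonneg_left h10 (by positivity : 0 ≤ 2 * t / s)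
    calc b 0 = 2 * t / s * (s / t / 2 * b 0) := by field_simp
      _ ≤ _ := this
      _ = _ := by field_simp
  rw [hb0] at h11
  linarith

end Poincare

/-! ### Adjacency matrix, codegrees and triangle counts -/

section Graph
variable {n : ℕ}

/-- Value of the configuration at an unordered pair, `0` on the diagonal. -/
def val (x : Config n) (s : Sym2 (Fin n)) : ℝ := if h : ¬ s.IsDiag then xr x ⟨s, h⟩ else 0

/-- Adjacency matrix. -/
def A (x : Config n) (v w : Fin n) : ℝ := val x s(v, w)

lemma A_symm (x : Config n) (v w : Fin n) : A x v w = A x w v := by rw [A, A, Sym2.eq_swap]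

@[simp] lemma A_self (x : Config n) (v : Fin n) : A x v v = 0 := by simp [A, val]

lemma val_edge (x : Config n) (e : Edge n) : val x e.1 = xr x e := by simp [val, e.2]

lemma A_eq (x : Config n) {v w : Fin n} (h : ¬ (s(v, w)).IsDiag) :
    A x v w = xr x ⟨s(v, w), h⟩ := by simp only [A, val]; rw [dif_pos h]

lemma A_zero_or_one (x : Config n) (v w : Fin n) : A x v w = 0 ∨ A x v w = 1 := by
  unfold A val xr
  split_ifs <;> simp

lemma A_nonneg (x : Config n) (v w : Fin n) : 0 ≤ A x v w := by
  rcases A_zero_or_one x v w with h | h <;> rw [h] <;> norm_num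

lemma A_le_one (x : Config n) (v w : Fin n) : A x v w ≤ 1 := by
  rcases A_zero_or_one x v w with h | h <;> rw [h] <;> norm_num

lemma A_sq (x : Config n) (v w : Fin n) : A x v w * A x v w = A x v w := by
  rcases A_zero_or_one x v w with h | h <;> rw [h] <;> norm_num

lemma A_up (x : Config n) (e : Edge n) (b : Bool) (v w : Fin n) :
    A (up x e b) v w = if s(v, w) = e.1 then (if b then 1 else 0) else A x v w := by
  by_cases hd : (s(v, w)).IsDiag
  · have hne : s(v, w) ≠ e.1 := fun h => e.2 (h ▸ hd)
    rw [if_neg hne]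
    simp [A, val, hd]
  · rw [A_eq _ hd, A_eq _ hd]
    by_cases he : s(v, w) = e.1
    · rw [if_pos he]
      have : (⟨s(v, w), hd⟩ : Edge n) = e := Subtype.ext he
      rw [this, xr_up_same]
    · rw [if_neg he]
      exact xr_up_ne _ (fun h => he (congrArg Subtype.val h)) _

lemma edge_cases (e : Edge n) : ∃ v w, v ≠ w ∧ e.1 = s(v, w) := by
  obtain ⟨s, hs⟩ := e
  induction s using Sym2.ind with
  | _ v w => exact ⟨v, w, by simpa using hs, rfl⟩

/-- The edge joining two distinct vertices. -/
def mkE (v w : Fin n) (h : v ≠ w) : Edge n := ⟨s(v, w), by simpa using h⟩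

/-- A sum over edges is half of the corresponding sum over ordered pairs of distinct vertices. -/
lemma sum_pairs (f : Sym2 (Fin n) → ℝ) :
    ∑ v : Fin n, ∑ w : Fin n, (if v = w then 0 else f s(v, w)) = 2 * ∑ e : Edge n, f e.1 := by
  have h1 : ∑ e : Edge n, f e.1
      = ∑ s ∈ (Finset.univ : Finset (Fin n)).sym2 with ¬ s.IsDiag, f s := by
    exact (Finset.sum_subtype _ (by simp) f).symm
  rw [h1, Finset.sum_sym2_filter_not_isDiag, ← Finset.sum_product']
  have h2 : ∑ p ∈ (Finset.univ : Finset (Fin n)) ×ˢ (Finset.univ : Finset (Fin n)),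
      (if p.1 = p.2 then 0 else f s(p.1, p.2)) = ∑ p ∈ (Finset.univ : Finset (Fin n)) ×ˢ
      (Finset.univ : Finset (Fin n)), ((if p.1 < p.2 then f s(p.1, p.2) else 0)
        + (if p.2 < p.1 then f s(p.2, p.1) else 0)) := by
    refine Finset.sum_congr rfl fun p _ => ?_
    rcases lt_trichotomy p.1 p.2 with h | h | h
    · simp [h, h.ne, h.le.not_gt]
    · simp [h]
    · simp [h, h.ne', h.le.not_gt, Sym2.eq_swap]
  rw [h2, Finset.sum_add_distrib]
  have h3 : ∑ p ∈ (Finset.univ : Finset (Fin n)) ×ˢ (Finset.univ : Finset (Fin n)),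
      (if p.2 < p.1 then f s(p.2, p.1) else 0) = ∑ p ∈ (Finset.univ : Finset (Fin n)) ×ˢ
      (Finset.univ : Finset (Fin n)), (if p.1 < p.2 then f s(p.1, p.2) else 0) := by
    rw [Finset.sum_product, Finset.sum_product_right]
  rw [h3, ← two_mul]
  congr 1
  rw [← Finset.sum_filter]
  refine Finset.sum_congr ?_ fun _ _ => rfl
  ext p
  simp only [Finset.mem_filter, Finset.mem_product, Finset.mem_univ, Finset.mem_offDiag, true_and]
  exact ⟨fun h => ⟨h.ne, h⟩, fun h => h.2⟩

/-- Number of common neighbours of an ordered pair. -/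
def cod (x : Config n) (v w : Fin n) : ℝ := ∑ z, A x v z * A x w z

lemma cod_symm (x : Config n) (v w : Fin n) : cod x v w = cod x w v :=
  Finset.sum_congr rfl fun _ _ => mul_comm _ _

/-- Number of common neighbours of the endpoints of an edge. -/
def cE (x : Config n) (e : Edge n) : ℝ := Sym2.lift ⟨fun v w => cod x v w, cod_symm x⟩ e.1

lemma cE_eq (x : Config n) {e : Edge n} {v w : Fin n} (h : e.1 = s(v, w)) :
    cE x e = cod x v w := by rw [cE, h]; rfl

/-- Degree. -/
def dg (x : Config n) (v : Fin n) : ℝ := ∑ w, A x v w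

/-- Number of triangles, as a real number. -/
def Tr (x : Config n) : ℝ := (triangleCount n x : ℝ)

/-- Number of edges, as a real number. -/
def Ec (x : Config n) : ℝ := ∑ e, xr x e

lemma Ec_eq (x : Config n) : Ec x = (edgeCount n x : ℝ) := by
  simp [Ec, edgeCount, xr, Finset.sum_ite]

lemma sum_A (x : Config n) : ∑ v, ∑ w, A x v w = 2 * Ec x := by
  have := sum_pairs (n := n) (val x)
  simp only [val_edge] at this
  rw [Ec, ← this]
  refine Finset.sum_congr rfl fun v _ => Finset.sum_congr rfl fun w _ => ?_
  by_cases h : v = w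
  · simp [h]
  · simp [h, A]

lemma sum_pairs_le (f : Sym2 (Fin n) → ℝ) (hf : ∀ s, 0 ≤ f s) :
    2 * ∑ e : Edge n, f e.1 ≤ ∑ v : Fin n, ∑ w : Fin n, f s(v, w) := by
  rw [← sum_pairs]
  refine Finset.sum_le_sum fun v _ => Finset.sum_le_sum fun w _ => ?_
  split_ifs with h
  · exact hf _
  · exact le_rfl

/-- Lifting a symmetric function of two vertices to unordered pairs. -/
def lft (g : Fin n → Fin n → ℝ) (hg : ∀ v w, g v w = g w v) : Sym2 (Fin n) → ℝ :=
  Sym2.lift ⟨g, hg⟩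

lemma card_edge : 2 * (Fintype.card (Edge n) : ℝ) = n * (n - 1) := by
  have := sum_pairs (n := n) (fun _ => 1)
  simp only [Finset.sum_const, Finset.card_univ, nsmul_eq_mul, mul_one] at this
  rw [← this]
  have h2 : ∀ v : Fin n, ∑ w : Fin n, (if v = w then (0 : ℝ) else 1) = n - 1 := fun v => by
    have : ∀ w : Fin n, (if v = w then (0 : ℝ) else 1) = 1 - (if v = w then 1 else 0) := fun w => by
      split_ifs <;> norm_num
    simp only [this, Finset.sum_sub_distrib]
    simp
  simp only [h2, Finset.sum_const, Finset.card_univ, Fintype.card_fin, nsmul_eq_mul]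

lemma six_Tr (x : Config n) : 6 * Tr x = ∑ a, ∑ b, ∑ c, A x a b * A x b c * A x c a := by
  classical
  set f : Fin n → Fin n → Fin n → ℝ := fun a b c => A x a b * A x b c * A x c a with hf
  have hclique : ∀ s ∈ Finset.powersetCard 3 (Finset.univ : Finset (Fin n)),
      ∑ a ∈ s, ∑ b ∈ s, ∑ c ∈ s, f a b c
        = 6 * (if ∀ e : Edge n, (∀ v ∈ (e : Sym2 (Fin n)), v ∈ s) → x e then (1 : ℝ) else 0) := by
    intro s hs
    obtain ⟨p, q, r, hpq, hpr, hqr, rfl⟩ := Finset.card_eq_three.1 (Finset.mem_powersetCard.1 hs).2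
    have e1 : ∑ a ∈ ({p, q, r} : Finset (Fin n)), ∑ b ∈ ({p, q, r} : Finset (Fin n)),
        ∑ c ∈ ({p, q, r} : Finset (Fin n)), f a b c = 6 * (A x p q * A x q r * A x p r) := by
      have hp : p ∉ ({q, r} : Finset (Fin n)) := by simp [hpq, hpr]
      have hq : q ∉ ({r} : Finset (Fin n)) := by simp [hqr]
      simp only [Finset.sum_insert hp, Finset.sum_insert hq, Finset.sum_singleton, hf, A_self,
        mul_zero, zero_mul, add_zero, zero_add]
      rw [A_symm x q p, A_symm x r p, A_symm x r q]; ring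
    rw [e1]
    congr 1
    have dpq : ¬ (s(p, q)).IsDiag := by simpa using hpq
    have dpr : ¬ (s(p, r)).IsDiag := by simpa using hpr
    have dqr : ¬ (s(q, r)).IsDiag := by simpa using hqr
    rw [A_eq x dpq, A_eq x dpr, A_eq x dqr]
    have hiff : (∀ e : Edge n, (∀ v ∈ (e : Sym2 (Fin n)), v ∈ ({p, q, r} : Finset (Fin n))) → x e)
        ↔ (x ⟨s(p, q), dpq⟩ ∧ x ⟨s(q, r), dqr⟩ ∧ x ⟨s(p, r), dpr⟩) := by
      constructor
      · intro h
        refine ⟨h _ ?_, h _ ?_, h _ ?_⟩ <;> intro v hv <;> simp at hv ⊢ <;> tauto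
      · rintro ⟨h1, h2, h3⟩ ⟨s, hs⟩ h
        induction s using Sym2.ind with
        | _ v w =>
          have hv : v = p ∨ v = q ∨ v = r := by simpa using h v (by simp)
          have hw : w = p ∨ w = q ∨ w = r := by simpa using h w (by simp)
          have hvw : v ≠ w := by simpa using hs
          have h1' : x ⟨s(q, p), by simpa using hpq.symm⟩ = true := by
            rw [← h1]; congr 2; exact Sym2.eq_swap
          have h2' : x ⟨s(r, q), by simpa using hqr.symm⟩ = true := by
            rw [← h2]; congr 2; exact Sym2.eq_swap
          have h3' : x ⟨s(r, p), by simpa using hpr.symm⟩ = true := by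
            rw [← h3]; congr 2; exact Sym2.eq_swap
          rcases hv with rfl | rfl | rfl <;> rcases hw with rfl | rfl | rfl <;>
            first | exact absurd rfl hvw | assumption
    by_cases hc : ∀ e : Edge n, (∀ v ∈ (e : Sym2 (Fin n)), v ∈ ({p, q, r} : Finset (Fin n))) → x e
    · rw [if_pos hc]
      obtain ⟨h1, h2, h3⟩ := hiff.1 hc
      simp [xr, h1, h2, h3]
    · rw [if_neg hc]
      have := fun h => hc (hiff.2 h)
      unfold xr
      by_cases h1 : x ⟨s(p, q), dpq⟩ <;> by_cases h2 : x ⟨s(q, r), dqr⟩ <;>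
        by_cases h3 : x ⟨s(p, r), dpr⟩ <;> simp [h1, h2, h3] <;> exact this ⟨h1, h2, h3⟩
  have h1 : 6 * Tr x = ∑ s ∈ Finset.powersetCard 3 (Finset.univ : Finset (Fin n)),
      ∑ a ∈ s, ∑ b ∈ s, ∑ c ∈ s, f a b c := by
    rw [Finset.sum_congr rfl hclique, ← Finset.mul_sum]
    simp [Tr, triangleCount, Finset.sum_ite]
  have h2 : ∀ s : Finset (Fin n), ∑ a ∈ s, ∑ b ∈ s, ∑ c ∈ s, f a b c
      = ∑ a, ∑ b, ∑ c, if a ∈ s ∧ b ∈ s ∧ c ∈ s then f a b c else 0 := by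
    intro s
    simp only [ite_and]
    simp [Finset.sum_ite_mem, Finset.sum_ite_irrel]
  rw [h1]
  simp only [h2]
  rw [Finset.sum_comm]
  refine Finset.sum_congr rfl fun a _ => ?_
  rw [Finset.sum_comm]
  refine Finset.sum_congr rfl fun b _ => ?_
  rw [Finset.sum_comm]
  refine Finset.sum_congr rfl fun c _ => ?_
  by_cases hab : a = b
  · simp [hf, hab]
  by_cases hbc : b = c
  · simp [hf, hbc]
  by_cases hca : c = a
  · simp [hf, hca]
  have hcard : ({a, b, c} : Finset (Fin n)).card = 3 :=
    Finset.card_eq_three.2 ⟨a, b, c, hab, Ne.symm hca, hbc, rfl⟩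
  rw [Finset.sum_eq_single ({a, b, c} : Finset (Fin n))]
  · simp [hf]
  · intro s hs hne
    rw [if_neg]
    rintro ⟨ha, hb, hc⟩
    refine hne (Finset.eq_of_subset_of_card_le ?_ ?_).symm
    · intro v; simp; rintro (rfl | rfl | rfl) <;> assumption
    · rw [hcard, (Finset.mem_powersetCard.1 hs).2]
  · intro h
    exact absurd (Finset.mem_powersetCard.2 ⟨Finset.subset_univ _, hcard⟩) h

end Graph

/-! ### Discrete derivatives of graph statistics -/

section Deriv
variable {n : ℕ}

/-- Indicator that the pair `v, w` is the edge `e`. -/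
def dlt (e : Edge n) (v w : Fin n) : ℝ := if s(v, w) = e.1 then 1 else 0

lemma dlt_nonneg (e : Edge n) (v w : Fin n) : 0 ≤ dlt e v w := by
  unfold dlt; split_ifs <;> norm_num

lemma dlt_le_one (e : Edge n) (v w : Fin n) : dlt e v w ≤ 1 := by
  unfold dlt; split_ifs <;> norm_num

lemma dlt_symm (e : Edge n) (v w : Fin n) : dlt e v w = dlt e w v := by
  unfold dlt; rw [Sym2.eq_swap]

lemma A_up_true (x : Config n) (e : Edge n) (v w : Fin n) :
    A (up x e true) v w = A (up x e false) v w + dlt e v w := by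
  by_cases h : s(v, w) = e.1 <;> simp [A_up, dlt, h]

lemma A_up_false_mul_dlt (x : Config n) (e : Edge n) (v w : Fin n) :
    A (up x e false) v w * dlt e v w = 0 := by
  by_cases h : s(v, w) = e.1 <;> simp [A_up, dlt, h]

lemma sum_dlt_le (e : Edge n) (v : Fin n) : ∑ z, dlt e v z ≤ 1 := by
  obtain ⟨a, b, hab, he⟩ := edge_cases e
  unfold dlt
  rw [he]
  by_cases h1 : v = a
  · subst h1
    have : ∀ z, (if s(v, z) = s(v, b) then (1 : ℝ) else 0) = if z = b then 1 else 0 := fun z => by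
      simp [hab]
    simp only [this]; simp
  · have : ∀ z, (if s(v, z) = s(a, b) then (1 : ℝ) else 0) ≤ if z = a then 1 else 0 := fun z => by
      by_cases h2 : z = a
      · simp [h2]; split_ifs <;> norm_num
      · have : s(v, z) ≠ s(a, b) := by simp [h1, h2]
        simp [this, h2]
    refine (Finset.sum_le_sum fun z _ => this z).trans ?_
    simp

lemma sum_edge_dlt_le (v w : Fin n) : ∑ e : Edge n, dlt e v w ≤ 1 := by
  unfold dlt
  by_cases h : (s(v, w)).IsDiag
  · have : ∀ e : Edge n, s(v, w) ≠ e.1 := fun e he => e.2 (he ▸ h)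
    simp [this]
  · have : ∀ e : Edge n, (s(v, w) = e.1) ↔ ((⟨s(v, w), h⟩ : Edge n) = e) := fun e => by
      rw [Subtype.ext_iff]
    simp [this]

lemma sum_pairs_dlt (e : Edge n) {v w : Fin n} (hvw : v ≠ w) (he : e.1 = s(v, w))
    (f : Fin n → Fin n → ℝ) : ∑ a, ∑ b, dlt e a b * f a b = f v w + f w v := by
  have : ∀ a b, dlt e a b * f a b = (if a = v then (if b = w then f a b else 0) else 0)
      + (if a = w then (if b = v then f a b else 0) else 0) := by
    intro a b
    unfold dlt
    rw [he]
    by_cases h1 : a = v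
    · subst h1
      by_cases h2 : b = w <;> simp [h2, hvw]
    · by_cases h2 : a = w
      · subst h2
        by_cases h3 : b = v
        · simp [h3, Sym2.eq_swap, hvw, h1]
        · simp [h1, h3]
      · have : s(a, b) ≠ s(v, w) := by simp [h1, h2]
        simp [h1, h2]
  simp only [this, Finset.sum_add_distrib]
  simp

lemma A_up_mul (x : Config n) {e : Edge n} {v w : Fin n} (hvw : v ≠ w) (he : e.1 = s(v, w))
    (b : Bool) (z : Fin n) : A (up x e b) v z * A (up x e b) w z = A x v z * A x w z := by
  by_cases h1 : z = v
  · subst h1; simp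
  by_cases h2 : z = w
  · subst h2; simp
  have e1 : s(v, z) ≠ e.1 := by rw [he]; simp [h2, hvw]
  have e2 : s(w, z) ≠ e.1 := by rw [he]; simp [h1, hvw.symm]
  rw [A_up, A_up, if_neg e1, if_neg e2]

@[simp] lemma cE_up (x : Config n) (e : Edge n) (b : Bool) : cE (up x e b) e = cE x e := by
  obtain ⟨v, w, hvw, he⟩ := edge_cases e
  rw [cE_eq _ he, cE_eq _ he]
  exact Finset.sum_congr rfl fun z _ => A_up_mul x hvw he b z

/-- Flipping an edge changes the triangle count by the codegree. -/
lemma Tr_Dl (x : Config n) (e : Edge n) : Dl e Tr x = cE x e := by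
  obtain ⟨v, w, hvw, he⟩ := edge_cases e
  set B := A (up x e false) with hB
  have h6 : 6 * Dl e Tr x = ∑ a, ∑ b, ∑ c, (dlt e a b * (B b c * B c a)
      + dlt e b c * (B c a * B a b) + dlt e c a * (B a b * B b c)) := by
    rw [Dl, mul_sub, six_Tr, six_Tr]
    simp only [← Finset.sum_sub_distrib]
    refine Finset.sum_congr rfl fun a _ => Finset.sum_congr rfl fun b _ =>
      Finset.sum_congr rfl fun c _ => ?_
    simp only [A_up_true]
    -- two of the three pairs of a triple can only agree with `e` if the third one is a loop
    have key : ∀ a b c : Fin n, dlt e a b * dlt e b c = 0 ∨ a = c := by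
      intro a b c
      unfold dlt
      by_cases h1 : s(a, b) = e.1
      · by_cases h2 : s(b, c) = e.1
        · right
          rw [← h2, Sym2.eq_swap (a := b)] at h1
          have h3 : a = c ∨ a = b ∧ b = c := by simpa using h1
          rcases h3 with h3 | h3
          · exact h3
          · exact h3.1.trans h3.2
        · left; simp [h2]
      · left; simp [h1]
    have hself : ∀ a, B a a = 0 := fun a => by simp [hB]
    have hds : ∀ a, dlt e a a = 0 := fun a => by
      unfold dlt
      rw [if_neg]; intro h; exact e.2 (h ▸ (by simp))
    have k1 : dlt e a b * dlt e b c * B c a = 0 := by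
      rcases key a b c with h | h
      · rw [h, zero_mul]
      · rw [h, hself, mul_zero]
    have k2 : dlt e b c * dlt e c a * B a b = 0 := by
      rcases key b c a with h | h
      · rw [h, zero_mul]
      · rw [h, hself, mul_zero]
    have k3 : dlt e c a * dlt e a b * B b c = 0 := by
      rcases key c a b with h | h
      · rw [h, zero_mul]
      · rw [h, hself, mul_zero]
    have k4 : dlt e a b * dlt e b c * dlt e c a = 0 := by
      rcases key a b c with h | h
      · rw [h, zero_mul]
      · rw [h, hds, mul_zero]
    linear_combination k1 + k2 + k3 + k4
  have hs : ∀ a b, B a b = B b a := fun a b => A_symm _ _ _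
  have h1 : ∀ f : Fin n → Fin n → ℝ, ∑ a, ∑ b, dlt e a b * f a b = f v w + f w v :=
    sum_pairs_dlt e hvw he
  have hc : ∀ v w, ∑ z, B v z * B w z = cod (up x e false) v w := fun v w => rfl
  have e1 : ∑ a, ∑ b, ∑ c, dlt e a b * (B b c * B c a) = 2 * cE x e := by
    simp only [← Finset.mul_sum]
    rw [h1]
    rw [← cE_up x e false, cE_eq _ he, ← hc, two_mul]
    congr 1 <;> refine Finset.sum_congr rfl fun z _ => ?_
    · rw [hs z v]; ring
    · rw [hs z w]
  have e2 : ∑ a, ∑ b, ∑ c, dlt e b c * (B c a * B a b) = 2 * cE x e := by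
    rw [← e1, Finset.sum_comm]
    refine Finset.sum_congr rfl fun b _ => ?_
    rw [Finset.sum_comm]
  have e3 : ∑ a, ∑ b, ∑ c, dlt e c a * (B a b * B b c) = 2 * cE x e := by
    rw [← e2, Finset.sum_comm]
    refine Finset.sum_congr rfl fun b _ => ?_
    rw [Finset.sum_comm]
  simp only [Finset.sum_add_distrib] at h6
  rw [e1, e2, e3] at h6
  linarith

lemma Ec_Dl (x : Config n) (e : Edge n) : Dl e Ec x = 1 := by
  unfold Dl Ec
  rw [← Finset.sum_sub_distrib, Finset.sum_eq_single e]
  · simp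
  · intro f _ hf
    rw [xr_up_ne _ hf, xr_up_ne _ hf, sub_self]
  · simp

lemma lin_Dl (b : Edge n → ℝ) (x : Config n) (e : Edge n) :
    Dl e (fun x => ∑ f, b f * xr x f) x = b e := by
  unfold Dl
  simp only
  rw [← Finset.sum_sub_distrib, Finset.sum_eq_single e]
  · simp
  · intro f _ hf
    rw [xr_up_ne _ hf, xr_up_ne _ hf, sub_self]
  · simp

lemma dg_Dl (x : Config n) (e : Edge n) (v : Fin n) :
    Dl e (fun x => dg x v) x = ∑ z, dlt e v z := by
  simp only [Dl, dg, A_up_true, Finset.sum_add_distrib]; ring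

lemma cod_Dl (x : Config n) (f : Edge n) (v w : Fin n) :
    Dl f (fun x => cod x v w) x = ∑ z, (A (up x f true) v z * A (up x f true) w z
      - A (up x f false) v z * A (up x f false) w z) := by
  simp only [Dl, cod, Finset.sum_sub_distrib]

lemma cod_Dl_term (x : Config n) (f : Edge n) (v w z : Fin n) :
    0 ≤ A (up x f true) v z * A (up x f true) w z - A (up x f false) v z * A (up x f false) w z ∧
    A (up x f true) v z * A (up x f true) w z - A (up x f false) v z * A (up x f false) w z
      ≤ dlt f v z + dlt f w z := by
  have h1 := A_nonneg (up x f false) v z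
  have h2 := A_nonneg (up x f false) w z
  have h3 := dlt_nonneg f v z
  have h4 := dlt_nonneg f w z
  have h5 := A_le_one (up x f true) v z
  have h6 := A_le_one (up x f false) w z
  rw [A_up_true] at h5
  rw [A_up_true x f v z, A_up_true x f w z]
  constructor
  · nlinarith [mul_nonneg h1 h4, mul_nonneg h3 h2, mul_nonneg h3 h4]
  · nlinarith [mul_le_mul_of_nonneg_right h5 h4, mul_le_mul_of_nonneg_left h6 h3]

lemma cod_Dl_nonneg (x : Config n) (f : Edge n) (v w : Fin n) :
    0 ≤ Dl f (fun x => cod x v w) x := by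
  rw [cod_Dl]; exact Finset.sum_nonneg fun z _ => (cod_Dl_term x f v w z).1

lemma cod_Dl_le (x : Config n) (f : Edge n) (v w : Fin n) :
    Dl f (fun x => cod x v w) x ≤ ∑ z, dlt f v z + ∑ z, dlt f w z := by
  rw [cod_Dl, ← Finset.sum_add_distrib]
  exact Finset.sum_le_sum fun z _ => (cod_Dl_term x f v w z).2

lemma cod_Dl_le_two (x : Config n) (f : Edge n) (v w : Fin n) :
    Dl f (fun x => cod x v w) x ≤ 2 := by
  linarith [cod_Dl_le x f v w, sum_dlt_le f v, sum_dlt_le f w]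

lemma cE_Dl_nonneg (x : Config n) (f e : Edge n) : 0 ≤ Dl f (fun x => cE x e) x := by
  obtain ⟨v, w, hvw, he⟩ := edge_cases e
  simp only [cE_eq _ he]; exact cod_Dl_nonneg x f v w

lemma cE_Dl_le_two (x : Config n) (f e : Edge n) : Dl f (fun x => cE x e) x ≤ 2 := by
  obtain ⟨v, w, hvw, he⟩ := edge_cases e
  simp only [cE_eq _ he]; exact cod_Dl_le_two x f v w

lemma sum_sum_dlt_le (v : Fin n) : ∑ f : Edge n, ∑ z, dlt f v z ≤ n := by
  rw [Finset.sum_comm]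
  calc _ ≤ ∑ _z : Fin n, (1 : ℝ) := Finset.sum_le_sum fun z _ => sum_edge_dlt_le v z
    _ = n := by simp

lemma sum_cE_Dl_le (x : Config n) (e : Edge n) : ∑ f, Dl f (fun x => cE x e) x ≤ 2 * n := by
  obtain ⟨v, w, hvw, he⟩ := edge_cases e
  simp only [cE_eq _ he]
  calc _ ≤ ∑ f : Edge n, (∑ z, dlt f v z + ∑ z, dlt f w z) :=
        Finset.sum_le_sum fun f _ => cod_Dl_le x f v w
    _ ≤ _ := by
      rw [Finset.sum_add_distrib]
      linarith [sum_sum_dlt_le v, sum_sum_dlt_le w]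

lemma sum_cE_Dl_le' (x : Config n) (f : Edge n) : ∑ e, Dl f (fun x => cE x e) x ≤ 2 * n := by
  have h1 : ∀ e : Edge n, Dl f (fun x => cE x e) x ≤ lft (fun v w => ∑ z, dlt f v z + ∑ z, dlt f w z)
      (fun v w => add_comm _ _) e.1 := by
    intro e
    obtain ⟨v, w, hvw, he⟩ := edge_cases e
    simp only [cE_eq _ he]
    rw [he]
    exact cod_Dl_le x f v w
  have hnn : ∀ s, 0 ≤ lft (fun v w => ∑ z, dlt f v z + ∑ z, dlt f w z)
      (fun v w => add_comm _ _) s := by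
    intro s
    induction s using Sym2.ind with
    | _ v w =>
      exact add_nonneg (Finset.sum_nonneg fun z _ => dlt_nonneg f v z)
        (Finset.sum_nonneg fun z _ => dlt_nonneg f w z)
  have h2 := sum_pairs_le _ hnn
  have h3 : ∑ v : Fin n, ∑ w : Fin n, lft (fun v w => ∑ z, dlt f v z + ∑ z, dlt f w z)
      (fun v w => add_comm _ _) s(v, w) ≤ 4 * n := by
    have e1 : ∑ v : Fin n, ∑ z, dlt f v z = 2 := by
      obtain ⟨a, b, hab, he⟩ := edge_cases f
      have := sum_pairs_dlt f hab he (fun _ _ => 1)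
      simp only [mul_one] at this
      rw [this]; norm_num
    have e2 : ∀ v w : Fin n, lft (fun v w => ∑ z, dlt f v z + ∑ z, dlt f w z)
      (fun v w => add_comm _ _) s(v, w) = ∑ z, dlt f v z + ∑ z, dlt f w z := fun v w => rfl
    simp only [e2, Finset.sum_add_distrib, e1, Finset.sum_const, Finset.card_univ,
      Fintype.card_fin, nsmul_eq_mul, ← Finset.mul_sum]
    linarith
  have h4 := Finset.sum_le_sum fun e (_ : e ∈ Finset.univ) => h1 e
  linarith

lemma cod_nonneg (x : Config n) (v w : Fin n) : 0 ≤ cod x v w :=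
  Finset.sum_nonneg fun z _ => mul_nonneg (A_nonneg _ _ _) (A_nonneg _ _ _)

lemma cod_le (x : Config n) (v w : Fin n) : cod x v w ≤ n := by
  calc cod x v w ≤ ∑ _z : Fin n, (1 : ℝ) := Finset.sum_le_sum fun z _ =>
        mul_le_one₀ (A_le_one _ _ _) (A_nonneg _ _ _) (A_le_one _ _ _)
    _ = n := by simp

lemma cE_nonneg (x : Config n) (e : Edge n) : 0 ≤ cE x e := by
  obtain ⟨v, w, hvw, he⟩ := edge_cases e
  rw [cE_eq _ he]; exact cod_nonneg x v w

lemma cE_le (x : Config n) (e : Edge n) : cE x e ≤ n := by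
  obtain ⟨v, w, hvw, he⟩ := edge_cases e
  rw [cE_eq _ he]; exact cod_le x v w

lemma dg_nonneg (x : Config n) (v : Fin n) : 0 ≤ dg x v :=
  Finset.sum_nonneg fun z _ => A_nonneg _ _ _

lemma dg_le (x : Config n) (v : Fin n) : dg x v ≤ n := by
  calc dg x v ≤ ∑ _z : Fin n, (1 : ℝ) := Finset.sum_le_sum fun z _ => A_le_one _ _ _
    _ = n := by simp

lemma Tr_nonneg (x : Config n) : 0 ≤ Tr x := Nat.cast_nonneg _

lemma Tr_le (x : Config n) : Tr x ≤ (n : ℝ) ^ 3 := by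
  have h := six_Tr x
  have h2 : ∑ a, ∑ b, ∑ c, A x a b * A x b c * A x c a
      ≤ ∑ _a : Fin n, ∑ _b : Fin n, ∑ _c : Fin n, (1 : ℝ) :=
    Finset.sum_le_sum fun a _ => Finset.sum_le_sum fun b _ => Finset.sum_le_sum fun c _ =>
      mul_le_one₀ (mul_le_one₀ (A_le_one _ _ _) (A_nonneg _ _ _) (A_le_one _ _ _))
        (A_nonneg _ _ _) (A_le_one _ _ _)
  simp only [Finset.sum_const, Finset.card_univ, Fintype.card_fin, nsmul_eq_mul, mul_one] at h2
  have : (0 : ℝ) ≤ (n : ℝ) ^ 3 := by positivity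
  nlinarith

lemma Ec_nonneg (x : Config n) : 0 ≤ Ec x := Finset.sum_nonneg fun e _ => xr_nonneg x e

lemma card_edge_le : (Fintype.card (Edge n) : ℝ) ≤ (n : ℝ) ^ 2 / 2 := by
  have := card_edge (n := n)
  nlinarith [Nat.cast_nonneg (α := ℝ) n]

lemma Ec_le (x : Config n) : Ec x ≤ (n : ℝ) ^ 2 / 2 := by
  calc Ec x ≤ ∑ _e : Edge n, (1 : ℝ) := Finset.sum_le_sum fun e _ => xr_le_one x e
    _ = Fintype.card (Edge n) := by simp
    _ ≤ _ := card_edge_le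

end Deriv

/-! ### Gibbs measures -/

section Gibbs
variable {E : Type*} [Fintype E] [DecidableEq E]

/-- Gibbs weight of an energy function. -/
def gib {Ω : Type*} [Fintype Ω] (H : Ω → ℝ) (x : Ω) : ℝ := Real.exp (H x) / ∑ y, Real.exp (H y)

lemma gib_prob {Ω : Type*} [Fintype Ω] [Nonempty Ω] (H : Ω → ℝ) : IsProb (gib H) := by
  have hZ : 0 < ∑ y, Real.exp (H y) :=
    Finset.sum_pos (fun y _ => Real.exp_pos _) Finset.univ_nonempty
  refine ⟨fun x => div_pos (Real.exp_pos _) hZ, ?_⟩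
  simp only [gib]
  rw [← Finset.sum_div, div_self hZ.ne']

lemma gib_pr (H : (E → Bool) → ℝ) (e : E) (x : E → Bool) :
    pr (gib H) e x = Real.sigmoid (Dl e H x) := by
  have hZ : 0 < ∑ y, Real.exp (H y) :=
    Finset.sum_pos (fun y _ => Real.exp_pos _) Finset.univ_nonempty
  have h1 := Real.exp_pos (H (up x e true))
  have h2 := Real.exp_pos (H (up x e false))
  rw [pr, gib, gib, Real.sigmoid_def, Dl, neg_sub, Real.exp_sub, ← add_div]
  field_simp

lemma sig_deriv_le (x : ℝ) : Real.sigmoid x * (1 - Real.sigmoid x) ≤ 1 / 4 := by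
  nlinarith [sq_nonneg (Real.sigmoid x - 1 / 2)]

lemma sig_lip (s t : ℝ) : |Real.sigmoid s - Real.sigmoid t| ≤ 1 / 4 * |s - t| := by
  have := Convex.norm_image_sub_le_of_norm_hasDerivWithin_le (f := Real.sigmoid)
    (f' := fun x => Real.sigmoid x * (1 - Real.sigmoid x)) (s := Set.univ) (C := 1 / 4)
    (x := t) (y := s)
    (fun x _ => (Real.hasDerivAt_sigmoid x).hasDerivWithinAt) (fun x _ => by
      rw [Real.norm_of_nonneg (mul_nonneg (Real.sigmoid_nonneg x)
        (by linarith [Real.sigmoid_le_one x]))]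
      exact sig_deriv_le x) convex_univ (Set.mem_univ _) (Set.mem_univ _)
  simpa [Real.norm_eq_abs] using this

lemma sig_deriv_lip (s t : ℝ) : |Real.sigmoid s * (1 - Real.sigmoid s)
    - Real.sigmoid t * (1 - Real.sigmoid t)| ≤ 1 / 4 * |s - t| := by
  have h : Real.sigmoid s * (1 - Real.sigmoid s) - Real.sigmoid t * (1 - Real.sigmoid t)
      = (Real.sigmoid s - Real.sigmoid t) * (1 - Real.sigmoid s - Real.sigmoid t) := by ring
  rw [h, abs_mul]
  have h2 : |1 - Real.sigmoid s - Real.sigmoid t| ≤ 1 := by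
    rw [abs_le]
    constructor <;> linarith [Real.sigmoid_nonneg s, Real.sigmoid_nonneg t, Real.sigmoid_le_one s,
      Real.sigmoid_le_one t]
  calc _ ≤ |Real.sigmoid s - Real.sigmoid t| * 1 := by gcongr
    _ ≤ _ := by rw [mul_one]; exact sig_lip s t

/-- Linearization of the sigmoid around `a`. -/
lemma sig_lin (a s t : ℝ) : |Real.sigmoid s - Real.sigmoid t
    - Real.sigmoid a * (1 - Real.sigmoid a) * (s - t)| ≤ (|s - a| + |t - a|) * |s - t| := by
  set v := Real.sigmoid a * (1 - Real.sigmoid a)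
  have hd : ∀ x, HasDerivAt (fun x => Real.sigmoid x - v * x)
      (Real.sigmoid x * (1 - Real.sigmoid x) - v) x := fun x => by
    have := (Real.hasDerivAt_sigmoid x).sub ((hasDerivAt_id x).const_mul v)
    rw [mul_one] at this
    exact this
  have := Convex.norm_image_sub_le_of_norm_hasDerivWithin_le (f := fun x => Real.sigmoid x - v * x)
    (f' := fun x => Real.sigmoid x * (1 - Real.sigmoid x) - v) (s := Set.uIcc t s)
    (C := |s - a| + |t - a|) (x := t) (y := s)
    (fun x _ => (hd x).hasDerivWithinAt) (fun x hx => by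
      refine (sig_deriv_lip x a).trans ?_
      have : |x - a| ≤ |s - a| + |t - a| := by
        rw [Set.mem_uIcc] at hx
        rcases abs_cases (x - a) with h | h <;> rcases abs_cases (s - a) with h1 | h1 <;>
          rcases abs_cases (t - a) with h2 | h2 <;> rcases hx with h3 | h3 <;> linarith
      linarith [abs_nonneg (x - a)]) (convex_uIcc t s) Set.left_mem_uIcc Set.right_mem_uIcc
  simp only [Real.norm_eq_abs] at this
  convert this using 2
  ring

lemma sig_lip2 (a s t : ℝ) : |Real.sigmoid s - Real.sigmoid t| ≤
    (Real.sigmoid a * (1 - Real.sigmoid a) + (|s - a| + |t - a|)) * |s - t| := by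
  have h := sig_lin a s t
  have hv : 0 ≤ Real.sigmoid a * (1 - Real.sigmoid a) :=
    mul_nonneg (Real.sigmoid_nonneg a) (by linarith [Real.sigmoid_le_one a])
  have h2 := abs_sub_abs_le_abs_sub (Real.sigmoid s - Real.sigmoid t)
    (Real.sigmoid a * (1 - Real.sigmoid a) * (s - t))
  rw [abs_mul, abs_of_nonneg hv] at h2
  linarith

end Gibbs

section GibbsGraph
variable {n : ℕ}

/-- Energy of the edge-triangle model with an edge-dependent field. -/
def HH (α : ℝ) (b : Edge n → ℝ) (x : Config n) : ℝ := α / n * Tr x + ∑ e, b e * xr x e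

lemma HH_Dl (α : ℝ) (b : Edge n → ℝ) (x : Config n) (e : Edge n) :
    Dl e (HH α b) x = b e + α / n * cE x e := by
  have h1 := Tr_Dl x e
  have h2 := lin_Dl b x e
  simp only [Dl, HH] at *
  rw [← h1]
  linear_combination h2

/-- The edge-triangle Gibbs measure. -/
def PP (n : ℕ) (α h : ℝ) : Config n → ℝ := gib (HH α (fun _ => h))

lemma PP_prob (n : ℕ) (α h : ℝ) : IsProb (PP n α h) := gib_prob _

lemma PP_pr (α h : ℝ) (x : Config n) (e : Edge n) :
    pr (PP n α h) e x = Real.sigmoid (h + α / n * cE x e) := by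
  rw [PP, gib_pr, HH_Dl]

lemma HH_const (α h : ℝ) (x : Config n) : HH α (fun _ => h) x = ham n α h x := by
  rw [HH, ham, ← Finset.mul_sum, ← Ec_eq]; rfl

/-- Both copies of the adjacency matrix enter a weighted difference of codegrees symmetrically. -/
lemma sum_cod_diff (W : Fin n → Fin n → ℝ) (hW : ∀ v w, W v w = W w v) (hW0 : ∀ v w, 0 ≤ W v w)
    (x y : Config n) : ∑ v, ∑ w, W v w * |cod x v w - cod y v w|
      ≤ ∑ w, ∑ z, |A x w z - A y w z| * ∑ v, W v w * (A x v z + A y v z) := by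
  have h1 : ∀ v w, W v w * |cod x v w - cod y v w| ≤ ∑ z, (1 / 2 * (|A x v z - A y v z|
      * (W v w * (A x w z + A y w z))) + 1 / 2 * (|A x w z - A y w z|
      * (W v w * (A x v z + A y v z)))) := by
    intro v w
    rw [cod, cod, ← Finset.sum_sub_distrib]
    refine (mul_le_mul_of_nonneg_left (Finset.abs_sum_le_sum_abs _ _) (hW0 v w)).trans ?_
    rw [Finset.mul_sum]
    refine Finset.sum_le_sum fun z _ => ?_
    have e : A x v z * A x w z - A y v z * A y w z = 1 / 2 * ((A x v z - A y v z)
        * (A x w z + A y w z)) + 1 / 2 * ((A x w z - A y w z) * (A x v z + A y v z)) := by ring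
    have p1 : 0 ≤ A x w z + A y w z := add_nonneg (A_nonneg _ _ _) (A_nonneg _ _ _)
    have p2 : 0 ≤ A x v z + A y v z := add_nonneg (A_nonneg _ _ _) (A_nonneg _ _ _)
    rw [e]
    refine (mul_le_mul_of_nonneg_left (abs_add_le _ _) (hW0 v w)).trans (le_of_eq ?_)
    rw [abs_mul, abs_mul, abs_mul, abs_mul, abs_of_nonneg p1, abs_of_nonneg p2,
      abs_of_nonneg (by norm_num : (0 : ℝ) ≤ 1 / 2)]
    ring
  refine (Finset.sum_le_sum fun v _ => Finset.sum_le_sum fun w _ => h1 v w).trans (le_of_eq ?_)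
  simp only [Finset.sum_add_distrib]
  have e2 : ∑ v, ∑ w, ∑ z, 1 / 2 * (|A x w z - A y w z| * (W v w * (A x v z + A y v z)))
      = 1 / 2 * ∑ w, ∑ z, |A x w z - A y w z| * ∑ v, W v w * (A x v z + A y v z) := by
    simp only [Finset.mul_sum]
    rw [Finset.sum_comm]
    refine Finset.sum_congr rfl fun w _ => ?_
    rw [Finset.sum_comm]
  have e1 : ∑ v, ∑ w, ∑ z, 1 / 2 * (|A x v z - A y v z| * (W v w * (A x w z + A y w z)))
      = 1 / 2 * ∑ w, ∑ z, |A x w z - A y w z| * ∑ v, W v w * (A x v z + A y v z) := by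
    rw [← e2, Finset.sum_comm]
    refine Finset.sum_congr rfl fun w _ => Finset.sum_congr rfl fun v _ =>
      Finset.sum_congr rfl fun z _ => by rw [hW]
  rw [e1, e2]; ring

lemma two_Dh (x y : Config n) : ∑ v, ∑ w, |A x v w - A y v w| = 2 * Dh x y := by
  have := sum_pairs (n := n) (fun s => |val x s - val y s|)
  simp only [val_edge] at this
  rw [Dh, ← this]
  refine Finset.sum_congr rfl fun v _ => Finset.sum_congr rfl fun w _ => ?_
  by_cases h : v = w
  · simp [h]
  · simp [h, A]

/-- Contraction criterion: a uniform bound on weighted degrees gives a bound for the sum of the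
differences of the conditional probabilities. -/
lemma contraction_of_weights {α h : ℝ} (W : Fin n → Fin n → ℝ) (hW : ∀ v w, W v w = W w v)
    (hW0 : ∀ v w, 0 ≤ W v w) (x y : Config n)
    (hp : ∀ v w, |Real.sigmoid (h + α / n * cod x v w) - Real.sigmoid (h + α / n * cod y v w)|
      ≤ W v w * |cod x v w - cod y v w|)
    {M : ℝ} (hM : ∀ w z, ∑ v, W v w * (A x v z + A y v z) ≤ M) :
    ∑ e, |pr (PP n α h) e x - pr (PP n α h) e y| ≤ M * Dh x y := by
  set g : Sym2 (Fin n) → ℝ := lft (fun v w => W v w * |cod x v w - cod y v w|)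
    (fun v w => by rw [hW, cod_symm x, cod_symm y]) with hg
  have hg0 : ∀ s, 0 ≤ g s := by
    intro s
    induction s using Sym2.ind with
    | _ v w => exact mul_nonneg (hW0 v w) (abs_nonneg _)
  have h1 : ∑ e, |pr (PP n α h) e x - pr (PP n α h) e y| ≤ ∑ e : Edge n, g e.1 := by
    refine Finset.sum_le_sum fun e _ => ?_
    obtain ⟨v, w, hvw, he⟩ := edge_cases e
    rw [PP_pr, PP_pr, cE_eq _ he, cE_eq _ he, he]
    exact hp v w
  have h2 := sum_pairs_le g hg0
  have h3 : ∑ v : Fin n, ∑ w : Fin n, g s(v, w)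
      ≤ ∑ w, ∑ z, |A x w z - A y w z| * ∑ v, W v w * (A x v z + A y v z) :=
    sum_cod_diff W hW hW0 x y
  have h4 : ∑ w, ∑ z, |A x w z - A y w z| * ∑ v, W v w * (A x v z + A y v z)
      ≤ ∑ w, ∑ z, |A x w z - A y w z| * M :=
    Finset.sum_le_sum fun w _ => Finset.sum_le_sum fun z _ =>
      mul_le_mul_of_nonneg_left (hM w z) (abs_nonneg _)
  simp only [← Finset.sum_mul, two_Dh] at h4
  linarith

/-- High-temperature contraction. -/
lemma contraction_high {α h : ℝ} (x y : Config n) :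
    ∑ e, |pr (PP n α h) e x - pr (PP n α h) e y| ≤ |α| / 2 * Dh x y := by
  refine contraction_of_weights (fun _ _ => |α| / (4 * n)) (fun _ _ => rfl)
    (fun _ _ => by positivity) x y (fun v w => ?_) (fun w z => ?_)
  · refine (sig_lip _ _).trans (le_of_eq ?_)
    rw [show h + α / n * cod x v w - (h + α / n * cod y v w)
      = α / n * (cod x v w - cod y v w) by ring, abs_mul, abs_div, Nat.abs_cast]
    ring
  · have hn : (0 : ℝ) < n := by
      have := w.pos; exact_mod_cast this
    calc ∑ v, |α| / (4 * n) * (A x v z + A y v z) ≤ ∑ _v : Fin n, |α| / (4 * n) * 2 :=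
          Finset.sum_le_sum fun v _ => by
            have := A_le_one x v z
            have := A_le_one y v z
            gcongr; linarith
      _ = |α| / 2 := by
          simp only [Finset.sum_const, Finset.card_univ, Fintype.card_fin, nsmul_eq_mul]
          field_simp; norm_num

/-- Quasirandomness at density `u`: all vertex pairs of subsets have nearly `u` as density. -/
def CG (u ε : ℝ) : Set (Config n) :=
  {x | ∀ S S' : Finset (Fin n), |∑ a ∈ S, ∑ b ∈ S', (A x a b - u)| ≤ ε * n ^ 2}

/-- All degrees are close to `u n`. -/
def DG (u ε : ℝ) : Set (Config n) := {x | ∀ v, |dg x v - u * n| ≤ ε * n}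

/-- In a quasirandom, nearly regular graph the codegrees are close to `u² n` on average. -/
lemma sum_cod_dev {u ε : ℝ} (hu0 : 0 ≤ u) (hu1 : u ≤ 1) {x : Config n} (h1 : x ∈ CG u ε)
    (h2 : x ∈ DG u ε) (w : Fin n) : ∑ v, |cod x v w - u ^ 2 * n| ≤ 4 * ε * n ^ 2 := by
  classical
  have key : ∀ S : Finset (Fin n), |∑ v ∈ S, (cod x v w - u ^ 2 * n)| ≤ 2 * ε * n ^ 2 := by
    intro S
    have e1 : ∀ v, cod x v w - u ^ 2 * n
        = ∑ z ∈ Finset.univ.filter (fun z => A x w z = 1), (A x v z - u) + u * (dg x w - u * n) := by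
      intro v
      have : ∀ z, A x v z * A x w z = (if A x w z = 1 then (A x v z - u) else 0) + u * A x w z := by
        intro z
        rcases A_zero_or_one x w z with h | h <;> simp [h]
      rw [cod, Finset.sum_congr rfl fun z _ => this z, Finset.sum_add_distrib, Finset.sum_filter,
        ← Finset.mul_sum, dg]
      ring
    rw [Finset.sum_congr rfl fun v _ => e1 v, Finset.sum_add_distrib]
    refine (abs_add_le _ _).trans ?_
    have b1 := h1 S (Finset.univ.filter (fun z => A x w z = 1))
    have b2 : |∑ _v ∈ S, u * (dg x w - u * n)| ≤ ε * n ^ 2 := by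
      rw [Finset.sum_const, nsmul_eq_mul, abs_mul, Nat.abs_cast, abs_mul, abs_of_nonneg hu0]
      have hc : (S.card : ℝ) ≤ n := by
        have := Finset.card_le_univ S
        rw [Fintype.card_fin] at this; exact_mod_cast this
      have := h2 w
      calc (S.card : ℝ) * (u * |dg x w - u * n|) ≤ n * (1 * (ε * n)) := by gcongr
        _ = _ := by ring
    linarith
  have h3 : ∑ v, |cod x v w - u ^ 2 * n| = ∑ v ∈ Finset.univ.filter
      (fun v => 0 ≤ cod x v w - u ^ 2 * n), (cod x v w - u ^ 2 * n)
      - ∑ v ∈ Finset.univ.filter (fun v => ¬ 0 ≤ cod x v w - u ^ 2 * n),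
        (cod x v w - u ^ 2 * n) := by
    rw [← Finset.sum_filter_add_sum_filter_not Finset.univ
      (fun v => 0 ≤ cod x v w - u ^ 2 * n) (fun v => |cod x v w - u ^ 2 * n|), sub_eq_add_neg,
      ← Finset.sum_neg_distrib]
    congr 1 <;> refine Finset.sum_congr rfl fun v hv => ?_
    · exact abs_of_nonneg (Finset.mem_filter.1 hv).2
    · exact abs_of_neg (not_le.1 (Finset.mem_filter.1 hv).2)
  rw [h3]
  have k1 := (abs_le.1 (key (Finset.univ.filter (fun v => 0 ≤ cod x v w - u ^ 2 * n)))).2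
  have k2 := (abs_le.1 (key (Finset.univ.filter (fun v => ¬ 0 ≤ cod x v w - u ^ 2 * n)))).1
  linarith

/-- Contraction near a maximizer with `u = σ(h + α u²)`. -/
lemma contraction_low {α h u ε : ℝ} (hα : 0 ≤ α) (hu0 : 0 ≤ u) (hu1 : u ≤ 1)
    (hfix : Real.sigmoid (h + α * u ^ 2) = u)
    (x y : Config n) (hx1 : x ∈ CG u ε) (hx2 : x ∈ DG u ε) (hy1 : y ∈ CG u ε) (hy2 : y ∈ DG u ε) :
    ∑ e, |pr (PP n α h) e x - pr (PP n α h) e y|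
      ≤ (2 * α * u * (u * (1 - u)) + (2 * α + 16 * α ^ 2) * ε) * Dh x y := by
  have hv0 : 0 ≤ u * (1 - u) := mul_nonneg hu0 (by linarith)
  have hv1 : u * (1 - u) ≤ 1 := by nlinarith
  refine contraction_of_weights (fun v w => (u * (1 - u) + (|α / n * cod x v w - α * u ^ 2|
    + |α / n * cod y v w - α * u ^ 2|)) * (α / n))
    (fun v w => by rw [cod_symm x, cod_symm y]) (fun v w => by positivity) x y (fun v w => ?_)
    (fun w z => ?_)
  · have := sig_lip2 (h + α * u ^ 2) (h + α / n * cod x v w) (h + α / n * cod y v w)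
    rw [hfix] at this
    refine this.trans (le_of_eq ?_)
    rw [show h + α / n * cod x v w - (h + α / n * cod y v w)
      = α / n * (cod x v w - cod y v w) by ring, abs_mul, abs_of_nonneg (by positivity : 0 ≤ α / n)]
    rw [show h + α / n * cod x v w - (h + α * u ^ 2) = α / n * cod x v w - α * u ^ 2 by ring,
      show h + α / n * cod y v w - (h + α * u ^ 2) = α / n * cod y v w - α * u ^ 2 by ring]
    ring
  · have hn : (0 : ℝ) < n := by
      have := w.pos; exact_mod_cast this
    have hdev : ∀ x : Config n, ∀ v, |α / n * cod x v w - α * u ^ 2|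
        = α / n * |cod x v w - u ^ 2 * n| := fun x v => by
      rw [← abs_of_nonneg (by positivity : 0 ≤ α / n), ← abs_mul, abs_of_nonneg
        (by positivity : 0 ≤ α / n)]
      congr 1; field_simp
    have hdz : ∀ x : Config n, ∑ v, A x v z = dg x z := fun x =>
      Finset.sum_congr rfl fun v _ => A_symm x v z
    have hx3 := (abs_le.1 (hx2 z)).2
    have hy3 := (abs_le.1 (hy2 z)).2
    have hx4 := sum_cod_dev hu0 hu1 hx1 hx2 w
    have hy4 := sum_cod_dev hu0 hu1 hy1 hy2 w
    have hε : 0 ≤ ε := by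
      have := (abs_nonneg _).trans (hx2 z)
      exact nonneg_of_mul_nonneg_left this hn
    calc ∑ v, (u * (1 - u) + (|α / n * cod x v w - α * u ^ 2|
          + |α / n * cod y v w - α * u ^ 2|)) * (α / n) * (A x v z + A y v z)
        ≤ ∑ v, (α / n * (u * (1 - u)) * (A x v z + A y v z)
          + 2 * (α / n) ^ 2 * (|cod x v w - u ^ 2 * n| + |cod y v w - u ^ 2 * n|)) := by
          refine Finset.sum_le_sum fun v _ => ?_
          rw [hdev, hdev]
          have ha : A x v z + A y v z ≤ 2 := by linarith [A_le_one x v z, A_le_one y v z]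
          have hb : 0 ≤ (α / n) ^ 2 * (|cod x v w - u ^ 2 * n| + |cod y v w - u ^ 2 * n|) := by
            positivity
          have := mul_le_mul_of_nonneg_left ha hb
          nlinarith
      _ = α / n * (u * (1 - u)) * (dg x z + dg y z) + 2 * (α / n) ^ 2 *
          (∑ v, |cod x v w - u ^ 2 * n| + ∑ v, |cod y v w - u ^ 2 * n|) := by
          rw [Finset.sum_add_distrib, ← Finset.mul_sum, ← Finset.mul_sum, Finset.sum_add_distrib,
            Finset.sum_add_distrib, hdz, hdz]
      _ ≤ α / n * (u * (1 - u)) * (2 * u * n + 2 * ε * n) + 2 * (α / n) ^ 2 *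
          (4 * ε * n ^ 2 + 4 * ε * n ^ 2) := by
          have : dg x z + dg y z ≤ 2 * u * n + 2 * ε * n := by linarith
          gcongr
      _ = 2 * α * u * (u * (1 - u)) + 2 * α * (u * (1 - u)) * ε + 16 * α ^ 2 * ε := by
          field_simp; ring
      _ ≤ _ := by
          have : 2 * α * (u * (1 - u)) * ε ≤ 2 * α * 1 * ε := by gcongr
          linarith

end GibbsGraph

/-! ### Conditional expectations and product measures on finite spaces -/

section Cnd
variable {Ω β : Type*} [Fintype Ω] [DecidableEq β]

/-- Mass of the fibre of `r` through `x`. -/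
def wt (μ : Ω → ℝ) (r : Ω → β) (x : Ω) : ℝ := ∑ y, if r y = r x then μ y else 0

/-- Conditional expectation of `f` given the map `r`. -/
def cnd (μ : Ω → ℝ) (r : Ω → β) (f : Ω → ℝ) (x : Ω) : ℝ :=
  (∑ y, if r y = r x then μ y * f y else 0) / wt μ r x

variable {μ : Ω → ℝ} {r : Ω → β}

lemma wt_pos (hμ : IsProb μ) (x : Ω) : 0 < wt μ r x := by
  refine Finset.sum_pos' (fun y _ => ?_) ⟨x, Finset.mem_univ _, ?_⟩
  · split_ifs
    · exact (hμ.pos y).le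
    · exact le_rfl
  · simp [hμ.pos x]

lemma cnd_meas (f : Ω → ℝ) {x y : Ω} (h : r x = r y) : cnd μ r f x = cnd μ r f y := by
  simp only [cnd, wt, h]

lemma cnd_congr {f g : Ω → ℝ} (h : ∀ x, f x = g x) (x : Ω) : cnd μ r f x = cnd μ r g x := by
  have : f = g := funext h
  rw [this]

/-- Pull-out property of conditional expectations. -/
lemma EE_mul_cnd (hμ : IsProb μ) (f g : Ω → ℝ) (hg : ∀ x y, r x = r y → g x = g y) :
    EE μ (fun x => g x * cnd μ r f x) = EE μ (fun x => g x * f x) := by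
  have h1 : EE μ (fun x => g x * cnd μ r f x)
      = ∑ x, ∑ y, if r y = r x then μ x * (g y * (μ y * f y / wt μ r y)) else 0 := by
    simp only [EE, smul_eq_mul, cnd]
    refine Finset.sum_congr rfl fun x _ => ?_
    rw [Finset.sum_div, Finset.mul_sum, Finset.mul_sum]
    refine Finset.sum_congr rfl fun y _ => ?_
    split_ifs with h
    · have : wt μ r x = wt μ r y := by simp only [wt, h]
      rw [hg x y h.symm, this]
    · simp
  rw [h1, Finset.sum_comm]
  simp only [EE, smul_eq_mul]
  refine Finset.sum_congr rfl fun y _ => ?_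
  have h2 : ∑ x, (if r y = r x then μ x * (g y * (μ y * f y / wt μ r y)) else 0)
      = wt μ r y * (g y * (μ y * f y / wt μ r y)) := by
    generalize g y * (μ y * f y / wt μ r y) = K
    rw [wt, Finset.sum_mul]
    refine Finset.sum_congr rfl fun x _ => ?_
    by_cases h : r y = r x
    · rw [if_pos h, if_pos h.symm]
    · rw [if_neg h, if_neg (Ne.symm h), zero_mul]
  rw [h2]
  have := (wt_pos (r := r) hμ y).ne'
  field_simp

lemma EE_cnd (hμ : IsProb μ) (f : Ω → ℝ) : EE μ (cnd μ r f) = EE μ f := by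
  have := EE_mul_cnd (r := r) hμ f (fun _ => 1) (fun _ _ _ => rfl)
  simpa using this

lemma cnd_nonneg (hμ : IsProb μ) {f : Ω → ℝ} (hf : ∀ x, 0 ≤ f x) (x : Ω) : 0 ≤ cnd μ r f x := by
  refine div_nonneg (Finset.sum_nonneg fun y _ => ?_) (wt_pos hμ x).le
  split_ifs
  · exact mul_nonneg (hμ.pos y).le (hf y)
  · exact le_rfl

lemma cnd_le_one (hμ : IsProb μ) {f : Ω → ℝ} (hf : ∀ x, f x ≤ 1) (x : Ω) : cnd μ r f x ≤ 1 := by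
  rw [cnd, div_le_one (wt_pos hμ x), wt]
  refine Finset.sum_le_sum fun y _ => ?_
  split_ifs
  · exact mul_le_of_le_one_right (hμ.pos y).le (hf y)
  · exact le_rfl

lemma cnd_pos (hμ : IsProb μ) {f : Ω → ℝ} (hf : ∀ x, 0 ≤ f x) {x : Ω} (hx : 0 < f x) :
    0 < cnd μ r f x := by
  refine div_pos (Finset.sum_pos' (fun y _ => ?_) ⟨x, Finset.mem_univ _, ?_⟩) (wt_pos hμ x)
  · split_ifs
    · exact mul_nonneg (hμ.pos y).le (hf y)
    · exact le_rfl
  · simp [mul_pos (hμ.pos x) hx]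

lemma cnd_one_sub (hμ : IsProb μ) (f : Ω → ℝ) (x : Ω) :
    cnd μ r (fun y => 1 - f y) x = 1 - cnd μ r f x := by
  have := (wt_pos (r := r) hμ x).ne'
  rw [cnd, cnd, eq_sub_iff_add_eq, ← add_div, ← Finset.sum_add_distrib, div_eq_one_iff_eq this, wt]
  refine Finset.sum_congr rfl fun y _ => ?_
  split_ifs <;> ring

/-- Pythagoras for nested conditional expectations. -/
lemma cnd_pyth {γ : Type*} [DecidableEq γ] {r' : Ω → γ} (hμ : IsProb μ) (f : Ω → ℝ)
    (hr : ∀ x y, r' x = r' y → r x = r y) :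
    EE μ (fun x => (cnd μ r' f x - cnd μ r f x) ^ 2)
      = EE μ (fun x => cnd μ r' f x ^ 2) - EE μ (fun x => cnd μ r f x ^ 2) := by
  have h1 := EE_mul_cnd (r := r') hμ f (cnd μ r f) (fun x y h => cnd_meas f (hr x y h))
  have h2 := EE_mul_cnd (r := r) hμ f (cnd μ r f) (fun x y h => cnd_meas f h)
  have h3 : EE μ (fun x => (cnd μ r' f x - cnd μ r f x) ^ 2)
      = EE μ (fun x => (cnd μ r' f x ^ 2 - 2 * (cnd μ r f x * cnd μ r' f x)) + cnd μ r f x ^ 2) :=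
    EE_congr fun x => by ring
  have h4 : EE μ (fun x => cnd μ r f x ^ 2) = EE μ (fun x => cnd μ r f x * cnd μ r f x) :=
    EE_congr fun x => sq _
  rw [h3, EE_add, EE_sub, EE_mul_left, h1, ← h2, ← h4]; ring

end Cnd

section Prod
variable {E : Type*} [Fintype E] [DecidableEq E]

lemma sum_prod_bool (g : E → Bool → ℝ) :
    ∑ x : E → Bool, ∏ e, g e (x e) = ∏ e, (g e true + g e false) := by
  have := Finset.prod_univ_sum (fun _ : E => (Finset.univ : Finset Bool)) g
  rw [Fintype.piFinset_univ] at this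
  rw [← this]
  exact Finset.prod_congr rfl fun e _ => by rw [Fintype.sum_bool]

end Prod

/-! ### Mean-field upper bound for the partition function -/

section MF
variable {n : ℕ}

/-- The edge `e` has an endpoint in `S`. -/
def tch (S : Finset (Fin n)) (e : Edge n) : Prop := ∃ v ∈ S, v ∈ e.1

instance (S : Finset (Fin n)) (e : Edge n) : Decidable (tch S e) := by
  unfold tch; exact Classical.dec _

/-- Restriction of a configuration to the edges touching `S`. -/
def msk (S : Finset (Fin n)) (x : Config n) : Config n := fun e => if tch S e then x e else false

lemma msk_eq_of {S : Finset (Fin n)} {x y : Config n} (h : msk S x = msk S y) {e : Edge n}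
    (he : tch S e) : x e = y e := by
  have := congrFun h e
  simpa [msk, he] using this

lemma msk_mono {S S' : Finset (Fin n)} (hS : S ⊆ S') {x y : Config n} (h : msk S' x = msk S' y) :
    msk S x = msk S y := by
  funext e
  simp only [msk]
  split_ifs with he
  · obtain ⟨v, hv, hve⟩ := he
    exact msk_eq_of h ⟨v, hS hv, hve⟩
  · rfl

lemma A_msk {S : Finset (Fin n)} {x y : Config n} (h : msk S x = msk S y) {a : Fin n} (ha : a ∈ S)
    (b : Fin n) : A x a b = A y a b := by
  by_cases hd : (s(a, b)).IsDiag
  · simp [A, val, hd]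
  · rw [A_eq _ hd, A_eq _ hd, xr, xr, msk_eq_of h ⟨a, ha, by simp⟩]

lemma card_range_msk (S : Finset (Fin n)) :
    ((Finset.univ.image (msk S)).card : ℝ) ≤ 2 ^ (S.card * n) := by
  classical
  have h1 : (Finset.univ.image (msk S)).card ≤ 2 ^ (S.card * n) := by
    have hinj : ((Finset.univ : Finset ({v // v ∈ S} × Fin n → Bool)).card) = 2 ^ (S.card * n) := by
      simp
    rw [← hinj]
    refine Finset.card_le_card_of_injOn
      (fun x p => if h : p.1.1 = p.2 then false else x (mkE p.1.1 p.2 h)) (by simp) ?_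
    intro x hx y hy hxy
    simp only [Finset.coe_image, Finset.coe_univ, Set.image_univ, Set.mem_range] at hx hy
    obtain ⟨x, rfl⟩ := hx
    obtain ⟨y, rfl⟩ := hy
    funext e
    by_cases he : tch S e
    · obtain ⟨v, hv, hve⟩ := he
      obtain ⟨w, hw⟩ := Sym2.mem_iff_exists.1 hve
      have hvw : v ≠ w := by
        intro h; apply e.2; rw [hw, h]; simp
      have := congrFun hxy (⟨v, hv⟩, w)
      simp only [hvw, dite_false] at this
      have hE : mkE v w hvw = e := Subtype.ext hw.symm
      rwa [hE] at this
    · simp [msk, he]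
  exact_mod_cast h1

/-- Total square mass of the conditional edge probabilities. -/
def Phi (μ : Config n → ℝ) (S : Finset (Fin n)) : ℝ :=
  ∑ e, EE μ (fun x => cnd μ (msk S) (fun y => xr y e) x ^ 2)

/-- A vertex set maximizing `Phi S - δ |S|` is small, and no further vertex adds more than `δ`
of information. -/
lemma exists_good_set {μ : Config n → ℝ} (hμ : IsProb μ) {δ : ℝ} (hδ : 0 < δ) :
    ∃ S : Finset (Fin n), (S.card : ℝ) ≤ Fintype.card (Edge n) / δ ∧
      ∀ a, Phi μ (insert a S) - Phi μ S ≤ δ := by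
  classical
  obtain ⟨S, -, hS⟩ := Finset.exists_max_image (Finset.univ : Finset (Finset (Fin n)))
    (fun S => Phi μ S - δ * S.card) ⟨∅, Finset.mem_univ _⟩
  refine ⟨S, ?_, fun a => ?_⟩
  · have h1 := hS ∅ (Finset.mem_univ _)
    simp only [Finset.card_empty, Nat.cast_zero, mul_zero, sub_zero] at h1
    have h2 : 0 ≤ Phi μ ∅ := Finset.sum_nonneg fun e _ => EE_nonneg hμ fun x => sq_nonneg _
    have h3 : Phi μ S ≤ Fintype.card (Edge n) := by
      calc Phi μ S ≤ ∑ _e : Edge n, (1 : ℝ) := Finset.sum_le_sum fun e _ =>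
            EE_le_const hμ fun x => by
              have a1 := cnd_nonneg (r := msk S) hμ (fun y => xr_nonneg y e) x
              have a2 := cnd_le_one (r := msk S) hμ (fun y => xr_le_one y e) x
              exact pow_le_one₀ a1 a2
        _ = _ := by simp
    rw [le_div_iff₀ hδ]
    linarith
  · have h1 := hS (insert a S) (Finset.mem_univ _)
    have h2 : ((insert a S).card : ℝ) ≤ S.card + 1 := by exact_mod_cast Finset.card_insert_le a S
    nlinarith

lemma A_cnd_edge (μ : Config n → ℝ) (S : Finset (Fin n)) {e : Edge n} {v w : Fin n}
    (he : e.1 = s(v, w)) (x : Config n) :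
    cnd μ (msk S) (fun y => A y v w) x = cnd μ (msk S) (fun y => xr y e) x :=
  cnd_congr (fun y => by rw [← val_edge, he]; rfl) x

lemma cnd_A_self (μ : Config n → ℝ) (S : Finset (Fin n)) (v : Fin n) (x : Config n) :
    cnd μ (msk S) (fun y => A y v v) x = 0 := by
  simp [cnd]

lemma sum_pairs' (g : Fin n → Fin n → ℝ) (hg : ∀ v w, g v w = g w v) (h0 : ∀ v, g v v = 0)
    (f : Edge n → ℝ) (hf : ∀ e : Edge n, ∀ v w, e.1 = s(v, w) → g v w = f e) :
    ∑ v, ∑ w, g v w = 2 * ∑ e, f e := by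
  have := sum_pairs (lft g hg)
  have h2 : ∑ e : Edge n, lft g hg e.1 = ∑ e, f e := Finset.sum_congr rfl fun e _ => by
    obtain ⟨v, w, hvw, he⟩ := edge_cases e
    rw [← hf e v w he, he]; rfl
  rw [← h2, ← this]
  refine Finset.sum_congr rfl fun v _ => Finset.sum_congr rfl fun w _ => ?_
  split_ifs with h
  · rw [h, h0]
  · rfl

lemma sum_cnd_dev {μ : Config n → ℝ} (hμ : IsProb μ) {δ : ℝ} {S : Finset (Fin n)} (a : Fin n)
    (hS : Phi μ (insert a S) - Phi μ S ≤ δ) :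
    ∑ b, ∑ c, EE μ (fun x => |cnd μ (msk (insert a S)) (fun y => A y b c) x
      - cnd μ (msk S) (fun y => A y b c) x|) ≤ n * Real.sqrt (2 * δ) := by
  set D : Fin n → Fin n → Config n → ℝ := fun b c x =>
    cnd μ (msk (insert a S)) (fun y => A y b c) x - cnd μ (msk S) (fun y => A y b c) x with hD
  have h1 : ∑ b, ∑ c, EE μ (fun x => D b c x ^ 2) = 2 * (Phi μ (insert a S) - Phi μ S) := by
    rw [Phi, Phi, ← Finset.sum_sub_distrib]
    refine sum_pairs' (fun b c => EE μ (fun x => D b c x ^ 2)) (fun b c => EE_congr fun x => ?_)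
      (fun v => ?_) _ (fun e v w he => ?_)
    · simp only [hD]
      rw [cnd_congr (fun y => A_symm y b c) x, cnd_congr (fun y => A_symm y b c) x]
    · simp only [hD, cnd_A_self]
      simp [EE]
    · simp only [hD, A_cnd_edge μ _ he]
      exact cnd_pyth hμ _ fun x y h => msk_mono (Finset.subset_insert a S) h
  have h2 : (∑ b, ∑ c, EE μ (fun x => |D b c x|)) ^ 2 ≤ n ^ 2 * (2 * δ) := by
    rw [← Finset.sum_product']
    refine (sq_sum_le_card_mul_sum_sq).trans ?_
    rw [Finset.card_product, Finset.card_univ, Fintype.card_fin, ← sq]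
    push_cast
    gcongr
    calc _ ≤ ∑ p ∈ Finset.univ ×ˢ Finset.univ, EE μ (fun x => D p.1 p.2 x ^ 2) :=
          Finset.sum_le_sum fun p _ => by
            have := EE_sq_le hμ (fun x => |D p.1 p.2 x|)
            simpa only [sq_abs] using this
      _ = 2 * (Phi μ (insert a S) - Phi μ S) := by
          rw [← h1, Finset.sum_product]
      _ ≤ _ := by linarith
  have h3 := Real.le_sqrt_of_sq_le h2
  rwa [Real.sqrt_mul (by positivity), Real.sqrt_sq (by positivity)] at h3

/-- Decoupling of the triangle count. -/
lemma EE_Tr_le {μ : Config n → ℝ} (hμ : IsProb μ) {δ : ℝ} {S : Finset (Fin n)}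
    (hS : ∀ a, Phi μ (insert a S) - Phi μ S ≤ δ) :
    6 * EE μ Tr ≤ 2 * n * ∑ e, EE μ (fun x => cnd μ (msk S) (fun y => xr y e) x ^ 3)
      + 2 * n ^ 2 * Real.sqrt (2 * δ) := by
  set P : Fin n → Fin n → Config n → ℝ := fun b c => cnd μ (msk S) (fun y => A y b c) with hP
  have hP0 : ∀ b c x, 0 ≤ P b c x := fun b c x => cnd_nonneg hμ (fun y => A_nonneg y b c) x
  have hP1 : ∀ b c x, P b c x ≤ 1 := fun b c x => cnd_le_one hμ (fun y => A_le_one y b c) x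
  have hPs : ∀ b c x, P b c x = P c b x := fun b c x => cnd_congr (fun y => A_symm y b c) x
  set D : Fin n → Fin n → Fin n → ℝ := fun a b c =>
    EE μ (fun x => |cnd μ (msk (insert a S)) (fun y => A y b c) x
      - cnd μ (msk S) (fun y => A y b c) x|) with hD
  have hdec : ∀ a b c (g : Config n → ℝ),
      (∀ x y, msk (insert a S) x = msk (insert a S) y → g x = g y) →
      (∀ x, 0 ≤ g x) → (∀ x, g x ≤ 1) →
      EE μ (fun x => g x * A x b c) ≤ EE μ (fun x => g x * P b c x) + D a b c := by
    intro a b c g hg h0 h1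
    rw [← EE_mul_cnd (r := msk (insert a S)) hμ (fun y => A y b c) g hg, hD]
    simp only
    rw [← EE_add]
    refine EE_mono hμ fun x => ?_
    have h2 := le_abs_self (cnd μ (msk (insert a S)) (fun y => A y b c) x - P b c x)
    have h3 := mul_le_mul_of_nonneg_left h2 (h0 x)
    have h4 := mul_le_mul_of_nonneg_right (h1 x)
      (abs_nonneg (cnd μ (msk (insert a S)) (fun y => A y b c) x - P b c x))
    nlinarith
  have hterm : ∀ a b c, EE μ (fun x => A x a b * A x b c * A x c a)
      ≤ EE μ (fun x => P a b x * P b c x * P c a x) + D a b c + D b c a := by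
    intro a b c
    have ha : a ∈ insert a S := Finset.mem_insert_self _ _
    have hb : b ∈ insert b S := Finset.mem_insert_self _ _
    have s1 := hdec a b c (fun x => A x a b * A x c a)
      (fun x y h => by rw [A_msk h ha, A_symm x c a, A_symm y c a, A_msk h ha])
      (fun x => mul_nonneg (A_nonneg _ _ _) (A_nonneg _ _ _))
      (fun x => mul_le_one₀ (A_le_one _ _ _) (A_nonneg _ _ _) (A_le_one _ _ _))
    have s2 := hdec b c a (fun x => P b c x * A x a b)
      (fun x y h => by
        rw [A_symm x a b, A_symm y a b, A_msk h hb]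
        congr 1
        exact cnd_meas _ (msk_mono (Finset.subset_insert b S) h))
      (fun x => mul_nonneg (hP0 _ _ _) (A_nonneg _ _ _))
      (fun x => mul_le_one₀ (hP1 _ _ _) (A_nonneg _ _ _) (A_le_one _ _ _))
    have s3 := EE_mul_cnd (r := msk S) hμ (fun y => A y a b) (fun x => P b c x * P c a x)
      (fun x y h => by simp only [hP]; rw [cnd_meas _ h, cnd_meas (fun y => A y c a) h])
    have e1 : EE μ (fun x => A x a b * A x b c * A x c a)
        = EE μ (fun x => A x a b * A x c a * A x b c) := EE_congr fun x => by ring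
    have e2 : EE μ (fun x => A x a b * A x c a * P b c x)
        = EE μ (fun x => P b c x * A x a b * A x c a) := EE_congr fun x => by ring
    have e3 : EE μ (fun x => P b c x * A x a b * P c a x)
        = EE μ (fun x => P b c x * P c a x * A x a b) := EE_congr fun x => by ring
    have e4 : EE μ (fun x => P a b x * P b c x * P c a x)
        = EE μ (fun x => P b c x * P c a x * cnd μ (msk S) (fun y => A y a b) x) :=
      EE_congr fun x => by simp only [hP]; ring
    rw [e1, e4, s3, ← e3]
    rw [e2] at s1
    linarith
  have hamgm : ∀ a b c, EE μ (fun x => P a b x * P b c x * P c a x)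
      ≤ 1 / 3 * (EE μ (fun x => P a b x ^ 3) + EE μ (fun x => P b c x ^ 3)
        + EE μ (fun x => P c a x ^ 3)) := by
    intro a b c
    rw [← EE_add, ← EE_add, ← EE_mul_left]
    refine EE_mono hμ fun x => ?_
    have h1 := hP0 a b x
    have h2 := hP0 b c x
    have h3 := hP0 c a x
    nlinarith [mul_nonneg (add_nonneg (add_nonneg h1 h2) h3) (add_nonneg (add_nonneg
      (sq_nonneg (P a b x - P b c x)) (sq_nonneg (P b c x - P c a x)))
      (sq_nonneg (P c a x - P a b x)))]
  have hcube : ∑ b, ∑ c, EE μ (fun x => P b c x ^ 3)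
      = 2 * ∑ e, EE μ (fun x => cnd μ (msk S) (fun y => xr y e) x ^ 3) := by
    refine sum_pairs' (fun b c => EE μ (fun x => P b c x ^ 3)) (fun b c => EE_congr fun x => ?_)
      (fun v => ?_) _ (fun e v w he => ?_)
    · rw [hPs]
    · simp only [hP, cnd_A_self]
      simp [EE]
    · simp only [hP, A_cnd_edge μ _ he]
  have h6 : 6 * EE μ Tr = ∑ a, ∑ b, ∑ c, EE μ (fun x => A x a b * A x b c * A x c a) := by
    rw [← EE_mul_left]
    simp only [six_Tr, EE_sum]
  have hsum := Finset.sum_le_sum fun a (_ : a ∈ Finset.univ) => Finset.sum_le_sum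
    fun b (_ : b ∈ Finset.univ) => Finset.sum_le_sum fun c (_ : c ∈ Finset.univ) =>
      (hterm a b c).trans (add_le_add (add_le_add (hamgm a b c) le_rfl) le_rfl)
  rw [h6]
  refine hsum.trans ?_
  simp only [Finset.sum_add_distrib, ← Finset.mul_sum]
  have c1 : ∑ a : Fin n, ∑ b : Fin n, ∑ _c : Fin n, EE μ (fun x => P a b x ^ 3)
      = n * ∑ b, ∑ c, EE μ (fun x => P b c x ^ 3) := by
    simp only [Finset.sum_const, Finset.card_univ, Fintype.card_fin, nsmul_eq_mul,
      ← Finset.mul_sum]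
  have c2 : ∑ _a : Fin n, ∑ b : Fin n, ∑ c : Fin n, EE μ (fun x => P b c x ^ 3)
      = n * ∑ b, ∑ c, EE μ (fun x => P b c x ^ 3) := by
    simp only [Finset.sum_const, Finset.card_univ, Fintype.card_fin, nsmul_eq_mul]
  have c3 : ∑ a : Fin n, ∑ _b : Fin n, ∑ c : Fin n, EE μ (fun x => P c a x ^ 3)
      = n * ∑ b, ∑ c, EE μ (fun x => P b c x ^ 3) := by
    simp only [Finset.sum_const, Finset.card_univ, Fintype.card_fin, nsmul_eq_mul,
      ← Finset.mul_sum]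
    rw [Finset.sum_comm]
  have d1 : ∑ a, ∑ b, ∑ c, D a b c ≤ n * (n * Real.sqrt (2 * δ)) := by
    calc _ ≤ ∑ _a : Fin n, n * Real.sqrt (2 * δ) :=
          Finset.sum_le_sum fun a _ => sum_cnd_dev hμ a (hS a)
      _ = _ := by simp
  have d2 : ∑ a, ∑ b, ∑ c, D b c a ≤ n * (n * Real.sqrt (2 * δ)) := by
    rw [Finset.sum_comm]
    refine le_trans (le_of_eq ?_) d1
    refine Finset.sum_congr rfl fun a _ => ?_
    rw [Finset.sum_comm]
  rw [c1, c2, c3, hcube]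
  linarith

/-- Mean-field upper bound for the free energy with an edge-dependent field. -/
theorem logZ_le {α : ℝ} (hα : 0 ≤ α) (b F : Edge n → ℝ)
    (hF : ∀ e, ∀ p ∈ Set.Icc (0 : ℝ) 1, 2 * phiET α (b e) p ≤ F e) {η : ℝ} (hη : 0 < η)
    (hn : 0 < n) :
    Real.log (∑ x, Real.exp (HH α b x)) ≤ ∑ e, F e + α * Real.sqrt (2 * η) * n ^ 2 + n / η := by
  classical
  set μ := gib (HH α b) with hμdef
  have hμ : IsProb μ := gib_prob _
  have hn' : (0 : ℝ) < n := by exact_mod_cast hn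
  set Z := ∑ x, Real.exp (HH α b x) with hZdef
  have hZ : 0 < Z := Finset.sum_pos (fun y _ => Real.exp_pos _) Finset.univ_nonempty
  obtain ⟨S, hScard, hS⟩ := exists_good_set hμ (show 0 < η * n ^ 2 by positivity)
  set P : Edge n → Config n → ℝ := fun e => cnd μ (msk S) (fun y => xr y e) with hP
  have hP0 : ∀ e x, 0 ≤ P e x := fun e x => cnd_nonneg hμ (fun y => xr_nonneg y e) x
  have hP1 : ∀ e x, P e x ≤ 1 := fun e x => cnd_le_one hμ (fun y => xr_le_one y e) x
  have hPm : ∀ e x y, msk S x = msk S y → P e x = P e y := fun e x y h => cnd_meas _ h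
  set R : ℝ := ((Finset.univ.image (msk S)).card : ℝ) with hR
  have hRpos : 0 < R := by
    rw [hR]; exact_mod_cast Finset.card_pos.2 (Finset.univ_nonempty.image _)
  set Bf : Config n → Edge n → Bool → ℝ := fun y e c => if c then P e y else 1 - P e y with hB
  have hBpos : ∀ x e, 0 < Bf x e (x e) := by
    intro x e
    simp only [hB]
    cases hx : x e
    · simp only [Bool.false_eq_true, if_false]
      rw [← cnd_one_sub hμ]
      refine cnd_pos hμ (fun y => by linarith [xr_le_one y e]) ?_
      simp [xr, hx]
    · simp only [if_true]
      refine cnd_pos hμ (fun y => xr_nonneg y e) ?_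
      simp [xr, hx]
  set Q : Config n → ℝ := fun x => R⁻¹ * ∏ e, Bf x e (x e) with hQ
  have hQpos : ∀ x, 0 < Q x := fun x =>
    mul_pos (inv_pos.2 hRpos) (Finset.prod_pos fun e _ => hBpos x e)
  have hQ1 : ∑ x, Q x ≤ 1 := by
    rw [hQ, ← Finset.mul_sum, inv_mul_le_iff₀ hRpos, mul_one]
    have h1 : ∑ x, ∏ e, Bf x e (x e) = ∑ ρ ∈ Finset.univ.image (msk S),
        ∑ x ∈ Finset.univ.filter (fun x => msk S x = ρ), ∏ e, Bf x e (x e) :=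
      (Finset.sum_fiberwise_of_maps_to (fun x _ => Finset.mem_image_of_mem _ (Finset.mem_univ x))
        _).symm
    rw [h1, hR]
    have h2 : ∀ ρ ∈ Finset.univ.image (msk S),
        ∑ x ∈ Finset.univ.filter (fun x => msk S x = ρ), ∏ e, Bf x e (x e) ≤ 1 := by
      intro ρ hρ
      obtain ⟨y, -, rfl⟩ := Finset.mem_image.1 hρ
      have h3 : ∀ x ∈ Finset.univ.filter (fun x => msk S x = msk S y),
          ∏ e, Bf x e (x e) = ∏ e, Bf y e (x e) := by
        intro x hx
        refine Finset.prod_congr rfl fun e _ => ?_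
        simp only [hB]
        rw [hPm e x y (Finset.mem_filter.1 hx).2]
      rw [Finset.sum_congr rfl h3]
      calc _ ≤ ∑ x : Config n, ∏ e, Bf y e (x e) := by
            refine Finset.sum_le_sum_of_subset_of_nonneg (Finset.filter_subset _ _) fun x _ _ => ?_
            refine Finset.prod_nonneg fun e _ => ?_
            simp only [hB]
            split_ifs
            · exact hP0 e y
            · linarith [hP1 e y]
        _ = 1 := by
            rw [sum_prod_bool]
            simp [hB]
    calc _ ≤ ∑ _ρ ∈ Finset.univ.image (msk S), (1 : ℝ) := Finset.sum_le_sum h2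
      _ = _ := by simp
  have hG := gibbs_ineq hμ Q hQpos hQ1
  have hlogμ : ∀ x, Real.log (μ x) = HH α b x - Real.log Z := by
    intro x
    rw [hμdef, gib, Real.log_div (Real.exp_pos _).ne' hZ.ne', Real.log_exp]
  have hlogQ : ∀ x, Real.log (Q x) = -Real.log R + ∑ e, (Real.log (P e x) * xr x e
      + Real.log (1 - P e x) * (1 - xr x e)) := by
    intro x
    rw [hQ]
    simp only
    rw [Real.log_mul (inv_pos.2 hRpos).ne' (Finset.prod_pos fun e _ => hBpos x e).ne',
      Real.log_inv, Real.log_prod fun e _ => (hBpos x e).ne']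
    congr 1
    refine Finset.sum_congr rfl fun e _ => ?_
    simp only [hB, xr]
    cases x e <;> simp
  have hEQ : EE μ (fun x => Real.log (Q x)) = -Real.log R + ∑ e, EE μ (fun x => Ifun (P e x)) := by
    simp only [hlogQ]
    rw [EE_add, EE_const hμ, EE_sum]
    congr 1
    refine Finset.sum_congr rfl fun e _ => ?_
    rw [EE_add, ← EE_mul_cnd (r := msk S) hμ (fun x => xr x e) (fun x => Real.log (P e x))
      (fun x y h => by rw [hPm e x y h]),
      ← EE_mul_cnd (r := msk S) hμ (fun x => 1 - xr x e) (fun x => Real.log (1 - P e x))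
      (fun x y h => by rw [hPm e x y h]), ← EE_add]
    refine EE_congr fun x => ?_
    rw [cnd_one_sub hμ, Ifun]
    simp only [hP]
    ring
  have hEμ : EE μ (fun x => Real.log (μ x)) = EE μ (HH α b) - Real.log Z := by
    simp only [hlogμ]
    rw [EE_sub, EE_const hμ]
  have hEH : EE μ (HH α b) = α / n * EE μ Tr + ∑ e, b e * EE μ (P e) := by
    unfold HH
    rw [EE_add, EE_mul_left, EE_sum]
    congr 1
    refine Finset.sum_congr rfl fun e _ => ?_
    rw [EE_mul_left, hP, EE_cnd hμ]
  have hT := EE_Tr_le hμ hS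
  have hT2 : α / n * EE μ Tr ≤ α / 3 * ∑ e, EE μ (fun x => P e x ^ 3)
      + α * Real.sqrt (2 * η) * n ^ 2 := by
    have hsq : Real.sqrt (2 * (η * n ^ 2)) = Real.sqrt (2 * η) * n := by
      rw [← mul_assoc, Real.sqrt_mul (by positivity), Real.sqrt_sq hn'.le]
    rw [hsq] at hT
    have h0 : 0 ≤ α * Real.sqrt (2 * η) * n ^ 2 := by positivity
    calc α / n * EE μ Tr = α / (6 * n) * (6 * EE μ Tr) := by field_simp
      _ ≤ α / (6 * n) * (2 * n * ∑ e, EE μ (fun x => P e x ^ 3)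
          + 2 * n ^ 2 * (Real.sqrt (2 * η) * n)) := by
          refine mul_le_mul_of_nonneg_left hT (by positivity)
      _ = α / 3 * ∑ e, EE μ (fun x => P e x ^ 3) + (α * Real.sqrt (2 * η) * n ^ 2) / 3 := by
          field_simp; ring
      _ ≤ _ := by linarith
  have hF2 : ∀ e, α / 3 * EE μ (fun x => P e x ^ 3) + b e * EE μ (P e)
      - EE μ (fun x => Ifun (P e x)) ≤ F e := by
    intro e
    rw [← EE_mul_left, ← EE_mul_left, ← EE_add, ← EE_sub]
    refine EE_le_const hμ fun x => ?_
    have := hF e (P e x) ⟨hP0 e x, hP1 e x⟩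
    unfold phiET at this
    linarith
  have hF3 := Finset.sum_le_sum fun e (_ : e ∈ Finset.univ) => hF2 e
  rw [Finset.sum_sub_distrib, Finset.sum_add_distrib, ← Finset.mul_sum] at hF3
  have hlogR : Real.log R ≤ n / η := by
    have h1 := card_range_msk S
    have h2 : Real.log R ≤ Real.log (2 ^ (S.card * n)) := Real.log_le_log hRpos h1
    rw [Real.log_pow] at h2
    push_cast at h2
    have h3 : (S.card : ℝ) ≤ 1 / η := by
      refine hScard.trans ?_
      rw [div_le_div_iff₀ (by positivity) hη]
      have := card_edge_le (n := n)
      nlinarith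
    have h4 : Real.log 2 ≤ 1 := by linarith [Real.log_two_lt_d9]
    have h5 : 0 ≤ Real.log 2 := by linarith [Real.log_two_gt_d9]
    calc Real.log R ≤ S.card * n * Real.log 2 := h2
      _ ≤ (1 / η) * n * 1 := by gcongr
      _ = _ := by ring
  rw [hEQ, hEμ, hEH] at hG
  linarith

end MF

/-! ### Lower bound for the partition function -/

section Low
variable {n : ℕ}

lemma logit_eq (β : ℝ) : Real.log (1 + Real.exp β) = -Real.log (1 - Real.sigmoid β) := by
  rw [← Real.sigmoid_neg, Real.sigmoid_def, Real.log_inv, neg_neg, neg_neg]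

lemma logit_eq' (β : ℝ) :
    Real.log (Real.sigmoid β) = β + Real.log (1 - Real.sigmoid β) := by
  have h := Real.sigmoid_mul_rexp_neg β
  rw [Real.sigmoid_neg] at h
  have h2 : Real.sigmoid β = Real.exp β * (1 - Real.sigmoid β) := by
    rw [← h, mul_comm, mul_assoc, ← Real.exp_add]; simp
  conv_lhs => rw [h2]
  rw [Real.log_mul (Real.exp_pos _).ne' (by linarith [Real.sigmoid_lt_one β]), Real.log_exp]

lemma Ifun_sigmoid (β : ℝ) : Ifun (Real.sigmoid β)
    = β * Real.sigmoid β - Real.log (1 + Real.exp β) := by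
  rw [logit_eq, Ifun, logit_eq']; ring

lemma sum_exp_lin {E : Type*} [Fintype E] [DecidableEq E] (b : E → ℝ) :
    ∑ x : E → Bool, Real.exp (∑ e, b e * xr x e) = ∏ e, (1 + Real.exp (b e)) := by
  have := sum_prod_bool (fun (e : E) (c : Bool) => Real.exp (b e * if c then 1 else 0))
  simp only [if_true, mul_one, Bool.false_eq_true, if_false, mul_zero, Real.exp_zero] at this
  rw [show ∏ e, (1 + Real.exp (b e)) = ∏ e, (Real.exp (b e) + 1) from
    Finset.prod_congr rfl fun e _ => add_comm _ _, ← this]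
  refine Finset.sum_congr rfl fun x _ => ?_
  rw [Real.exp_sum]
  rfl

/-- Under a product measure an edge variable is independent of functions of the other edges. -/
lemma EE_nu_mul (β : ℝ) (e : Edge n) (F : Config n → ℝ) (hF : ∀ x, Dl e F x = 0) :
    EE (PP n 0 β) (fun x => xr x e * F x) = Real.sigmoid β * EE (PP n 0 β) F := by
  have h := EE_ibp_real (PP_prob n 0 β) e F
  have h2 : EE (PP n 0 β) (fun x => (xr x e - pr (PP n 0 β) e x) * F x)
      = EE (PP n 0 β) (fun x => xr x e * F x - Real.sigmoid β * F x) :=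
    EE_congr fun x => by rw [PP_pr]; simp [sub_mul]
  rw [h2, EE_sub, EE_mul_left] at h
  have h3 : EE (PP n 0 β) (fun x => pr (PP n 0 β) e x * (1 - pr (PP n 0 β) e x) * Dl e F x) = 0 := by
    have h4 := EE_const (PP_prob n 0 β) (0 : ℝ)
    refine Eq.trans (EE_congr fun x => ?_) h4
    rw [hF, mul_zero]
  linarith

lemma A_mkE (x : Config n) {v w : Fin n} (h : v ≠ w) : A x v w = xr x (mkE v w h) := A_eq x _

lemma A_up_ne (x : Config n) {v w a b : Fin n} (h : v ≠ w) (c : Bool) (hne : s(a, b) ≠ s(v, w)) :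
    A (up x (mkE v w h) c) a b = A x a b := by
  rw [A_up, if_neg]; exact hne

lemma EE_nu_tri (β : ℝ) {a b c : Fin n} (hab : a ≠ b) (hbc : b ≠ c) (hca : c ≠ a) :
    EE (PP n 0 β) (fun x => A x a b * A x b c * A x c a) = Real.sigmoid β ^ 3 := by
  have h1 : EE (PP n 0 β) (fun x => A x a b * A x b c * A x c a)
      = EE (PP n 0 β) (fun x => xr x (mkE a b hab) * (A x b c * A x c a)) :=
    EE_congr fun x => by rw [A_mkE x hab]; ring
  have h2 : EE (PP n 0 β) (fun x => A x b c * A x c a)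
      = EE (PP n 0 β) (fun x => xr x (mkE b c hbc) * (A x c a)) :=
    EE_congr fun x => by rw [A_mkE x hbc]
  have h3 : EE (PP n 0 β) (fun x => A x c a)
      = EE (PP n 0 β) (fun x => xr x (mkE c a hca) * 1) :=
    EE_congr fun x => by rw [A_mkE x hca]; ring
  rw [h1, EE_nu_mul, h2, EE_nu_mul, h3, EE_nu_mul, EE_const (PP_prob n 0 β)]
  · ring
  · intro x; simp [Dl]
  · intro x
    have : s(c, a) ≠ s(b, c) := by
      rw [Ne, Sym2.eq_iff]; grind
    simp [Dl, A_up_ne _ _ _ this]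
  · intro x
    have h4 : s(c, a) ≠ s(a, b) := by
      rw [Ne, Sym2.eq_iff]; grind
    have h5 : s(b, c) ≠ s(a, b) := by
      rw [Ne, Sym2.eq_iff]; grind
    simp [Dl, A_up_ne _ _ _ h4, A_up_ne _ _ _ h5]

/-- Expected number of triangles of the Erdős–Rényi graph, up to lower order. -/
lemma EE_nu_Tr (β : ℝ) :
    Real.sigmoid β ^ 3 * ((n : ℝ) ^ 3 - 3 * n ^ 2) ≤ 6 * EE (PP n 0 β) Tr := by
  have h0 := PP_prob n 0 β
  have h1 : 6 * EE (PP n 0 β) Tr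
      = ∑ a, ∑ b, ∑ c, EE (PP n 0 β) (fun x => A x a b * A x b c * A x c a) := by
    rw [← EE_mul_left, EE_congr (fun x => six_Tr x), EE_sum]
    refine Finset.sum_congr rfl fun a _ => ?_
    rw [EE_sum]
    refine Finset.sum_congr rfl fun b _ => ?_
    rw [EE_sum]
  rw [h1]
  have h2 : ∀ a b c : Fin n, Real.sigmoid β ^ 3 * (1 - (if a = b then 1 else 0)
      - (if b = c then 1 else 0) - (if c = a then 1 else 0))
      ≤ EE (PP n 0 β) (fun x => A x a b * A x b c * A x c a) := by
    intro a b c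
    have hs : 0 ≤ Real.sigmoid β ^ 3 := by have := Real.sigmoid_nonneg β; positivity
    by_cases hd : a ≠ b ∧ b ≠ c ∧ c ≠ a
    · rw [EE_nu_tri β hd.1 hd.2.1 hd.2.2, if_neg hd.1, if_neg hd.2.1, if_neg hd.2.2]; simp
    · refine le_trans (mul_nonpos_of_nonneg_of_nonpos hs ?_) (EE_nonneg h0 fun x =>
        mul_nonneg (mul_nonneg (A_nonneg _ _ _) (A_nonneg _ _ _)) (A_nonneg _ _ _))
      by_cases h1 : a = b
      · rw [if_pos h1]; split_ifs <;> norm_num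
      · by_cases h2 : b = c
        · rw [if_pos h2]; split_ifs <;> norm_num
        · have h3 : c = a := by tauto
          rw [if_pos h3]; split_ifs <;> norm_num
  refine le_trans (le_of_eq ?_) (Finset.sum_le_sum fun a _ => Finset.sum_le_sum fun b _ =>
    Finset.sum_le_sum fun c _ => h2 a b c)
  simp only [← Finset.mul_sum, Finset.sum_sub_distrib, Finset.sum_const, Finset.card_univ,
    Fintype.card_fin, nsmul_eq_mul, Finset.sum_ite_eq, Finset.sum_ite_eq', Finset.mem_univ, if_true]
  congr 1
  simp only [mul_one, Finset.sum_const, Finset.card_univ, Fintype.card_fin, nsmul_eq_mul, mul_ite, mul_zero, Finset.sum_ite_eq, Finset.mem_univ, if_true]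
  ring

/-- Lower bound for the free energy, by testing the Gibbs variational principle on independent
edges of density `u`. -/
theorem logZ_ge {α h u : ℝ} (hα : 0 ≤ α) (hu0 : 0 < u) (hu1 : u < 1) (hn : 0 < n) :
    Fintype.card (Edge n) * (2 * phiET α h u) - α * n
      ≤ Real.log (∑ x : Config n, Real.exp (HH α (fun _ => h) x)) := by
  obtain ⟨β, rfl⟩ : ∃ β, Real.sigmoid β = u := by
    have : u ∈ Set.range Real.sigmoid := by rw [Real.range_sigmoid]; exact ⟨hu0, hu1⟩
    exact this
  have hn' : (0 : ℝ) < n := by exact_mod_cast hn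
  have h0 := PP_prob n 0 β
  have hq := PP_prob n α h
  have hZ : 0 < ∑ x : Config n, Real.exp (HH α (fun _ => h) x) :=
    Finset.sum_pos (fun y _ => Real.exp_pos _) Finset.univ_nonempty
  have hZ0 : 0 < ∑ x : Config n, Real.exp (HH 0 (fun _ => β) x) :=
    Finset.sum_pos (fun y _ => Real.exp_pos _) Finset.univ_nonempty
  have hg := gibbs_ineq h0 (PP n α h) hq.pos hq.one.le
  have hE : EE (PP n 0 β) Ec = Fintype.card (Edge n) * Real.sigmoid β := by
    have : EE (PP n 0 β) Ec = ∑ e, EE (PP n 0 β) (fun x => xr x e * 1) := by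
      rw [← EE_sum]; exact EE_congr fun x => by simp [Ec]
    rw [this, Finset.sum_congr rfl fun e _ => EE_nu_mul β e (fun _ => 1) (fun x => by simp [Dl])]
    rw [EE_const h0]; simp
  have hl1 : EE (PP n 0 β) (fun x => Real.log (PP n α h x))
      = α / n * EE (PP n 0 β) Tr + h * EE (PP n 0 β) Ec
        - Real.log (∑ x : Config n, Real.exp (HH α (fun _ => h) x)) := by
    rw [← EE_mul_left, ← EE_mul_left, ← EE_add,
      ← EE_const h0 (Real.log (∑ x : Config n, Real.exp (HH α (fun _ => h) x))), ← EE_sub]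
    refine EE_congr fun x => ?_
    rw [PP, gib, Real.log_div (Real.exp_pos _).ne' hZ.ne', Real.log_exp]
    nth_rw 1 [HH]
    rw [Ec, Finset.mul_sum]
  have hZ0' : Real.log (∑ x : Config n, Real.exp (HH 0 (fun _ => β) x))
      = Fintype.card (Edge n) * Real.log (1 + Real.exp β) := by
    have : ∑ x : Config n, Real.exp (HH 0 (fun _ => β) x) = (1 + Real.exp β) ^ Fintype.card (Edge n) := by
      have := sum_exp_lin (E := Edge n) (fun _ => β)
      simp only [Finset.prod_const, Finset.card_univ] at this
      rw [← this]
      refine Finset.sum_congr rfl fun x _ => ?_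
      simp [HH]
    rw [this, Real.log_pow]
  have hl2 : EE (PP n 0 β) (fun x => Real.log (PP n 0 β x))
      = β * EE (PP n 0 β) Ec - Fintype.card (Edge n) * Real.log (1 + Real.exp β) := by
    rw [← hZ0', ← EE_mul_left,
      ← EE_const h0 (Real.log (∑ x : Config n, Real.exp (HH 0 (fun _ => β) x))), ← EE_sub]
    refine EE_congr fun x => ?_
    rw [PP, gib, Real.log_div (Real.exp_pos _).ne' hZ0.ne', Real.log_exp]
    nth_rw 1 [HH]
    rw [Ec, Finset.mul_sum]; simp
  rw [hl1, hl2, hE] at hg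
  have hT := EE_nu_Tr (n := n) β
  have hI := Ifun_sigmoid β
  have hN := card_edge (n := n)
  set N : ℝ := (Fintype.card (Edge n) : ℝ)
  set σ := Real.sigmoid β
  have hσ0 : 0 < σ := hu0
  have hσ3 : σ ^ 3 ≤ 1 := pow_le_one₀ hσ0.le hu1.le
  have h7 : α / n * (σ ^ 3 * ((n : ℝ) ^ 3 - 3 * n ^ 2)) ≤ α / n * (6 * EE (PP n 0 β) Tr) :=
    mul_le_mul_of_nonneg_left hT (by positivity)
  have h8 : α / n * (σ ^ 3 * ((n : ℝ) ^ 3 - 3 * n ^ 2)) = α * σ ^ 3 * (n ^ 2 - 3 * n) := by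
    field_simp
  have h9 : N * (2 * phiET α h σ) = α * σ ^ 3 * (n * (n - 1)) / 6 + h * (N * σ)
      - (β * (N * σ) - N * Real.log (1 + Real.exp β)) := by
    rw [phiET, hI, ← hN]; ring
  have h10 : α * σ ^ 3 * n ≤ α * n := by
    have : α * σ ^ 3 ≤ α := mul_le_of_le_one_right hα hσ3
    exact mul_le_mul_of_nonneg_right this hn'.le
  rw [h9]
  nlinarith
end Low

/-! ### Quasirandomness with exponentially small failure probability -/

/-- Consequences of the hypotheses on the maximizer that drive the whole argument: `u` is a
nondegenerate global maximizer of the variational functional at `(α, h)`, it solves the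
mean-field equation, and `us s` is a maximizer at `(α, h + s)` depending continuously on `s`. -/
structure Good (α h u : ℝ) (us : ℝ → ℝ) (s0 : ℝ) : Prop where
  pos : 0 < u
  lt : u < 1
  max : ∀ p ∈ Set.Icc (0 : ℝ) 1, phiET α h p ≤ phiET α h u
  fix : Real.sigmoid (h + α * u ^ 2) = u
  nondeg : 0 < 1 - 2 * α * u * (u * (1 - u))
  s0pos : 0 < s0
  us0 : us 0 = u
  cont : ContinuousAt us 0
  mem : ∀ s, |s| ≤ s0 → us s ∈ Set.Icc (0 : ℝ) 1
  maxs : ∀ s, |s| ≤ s0 → ∀ p ∈ Set.Icc (0 : ℝ) 1, phiET α (h + s) p ≤ phiET α (h + s) (us s)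

section Chernoff
variable {n : ℕ}

lemma sum_edge_dlt_mul (x : Config n) (a b : Fin n) : A x a b = ∑ e, dlt e a b * xr x e := by
  unfold dlt
  by_cases h : (s(a, b)).IsDiag
  · have : ∀ e : Edge n, s(a, b) ≠ e.1 := fun e he => e.2 (he ▸ h)
    simp [this, A, val, h]
  · have : ∀ e : Edge n, (s(a, b) = e.1) ↔ ((⟨s(a, b), h⟩ : Edge n) = e) := fun e => by
      rw [Subtype.ext_iff]
    simp [this, A_eq x h]

lemma sum_edge_dlt (a b : Fin n) : ∑ e : Edge n, dlt e a b = 1 - (if a = b then 1 else 0) := by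
  unfold dlt
  by_cases h : a = b
  · have : ∀ e : Edge n, s(a, b) ≠ e.1 := fun e he => e.2 (he ▸ by simp [h])
    simp only [if_neg (this _)]; simp [h]
  · have h' : ¬ (s(a, b)).IsDiag := by simpa using h
    have : ∀ e : Edge n, (s(a, b) = e.1) ↔ ((⟨s(a, b), h'⟩ : Edge n) = e) := fun e => by
      rw [Subtype.ext_iff]
    simp [this, h]

/-- Multiplicity of the edge `e` in `S × S'`. -/
def mlt (S S' : Finset (Fin n)) (e : Edge n) : ℝ := ∑ a ∈ S, ∑ b ∈ S', dlt e a b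

lemma mlt_nonneg (S S' : Finset (Fin n)) (e : Edge n) : 0 ≤ mlt S S' e :=
  Finset.sum_nonneg fun a _ => Finset.sum_nonneg fun b _ => dlt_nonneg e a b

lemma mlt_le (S S' : Finset (Fin n)) (e : Edge n) : mlt S S' e ≤ 2 := by
  obtain ⟨v, w, hvw, he⟩ := edge_cases e
  have h := sum_pairs_dlt e hvw he (fun _ _ => 1)
  simp only [mul_one] at h
  calc mlt S S' e ≤ ∑ a, ∑ b, dlt e a b := by
        refine (Finset.sum_le_sum fun a _ => Finset.sum_le_univ_sum_of_nonneg
          fun b => dlt_nonneg e a b).trans ?_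
        exact Finset.sum_le_univ_sum_of_nonneg fun a => Finset.sum_nonneg fun b _ => dlt_nonneg e a b
    _ ≤ 2 := by linarith

lemma sum_mlt (S S' : Finset (Fin n)) : ∑ e, mlt S S' e ≤ (S.card : ℝ) * S'.card ∧
    (S.card : ℝ) * S'.card - n ≤ ∑ e, mlt S S' e := by
  have h : ∑ e, mlt S S' e = (S.card : ℝ) * S'.card
      - ∑ a ∈ S, ∑ b ∈ S', (if a = b then (1 : ℝ) else 0) := by
    unfold mlt
    rw [Finset.sum_comm]
    simp only [Finset.sum_comm (s := Finset.univ), sum_edge_dlt, Finset.sum_sub_distrib]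
    simp
  have h2 : 0 ≤ ∑ a ∈ S, ∑ b ∈ S', (if a = b then (1 : ℝ) else 0) :=
    Finset.sum_nonneg fun a _ => Finset.sum_nonneg fun b _ => by split_ifs <;> norm_num
  have h3 : ∑ a ∈ S, ∑ b ∈ S', (if a = b then (1 : ℝ) else 0) ≤ n := by
    calc _ ≤ ∑ a ∈ S, (1 : ℝ) := Finset.sum_le_sum fun a _ => by
          rw [Finset.sum_ite_eq]; split_ifs <;> norm_num
      _ = S.card := by simp
      _ ≤ n := by exact_mod_cast (Finset.card_le_univ S).trans (by simp)
  constructor <;> linarith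

lemma sum_mlt_xr (x : Config n) (S S' : Finset (Fin n)) :
    ∑ a ∈ S, ∑ b ∈ S', A x a b = ∑ e, mlt S S' e * xr x e := by
  simp only [mlt, Finset.sum_mul]
  rw [Finset.sum_comm (s := Finset.univ)]
  refine Finset.sum_congr rfl fun a _ => ?_
  rw [Finset.sum_comm]
  exact Finset.sum_congr rfl fun b _ => sum_edge_dlt_mul x a b

/-- Ratio of partition functions. -/
lemma EE_exp_lin (α h τ : ℝ) (m : Edge n → ℝ) :
    EE (PP n α h) (fun x => Real.exp (τ * ∑ e, m e * xr x e))
      = (∑ x, Real.exp (HH α (fun e => h + τ * m e) x)) / ∑ x : Config n, Real.exp (HH α (fun _ => h) x) := by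
  rw [EE, Finset.sum_div]
  refine Finset.sum_congr rfl fun x _ => ?_
  rw [smul_eq_mul, PP, gib, div_mul_eq_mul_div, ← Real.exp_add]
  congr 2
  rw [HH, HH, Finset.mul_sum, add_assoc, ← Finset.sum_add_distrib]
  congr 1
  exact Finset.sum_congr rfl fun e _ => by ring

/-- Exponential moments of edge counts between vertex sets. -/
lemma chernoff_moment {α h u s0 : ℝ} {us : ℝ → ℝ} (hG : Good α h u us s0) (hα : 0 ≤ α)
    {ω t η : ℝ} (ht : 0 ≤ t) (hη : 0 < η) (ht0 : 2 * t ≤ s0)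
    (hω : ∀ s, |s| ≤ 2 * t → |us s - u| ≤ ω) (hn : 0 < n) (S S' : Finset (Fin n)) {τ : ℝ}
    (hτ : |τ| = t) :
    EE (PP n α h) (fun x => Real.exp (τ * ∑ a ∈ S, ∑ b ∈ S', (A x a b - u)))
      ≤ Real.exp (t * ω * n ^ 2 + t * n + α * Real.sqrt (2 * η) * n ^ 2 + n / η + α * n) := by
  have hn' : (0 : ℝ) < n := by exact_mod_cast hn
  set m := mlt S S' with hm
  have hm0 : ∀ e, 0 ≤ m e := mlt_nonneg S S'
  have hsm : ∀ e, |τ * m e| ≤ 2 * t := fun e => by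
    rw [abs_mul, hτ, abs_of_nonneg (hm0 e)]
    nlinarith [mlt_le S S' e]
  set F : Edge n → ℝ := fun e => 2 * phiET α h u + τ * m e * us (τ * m e) with hFdef
  have hF : ∀ e, ∀ p ∈ Set.Icc (0 : ℝ) 1, 2 * phiET α (h + τ * m e) p ≤ F e := by
    intro e p hp
    have hs := (hsm e).trans ht0
    have h1 := hG.maxs _ hs p hp
    have h2 := hG.max _ (hG.mem _ hs)
    have h3 : phiET α (h + τ * m e) (us (τ * m e)) = phiET α h (us (τ * m e))
        + τ * m e * us (τ * m e) / 2 := by simp only [phiET]; ring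
    simp only [hFdef]
    linarith
  have hup := logZ_le hα (fun e => h + τ * m e) F hF hη hn
  have hlow := logZ_ge (n := n) (h := h) hα hG.pos hG.lt hn
  set Z1 := ∑ x, Real.exp (HH α (fun e => h + τ * m e) x)
  set Z0 := ∑ x : Config n, Real.exp (HH α (fun _ => h) x)
  have hZ1 : 0 < Z1 := Finset.sum_pos (fun y _ => Real.exp_pos _) Finset.univ_nonempty
  have hZ0 : 0 < Z0 := Finset.sum_pos (fun y _ => Real.exp_pos _) Finset.univ_nonempty
  have hS := sum_mlt S S'
  have hSn : (S.card : ℝ) * S'.card ≤ n ^ 2 := by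
    have h1 : (S.card : ℝ) ≤ n := by exact_mod_cast (Finset.card_le_univ S).trans (by simp)
    have h2 : (S'.card : ℝ) ≤ n := by exact_mod_cast (Finset.card_le_univ S').trans (by simp)
    rw [sq]; exact mul_le_mul h1 h2 (Nat.cast_nonneg _) hn'.le
  have hω0 : 0 ≤ ω := (abs_nonneg _).trans (hω 0 (by simp; exact ht))
  have hFs : ∑ e, F e ≤ Fintype.card (Edge n) * (2 * phiET α h u) + τ * u * ∑ e, m e
      + t * ω * n ^ 2 := by
    have h1 : ∀ e, F e ≤ 2 * phiET α h u + τ * u * m e + t * ω * m e := fun e => by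
      have h2 : τ * m e * (us (τ * m e) - u) ≤ t * m e * ω := by
        refine (le_abs_self _).trans ?_
        rw [abs_mul, abs_mul, hτ, abs_of_nonneg (hm0 e)]
        exact mul_le_mul_of_nonneg_left (hω _ (hsm e)) (mul_nonneg ht (hm0 e))
      simp only [hFdef]
      nlinarith
    refine (Finset.sum_le_sum fun e _ => h1 e).trans ?_
    rw [Finset.sum_add_distrib, Finset.sum_add_distrib, ← Finset.mul_sum Finset.univ m (τ * u),
      ← Finset.mul_sum Finset.univ m (t * ω)]
    simp only [Finset.sum_const, Finset.card_univ, nsmul_eq_mul]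
    have : t * ω * ∑ e, m e ≤ t * ω * n ^ 2 :=
      mul_le_mul_of_nonneg_left (hS.1.trans hSn) (mul_nonneg ht hω0)
    linarith
  have heq : ∀ x, Real.exp (τ * ∑ a ∈ S, ∑ b ∈ S', (A x a b - u))
      = Real.exp (-(τ * u * ((S.card : ℝ) * S'.card))) * Real.exp (τ * ∑ e, m e * xr x e) := fun x => by
    rw [← Real.exp_add, ← sum_mlt_xr x S S']
    congr 1
    simp only [Finset.sum_sub_distrib, Finset.sum_const, nsmul_eq_mul]
    ring
  rw [EE_congr heq, EE_mul_left, EE_exp_lin]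
  have hr : Z1 / Z0 = Real.exp (Real.log Z1 - Real.log Z0) := by
    rw [Real.exp_sub, Real.exp_log hZ1, Real.exp_log hZ0]
  rw [hr, ← Real.exp_add]
  refine Real.exp_le_exp.2 ?_
  have h5 : τ * u * (∑ e, m e - (S.card : ℝ) * S'.card) ≤ t * n := by
    refine (le_abs_self _).trans ?_
    rw [abs_mul, abs_mul, hτ, abs_of_pos hG.pos]
    have : |∑ e, m e - (S.card : ℝ) * S'.card| ≤ n := abs_le.2 ⟨by linarith [hS.2], by linarith [hS.1]⟩
    calc t * u * _ ≤ t * 1 * n := by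
          refine mul_le_mul (mul_le_mul_of_nonneg_left hG.lt.le ht) this (abs_nonneg _) (by linarith)
      _ = _ := by ring
  nlinarith

lemma indicator_le_exp {Ω : Type*} (s : Set Ω) (f : Ω → ℝ) (hf : ∀ x ∈ s, 0 ≤ f x) (x : Ω) :
    s.indicator (fun _ => (1 : ℝ)) x ≤ Real.exp (f x) := by
  by_cases hx : x ∈ s
  · rw [Set.indicator_of_mem hx]; exact Real.one_le_exp (hf x hx)
  · rw [Set.indicator_of_notMem hx]; exact (Real.exp_pos _).le

/-- Quasirandomness fails with exponentially small probability: tilting the field by `± t` on the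
edges between two vertex sets moves the free energy by at most the first-order term with density
close to `u`. -/
theorem CG_prob {α h u s0 : ℝ} {us : ℝ → ℝ} (hG : Good α h u us s0) (hα : 0 ≤ α) {ε : ℝ}
    (hε : 0 < ε) : ∃ n0 : ℕ, ∀ n ≥ n0,
      EE (PP n α h) ((CG u ε)ᶜ.indicator fun _ => (1 : ℝ)) ≤ Real.exp (-n) := by
  obtain ⟨δ, hδ, hδ2⟩ := Metric.continuousAt_iff.1 hG.cont (ε / 4) (by linarith)
  set t := min (s0 / 2) (δ / 4) with ht
  have ht0 : 0 < t := lt_min (by linarith [hG.s0pos]) (by linarith)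
  have hω : ∀ s, |s| ≤ 2 * t → |us s - u| ≤ ε / 4 := fun s hs => by
    have h1 : dist s 0 < δ := by
      rw [Real.dist_eq, sub_zero]
      have := min_le_right (s0 / 2) (δ / 4)
      linarith
    have := hδ2 h1
    rw [hG.us0, Real.dist_eq] at this
    exact this.le
  -- the decoupling error `α √(2η)` is at most `t ε / 4`
  set η := (t * ε / (4 * (α + 1))) ^ 2 / 2 with hη
  have hη0 : 0 < η := by positivity
  have hsq : α * Real.sqrt (2 * η) ≤ t * ε / 4 := by
    have : 2 * η = (t * ε / (4 * (α + 1))) ^ 2 := by rw [hη]; ring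
    rw [this, Real.sqrt_sq (by positivity), mul_div_assoc', div_le_div_iff₀ (by positivity) (by norm_num)]
    have : 0 < t * ε := by positivity
    nlinarith
  set K := t + 1 / η + α + 4 with hK
  refine ⟨⌈2 * (K + 1) / (t * ε)⌉₊ + 1, fun n hn => ?_⟩
  have hn1 : 0 < n := by omega
  have hn' : (0 : ℝ) < n := by exact_mod_cast hn1
  have hnK : 2 * (K + 1) / (t * ε) ≤ n := by
    refine (Nat.le_ceil _).trans ?_
    exact_mod_cast (by omega)
  rw [div_le_iff₀ (by positivity)] at hnK
  have hμ := PP_prob n α h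
  -- union bound over the two vertex sets and the sign of the deviation
  have hind : ∀ x : Config n, (CG u ε)ᶜ.indicator (fun _ => (1 : ℝ)) x ≤
      ∑ p : Finset (Fin n) × Finset (Fin n),
        (Real.exp (-(t * ε * n ^ 2)) * Real.exp (t * ∑ a ∈ p.1, ∑ b ∈ p.2, (A x a b - u))
        + Real.exp (-(t * ε * n ^ 2)) * Real.exp (-t * ∑ a ∈ p.1, ∑ b ∈ p.2, (A x a b - u))) := by
    intro x
    by_cases hx : x ∈ (CG u ε)ᶜ
    · rw [Set.indicator_of_mem hx]
      have : ∃ S S' : Finset (Fin n), ε * n ^ 2 < |∑ a ∈ S, ∑ b ∈ S', (A x a b - u)| := by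
        by_contra hcon
        push Not at hcon
        exact hx hcon
      obtain ⟨S, S', hS⟩ := this
      refine le_trans ?_ (Finset.single_le_sum (fun p _ => by positivity) (Finset.mem_univ (S, S')))
      simp only [← Real.exp_add]
      rcases lt_abs.1 hS with h1 | h1
      · have : (1 : ℝ) ≤ Real.exp (-(t * ε * n ^ 2) + t * ∑ a ∈ S, ∑ b ∈ S', (A x a b - u)) := by
          refine Real.one_le_exp ?_
          nlinarith
        linarith [Real.exp_pos (-(t * ε * n ^ 2) + -t * ∑ a ∈ S, ∑ b ∈ S', (A x a b - u))]
      · have : (1 : ℝ) ≤ Real.exp (-(t * ε * n ^ 2) + -t * ∑ a ∈ S, ∑ b ∈ S', (A x a b - u)) := by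
          refine Real.one_le_exp ?_
          nlinarith
        linarith [Real.exp_pos (-(t * ε * n ^ 2) + t * ∑ a ∈ S, ∑ b ∈ S', (A x a b - u))]
    · rw [Set.indicator_of_notMem hx]
      exact Finset.sum_nonneg fun p _ => by positivity
  refine (EE_mono hμ hind).trans ?_
  rw [EE_sum]
  set R := t * (ε / 4) * n ^ 2 + t * n + α * Real.sqrt (2 * η) * n ^ 2 + n / η + α * n with hR
  have hterm : ∀ p : Finset (Fin n) × Finset (Fin n), EE (PP n α h) (fun x =>
      (Real.exp (-(t * ε * n ^ 2)) * Real.exp (t * ∑ a ∈ p.1, ∑ b ∈ p.2, (A x a b - u))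
        + Real.exp (-(t * ε * n ^ 2)) * Real.exp (-t * ∑ a ∈ p.1, ∑ b ∈ p.2, (A x a b - u))))
      ≤ 2 * Real.exp (R - t * ε * n ^ 2) := by
    intro p
    rw [EE_add, EE_mul_left, EE_mul_left]
    have ht2 : 2 * t ≤ s0 := by have := min_le_left (s0 / 2) (δ / 4); linarith
    have h1 := chernoff_moment (n := n) hG hα ht0.le hη0 ht2 hω hn1 p.1 p.2 (abs_of_pos ht0)
    have h2 := chernoff_moment (n := n) hG hα ht0.le hη0 ht2 hω hn1 p.1 p.2
      (τ := -t) (by rw [abs_neg, abs_of_pos ht0])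
    rw [show R - t * ε * n ^ 2 = -(t * ε * n ^ 2) + R by ring, Real.exp_add]
    have h3 := Real.exp_pos (-(t * ε * n ^ 2))
    nlinarith
  refine (Finset.sum_le_sum fun p _ => hterm p).trans ?_
  rw [Finset.sum_const, Finset.card_univ, Fintype.card_prod, Fintype.card_finset, Fintype.card_fin,
    nsmul_eq_mul]
  push_cast
  have h2n : (2 : ℝ) ^ n ≤ Real.exp n := by
    rw [← Real.exp_one_rpow, Real.rpow_natCast]
    exact pow_le_pow_left₀ (by norm_num) (by linarith [Real.add_one_le_exp (1 : ℝ)]) n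
  have h2 : (2 : ℝ) ≤ Real.exp n := by
    have h1 : (1 : ℝ) ≤ n := by exact_mod_cast hn1
    have := Real.add_one_le_exp (n : ℝ)
    linarith
  calc (2 : ℝ) ^ n * 2 ^ n * (2 * Real.exp (R - t * ε * n ^ 2))
      ≤ Real.exp n * Real.exp n * (Real.exp n * Real.exp (R - t * ε * n ^ 2)) := by
        gcongr
    _ = Real.exp (3 * n + (R - t * ε * n ^ 2)) := by
        rw [← Real.exp_add, ← Real.exp_add, ← Real.exp_add]; ring_nf
    _ ≤ _ := by
        refine Real.exp_le_exp.2 ?_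
        have h5 : α * Real.sqrt (2 * η) * n ^ 2 ≤ t * ε / 4 * n ^ 2 := by gcongr
        have h6 : (n : ℝ) / η = 1 / η * n := by ring
        rw [hR, h6]
        have h7 : 2 * (K + 1) * n ≤ n * (t * ε) * n := mul_le_mul_of_nonneg_right hnK hn'.le
        rw [hK] at h7
        nlinarith
end Chernoff

/-! ### Concentration of degrees -/

section Star
variable {E : Type*} [Fintype E] [DecidableEq E]

/-- Number of ones of a configuration. -/
def ones (s : E → Bool) : ℝ := ∑ e, xr s e

lemma ones_eq_card (s : E → Bool) : ones s = ((Finset.univ.filter fun e => s e).card : ℝ) := by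
  simp [ones, xr, Finset.sum_ite]

/-- Counting configurations by their number of ones, with entropy weights. -/
lemma star_num (G : (E → Bool) → ℝ) {M : ℝ} (hM : 0 ≤ M)
    (hG : ∀ s, G s ≤ M * Real.exp (Fintype.card E * Ifun (ones s / Fintype.card E))) :
    ∑ s, G s ≤ M * (Fintype.card E + 1) := by
  set m := Fintype.card E with hm
  set Q : ℕ → (E → Bool) → ℝ := fun k s =>
    ∏ e, (if s e then (k : ℝ) / m else 1 - (k : ℝ) / m) with hQ
  have hQ1 : ∀ k, ∑ s, Q k s = 1 := fun k => by
    rw [hQ]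
    simp only
    rw [sum_prod_bool (fun (_ : E) (c : Bool) => if c then (k : ℝ) / m else 1 - (k : ℝ) / m)]
    simp
  have hQ0 : ∀ k ∈ Finset.range (m + 1), ∀ s, 0 ≤ Q k s := fun k hk s => by
    refine Finset.prod_nonneg fun e _ => ?_
    have hk' : (k : ℝ) / m ≤ 1 := by
      refine div_le_one_of_le₀ ?_ (Nat.cast_nonneg _)
      exact_mod_cast Nat.lt_succ_iff.1 (Finset.mem_range.1 hk)
    split_ifs
    · positivity
    · linarith
  have hQs : ∀ s, Real.exp (m * Ifun (ones s / m)) ≤ ∑ k ∈ Finset.range (m + 1), Q k s := by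
    intro s
    set k := (Finset.univ.filter fun e => s e).card with hk
    have hkm : k ≤ m := Finset.card_le_univ _
    have hks : ones s = (k : ℝ) := ones_eq_card s
    refine le_trans (le_of_eq ?_) (Finset.single_le_sum (fun j hj => hQ0 j hj s)
      (Finset.mem_range.2 (Nat.lt_succ_of_le hkm)))
    rcases Nat.eq_zero_or_pos m with h0 | h0
    · have : IsEmpty E := Fintype.card_eq_zero_iff.1 h0
      simp [hQ, h0]
    have hm' : (m : ℝ) ≠ 0 := by exact_mod_cast h0.ne'
    have h1 : (m : ℝ) * Ifun (ones s / m) = ∑ e, (xr s e * Real.log ((k : ℝ) / m)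
        + (1 - xr s e) * Real.log (1 - (k : ℝ) / m)) := by
      rw [Finset.sum_add_distrib, ← Finset.sum_mul, ← Finset.sum_mul, Finset.sum_sub_distrib]
      have : ∑ e, xr s e = (k : ℝ) := hks
      rw [this, hks, Ifun]
      simp only [Finset.sum_const, Finset.card_univ, nsmul_eq_mul, mul_one, ← hm]
      field_simp
    rw [h1, Real.exp_sum]
    refine Finset.prod_congr rfl fun e _ => ?_
    by_cases hse : s e
    · have : 0 < k := Finset.card_pos.2 ⟨e, by simp [hse]⟩
      have : (0 : ℝ) < k / m := by positivity
      simp [xr, hse, Real.exp_log this]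
    · have : k < m := by
        rw [hk, hm]
        refine Finset.card_lt_univ_of_notMem (x := e) (by simp [hse])
      have : (0 : ℝ) < 1 - (k : ℝ) / m := by
        rw [sub_pos, div_lt_one (by positivity)]; exact_mod_cast this
      simp [xr, hse, Real.exp_log this]
  calc ∑ s, G s ≤ ∑ s, M * ∑ k ∈ Finset.range (m + 1), Q k s :=
        Finset.sum_le_sum fun s _ => (hG s).trans (mul_le_mul_of_nonneg_left (hQs s) hM)
    _ = M * (m + 1) := by
        rw [← Finset.mul_sum, Finset.sum_comm]
        simp [hQ1]

/-- The large deviation estimate for the degree in the mean-field star. -/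
lemma star_ratio {α h u s0 : ℝ} {us : ℝ → ℝ} (hG : Good α h u us s0) (hα : 0 ≤ α) {ε n : ℝ}
    (hm : (Fintype.card E : ℝ) + 1 = n) (hn : 2 / ε ≤ n) (hε : 0 < ε) (hn2 : 2 ≤ n) :
    ∑ s : E → Bool, (if ε * n < |ones s - u * n| then
        Real.exp (α * u * ones s ^ 2 / (2 * n) + h * ones s) else 0)
      ≤ n * Real.exp (α - α * u * ε ^ 2 / 24 * (n - 1)) * ∑ s : E → Bool,
        Real.exp (α * u * ones s ^ 2 / (2 * n) + h * ones s) := by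
  set m : ℝ := (Fintype.card E : ℝ) with hmdef
  have hm1 : 1 ≤ m := by linarith
  have hn0 : 0 < n := by linarith
  have hu0 := hG.pos
  have hu1 := hG.lt
  set χ : ℝ := h * u + α * u ^ 3 / 2 - Ifun u with hχ
  have hnum := star_num (E := E) (fun s => if ε * n < |ones s - u * n| then
        Real.exp (α * u * ones s ^ 2 / (2 * n) + h * ones s) else 0)
      (M := Real.exp (m * χ - m * (α * u * ε ^ 2 / 24))) (Real.exp_pos _).le (fun s => by
    split_ifs with hb
    · rw [← Real.exp_add]
      refine Real.exp_le_exp.2 ?_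
      rw [← hmdef]
      set d := ones s
      have hd0 : 0 ≤ d := Finset.sum_nonneg fun e _ => xr_nonneg s e
      have hdm : d ≤ m := by
        calc d ≤ ∑ _e : E, (1 : ℝ) := Finset.sum_le_sum fun e _ => xr_le_one s e
          _ = m := by simp [hmdef]
      set p := d / m with hp
      have hp0 : 0 ≤ p := by positivity
      have hp1 : p ≤ 1 := div_le_one_of_le₀ hdm (by linarith)
      have hdp : d = m * p := by rw [hp]; field_simp
      have hmax := hG.max p ⟨hp0, hp1⟩
      simp only [phiET] at hmax
      have hdev : ε / 2 ≤ |p - u| := by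
        have h1 : |d - u * n| ≤ m * |p - u| + 1 := by
          have : d - u * n = m * (p - u) - u := by rw [hdp, ← hm]; ring
          rw [this]
          refine (abs_sub _ _).trans ?_
          rw [abs_mul, abs_of_pos (by linarith : 0 < m), abs_of_pos hu0]
          linarith
        have h2 : 2 ≤ ε * n := by rwa [div_le_iff₀ hε, mul_comm] at hn
        have h3 : ε / 2 * m ≤ m * |p - u| := by nlinarith
        nlinarith
      have hsq : ε ^ 2 / 4 ≤ (p - u) ^ 2 := by
        rw [← sq_abs (p - u)]; nlinarith
      have h5 : α * u * d ^ 2 / (2 * n) ≤ m * (α * u * p ^ 2 / 2) := by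
        rw [hdp, div_le_iff₀ (by positivity)]
        have : 0 ≤ α * u * p ^ 2 * m := by positivity
        nlinarith
      have h6 : h * p + α * u * p ^ 2 / 2 - Ifun p ≤ χ - α * u / 6 * (p - u) ^ 2 := by
        have : 0 ≤ α * p * (p - u) ^ 2 := by positivity
        rw [hχ]; nlinarith
      have h7 : α * u / 6 * (ε ^ 2 / 4) ≤ α * u / 6 * (p - u) ^ 2 := by gcongr
      have h8 : m * (h * p + α * u * p ^ 2 / 2 - Ifun p) ≤ m * (χ - α * u * ε ^ 2 / 24) := by
        refine mul_le_mul_of_nonneg_left ?_ (by linarith)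
        linarith
      rw [hdp] at h5 ⊢
      nlinarith
    · positivity)
  have hden : Real.exp (m * χ - α * u ^ 3 / 2) ≤ ∑ s : E → Bool,
        Real.exp (α * u * ones s ^ 2 / (2 * n) + h * ones s) := by
    set β := h + α * u ^ 2 with hβ
    have h1 : ∀ s : E → Bool, Real.exp (-(α * u ^ 3 * n / 2)) * Real.exp (∑ e, β * xr s e) ≤
        Real.exp (α * u * ones s ^ 2 / (2 * n) + h * ones s) := by
      intro s
      rw [← Real.exp_add, ← Finset.mul_sum]
      refine Real.exp_le_exp.2 ?_
      change _ + β * ones s ≤ _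
      set d := ones s
      have h2 : 0 ≤ α * u * (d - u * n) ^ 2 / (2 * n) := by positivity
      have h3 : α * u * (d - u * n) ^ 2 / (2 * n) = α * u * d ^ 2 / (2 * n) - α * u ^ 2 * d
          + α * u ^ 3 * n / 2 := by field_simp; ring
      rw [hβ]; nlinarith
    refine le_trans (le_of_eq ?_) (Finset.sum_le_sum fun s _ => h1 s)
    rw [← Finset.mul_sum, sum_exp_lin]
    simp only [Finset.prod_const, Finset.card_univ]
    have h4 : (1 + Real.exp β) ^ Fintype.card E = Real.exp (m * (β * u - Ifun u)) := by
      have h5 := Ifun_sigmoid β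
      rw [hG.fix] at h5
      have h6 : β * u - Ifun u = Real.log (1 + Real.exp β) := by rw [h5]; ring
      rw [h6, mul_comm, Real.exp_mul, Real.exp_log (by positivity), hmdef, Real.rpow_natCast]
    rw [h4, ← Real.exp_add]
    congr 1
    rw [hχ, hβ, ← hm]; ring
  refine hnum.trans ?_
  rw [← hmdef, hm]
  have h9 : Real.exp (m * χ - m * (α * u * ε ^ 2 / 24))
      ≤ Real.exp (α - α * u * ε ^ 2 / 24 * (n - 1)) * Real.exp (m * χ - α * u ^ 3 / 2) := by
    rw [← Real.exp_add]
    refine Real.exp_le_exp.2 ?_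
    have h10 : α * u ^ 3 ≤ α * 1 := mul_le_mul_of_nonneg_left (pow_le_one₀ hu0.le hu1.le) hα
    have : m = n - 1 := by linarith
    rw [this]; nlinarith
  calc _ ≤ (Real.exp (α - α * u * ε ^ 2 / 24 * (n - 1)) * Real.exp (m * χ - α * u ^ 3 / 2)) * n := by
        gcongr
    _ ≤ (Real.exp (α - α * u * ε ^ 2 / 24 * (n - 1)) * ∑ s : E → Bool,
        Real.exp (α * u * ones s ^ 2 / (2 * n) + h * ones s)) * n := by gcongr
    _ = _ := by ring

end Star

section Split
variable {n : ℕ}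

/-- Configuration with prescribed star at `v` and prescribed edges away from `v`. -/
def comb (v : Fin n) (s : {e : Edge n // v ∈ e.1} → Bool) (y : {e : Edge n // ¬ v ∈ e.1} → Bool) :
    Config n := fun e => if h : v ∈ e.1 then s ⟨e, h⟩ else y ⟨e, h⟩

lemma sum_comb (v : Fin n) (G : Config n → ℝ) : ∑ x, G x = ∑ y, ∑ s, G (comb v s y) := by
  rw [Finset.sum_comm, ← Finset.sum_product', Finset.univ_product_univ]
  exact Fintype.sum_equiv (Equiv.piEquivPiSubtypeProd (fun e : Edge n => v ∈ e.1) (fun _ => Bool))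
    _ _ (fun x => by
      congr 1
      funext e
      simp only [comb, Equiv.piEquivPiSubtypeProd]
      by_cases h : v ∈ e.1 <;> simp [h])

lemma sum_dlt_eq (e : Edge n) (v : Fin n) : ∑ z, dlt e v z = if v ∈ e.1 then 1 else 0 := by
  obtain ⟨a, b, hab, he⟩ := edge_cases e
  unfold dlt
  rw [he]
  by_cases h1 : v = a
  · subst h1
    simp [Sym2.eq_iff, hab]
  · by_cases h2 : v = b
    · subst h2
      simp [Sym2.eq_iff, h1]
    · simp [Sym2.eq_iff, h1, h2]

lemma dg_eq (x : Config n) (v : Fin n) : dg x v = ∑ e, if v ∈ e.1 then xr x e else 0 := by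
  unfold dg
  simp only [sum_edge_dlt_mul]
  rw [Finset.sum_comm]
  refine Finset.sum_congr rfl fun e _ => ?_
  rw [← Finset.sum_mul, sum_dlt_eq]; split_ifs <;> simp

lemma sum_star (v : Fin n) (f : Edge n → ℝ) :
    ∑ e, (if v ∈ e.1 then f e else 0) = ∑ e : {e : Edge n // v ∈ e.1}, f e.1 := by
  rw [← Finset.sum_filter]
  exact Finset.sum_subtype _ (by simp) f

lemma dg_comb (v : Fin n) (s) (y) : dg (comb v s y) v = ones s := by
  rw [dg_eq, sum_star, ones]
  refine Finset.sum_congr rfl fun e _ => ?_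
  simp [xr, comb, e.2]

lemma card_star (v : Fin n) : (Fintype.card {e : Edge n // v ∈ e.1} : ℝ) + 1 = n := by
  have h := sum_star v (fun _ => 1)
  simp only [Finset.sum_const, Finset.card_univ, nsmul_eq_mul, mul_one] at h
  rw [← h, ← Finset.sum_congr rfl fun e _ => sum_dlt_eq e v, Finset.sum_comm]
  simp only [sum_edge_dlt, Finset.sum_sub_distrib]
  simp

lemma A_comb (v : Fin n) (s s') (y) {a b : Fin n} (ha : a ≠ v) (hb : b ≠ v) :
    A (comb v s y) a b = A (comb v s' y) a b := by
  unfold A val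
  split_ifs with h
  · rfl
  · have : v ∉ s(a, b) := by simp [ha.symm, hb.symm]
    simp [xr, comb, this]

/-- Six times the number of triangles avoiding `v`. -/
def T0 (v : Fin n) (x : Config n) : ℝ := ∑ a, ∑ b, ∑ c,
  if a = v ∨ b = v ∨ c = v then 0 else A x a b * A x b c * A x c a

lemma T0_comb (v : Fin n) (s s') (y) : T0 v (comb v s y) = T0 v (comb v s' y) := by
  unfold T0
  refine Finset.sum_congr rfl fun a _ => Finset.sum_congr rfl fun b _ => Finset.sum_congr rfl
    fun c _ => ?_
  split_ifs with h
  · rfl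
  · push Not at h
    rw [A_comb v s s' y h.1 h.2.1, A_comb v s s' y h.2.1 h.2.2, A_comb v s s' y h.2.2 h.1]

lemma six_Tr_split (v : Fin n) (x : Config n) :
    6 * Tr x = T0 v x + 3 * ∑ b, ∑ c, A x v b * A x v c * A x b c := by
  rw [six_Tr, T0]
  have h1 : ∀ a b c, A x a b * A x b c * A x c a
      = (if a = v ∨ b = v ∨ c = v then 0 else A x a b * A x b c * A x c a)
        + (if a = v then A x v b * A x v c * A x b c else 0)
        + (if b = v then A x v c * A x v a * A x c a else 0)
        + (if c = v then A x v a * A x v b * A x a b else 0) := by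
    intro a b c
    by_cases h1 : a = v
    · subst h1
      by_cases h2 : b = a
      · subst h2; simp
      · by_cases h3 : c = a
        · subst h3; simp
        · simp [h2, h3]; rw [A_symm x c a]; ring
    · by_cases h2 : b = v
      · subst h2
        by_cases h3 : c = b
        · subst h3; simp
        · rw [if_pos (by simp), if_neg h1, if_pos rfl, if_neg h3, A_symm x a b]; ring
      · by_cases h3 : c = v
        · subst h3; simp [h1, h2]; rw [A_symm x c b, A_symm x c a]; ring
        · simp [h1, h2, h3]
  rw [Finset.sum_congr rfl fun a _ => Finset.sum_congr rfl fun b _ => Finset.sum_congr rfl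
    fun c _ => h1 a b c]
  simp only [Finset.sum_add_distrib]
  have h2 : ∑ a, ∑ b, ∑ c, (if a = v then A x v b * A x v c * A x b c else 0)
      = ∑ b, ∑ c, A x v b * A x v c * A x b c := by
    rw [Finset.sum_eq_single v]
    · simp
    · intro a _ ha; simp [ha]
    · simp
  have h3 : ∑ a, ∑ b, ∑ c, (if b = v then A x v c * A x v a * A x c a else 0)
      = ∑ b, ∑ c, A x v b * A x v c * A x b c := by
    refine Finset.sum_congr rfl fun a _ => ?_
    rw [Finset.sum_eq_single v]
    · refine Finset.sum_congr rfl fun c _ => ?_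
      rw [if_pos rfl, A_symm x c a]; ring
    · intro b _ hb; simp [hb]
    · simp
  have h4 : ∑ a, ∑ b, ∑ c, (if c = v then A x v a * A x v b * A x a b else 0)
      = ∑ b, ∑ c, A x v b * A x v c * A x b c := by
    refine Finset.sum_congr rfl fun a _ => Finset.sum_congr rfl fun b _ => ?_
    simp
  rw [h2, h3, h4]; ring

/-- In a quasirandom graph the neighbourhood of any vertex spans the expected number of edges. -/
lemma nbhd_edges {u ε : ℝ} {x : Config n} (hx : x ∈ CG u ε) (v : Fin n) :
    |∑ b, ∑ c, A x v b * A x v c * A x b c - u * dg x v ^ 2| ≤ ε * n ^ 2 := by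
  classical
  set S := Finset.univ.filter fun b => A x v b = 1 with hS
  have hA : ∀ b, A x v b = if b ∈ S then 1 else 0 := fun b => by
    rcases A_zero_or_one x v b with h | h <;> simp [hS, h]
  have h := hx S S
  have h1 : ∑ b, ∑ c, A x v b * A x v c * A x b c - u * dg x v ^ 2
      = ∑ a ∈ S, ∑ b ∈ S, (A x a b - u) := by
    have h2 : dg x v ^ 2 = ∑ b, ∑ c, A x v b * A x v c := by
      rw [dg, sq, Finset.sum_mul_sum]
    rw [h2, Finset.mul_sum, ← Finset.sum_sub_distrib]
    rw [← Finset.sum_filter_add_sum_filter_not Finset.univ (fun b => b ∈ S)]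
    have h3 : ∑ b ∈ Finset.univ.filter (fun b => ¬ b ∈ S), (∑ c, A x v b * A x v c * A x b c
        - u * ∑ c, A x v b * A x v c) = 0 := by
      refine Finset.sum_eq_zero fun b hb => ?_
      have : A x v b = 0 := by rw [hA, if_neg (Finset.mem_filter.1 hb).2]
      simp [this]
    rw [h3, add_zero]
    refine Finset.sum_congr (by ext; simp) fun b hb => ?_
    rw [Finset.mul_sum, ← Finset.sum_sub_distrib]
    rw [hA b, if_pos hb]
    simp only [hA, one_mul]
    rw [← Finset.sum_subset (Finset.subset_univ S)]
    · refine Finset.sum_congr rfl fun c hc => ?_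
      rw [if_pos hc]; ring
    · intro c _ hc
      rw [if_neg hc]; ring
  rw [h1]; exact h

lemma CG_comb {u ε : ℝ} (v : Fin n) (s s') (y) (hn : 2 ≤ ε * n) (hx : comb v s y ∈ CG u ε) :
    comb v s' y ∈ CG u (2 * ε) := by
  intro S S'
  have h1 := hx S S'
  set x := comb v s y
  set x' := comb v s' y with hx'
  have h2 : |∑ a ∈ S, ∑ b ∈ S', (A x' a b - u) - ∑ a ∈ S, ∑ b ∈ S', (A x a b - u)| ≤ 2 * n := by
    rw [← Finset.sum_sub_distrib]
    calc _ ≤ ∑ a, ∑ b, ((if a = v then (1 : ℝ) else 0) + if b = v then (1 : ℝ) else 0) := by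
          refine (Finset.abs_sum_le_sum_abs _ _).trans ?_
          refine (Finset.sum_le_sum fun a _ => ?_).trans (Finset.sum_le_univ_sum_of_nonneg fun a =>
            Finset.sum_nonneg fun b _ => by split_ifs <;> norm_num)
          rw [← Finset.sum_sub_distrib]
          refine (Finset.abs_sum_le_sum_abs _ _).trans ?_
          refine (Finset.sum_le_sum fun b _ => ?_).trans (Finset.sum_le_univ_sum_of_nonneg fun b =>
            by split_ifs <;> norm_num)
          have h3 : |A x' a b - u - (A x a b - u)| ≤ 1 := by
            rw [abs_le]
            constructor <;>
            linarith [A_nonneg x a b, A_le_one x a b, A_nonneg x' a b, A_le_one x' a b]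
          by_cases ha : a = v
          · rw [if_pos ha]; refine h3.trans ?_; split_ifs <;> norm_num
          · by_cases hb : b = v
            · rw [if_neg ha, if_pos hb]; simpa using h3
            · have h4 : A x' a b = A x a b := A_comb v s' s y ha hb
              rw [h4]; simp [ha, hb]
      _ = 2 * n := by
          simp [Finset.sum_add_distrib]; ring
  have h4 := abs_sub_abs_le_abs_sub (∑ a ∈ S, ∑ b ∈ S', (A x' a b - u)) (∑ a ∈ S, ∑ b ∈ S', (A x a b - u))
  have h5 : 2 * (n : ℝ) ≤ ε * n * n := mul_le_mul_of_nonneg_right hn (Nat.cast_nonneg _)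
  nlinarith

/-- Deviations of a single degree in a quasirandom graph are exponentially unlikely. -/
lemma degree_ld {α h u s0 : ℝ} {us : ℝ → ℝ} (hG : Good α h u us s0) (hα : 0 ≤ α) {ε ε1 : ℝ}
    (hε : 0 < ε) (hε1 : 0 < ε1) (hn : 2 / ε ≤ n) (hn1 : 2 / ε1 ≤ n) (hn2 : 2 ≤ n) (v : Fin n) :
    EE (PP n α h) ((CG u ε ∩ {x | ε1 * n < |dg x v - u * n|}).indicator fun _ => (1 : ℝ))
      ≤ n * Real.exp (α - α * u * ε1 ^ 2 / 24 * (n - 1) + 2 * (α * ε * n)) := by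
  have hn' : (0 : ℝ) < n := by exact_mod_cast (by omega : 0 < n)
  set Z := ∑ x : Config n, Real.exp (HH α (fun _ => h) x) with hZ
  have hZ0 : 0 < Z := Finset.sum_pos (fun y _ => Real.exp_pos _) Finset.univ_nonempty
  set B := CG u ε ∩ {x : Config n | ε1 * n < |dg x v - u * n|} with hB
  have h1 : EE (PP n α h) (B.indicator fun _ => (1 : ℝ))
      = (∑ x, B.indicator (fun x => Real.exp (HH α (fun _ => h) x)) x) / Z := by
    rw [EE, Finset.sum_div]
    refine Finset.sum_congr rfl fun x _ => ?_
    rw [PP, gib]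
    by_cases hx : x ∈ B
    · rw [Set.indicator_of_mem hx, Set.indicator_of_mem hx, smul_eq_mul, mul_one]
    · rw [Set.indicator_of_notMem hx, Set.indicator_of_notMem hx, smul_zero, zero_div]
  rw [h1, div_le_iff₀ hZ0, hZ, sum_comb v, sum_comb v, Finset.mul_sum]
  refine Finset.sum_le_sum fun y _ => ?_
  by_cases hy : ∃ s, comb v s y ∈ CG u ε
  swap
  · push Not at hy
    have : ∀ s, B.indicator (fun x => Real.exp (HH α (fun _ => h) x)) (comb v s y) = 0 := fun s =>
      Set.indicator_of_notMem (fun hs => hy s hs.1) _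
    simp only [this, Finset.sum_const_zero]
    positivity
  obtain ⟨s1, hs1⟩ := hy
  have hCG : ∀ s, comb v s y ∈ CG u (2 * ε) := fun s =>
    CG_comb v s1 s y (by rwa [div_le_iff₀ hε, mul_comm] at hn) hs1
  set b0 : ℝ := α / n * (T0 v (comb v s1 y) / 6)
    + h * ∑ e : {e : Edge n // ¬ v ∈ e.1}, xr y e with hb0
  have hEc : ∀ s, Ec (comb v s y) = ones s + ∑ e : {e : Edge n // ¬ v ∈ e.1}, xr y e := by
    intro s
    rw [Ec, ← dg_comb v s y, dg_eq]
    have : ∑ e : {e : Edge n // ¬ v ∈ e.1}, xr y e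
        = ∑ e : Edge n, if ¬ v ∈ e.1 then xr (comb v s y) e else 0 := by
      rw [← Finset.sum_filter, Finset.sum_subtype (p := fun e : Edge n => ¬ v ∈ e.1) _ (by simp)]
      refine Finset.sum_congr rfl fun e _ => ?_
      simp [xr, comb, e.2]
    rw [this, ← Finset.sum_add_distrib]
    refine Finset.sum_congr rfl fun e _ => ?_
    by_cases h : v ∈ e.1 <;> simp [h]
  have hHH : ∀ s, |HH α (fun _ => h) (comb v s y) - (b0
      + (α * u * ones s ^ 2 / (2 * n) + h * ones s))| ≤ α * ε * n := by
    intro s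
    have h2 := nbhd_edges (hCG s) v
    have h3 := six_Tr_split v (comb v s y)
    rw [T0_comb v s s1 y] at h3
    rw [dg_comb] at h2
    set X := ∑ b, ∑ c, A (comb v s y) v b * A (comb v s y) v c * A (comb v s y) b c
    have h4 : HH α (fun _ => h) (comb v s y) - (b0 + (α * u * ones s ^ 2 / (2 * n) + h * ones s))
        = α / (2 * n) * (X - u * ones s ^ 2) := by
      have h5 : Tr (comb v s y) = T0 v (comb v s1 y) / 6 + X / 2 := by linarith
      rw [HH, ← Finset.mul_sum, h5]
      change _ + h * Ec (comb v s y) - _ = _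
      rw [hEc, hb0]
      field_simp
      ring
    rw [h4, abs_mul, abs_of_nonneg (by positivity)]
    calc α / (2 * n) * |X - u * ones s ^ 2| ≤ α / (2 * n) * (2 * ε * n ^ 2) := by gcongr
      _ = _ := by field_simp
  have hnum : ∀ s, B.indicator (fun x => Real.exp (HH α (fun _ => h) x)) (comb v s y)
      ≤ Real.exp (b0 + α * ε * n) * (if ε1 * n < |ones s - u * n| then
        Real.exp (α * u * ones s ^ 2 / (2 * n) + h * ones s) else 0) := by
    intro s
    by_cases hs : comb v s y ∈ B
    · rw [Set.indicator_of_mem hs]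
      have h2 : ε1 * n < |ones s - u * n| := by
        have := hs.2
        simp only [Set.mem_setOf_eq, dg_comb] at this
        exact this
      rw [if_pos h2, ← Real.exp_add]
      refine Real.exp_le_exp.2 ?_
      linarith [(abs_le.1 (hHH s)).2]
    · rw [Set.indicator_of_notMem hs]
      positivity
  have hden : ∀ s, Real.exp (b0 - α * ε * n) * Real.exp (α * u * ones s ^ 2 / (2 * n) + h * ones s)
      ≤ Real.exp (HH α (fun _ => h) (comb v s y)) := by
    intro s
    rw [← Real.exp_add]
    refine Real.exp_le_exp.2 ?_
    linarith [(abs_le.1 (hHH s)).1]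
  have hr := star_ratio (E := {e : Edge n // v ∈ e.1}) hG hα (card_star v) hn1 hε1
    (by exact_mod_cast hn2)
  refine (Finset.sum_le_sum fun s _ => hnum s).trans ?_
  rw [← Finset.mul_sum]
  refine (mul_le_mul_of_nonneg_left hr (Real.exp_pos _).le).trans ?_
  have h6 := Finset.sum_le_sum fun s (_ : s ∈ Finset.univ) => hden s
  rw [← Finset.mul_sum] at h6
  refine le_trans (le_of_eq ?_) (mul_le_mul_of_nonneg_left h6 (by positivity))
  rw [show b0 + α * ε * n = 2 * (α * ε * n) + (b0 - α * ε * n) by ring, Real.exp_add, Real.exp_add]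
  ring

end Split

/-! ### Poincaré inequality for the edge-triangle measure -/

/-- A uniform Poincaré inequality (with a negligible additive error) for functions of
polynomial size. -/
def HasPoincare (α h C : ℝ) (n : ℕ) : Prop := ∀ F : Config n → ℝ, (∀ x, |F x| ≤ (n : ℝ) ^ 6) →
  Vr (PP n α h) F ≤ 1 / n + C * ∑ e, EE (PP n α h) (fun x => Dl e F x ^ 2)

/-- A contraction of heat-bath dynamics on a set of overwhelming probability yields the Poincaré
inequality. -/
lemma poincare_of_contraction {α h κ : ℝ} (hκ0 : 0 < κ) (hκ1 : κ ≤ 1)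
    (Γ : ∀ n : ℕ, Set (Config n))
    (hΓ : ∀ᶠ n : ℕ in atTop, ∀ x ∈ Γ n, ∀ y ∈ Γ n,
      ∑ e, |pr (PP n α h) e x - pr (PP n α h) e y| ≤ (1 - κ) * Dh x y)
    (hP : Tendsto (fun n : ℕ => (n : ℝ) ^ 20 * EE (PP n α h) ((Γ n)ᶜ.indicator fun _ => (1 : ℝ)))
      atTop (𝓝 0)) :
    ∀ᶠ n : ℕ in atTop, HasPoincare α h (20 / κ + 1) n := by
  have hP1 := hP.eventually (gt_mem_nhds (zero_lt_one (α := ℝ)))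
  have hbig : ∀ᶠ n : ℕ in atTop, 168 / κ ≤ (n : ℝ) :=
    tendsto_natCast_atTop_atTop.eventually_ge_atTop _
  filter_upwards [hΓ, hP1, hbig, eventually_ge_atTop 3] with n hc hp hb hn3 F hF
  have hn3' : (3 : ℝ) ≤ n := by exact_mod_cast hn3
  have hn0 : (0 : ℝ) < n := by linarith
  have hμ := PP_prob n α h
  set P := EE (PP n α h) ((Γ n)ᶜ.indicator fun _ => (1 : ℝ)) with hPdef
  have hP0 : 0 ≤ P := EE_nonneg hμ fun x => Set.indicator_nonneg (fun _ _ => zero_le_one) x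
  have hNe : Nonempty (Edge n) := ⟨mkE ⟨0, by omega⟩ ⟨1, by omega⟩ (by simp)⟩
  have hN1 : (1 : ℝ) ≤ Fintype.card (Edge n) := by exact_mod_cast Fintype.card_pos
  have hN2 := card_edge_le (n := n)
  set N := Fintype.card (Edge n) with hN
  have hlog1 : 1 ≤ Real.log n := by
    rw [Real.le_log_iff_exp_le hn0]
    linarith [Real.exp_one_lt_d9]
  have hlogn : Real.log n ≤ n := (Real.log_le_sub_one_of_pos hn0).trans (by linarith)
  set m := ⌈20 * Real.log n / κ⌉₊ with hm
  have hm1 : 20 * Real.log n / κ ≤ m := Nat.le_ceil _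
  have hm2 : (m : ℝ) ≤ 20 * Real.log n / κ + 1 := (Nat.ceil_lt_add_one (by positivity)).le
  have hm3 : 20 * Real.log n ≤ κ * m := by rw [div_le_iff₀ hκ0] at hm1; linarith
  have hmn : (m : ℝ) ≤ 21 / κ * n := by
    have h1 : 20 * Real.log n / κ ≤ 20 / κ * n := by
      rw [div_mul_eq_mul_div]; gcongr
    have h2 : (1 : ℝ) ≤ 1 / κ * n := by
      rw [div_mul_eq_mul_div, one_mul, le_div_iff₀ hκ0]; nlinarith
    have : 21 / κ * n = 20 / κ * n + 1 / κ * n := by ring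
    linarith
  have hm0 : (1 : ℝ) ≤ m := by nlinarith
  have hpc := poincare hμ hκ0 hκ1 hc (N * m) hF (s := Real.log n) (η := 1 / n) (by linarith)
    (by push_cast; nlinarith) (by positivity) (by
      rw [← hPdef, ← hN, Real.exp_neg, Real.exp_log hn0]
      have hN0 : (0 : ℝ) < N := by linarith
      have h1 : (1 - κ / N) ^ (N * m) ≤ ((n : ℝ) ^ 20)⁻¹ := by
        have h2 : 1 - κ / N ≤ Real.exp (-(κ / N)) := by
          have := Real.add_one_le_exp (-(κ / N)); linarith
        have h3 : 0 ≤ 1 - κ / N := by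
          rw [sub_nonneg, div_le_one hN0]; linarith
        refine (pow_le_pow_left₀ h3 h2 _).trans ?_
        rw [← Real.exp_nat_mul]
        have h4 : ((n : ℝ) ^ 20)⁻¹ = Real.exp (-(20 * Real.log n)) := by
          rw [Real.exp_neg, mul_comm, Real.exp_mul, Real.exp_log hn0]
          norm_cast
        rw [h4]
        refine Real.exp_le_exp.2 ?_
        push_cast
        have : (N : ℝ) * m * -(κ / N) = -(κ * m) := by field_simp
        rw [this]; linarith
      have hN3 : (N : ℝ) ≤ n ^ 2 := hN2.trans (by nlinarith)
      have h5 : ((1 - κ / N) ^ (N * m) * N + 2 * ((N * m : ℕ) : ℝ) * P)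
          ≤ ((n : ℝ) ^ 20)⁻¹ * n ^ 2 + 2 * (n ^ 2 * (21 / κ * n)) * P := by
        push_cast
        gcongr
      have h6 : 2 * ((n : ℝ) ^ 6) ^ 2 * (((n : ℝ) ^ 20)⁻¹ * n ^ 2 + 2 * (n ^ 2 * (21 / κ * n)) * P)
          ≤ 1 / n * (n : ℝ)⁻¹ := by
        have h7 : 2 * ((n : ℝ) ^ 6) ^ 2 * (((n : ℝ) ^ 20)⁻¹ * n ^ 2) ≤ 1 / 2 * (1 / n * (n : ℝ)⁻¹) := by
          field_simp
          nlinarith [pow_le_pow_left₀ (by norm_num : (0 : ℝ) ≤ 3) hn3' 4]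
        have h8 : 2 * ((n : ℝ) ^ 6) ^ 2 * (2 * (n ^ 2 * (21 / κ * n)) * P)
            ≤ 1 / 2 * (1 / n * (n : ℝ)⁻¹) := by
          have h9 : 2 * ((n : ℝ) ^ 6) ^ 2 * (2 * (n ^ 2 * (21 / κ * n)) * P)
              = 1 / 2 * (168 / κ * (n ^ 15 * P)) := by ring
          rw [h9]
          have h10 : 168 / κ * (n ^ 15 * P) ≤ n * (n ^ 15 * P) := by gcongr
          have h11 : (n : ℝ) * (n ^ 15 * P) ≤ (n : ℝ) ^ 18 * P := by
            have : (n : ℝ) ^ 16 ≤ n ^ 18 := pow_le_pow_right₀ (by linarith) (by norm_num)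
            calc (n : ℝ) * (n ^ 15 * P) = n ^ 16 * P := by ring
              _ ≤ _ := by gcongr
          have h12 : (n : ℝ) ^ 18 * P ≤ 1 / n * (n : ℝ)⁻¹ := by
            rw [show (1 : ℝ) / n * (n : ℝ)⁻¹ = 1 / n ^ 2 by field_simp, le_div_iff₀ (by positivity)]
            nlinarith
          linarith
        linarith
      exact (mul_le_mul_of_nonneg_left h5 (by positivity)).trans h6)
  refine hpc.trans ?_
  have hS : 0 ≤ ∑ e, EE (PP n α h) (fun x => Dl e F x ^ 2) :=
    Finset.sum_nonneg fun e _ => EE_nonneg hμ fun x => sq_nonneg _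
  have h13 : ((N * m : ℕ) : ℝ) / (Real.log n * N) ≤ 20 / κ + 1 := by
    push_cast
    rw [div_le_iff₀ (by positivity)]
    have : (20 / κ + 1) * (Real.log n * N) = N * (20 * Real.log n / κ + Real.log n) := by ring
    rw [this]
    refine mul_le_mul_of_nonneg_left ?_ (by linarith)
    linarith
  rw [← hN]
  gcongr

lemma tendsto_pow_exp (k : ℕ) {c : ℝ} (hc : 0 < c) :
    Tendsto (fun n : ℕ => (n : ℝ) ^ k * Real.exp (-(c * n))) atTop (𝓝 0) := by
  have h1 := (Real.tendsto_pow_mul_exp_neg_atTop_nhds_zero k).comp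
    ((tendsto_natCast_atTop_atTop (R := ℝ)).const_mul_atTop hc)
  have h2 := h1.const_mul ((c ^ k)⁻¹)
  rw [mul_zero] at h2
  refine h2.congr fun n => ?_
  simp only [Function.comp, mul_pow]
  field_simp

/-- The good set has overwhelming probability. -/
lemma good_prob {α h u s0 : ℝ} {us : ℝ → ℝ} (hG : Good α h u us s0) (hα : 0 < α) {ε1 : ℝ}
    (hε1 : 0 < ε1) : Tendsto (fun n : ℕ => (n : ℝ) ^ 20 * EE (PP n α h)
      ((CG u (u * ε1 ^ 2 / 96) ∩ DG u ε1)ᶜ.indicator fun _ => (1 : ℝ))) atTop (𝓝 0) := by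
  set ε0 := u * ε1 ^ 2 / 96 with hε0
  have hu := hG.pos
  have hε0' : 0 < ε0 := by positivity
  set c0 := α * u * ε1 ^ 2 / 24 with hc0
  have hc0' : 0 < c0 := by positivity
  obtain ⟨n0, hn0⟩ := CG_prob hG hα.le hε0'
  have hlim : Tendsto (fun n : ℕ => (n : ℝ) ^ 20 * Real.exp (-(1 * n))
      + Real.exp (α + c0) * ((n : ℝ) ^ 22 * Real.exp (-(c0 / 2 * n)))) atTop (𝓝 0) := by
    have := (tendsto_pow_exp 20 one_pos).add ((tendsto_pow_exp 22 (half_pos hc0')).const_mul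
      (Real.exp (α + c0)))
    simpa using this
  refine squeeze_zero' (Eventually.of_forall fun n => ?_) ?_ hlim
  · exact mul_nonneg (by positivity) (EE_nonneg (PP_prob n α h) fun x =>
      Set.indicator_nonneg (fun _ _ => zero_le_one) x)
  have hb1 : ∀ᶠ n : ℕ in atTop, 2 / ε0 ≤ (n : ℝ) := tendsto_natCast_atTop_atTop.eventually_ge_atTop _
  have hb2 : ∀ᶠ n : ℕ in atTop, 2 / ε1 ≤ (n : ℝ) := tendsto_natCast_atTop_atTop.eventually_ge_atTop _
  filter_upwards [hb1, hb2, eventually_ge_atTop 2, eventually_ge_atTop n0] with n h1 h2 h3 h4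
  have hμ := PP_prob n α h
  have hind : ∀ x : Config n, (CG u ε0 ∩ DG u ε1)ᶜ.indicator (fun _ => (1 : ℝ)) x ≤
      (CG u ε0)ᶜ.indicator (fun _ => (1 : ℝ)) x
      + ∑ v, (CG u ε0 ∩ {x | ε1 * n < |dg x v - u * n|}).indicator (fun _ => (1 : ℝ)) x := by
    intro x
    have hs0 : ∀ v ∈ Finset.univ, 0 ≤ (CG u ε0 ∩ {x : Config n | ε1 * n < |dg x v - u * n|}).indicator
        (fun _ => (1 : ℝ)) x := fun v _ => Set.indicator_nonneg (fun _ _ => zero_le_one) x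
    have hs1 : 0 ≤ (CG u ε0)ᶜ.indicator (fun _ => (1 : ℝ)) x :=
      Set.indicator_nonneg (fun _ _ => zero_le_one) x
    by_cases hx : x ∈ (CG u ε0 ∩ DG u ε1)ᶜ
    · rw [Set.indicator_of_mem hx]
      by_cases hc : x ∈ CG u ε0
      · have hd : ∃ v, ε1 * n < |dg x v - u * n| := by
          by_contra hcon
          push Not at hcon
          exact hx ⟨hc, hcon⟩
        obtain ⟨v, hv⟩ := hd
        have := Finset.single_le_sum hs0 (Finset.mem_univ v)
        rw [Set.indicator_of_mem (show x ∈ CG u ε0 ∩ {x | ε1 * n < |dg x v - u * n|} from ⟨hc, hv⟩)]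
          at this
        linarith
      · rw [Set.indicator_of_mem (show x ∈ (CG u ε0)ᶜ from hc)]
        linarith [Finset.sum_nonneg hs0]
    · rw [Set.indicator_of_notMem hx]
      linarith [Finset.sum_nonneg hs0]
  have h5 := EE_mono hμ hind
  rw [EE_add, EE_sum] at h5
  have h6 : ∀ v, EE (PP n α h) (fun x => (CG u ε0 ∩ {x | ε1 * n < |dg x v - u * n|}).indicator
      (fun _ => (1 : ℝ)) x) ≤ n * (Real.exp (α + c0) * Real.exp (-(c0 / 2 * n))) := by
    intro v
    refine (degree_ld hG hα.le hε0' hε1 h1 h2 h3 v).trans ?_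
    rw [← Real.exp_add]
    refine mul_le_mul_of_nonneg_left (Real.exp_le_exp.2 ?_) (Nat.cast_nonneg _)
    have : 2 * (α * ε0 * n) = c0 / 2 * n := by rw [hε0, hc0]; ring
    rw [this, ← hc0]; linarith
  have h7 := Finset.sum_le_sum fun v (_ : v ∈ Finset.univ) => h6 v
  rw [Finset.sum_const, Finset.card_univ, Fintype.card_fin, nsmul_eq_mul] at h7
  have h8 := hn0 n h4
  have h9 : EE (PP n α h) ((CG u ε0 ∩ DG u ε1)ᶜ.indicator fun _ => (1 : ℝ)) ≤
      Real.exp (-(1 * n)) + n * (n * (Real.exp (α + c0) * Real.exp (-(c0 / 2 * n)))) := by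
    rw [one_mul]
    exact h5.trans (add_le_add h8 h7)
  calc _ ≤ (n : ℝ) ^ 20 * (Real.exp (-(1 * n)) + n * (n * (Real.exp (α + c0) * Real.exp (-(c0 / 2 * n))))) := by
        gcongr
    _ = _ := by ring

lemma CG_mono {n : ℕ} {u ε ε' : ℝ} (h : ε ≤ ε') {x : Config n} (hx : x ∈ CG u ε) :
    x ∈ CG u ε' := fun S S' => (hx S S').trans (by gcongr)

/-- Contraction holds everywhere for `|α| < 2`, and on quasirandom nearly regular graphs for
`α ≥ 2`, where the factor is close to `2αu²(1-u) < 1`. -/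
theorem graph_poincare {α h u s0 : ℝ} {us : ℝ → ℝ} (hG : Good α h u us s0) (hα : -2 < α) :
    ∃ C : ℝ, 0 < C ∧ ∀ᶠ n : ℕ in atTop, HasPoincare α h C n := by
  by_cases h2 : α < 2
  · have habs : |α| < 2 := abs_lt.2 ⟨hα, h2⟩
    have hκ : 0 < 1 - |α| / 2 := by linarith
    refine ⟨20 / (1 - |α| / 2) + 1, by positivity, poincare_of_contraction hκ
      (by linarith [abs_nonneg α]) (fun _ => Set.univ) (Eventually.of_forall fun n x _ y _ => ?_) ?_⟩
    · rw [sub_sub_cancel]; exact contraction_high x y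
    · simp [EE]
  · push Not at h2
    have hα0 : 0 < α := by linarith
    have hu := hG.pos
    have hu1 := hG.lt
    set κ := (1 - 2 * α * u * (u * (1 - u))) / 2 with hκ
    have hκ0 : 0 < κ := half_pos hG.nondeg
    have hκ1 : κ ≤ 1 := by
      have : 0 ≤ 2 * α * u * (u * (1 - u)) := by
        have : 0 < 1 - u := by linarith
        positivity
      linarith
    set ε1 := κ / (2 * α + 16 * α ^ 2) with hε1
    have hε10 : 0 < ε1 := by positivity
    have hε11 : ε1 ≤ 1 := by
      rw [hε1, div_le_one (by positivity)]; nlinarith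
    refine ⟨20 / κ + 1, by positivity, poincare_of_contraction hκ0 hκ1
      (fun n => CG u (u * ε1 ^ 2 / 96) ∩ DG u ε1) (Eventually.of_forall fun n x hx y hy => ?_)
      (good_prob hG hα0 hε10)⟩
    have hle : u * ε1 ^ 2 / 96 ≤ ε1 := by nlinarith [mul_pos hu hε10]
    refine (contraction_low hα0.le hu.le hu1.le hG.fix x y (CG_mono hle hx.1) hx.2
      (CG_mono hle hy.1) hy.2).trans (le_of_eq ?_)
    congr 1
    have : (2 * α + 16 * α ^ 2) * ε1 = κ := by rw [hε1]; field_simp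
    rw [this, hκ]; ring

/-! ### Exchangeability -/

section Exch
variable {n : ℕ}

/-- The action of a vertex permutation on edges. -/
def pE (π : Equiv.Perm (Fin n)) : Edge n ≃ Edge n where
  toFun e := ⟨Sym2.map π e.1, by
    obtain ⟨v, w, hvw, he⟩ := edge_cases e
    rw [he]; simpa using hvw⟩
  invFun e := ⟨Sym2.map π.symm e.1, by
    obtain ⟨v, w, hvw, he⟩ := edge_cases e
    rw [he]; simpa using hvw⟩
  left_inv e := by
    ext1; simp [Sym2.map_map]
  right_inv e := by
    ext1; simp [Sym2.map_map]

/-- The action of a vertex permutation on graphs. -/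
def act (π : Equiv.Perm (Fin n)) (x : Config n) : Config n := fun e => x (pE π e)

lemma xr_act (π : Equiv.Perm (Fin n)) (x : Config n) (e : Edge n) :
    xr (act π x) e = xr x (pE π e) := rfl

lemma A_act (π : Equiv.Perm (Fin n)) (x : Config n) (v w : Fin n) :
    A (act π x) v w = A x (π v) (π w) := by
  by_cases h : v = w
  · subst h; rw [A_self, A_self]
  · rw [A_mkE _ h, A_mkE _ (fun h' => h (π.injective h')), xr_act]
    congr 1

lemma cod_act (π : Equiv.Perm (Fin n)) (x : Config n) (v w : Fin n) :
    cod (act π x) v w = cod x (π v) (π w) := by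
  unfold cod
  simp only [A_act]
  exact Equiv.sum_comp π (fun z => A x (π v) z * A x (π w) z)

lemma cE_act (π : Equiv.Perm (Fin n)) (x : Config n) (e : Edge n) :
    cE (act π x) e = cE x (pE π e) := by
  obtain ⟨v, w, hvw, he⟩ := edge_cases e
  rw [cE_eq _ he, cod_act, cE_eq]
  change Sym2.map π e.1 = _
  rw [he]; rfl

lemma dg_act (π : Equiv.Perm (Fin n)) (x : Config n) (v : Fin n) :
    dg (act π x) v = dg x (π v) := by
  unfold dg
  simp only [A_act]
  exact Equiv.sum_comp π (fun z => A x (π v) z)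

lemma Tr_act (π : Equiv.Perm (Fin n)) (x : Config n) : Tr (act π x) = Tr x := by
  have h1 := six_Tr (act π x)
  have h2 := six_Tr x
  simp only [A_act] at h1
  rw [Equiv.sum_comp π (fun a => ∑ b, ∑ c, A x a (π b) * A x (π b) (π c) * A x (π c) a)] at h1
  have : ∀ a, ∑ b, ∑ c, A x a (π b) * A x (π b) (π c) * A x (π c) a
      = ∑ b, ∑ c, A x a b * A x b c * A x c a := by
    intro a
    rw [Equiv.sum_comp π (fun b => ∑ c, A x a b * A x b (π c) * A x (π c) a)]
    refine Finset.sum_congr rfl fun b _ => ?_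
    rw [Equiv.sum_comp π (fun c => A x a b * A x b c * A x c a)]
  simp only [this] at h1
  linarith

lemma Ec_act (π : Equiv.Perm (Fin n)) (x : Config n) : Ec (act π x) = Ec x := by
  exact Equiv.sum_comp (pE π) (fun e => xr x e)

lemma EE_act (α h : ℝ) (π : Equiv.Perm (Fin n)) (F : Config n → ℝ) :
    EE (PP n α h) (fun x => F (act π x)) = EE (PP n α h) F := by
  have hPP : ∀ x, PP n α h (act π x) = PP n α h x := by
    intro x
    have h1 := Tr_act π x
    have h2 := Ec_act π x
    unfold Ec at h2
    simp only [PP, gib, HH, h1, ← Finset.mul_sum, h2]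
  unfold EE
  rw [← Equiv.sum_comp (Equiv.arrowCongr (pE π).symm (Equiv.refl Bool)) (fun x => PP n α h x • F x)]
  refine Finset.sum_congr rfl fun x _ => ?_
  have : (Equiv.arrowCongr (pE π).symm (Equiv.refl Bool)) x = act π x := by
    funext e; simp [act]
  rw [this, hPP]

lemma exists_perm (e f : Edge n) : ∃ π : Equiv.Perm (Fin n), pE π e = f := by
  obtain ⟨v, w, hvw, he⟩ := edge_cases e
  obtain ⟨a, b, hab, hf⟩ := edge_cases f
  refine ⟨(Equiv.swap v a).trans (Equiv.swap ((Equiv.swap v a) w) b), ?_⟩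
  ext1
  change Sym2.map _ e.1 = _
  rw [he, hf, Sym2.map_mk]
  have h1 : a ≠ Equiv.swap v a w := by
    intro h
    have := congrArg (Equiv.swap v a) h
    simp at this
    exact hvw this
  have h2 : Equiv.swap ((Equiv.swap v a) w) b a = a := Equiv.swap_apply_of_ne_of_ne h1 hab
  simp [h2]

lemma EE_xr_eq (α h : ℝ) (e f : Edge n) :
    EE (PP n α h) (fun x => xr x e) = EE (PP n α h) (fun x => xr x f) := by
  obtain ⟨π, rfl⟩ := exists_perm e f
  rw [← EE_act α h π (fun x => xr x e)]; rfl

lemma EE_cE_eq (α h : ℝ) (e f : Edge n) :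
    EE (PP n α h) (fun x => cE x e) = EE (PP n α h) (fun x => cE x f) := by
  obtain ⟨π, rfl⟩ := exists_perm e f
  rw [← EE_act α h π (fun x => cE x e)]; simp only [cE_act]

lemma EE_dg_eq (α h : ℝ) (k : ℕ) (v w : Fin n) :
    EE (PP n α h) (fun x => dg x v ^ k) = EE (PP n α h) (fun x => dg x w ^ k) := by
  rw [← EE_act α h (Equiv.swap v w) (fun x => dg x v ^ k)]; simp [dg_act]

lemma sum_dg (x : Config n) : ∑ v, dg x v = 2 * Ec x := sum_A x

lemma two_sum_cE (x : Config n) : 2 * ∑ e, cE x e = ∑ z, (dg x z ^ 2 - dg x z) := by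
  have h1 := sum_pairs (fun s => Sym2.lift ⟨fun v w => cod x v w, cod_symm x⟩ s)
  have h2 : ∑ e : Edge n, cE x e = ∑ e : Edge n, Sym2.lift ⟨fun v w => cod x v w, cod_symm x⟩ e.1 :=
    rfl
  rw [h2, ← h1]
  simp only [Sym2.lift_mk]
  have h3 : ∀ v w, (if v = w then (0 : ℝ) else cod x v w)
      = cod x v w - if v = w then dg x v else 0 := by
    intro v w
    split_ifs with h
    · subst h
      simp only [cod, A_sq, dg, sub_self]
    · ring
  simp only [h3, Finset.sum_sub_distrib, Finset.sum_ite_eq, Finset.mem_univ, if_true]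
  congr 1
  simp only [cod, dg, sq, Finset.sum_mul_sum]
  rw [Finset.sum_congr rfl fun v _ => Finset.sum_comm]
  rw [Finset.sum_comm]
  refine Finset.sum_congr rfl fun z _ => Finset.sum_congr rfl fun v _ =>
    Finset.sum_congr rfl fun w _ => ?_
  rw [A_symm x v z, A_symm x w z]

end Exch

/-! ### Law of large numbers for degrees and codegrees -/

section LLN
variable {n : ℕ}

lemma Vr_dg_le {α h C : ℝ} (hC : 0 < C) (hP : HasPoincare α h C n) (hn : 1 ≤ n) (v : Fin n) :
    Vr (PP n α h) (fun x => dg x v) ≤ (1 + 4 * C) * n := by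
  have hn' : (1 : ℝ) ≤ n := by exact_mod_cast hn
  have h1 := hP (fun x => dg x v) (fun x => by
    rw [abs_of_nonneg (dg_nonneg x v)]
    exact (dg_le x v).trans (le_self_pow₀ hn' (by norm_num)))
  refine h1.trans ?_
  have h2 : ∑ e, EE (PP n α h) (fun x => Dl e (fun x => dg x v) x ^ 2) ≤ n := by
    rw [← EE_sum]
    refine EE_le_const (PP_prob n α h) fun x => ?_
    refine le_trans (Finset.sum_le_sum fun e _ => ?_) (sum_sum_dlt_le v)
    rw [dg_Dl]
    have := sum_dlt_le e v
    have h0 : 0 ≤ ∑ z, dlt e v z := Finset.sum_nonneg fun z _ => dlt_nonneg e v z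
    nlinarith
  have h3 : (1 : ℝ) / n ≤ n := by rw [div_le_iff₀ (by linarith)]; nlinarith
  nlinarith

lemma Vr_cE_le {α h C : ℝ} (hC : 0 < C) (hP : HasPoincare α h C n) (hn : 1 ≤ n) (e : Edge n) :
    Vr (PP n α h) (fun x => cE x e) ≤ (1 + 4 * C) * n := by
  have hn' : (1 : ℝ) ≤ n := by exact_mod_cast hn
  have h1 := hP (fun x => cE x e) (fun x => by
    rw [abs_of_nonneg (cE_nonneg x e)]
    exact (cE_le x e).trans (le_self_pow₀ hn' (by norm_num)))
  refine h1.trans ?_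
  have h2 : ∑ f, EE (PP n α h) (fun x => Dl f (fun x => cE x e) x ^ 2) ≤ 4 * n := by
    rw [← EE_sum]
    refine EE_le_const (PP_prob n α h) fun x => ?_
    have : ∑ f, Dl f (fun x => cE x e) x ^ 2 ≤ ∑ f, 2 * Dl f (fun x => cE x e) x :=
      Finset.sum_le_sum fun f _ => by
        nlinarith [cE_Dl_nonneg x f e, cE_Dl_le_two x f e]
    rw [← Finset.mul_sum] at this
    linarith [sum_cE_Dl_le x e]
  have h3 : (1 : ℝ) / n ≤ n := by rw [div_le_iff₀ (by linarith)]; nlinarith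
  nlinarith

/-- The common value of the edge probabilities. -/
def qn (n : ℕ) (α h : ℝ) : ℝ := EE (PP n α h) (fun x => Ec x) / Fintype.card (Edge n)

lemma card_edge_pos (hn : 2 ≤ n) : 0 < (Fintype.card (Edge n) : ℝ) := by
  have := card_edge (n := n)
  have hn' : (2 : ℝ) ≤ n := by exact_mod_cast hn
  nlinarith

lemma EE_xr_qn (α h : ℝ) (e : Edge n) : EE (PP n α h) (fun x => xr x e) = qn n α h := by
  have : Nonempty (Edge n) := ⟨e⟩
  unfold qn Ec
  rw [EE_sum, Finset.sum_congr rfl (fun f _ => EE_xr_eq α h f e)]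
  rw [Finset.sum_const, Finset.card_univ, nsmul_eq_mul]
  have : (Fintype.card (Edge n) : ℝ) ≠ 0 := by exact_mod_cast Fintype.card_ne_zero
  field_simp

lemma EE_dg_qn (α h : ℝ) (v : Fin n) : EE (PP n α h) (fun x => dg x v) = (n - 1) * qn n α h := by
  have h1 : ∀ x : Config n, dg x v = ∑ e, (∑ z, dlt e v z) * xr x e := by
    intro x
    rw [dg_eq]
    refine Finset.sum_congr rfl fun e _ => ?_
    rw [sum_dlt_eq]; split_ifs <;> simp
  simp only [h1]
  rw [EE_sum]
  simp only [EE_mul_left, EE_xr_qn]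
  rw [← Finset.sum_mul, Finset.sum_comm]
  simp only [sum_edge_dlt]
  simp

/-- Summing codegrees over all edges is summing `d(d-1)/2` over all vertices; exchangeability
makes all terms equal in mean. -/
lemma EE_cE_formula (α h : ℝ) (e : Edge n) (v : Fin n) (hn : 2 ≤ n) :
    EE (PP n α h) (fun x => cE x e)
      = Vr (PP n α h) (fun x => dg x v) / (n - 1) + (n - 1) * qn n α h ^ 2 - qn n α h := by
  have hn' : (2 : ℝ) ≤ n := by exact_mod_cast hn
  have h1 : EE (PP n α h) (fun x => 2 * ∑ e, cE x e)
      = EE (PP n α h) (fun x => ∑ z, (dg x z ^ 2 - dg x z)) := EE_congr two_sum_cE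
  rw [EE_mul_left, EE_sum, EE_sum, Finset.sum_congr rfl (fun f _ => EE_cE_eq α h f e)] at h1
  have h2 : ∀ z : Fin n, EE (PP n α h) (fun x => dg x z ^ 2 - dg x z)
      = EE (PP n α h) (fun x => dg x v ^ 2) - EE (PP n α h) (fun x => dg x v) := by
    intro z
    rw [EE_sub, EE_dg_eq α h 2 z v, EE_dg_qn, EE_dg_qn]
  rw [Finset.sum_congr rfl (fun z _ => h2 z)] at h1
  simp only [Finset.sum_const, Finset.card_univ, nsmul_eq_mul, Fintype.card_fin] at h1
  rw [← mul_assoc, card_edge] at h1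
  have h3 := Vr_eq (PP_prob n α h) (fun x => dg x v)
  rw [EE_dg_qn] at h1 h3
  have h4 : ((n : ℝ) - 1) ≠ 0 := by linarith
  have h5 : (n : ℝ) ≠ 0 := by linarith
  have h6 : ((n : ℝ) - 1) * EE (PP n α h) (fun x => cE x e)
      = EE (PP n α h) (fun x => dg x v ^ 2) - (n - 1) * qn n α h := by
    apply mul_left_cancel₀ h5; linarith
  rw [h3]
  field_simp
  linarith

end LLN

section LLN2
variable {n : ℕ}

lemma EE_sub_sq {Ω : Type*} [Fintype Ω] {μ : Ω → ℝ} (hμ : IsProb μ) (f : Ω → ℝ) (c : ℝ) :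
    EE μ (fun x => (f x - c) ^ 2) = Vr μ f + (EE μ f - c) ^ 2 := by
  have h1 : ∀ x, (f x - c) ^ 2 = f x ^ 2 - ((2 * c) * f x - c ^ 2) := fun x => by ring
  rw [EE_congr h1, EE_sub, EE_sub, EE_mul_left, EE_const hμ, Vr_eq hμ]
  ring

lemma EE_abs_dev {Ω : Type*} [Fintype Ω] {μ : Ω → ℝ} (hμ : IsProb μ) (f : Ω → ℝ) :
    EE μ (fun x => |f x - EE μ f|) ≤ Real.sqrt (Vr μ f) := EE_abs_le_sqrt hμ _

lemma qn_nonneg (α h : ℝ) : 0 ≤ qn n α h :=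
  div_nonneg (EE_nonneg (PP_prob n α h) Ec_nonneg) (Nat.cast_nonneg _)

lemma qn_le_one (α h : ℝ) (hn : 2 ≤ n) : qn n α h ≤ 1 := by
  unfold qn
  rw [div_le_one (card_edge_pos hn)]
  refine EE_le_const (PP_prob n α h) fun x => ?_
  unfold Ec
  refine (Finset.sum_le_sum fun e _ => xr_le_one x e).trans ?_
  simp

lemma edge_nonempty (hn : 2 ≤ n) : Nonempty (Edge n) :=
  ⟨mkE ⟨0, by omega⟩ ⟨1, by omega⟩ (by simp)⟩

lemma cbar_bound {α h C : ℝ} (hC : 0 < C) (hP : HasPoincare α h C n) (hn : 2 ≤ n) (e : Edge n) :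
    |EE (PP n α h) (fun x => cE x e) / n - qn n α h ^ 2| ≤ (4 + 8 * C) / n := by
  have hn' : (2 : ℝ) ≤ n := by exact_mod_cast hn
  have hV := Vr_dg_le hC hP (by omega) ⟨0, by omega⟩
  have hV0 := Vr_nonneg (PP_prob n α h) (fun x => dg x (⟨0, by omega⟩ : Fin n))
  rw [EE_cE_formula α h e ⟨0, by omega⟩ hn]
  set V := Vr (PP n α h) (fun x => dg x (⟨0, by omega⟩ : Fin n))
  have hq0 := qn_nonneg (n := n) α h
  have hq1 := qn_le_one α h hn
  set q := qn n α h
  have h1 : 0 < (n : ℝ) - 1 := by linarith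
  have h2 : V / (n - 1) ≤ 2 * (1 + 4 * C) := by
    rw [div_le_iff₀ h1]; nlinarith
  have h3 : 0 ≤ V / (n - 1) := by positivity
  have h4 : (V / (n - 1) + (n - 1) * q ^ 2 - q) / n - q ^ 2 = (V / (n - 1) - q ^ 2 - q) / n := by
    field_simp; ring
  rw [h4, abs_div, abs_of_pos (by linarith : (0 : ℝ) < n)]
  gcongr
  rw [abs_le]; constructor <;> nlinarith

lemma EE_pr (α h : ℝ) (e : Edge n) : EE (PP n α h) (fun x => pr (PP n α h) e x) = qn n α h := by
  have := EE_ibp_real (PP_prob n α h) e (fun _ => 1)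
  simp only [mul_one, Dl, sub_self, mul_zero, EE_const (PP_prob n α h)] at this
  rw [EE_sub, EE_xr_qn] at this
  linarith

/-- The edge density approximately solves the mean-field equation. -/
lemma q_fix {α h C : ℝ} (hC : 0 < C) (hP : HasPoincare α h C n) (hn : 2 ≤ n) :
    |qn n α h - Real.sigmoid (h + α * qn n α h ^ 2)|
      ≤ |α| * (Real.sqrt ((1 + 4 * C) / n) + (4 + 8 * C) / n) := by
  have hn' : (2 : ℝ) ≤ n := by exact_mod_cast hn
  have hn0 : (0 : ℝ) < n := by linarith
  obtain ⟨e⟩ := edge_nonempty hn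
  have hc := cbar_bound hC hP hn e
  have hV := Vr_cE_le hC hP (by omega) e
  set cb := EE (PP n α h) (fun x => cE x e) with hcb
  set q := qn n α h
  have h1 : |q - Real.sigmoid (h + α / n * cb)| ≤ |α| * Real.sqrt ((1 + 4 * C) / n) := by
    have : q - Real.sigmoid (h + α / n * cb)
        = EE (PP n α h) (fun x => pr (PP n α h) e x - Real.sigmoid (h + α / n * cb)) := by
      rw [EE_sub, EE_pr, EE_const (PP_prob n α h)]
    rw [this]
    refine (abs_EE_le (PP_prob n α h) _).trans ?_
    have h2 : ∀ x, |pr (PP n α h) e x - Real.sigmoid (h + α / n * cb)|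
        ≤ |α| / n * |cE x e - cb| := by
      intro x
      rw [PP_pr]
      refine (sig_lip _ _).trans ?_
      rw [show h + α / n * cE x e - (h + α / n * cb) = α / n * (cE x e - cb) by ring, abs_mul,
        abs_div, abs_of_pos hn0]
      have : 0 ≤ |α| / n * |cE x e - cb| := by positivity
      linarith
    refine (EE_mono (PP_prob n α h) h2).trans ?_
    rw [EE_mul_left, div_mul_eq_mul_div, mul_div_assoc]
    refine mul_le_mul_of_nonneg_left ?_ (abs_nonneg α)
    have h3 := EE_abs_dev (PP_prob n α h) (fun x => cE x e)
    rw [div_le_iff₀ hn0]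
    refine (h3.trans (Real.sqrt_le_sqrt hV)).trans ?_
    apply Real.sqrt_le_iff.2
    refine ⟨by positivity, ?_⟩
    rw [mul_pow, Real.sq_sqrt (by positivity)]
    apply le_of_eq; field_simp
  have h2 : |Real.sigmoid (h + α / n * cb) - Real.sigmoid (h + α * q ^ 2)|
      ≤ |α| * ((4 + 8 * C) / n) := by
    refine (sig_lip _ _).trans ?_
    rw [show h + α / n * cb - (h + α * q ^ 2) = α * (cb / n - q ^ 2) by ring, abs_mul]
    have : |α| * |cb / n - q ^ 2| ≤ |α| * ((4 + 8 * C) / n) :=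
      mul_le_mul_of_nonneg_left hc (abs_nonneg α)
    have h0 : 0 ≤ |α| * |cb / n - q ^ 2| := by positivity
    linarith
  rw [mul_add]
  exact (abs_sub_le _ _ _).trans (add_le_add h1 h2)

/-- For `α ≤ 0` the map `q ↦ q - σ(h + α q²)` expands distances on `[0, ∞)`, so an approximate
solution is close to `u`. -/
lemma q_near_of_nonpos {α h u q : ℝ} (hα : α ≤ 0) (hu : 0 < u) (hq : 0 ≤ q)
    (hfix : Real.sigmoid (h + α * u ^ 2) = u) :
    |q - u| ≤ |q - Real.sigmoid (h + α * q ^ 2)| := by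
  rcases le_total u q with h1 | h1
  · have : Real.sigmoid (h + α * q ^ 2) ≤ u := by
      rw [← hfix]; apply Real.sigmoid_monotone
      nlinarith [mul_nonneg (sub_nonneg.2 h1) (add_nonneg hu.le hq)]
    rw [abs_of_nonneg (by linarith), abs_of_nonneg (by linarith)]; linarith
  · have : u ≤ Real.sigmoid (h + α * q ^ 2) := by
      conv_lhs => rw [← hfix]
      apply Real.sigmoid_monotone
      nlinarith [mul_nonneg (sub_nonneg.2 h1) (add_nonneg hu.le hq)]
    rw [abs_of_nonpos (by linarith), abs_of_nonpos (by linarith)]; linarith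

lemma q_near_of_CG {α h u ε : ℝ} (hu0 : 0 < u) (hu1 : u < 1) (hε : 0 < ε) (hn : 2 ≤ n)
    (hCG : EE (PP n α h) ((CG u ε)ᶜ.indicator fun _ => (1 : ℝ)) ≤ Real.exp (-n)) :
    |qn n α h - u| ≤ ε + 2 * Real.exp (-n) + 1 / n := by
  have hn' : (2 : ℝ) ≤ n := by exact_mod_cast hn
  have hn0 : (0 : ℝ) < n := by linarith
  have h1 : ∀ x : Config n, |2 * Ec x - u * n ^ 2| ≤ ε * n ^ 2
      + 2 * n ^ 2 * ((CG u ε)ᶜ.indicator (fun _ => (1 : ℝ)) x) := by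
    intro x
    by_cases hx : x ∈ CG u ε
    · rw [Set.indicator_of_notMem (by simpa using hx), mul_zero, add_zero]
      have := hx Finset.univ Finset.univ
      simp only [Finset.sum_sub_distrib, sum_A, Finset.sum_const, Finset.card_univ,
        Fintype.card_fin, nsmul_eq_mul] at this
      rwa [show (n : ℝ) * (n * u) = u * n ^ 2 by ring] at this
    · rw [Set.indicator_of_mem (by simpa using hx), mul_one]
      have a1 := Ec_nonneg x
      have a2 := Ec_le x
      rw [abs_le]; constructor <;> nlinarith [sq_nonneg (n : ℝ), mul_pos hε (pow_pos hn0 2)]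
  have h2 := (abs_EE_le (PP_prob n α h) _).trans (EE_mono (PP_prob n α h) h1)
  rw [EE_sub, EE_add, EE_mul_left, EE_mul_left, EE_const (PP_prob n α h),
    EE_const (PP_prob n α h)] at h2
  have h3 : EE (PP n α h) (fun x => Ec x) = Fintype.card (Edge n) * qn n α h := by
    unfold qn; have := card_edge_pos hn; field_simp
  have h3' : EE (PP n α h) Ec = Fintype.card (Edge n) * qn n α h := h3
  rw [h3', ← mul_assoc, card_edge] at h2
  have hq0 := qn_nonneg (n := n) α h
  have hq1 := qn_le_one α h hn
  set q := qn n α h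
  have h4 : |n * (n - 1) * q - u * n ^ 2| ≤ ε * n ^ 2 + 2 * n ^ 2 * Real.exp (-n) := by
    refine h2.trans ?_
    rw [EE_mul_left]
    gcongr
  have h5 : (q - u) * n ^ 2 = (n * (n - 1) * q - u * n ^ 2) + n * q := by ring
  have h6 : |q - u| * n ^ 2 ≤ ε * n ^ 2 + 2 * n ^ 2 * Real.exp (-n) + n := by
    rw [← abs_of_pos (pow_pos hn0 2), ← abs_mul, abs_of_pos (pow_pos hn0 2), h5]
    refine (abs_add_le _ _).trans (add_le_add h4 ?_)
    rw [abs_of_nonneg (by positivity)]; nlinarith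
  have h7 : |q - u| * n ^ 2 ≤ (ε + 2 * Real.exp (-n) + 1 / n) * n ^ 2 := by
    refine h6.trans (le_of_eq ?_); field_simp
  exact le_of_mul_le_mul_right h7 (by positivity)

lemma tendsto_c_div (c : ℝ) : Tendsto (fun n : ℕ => c / n) atTop (𝓝 0) :=
  tendsto_const_div_atTop_nhds_zero_nat c

/-- For `α ≤ 0` the mean-field equation determines the limit; for `α > 0` quasirandomness does. -/
theorem qn_tendsto {α h u s0 : ℝ} {us : ℝ → ℝ} (hG : Good α h u us s0) (hα : -2 < α) :
    Tendsto (fun n : ℕ => qn n α h) atTop (𝓝 u) := by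
  obtain ⟨C, hC, hP⟩ := graph_poincare hG hα
  rw [tendsto_iff_norm_sub_tendsto_zero]
  simp only [Real.norm_eq_abs]
  rcases le_or_gt α 0 with h0 | h0
  · have hlim : Tendsto (fun n : ℕ => |α| * (Real.sqrt ((1 + 4 * C) / n) + (4 + 8 * C) / n))
        atTop (𝓝 0) := by
      have h1 := (Real.continuous_sqrt.tendsto 0).comp (tendsto_c_div (1 + 4 * C))
      have h2 := (h1.add (tendsto_c_div (4 + 8 * C))).const_mul |α|
      simpa [Function.comp_def] using h2
    refine squeeze_zero' (Eventually.of_forall fun n => abs_nonneg _) ?_ hlim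
    filter_upwards [hP, eventually_ge_atTop 2] with n hPn hn
    exact (q_near_of_nonpos h0 hG.pos (qn_nonneg α h) hG.fix).trans (q_fix hC hPn hn)
  · rw [Metric.tendsto_atTop]
    intro ε hε
    obtain ⟨n0, hn0⟩ := CG_prob hG h0.le (half_pos hε)
    have hlim : Tendsto (fun n : ℕ => 2 * Real.exp (-n) + 1 / n) atTop (𝓝 0) := by
      have h1 : Tendsto (fun n : ℕ => Real.exp (-(n : ℝ))) atTop (𝓝 0) :=
        Real.tendsto_exp_neg_atTop_nhds_zero.comp tendsto_natCast_atTop_atTop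
      simpa using (h1.const_mul 2).add (tendsto_c_div 1)
    obtain ⟨n1, hn1⟩ := (eventually_atTop.1 (hlim.eventually (gt_mem_nhds (half_pos hε))))
    refine ⟨max (max n0 n1) 2, fun n hn => ?_⟩
    simp only [ge_iff_le, max_le_iff] at hn
    have h2 := q_near_of_CG (α := α) (h := h) hG.pos hG.lt (half_pos hε) hn.2 (hn0 n hn.1.1)
    have h3 := hn1 n hn.1.2
    rw [Real.dist_eq, sub_zero, abs_abs]
    linarith

/-- Degrees and codegrees concentrate, in mean square, within `δ` of `u n` and `u² n`. -/
def Dev (n : ℕ) (α h u δ : ℝ) : Prop :=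
  (∀ e : Edge n, EE (PP n α h) (fun x => (cE x e / n - u ^ 2) ^ 2) ≤ δ) ∧
  (∀ v : Fin n, EE (PP n α h) (fun x => (dg x v / n - u) ^ 2) ≤ δ)

lemma Vr_div {Ω : Type*} [Fintype Ω] {μ : Ω → ℝ} (f : Ω → ℝ) (c : ℝ) :
    Vr μ (fun x => f x / c) = Vr μ f / c ^ 2 := by
  have : ∀ x, f x / c = c⁻¹ * f x := fun x => by rw [div_eq_inv_mul]
  rw [show (fun x => f x / c) = fun x => c⁻¹ * f x from funext this, Vr_mul_left]
  rw [inv_pow, ← div_eq_inv_mul]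

/-- Law of large numbers in mean square for degrees and codegrees. -/
theorem exists_Dev {α h u s0 : ℝ} {us : ℝ → ℝ} (hG : Good α h u us s0) (hα : -2 < α) :
    ∃ δ : ℕ → ℝ, Tendsto δ atTop (𝓝 0) ∧ ∀ᶠ n : ℕ in atTop, Dev n α h u (δ n) := by
  obtain ⟨C, hC, hP⟩ := graph_poincare hG hα
  have hq := qn_tendsto hG hα
  refine ⟨fun n => (1 + 4 * C) / n + 2 * ((4 + 8 * C) / n) ^ 2 + 2 * (qn n α h ^ 2 - u ^ 2) ^ 2
    + 2 * (1 / n) ^ 2 + 2 * (qn n α h - u) ^ 2, ?_, ?_⟩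
  · have h1 := ((tendsto_c_div (4 + 8 * C)).pow 2).const_mul 2
    have h2 := (((hq.pow 2).sub_const (u ^ 2)).pow 2).const_mul 2
    have h3 := ((tendsto_c_div 1).pow 2).const_mul 2
    have h4 := ((hq.sub_const u).pow 2).const_mul 2
    simpa using ((((tendsto_c_div (1 + 4 * C)).add h1).add h2).add h3).add h4
  · filter_upwards [hP, eventually_ge_atTop 2] with n hPn hn
    have hn' : (2 : ℝ) ≤ n := by exact_mod_cast hn
    have hn0 : (0 : ℝ) < n := by linarith
    have hq0 := qn_nonneg (n := n) α h
    have hq1 := qn_le_one α h hn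
    constructor
    · intro e
      rw [EE_sub_sq (PP_prob n α h) (fun x => cE x e / n), Vr_div, EE_div]
      have a1 : Vr (PP n α h) (fun x => cE x e) / n ^ 2 ≤ (1 + 4 * C) / n := by
        have := Vr_cE_le hC hPn (by omega) e
        rw [div_le_div_iff₀ (by positivity) hn0]
        nlinarith
      have a2 := sq_le_sq' (neg_le_of_abs_le (cbar_bound hC hPn hn e))
        (le_of_abs_le (cbar_bound hC hPn hn e))
      set c := EE (PP n α h) (fun x => cE x e) / n
      set q := qn n α h
      have a3 : (c - u ^ 2) ^ 2 ≤ 2 * (c - q ^ 2) ^ 2 + 2 * (q ^ 2 - u ^ 2) ^ 2 := by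
        nlinarith [sq_nonneg ((c - q ^ 2) - (q ^ 2 - u ^ 2))]
      nlinarith [sq_nonneg (1 / (n : ℝ)), sq_nonneg (q - u)]
    · intro v
      rw [EE_sub_sq (PP_prob n α h) (fun x => dg x v / n), Vr_div, EE_div, EE_dg_qn]
      have a1 : Vr (PP n α h) (fun x => dg x v) / n ^ 2 ≤ (1 + 4 * C) / n := by
        have := Vr_dg_le hC hPn (by omega) v
        rw [div_le_div_iff₀ (by positivity) hn0]
        nlinarith
      set q := qn n α h
      have a2 : (n - 1) * q / n - u = (q - u) - q * (1 / n) := by field_simp; ring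
      have a3 : (q * (1 / n)) ^ 2 ≤ (1 / (n : ℝ)) ^ 2 := by
        rw [mul_pow]; have : q ^ 2 ≤ 1 := by nlinarith
        nlinarith [sq_nonneg (1 / (n : ℝ))]
      have a4 : ((n - 1) * q / n - u) ^ 2 ≤ 2 * (q - u) ^ 2 + 2 * (1 / n) ^ 2 := by
        rw [a2]
        nlinarith [sq_nonneg ((q - u) + q * (1 / n))]
      nlinarith [sq_nonneg ((4 + 8 * C) / (n : ℝ)), sq_nonneg (q ^ 2 - u ^ 2)]

end LLN2

/-! ### Asymptotic variance of the triangle count -/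

section VarT
variable {n : ℕ} {α h u C δ : ℝ}

lemma one_div_le_self (hn : 2 ≤ n) : (1 : ℝ) / n ≤ 1 := by
  have hn' : (2 : ℝ) ≤ n := by exact_mod_cast hn
  rw [div_le_one (by linarith)]; linarith

/-- The triangle count is `u² n` times the edge count, up to negligible fluctuations. -/
lemma Vr_R (hC : 0 < C) (hP : HasPoincare α h C n) (hD : Dev n α h u δ) (hδ : 0 ≤ δ) (hn : 2 ≤ n)
    (hu0 : 0 < u) (hu1 : u < 1) :
    Vr (PP n α h) (fun x => Tr x - u ^ 2 * n * Ec x) ≤ 1 + C * δ * n ^ 4 := by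
  have hn' : (2 : ℝ) ≤ n := by exact_mod_cast hn
  have hn0 : (0 : ℝ) < n := by linarith
  have hb : ∀ x : Config n, |Tr x - u ^ 2 * n * Ec x| ≤ (n : ℝ) ^ 6 := by
    intro x
    have a1 := Tr_nonneg x
    have a2 := Tr_le x
    have a3 := Ec_nonneg x
    have a4 := Ec_le x
    have a5 : u ^ 2 ≤ 1 := by nlinarith
    have a6 : 0 ≤ u ^ 2 * n * Ec x := by positivity
    have a7 : u ^ 2 * n * Ec x ≤ 1 * n * (n ^ 2 / 2) := by gcongr
    have a8 : (n : ℝ) ^ 3 ≤ n ^ 6 := pow_le_pow_right₀ (by linarith) (by norm_num)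
    rw [abs_le]; constructor <;> nlinarith
  refine (hP _ hb).trans ?_
  have h1 : ∀ e : Edge n, EE (PP n α h) (fun x => Dl e (fun x => Tr x - u ^ 2 * n * Ec x) x ^ 2)
      ≤ n ^ 2 * δ := by
    intro e
    refine le_trans (le_of_eq ?_) (mul_le_mul_of_nonneg_left (hD.1 e) (sq_nonneg (n : ℝ)))
    rw [← EE_mul_left]
    refine EE_congr fun x => ?_
    have : Dl e (fun x => Tr x - u ^ 2 * n * Ec x) x = Dl e Tr x - u ^ 2 * n * Dl e Ec x := by
      unfold Dl; ring
    rw [this, Tr_Dl, Ec_Dl]; field_simp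
  have h2 := Finset.sum_le_sum fun e (_ : e ∈ Finset.univ) => h1 e
  rw [Finset.sum_const, Finset.card_univ, nsmul_eq_mul] at h2
  have h3 : (Fintype.card (Edge n) : ℝ) * (n ^ 2 * δ) ≤ n ^ 4 * δ := by
    have := card_edge_le (n := n)
    have h0 : 0 ≤ (n : ℝ) ^ 2 * δ := by positivity
    nlinarith [sq_nonneg (n : ℝ)]
  have h4 := mul_le_mul_of_nonneg_left (h2.trans h3) hC.le
  linarith [one_div_le_self hn]

lemma sum_cE_Dl_eq (x : Config n) (f : Edge n) {a b : Fin n} (hab : a ≠ b) (hf : f.1 = s(a, b)) :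
    Dl f (fun x => ∑ e, cE x e) x = dg (up x f false) a + dg (up x f false) b := by
  have h1 : ∀ y : Config n, ∑ e, cE y e = (∑ z, (dg y z ^ 2 - dg y z)) / 2 := fun y => by
    rw [← two_sum_cE]; ring
  simp only [Dl, h1]
  have h2 : ∀ z, dg (up x f true) z = dg (up x f false) z + ∑ y, dlt f z y := by
    intro z
    have := dg_Dl x f z
    simp only [Dl] at this
    linarith
  simp only [h2]
  rw [← sub_div, ← Finset.sum_sub_distrib]
  have h3 : ∀ z, (dg (up x f false) z + ∑ y, dlt f z y) ^ 2 - (dg (up x f false) z + ∑ y, dlt f z y)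
      - (dg (up x f false) z ^ 2 - dg (up x f false) z)
      = 2 * ∑ y, dlt f z y * dg (up x f false) z := by
    intro z
    rw [← Finset.sum_mul, sum_dlt_eq]
    split_ifs <;> ring
  simp only [h3]
  rw [← Finset.mul_sum, sum_pairs_dlt f hab hf (fun z _ => dg (up x f false) z)]
  ring

lemma dg_up_false (x : Config n) (f : Edge n) (a : Fin n) :
    |dg (up x f false) a - dg x a| ≤ 1 := by
  have h1 := dg_Dl x f a
  have h2 := sum_dlt_le f a
  have h0 : 0 ≤ ∑ z, dlt f a z := Finset.sum_nonneg fun z _ => dlt_nonneg f a z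
  have h3 := up_self x f
  simp only [Dl] at h1
  cases hx : x f
  · rw [hx] at h3; rw [h3]; simp
  · rw [hx] at h3; rw [h3] at h1; rw [abs_le]; constructor <;> linarith

/-- The sum of the codegrees is `2 u n` times the edge count, up to negligible fluctuations. -/
lemma Vr_W (hC : 0 < C) (hP : HasPoincare α h C n) (hD : Dev n α h u δ) (hδ : 0 ≤ δ) (hn : 2 ≤ n)
    (hu0 : 0 < u) (hu1 : u < 1) :
    Vr (PP n α h) (fun x => ∑ e, cE x e - 2 * u * n * Ec x)
      ≤ 1 + C * (3 * δ * n ^ 4 + 6 * n ^ 2) := by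
  have hn' : (2 : ℝ) ≤ n := by exact_mod_cast hn
  have hn0 : (0 : ℝ) < n := by linarith
  have hcard := card_edge_le (n := n)
  have hb : ∀ x : Config n, |∑ e, cE x e - 2 * u * n * Ec x| ≤ (n : ℝ) ^ 6 := by
    intro x
    have a1 : 0 ≤ ∑ e, cE x e := Finset.sum_nonneg fun e _ => cE_nonneg x e
    have a2 : ∑ e, cE x e ≤ n ^ 2 / 2 * n := by
      refine (Finset.sum_le_sum fun e _ => cE_le x e).trans ?_
      rw [Finset.sum_const, Finset.card_univ, nsmul_eq_mul]
      gcongr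
    have a3 := Ec_nonneg x
    have a4 := Ec_le x
    have a6 : 0 ≤ 2 * u * n * Ec x := by positivity
    have a7 : 2 * u * n * Ec x ≤ 2 * 1 * n * (n ^ 2 / 2) := by gcongr
    have a8 : (n : ℝ) ^ 3 ≤ n ^ 6 := pow_le_pow_right₀ (by linarith) (by norm_num)
    rw [abs_le]; constructor <;> nlinarith [pow_pos hn0 3]
  refine (hP _ hb).trans ?_
  have h1 : ∀ f : Edge n, EE (PP n α h)
      (fun x => Dl f (fun x => ∑ e, cE x e - 2 * u * n * Ec x) x ^ 2) ≤ 6 * n ^ 2 * δ + 12 := by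
    intro f
    obtain ⟨a, b, hab, hf⟩ := edge_cases f
    have key : ∀ x, Dl f (fun x => ∑ e, cE x e - 2 * u * n * Ec x) x ^ 2
        ≤ 3 * n ^ 2 * (dg x a / n - u) ^ 2 + 3 * n ^ 2 * (dg x b / n - u) ^ 2 + 12 := by
      intro x
      have e1 : Dl f (fun x => ∑ e, cE x e - 2 * u * n * Ec x) x
          = Dl f (fun x => ∑ e, cE x e) x - 2 * u * n * Dl f Ec x := by unfold Dl; ring
      rw [e1, sum_cE_Dl_eq x f hab hf, Ec_Dl]
      have b1 := abs_le.1 (dg_up_false x f a)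
      have b2 := abs_le.1 (dg_up_false x f b)
      have b3 : n ^ 2 * (dg x a / n - u) ^ 2 = (dg x a - u * n) ^ 2 := by field_simp
      have b4 : n ^ 2 * (dg x b / n - u) ^ 2 = (dg x b - u * n) ^ 2 := by field_simp
      set p := dg (up x f false) a - dg x a
      set q := dg (up x f false) b - dg x b
      have b5 : dg (up x f false) a + dg (up x f false) b - 2 * u * n * 1
          = (dg x a - u * n) + (dg x b - u * n) + (p + q) := by simp only [p, q]; ring
      rw [b5]
      have b6 : (p + q) ^ 2 ≤ 4 := by nlinarith
      set r := dg x a - u * n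
      set s := dg x b - u * n
      nlinarith [sq_nonneg (r - s), sq_nonneg (r - (p + q)), sq_nonneg (s - (p + q))]
    refine (EE_mono (PP_prob n α h) key).trans ?_
    rw [EE_add, EE_add, EE_mul_left, EE_mul_left, EE_const (PP_prob n α h)]
    have := mul_le_mul_of_nonneg_left (hD.2 a) (by positivity : 0 ≤ 3 * (n : ℝ) ^ 2)
    have := mul_le_mul_of_nonneg_left (hD.2 b) (by positivity : 0 ≤ 3 * (n : ℝ) ^ 2)
    linarith
  have h2 := Finset.sum_le_sum fun e (_ : e ∈ Finset.univ) => h1 e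
  rw [Finset.sum_const, Finset.card_univ, nsmul_eq_mul] at h2
  have h3 : (Fintype.card (Edge n) : ℝ) * (6 * n ^ 2 * δ + 12) ≤ 3 * δ * n ^ 4 + 6 * n ^ 2 := by
    have := mul_le_mul_of_nonneg_right hcard (by positivity : 0 ≤ 6 * (n : ℝ) ^ 2 * δ + 12)
    nlinarith
  have h4 := mul_le_mul_of_nonneg_left (h2.trans h3) hC.le
  linarith [one_div_le_self hn]

lemma cE_up_near (x : Config n) (f e : Edge n) (b : Bool) : |cE (up x f b) e - cE x e| ≤ 2 := by
  have h1 := cE_Dl_nonneg x f e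
  have h2 := cE_Dl_le_two x f e
  have h3 := up_self x f
  simp only [Dl] at h1 h2
  rw [abs_le]
  cases hx : x f <;> cases b <;> rw [hx] at h3 <;> rw [h3] at h1 h2 <;> constructor <;>
    first | linarith | (rw [h3]; linarith)

/-- Nonlinear remainder of the conditional edge probabilities. -/
def Gf (α h v : ℝ) (x : Config n) : ℝ := ∑ e, (pr (PP n α h) e x - v * (α / n * cE x e))

lemma Gf_Dl (hfix : Real.sigmoid (h + α * u ^ 2) = u) (hn : 2 ≤ n) (x : Config n) (f : Edge n) :
    |Dl f (Gf α h (u * (1 - u))) x|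
      ≤ 2 * α ^ 2 / n * ∑ e, Dl f (fun x => cE x e) x * (|cE x e / n - u ^ 2| + 2 / n) := by
  have hn' : (2 : ℝ) ≤ n := by exact_mod_cast hn
  have hn0 : (0 : ℝ) < n := by linarith
  simp only [Dl, Gf, ← Finset.sum_sub_distrib]
  refine (Finset.abs_sum_le_sum_abs _ _).trans ?_
  rw [Finset.mul_sum]
  refine Finset.sum_le_sum fun e _ => ?_
  rw [PP_pr, PP_pr]
  have h1 := cE_Dl_nonneg x f e
  simp only [Dl] at h1
  have h2 := sig_lin (h + α * u ^ 2) (h + α / n * cE (up x f true) e)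
    (h + α / n * cE (up x f false) e)
  rw [hfix] at h2
  set cp := cE (up x f true) e with hcp
  set cm := cE (up x f false) e with hcm
  have e1 : (h + α / n * cp).sigmoid - u * (1 - u) * (α / n * cp)
      - ((h + α / n * cm).sigmoid - u * (1 - u) * (α / n * cm))
      = (h + α / n * cp).sigmoid - (h + α / n * cm).sigmoid
        - u * (1 - u) * (h + α / n * cp - (h + α / n * cm)) := by ring
  rw [e1]
  refine h2.trans ?_
  have dev : ∀ b, |h + α / n * cE (up x f b) e - (h + α * u ^ 2)|
      ≤ |α| * (|cE x e / n - u ^ 2| + 2 / n) := by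
    intro b
    have : h + α / n * cE (up x f b) e - (h + α * u ^ 2)
        = α * ((cE x e / n - u ^ 2) + (cE (up x f b) e - cE x e) / n) := by field_simp; ring
    rw [this, abs_mul]
    refine mul_le_mul_of_nonneg_left ((abs_add_le _ _).trans (add_le_add le_rfl ?_)) (abs_nonneg α)
    rw [abs_div, abs_of_pos hn0]
    have := cE_up_near x f e b
    gcongr
  have d1 := dev true
  have d2 := dev false
  rw [← hcp] at d1
  rw [← hcm] at d2
  have e2 : |h + α / n * cp - (h + α / n * cm)| = |α| / n * (cp - cm) := by
    rw [show h + α / n * cp - (h + α / n * cm) = α / n * (cp - cm) by ring, abs_mul, abs_div,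
      abs_of_pos hn0, abs_of_nonneg h1]
  rw [e2]
  set D := |cE x e / n - u ^ 2| + 2 / n
  have e3 : 0 ≤ |α| / n * (cp - cm) := by positivity
  calc _ ≤ (|α| * D + |α| * D) * (|α| / n * (cp - cm)) :=
        mul_le_mul_of_nonneg_right (add_le_add d1 d2) e3
    _ = 2 * |α| ^ 2 / n * ((cp - cm) * D) := by ring
    _ = _ := by rw [sq_abs]

/-- The nonlinear part of `∑ p_e` has negligible fluctuations. -/
lemma Vr_Gf (hC : 0 < C) (hP : HasPoincare α h C n) (hD : Dev n α h u δ) (hδ : 0 ≤ δ) (hn : 2 ≤ n)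
    (hnα : 1 + |α| ≤ n) (hu0 : 0 < u) (hu1 : u < 1) (hfix : Real.sigmoid (h + α * u ^ 2) = u) :
    Vr (PP n α h) (Gf α h (u * (1 - u))) ≤ 1 + C * (16 * α ^ 4 * (δ * n ^ 2 + 4)) := by
  have hn' : (2 : ℝ) ≤ n := by exact_mod_cast hn
  have hn0 : (0 : ℝ) < n := by linarith
  have hcard := card_edge_le (n := n)
  have hb : ∀ x : Config n, |Gf α h (u * (1 - u)) x| ≤ (n : ℝ) ^ 6 := by
    intro x
    unfold Gf
    have h1 : ∀ e : Edge n, |pr (PP n α h) e x - u * (1 - u) * (α / n * cE x e)| ≤ 1 + |α| := by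
      intro e
      have a1 := (pr_pos (PP_prob n α h) e x).le
      have a2 := (pr_lt_one (PP_prob n α h) e x).le
      refine (abs_sub _ _).trans (add_le_add (by rw [abs_of_nonneg a1]; exact a2) ?_)
      have a3 : 0 ≤ u * (1 - u) := by nlinarith
      have a4 : u * (1 - u) ≤ 1 := by nlinarith
      have a5 : cE x e / n ≤ 1 := (div_le_one hn0).2 (cE_le x e)
      have a6 : 0 ≤ cE x e / n := div_nonneg (cE_nonneg x e) hn0.le
      rw [show u * (1 - u) * (α / n * cE x e) = α * (u * (1 - u) * (cE x e / n)) by ring, abs_mul]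
      rw [abs_of_nonneg (mul_nonneg a3 a6)]
      have : u * (1 - u) * (cE x e / n) ≤ 1 := mul_le_one₀ a4 a6 a5
      nlinarith [abs_nonneg α]
    refine (Finset.abs_sum_le_sum_abs _ _).trans ((Finset.sum_le_sum fun e _ => h1 e).trans ?_)
    rw [Finset.sum_const, Finset.card_univ, nsmul_eq_mul]
    have a8 : (n : ℝ) ^ 3 ≤ n ^ 6 := pow_le_pow_right₀ (by linarith) (by norm_num)
    refine le_trans ?_ a8
    calc (Fintype.card (Edge n) : ℝ) * (1 + |α|) ≤ (n : ℝ) ^ 2 / 2 * n := by gcongr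
      _ ≤ (n : ℝ) ^ 3 := by nlinarith [pow_pos hn0 3]
  refine (hP _ hb).trans ?_
  have key : ∀ x : Config n, ∑ f, Dl f (Gf α h (u * (1 - u))) x ^ 2
      ≤ 32 * α ^ 4 * ∑ e, ((cE x e / n - u ^ 2) ^ 2 + 4 / n ^ 2) := by
    intro x
    set g : Edge n → ℝ := fun e => |cE x e / n - u ^ 2| + 2 / n with hg
    set d : Edge n → Edge n → ℝ := fun f e => Dl f (fun x => cE x e) x with hd
    have hd0 : ∀ f e, 0 ≤ d f e := fun f e => cE_Dl_nonneg x f e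
    have s1 : ∀ f, Dl f (Gf α h (u * (1 - u))) x ^ 2
        ≤ 4 * α ^ 4 / n ^ 2 * (2 * n * ∑ e, d f e * g e ^ 2) := by
      intro f
      have t1 := Gf_Dl hfix hn x f
      have t2 : (∑ e, d f e * g e) ^ 2 ≤ 2 * n * ∑ e, d f e * g e ^ 2 := by
        have cs : (∑ e, d f e * g e) ^ 2 ≤ (∑ e, d f e) * ∑ e, d f e * g e ^ 2 := by
          have := Finset.sum_mul_sq_le_sq_mul_sq Finset.univ (fun e => Real.sqrt (d f e))
            (fun e => Real.sqrt (d f e) * g e)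
          simp only [← mul_assoc, Real.mul_self_sqrt (hd0 f _), mul_pow, Real.sq_sqrt (hd0 f _)]
            at this
          exact this
        refine cs.trans (mul_le_mul_of_nonneg_right (sum_cE_Dl_le' x f) ?_)
        exact Finset.sum_nonneg fun e _ => mul_nonneg (hd0 f e) (sq_nonneg _)
      calc Dl f (Gf α h (u * (1 - u))) x ^ 2 = |Dl f (Gf α h (u * (1 - u))) x| ^ 2 := (sq_abs _).symm
        _ ≤ (2 * α ^ 2 / n * ∑ e, d f e * g e) ^ 2 := by gcongr
        _ = 4 * α ^ 4 / n ^ 2 * (∑ e, d f e * g e) ^ 2 := by ring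
        _ ≤ _ := by gcongr
    refine (Finset.sum_le_sum fun f _ => s1 f).trans ?_
    rw [← Finset.mul_sum, ← Finset.mul_sum, Finset.sum_comm]
    simp only [← Finset.sum_mul]
    have s2 : ∑ e, (∑ f, d f e) * g e ^ 2
        ≤ ∑ e, 2 * n * (2 * ((cE x e / n - u ^ 2) ^ 2 + 4 / n ^ 2)) := by
      refine Finset.sum_le_sum fun e _ => ?_
      have t1 := sum_cE_Dl_le x e
      have t2 : g e ^ 2 ≤ 2 * ((cE x e / n - u ^ 2) ^ 2 + 4 / n ^ 2) := by
        simp only [hg]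
        rw [← sq_abs (cE x e / n - u ^ 2), show (4 : ℝ) / n ^ 2 = (2 / n) ^ 2 by ring]
        nlinarith [sq_nonneg (|cE x e / n - u ^ 2| - 2 / n)]
      exact mul_le_mul t1 t2 (sq_nonneg _) (by positivity)
    rw [← Finset.mul_sum, ← Finset.mul_sum] at s2
    calc _ ≤ 4 * α ^ 4 / n ^ 2 * (2 * n * (2 * n * (2 * ∑ e, ((cE x e / n - u ^ 2) ^ 2 + 4 / n ^ 2)))) := by
          gcongr
      _ = _ := by field_simp; ring
  have h2 : ∑ f, EE (PP n α h) (fun x => Dl f (Gf α h (u * (1 - u))) x ^ 2)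
      ≤ 32 * α ^ 4 * (n ^ 2 / 2 * (δ + 4 / n ^ 2)) := by
    rw [← EE_sum]
    refine (EE_mono (PP_prob n α h) key).trans ?_
    rw [EE_mul_left, EE_sum]
    refine mul_le_mul_of_nonneg_left ?_ (by positivity)
    have : ∀ e : Edge n, EE (PP n α h) (fun x => (cE x e / n - u ^ 2) ^ 2 + 4 / n ^ 2) ≤ δ + 4 / n ^ 2 := by
      intro e
      rw [EE_add, EE_const (PP_prob n α h)]
      linarith [hD.1 e]
    refine (Finset.sum_le_sum fun e _ => this e).trans ?_
    rw [Finset.sum_const, Finset.card_univ, nsmul_eq_mul]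
    gcongr
  have h3 : 32 * α ^ 4 * (n ^ 2 / 2 * (δ + 4 / n ^ 2)) = 16 * α ^ 4 * (δ * n ^ 2 + 4) := by
    field_simp; ring
  rw [h3] at h2
  have h4 := mul_le_mul_of_nonneg_left h2 hC.le
  linarith [one_div_le_self hn]

lemma Vr_Ec (hC : 0 < C) (hP : HasPoincare α h C n) (hn : 2 ≤ n) :
    Vr (PP n α h) Ec ≤ (1 + C) * n ^ 2 := by
  have hn' : (2 : ℝ) ≤ n := by exact_mod_cast hn
  have hb : ∀ x : Config n, |Ec x| ≤ (n : ℝ) ^ 6 := by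
    intro x
    rw [abs_of_nonneg (Ec_nonneg x)]
    have a8 : (n : ℝ) ^ 2 ≤ n ^ 6 := pow_le_pow_right₀ (by linarith) (by norm_num)
    nlinarith [Ec_le x]
  refine (hP _ hb).trans ?_
  have : ∑ e : Edge n, EE (PP n α h) (fun x => Dl e Ec x ^ 2) = Fintype.card (Edge n) := by
    simp [Ec_Dl, EE_const (PP_prob n α h)]
  rw [this]
  have := mul_le_mul_of_nonneg_left (card_edge_le (n := n)) hC.le
  nlinarith [one_div_le_self hn]

/-- The sum of the conditional edge variances. -/
def Sn (n : ℕ) (α h : ℝ) : ℝ :=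
  ∑ e : Edge n, EE (PP n α h) (fun x => pr (PP n α h) e x * (1 - pr (PP n α h) e x))

/-- Exact identity relating the edge variance to the sum of conditional variances. -/
lemma Ec_identity (hn : 2 ≤ n) :
    (1 - 2 * α * u * (u * (1 - u))) * Vr (PP n α h) Ec
      - Cv (PP n α h) (Gf α h (u * (1 - u))) Ec
      - (u * (1 - u) * α / n) * Cv (PP n α h) (fun x => ∑ e, cE x e - 2 * u * n * Ec x) Ec
      = Sn n α h := by
  have hn' : (2 : ℝ) ≤ n := by exact_mod_cast hn
  have hn0 : (n : ℝ) ≠ 0 := by linarith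
  have hμ := PP_prob n α h
  set m := EE (PP n α h) Ec
  have h1 : Sn n α h = EE (PP n α h) (fun x => (∑ e, (xr x e - pr (PP n α h) e x)) * (Ec x - m)) := by
    simp only [Finset.sum_mul]
    rw [EE_sum]
    refine Finset.sum_congr rfl fun e _ => ?_
    rw [EE_ibp_real hμ e (fun x => Ec x - m)]
    refine EE_congr fun x => ?_
    have : Dl e (fun x => Ec x - m) x = Dl e Ec x := by unfold Dl; ring
    rw [this, Ec_Dl, mul_one]
  have cv0 : ∀ F : Config n → ℝ, Cv (PP n α h) F Ec = EE (PP n α h) (fun x => F x * (Ec x - m)) := by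
    intro F
    unfold Cv
    have : ∀ x, (F x - EE (PP n α h) F) * (Ec x - EE (PP n α h) Ec)
        = F x * (Ec x - m) - EE (PP n α h) F * (Ec x - m) := fun x => by ring
    rw [EE_congr this, EE_sub, EE_mul_left, EE_sub, EE_const hμ]
    simp [m]
  have vv : Vr (PP n α h) Ec = Cv (PP n α h) Ec Ec := by
    unfold Vr Cv; exact EE_congr fun x => by ring
  rw [vv, cv0, cv0, cv0, h1, ← EE_mul_left, ← EE_mul_left, ← EE_sub, ← EE_sub]
  refine EE_congr fun x => ?_
  have e1 : Gf α h (u * (1 - u)) x = ∑ e, pr (PP n α h) e x - u * (1 - u) * (α / n * ∑ e, cE x e) := by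
    unfold Gf
    rw [Finset.sum_sub_distrib, Finset.mul_sum, Finset.mul_sum]
  rw [e1, Finset.sum_sub_distrib]
  change _ = (Ec x - _) * _
  field_simp
  ring

lemma Sn_near (hD : Dev n α h u δ) (hfix : Real.sigmoid (h + α * u ^ 2) = u) (hn : 2 ≤ n) :
    |Sn n α h - Fintype.card (Edge n) * (u * (1 - u))| ≤ n ^ 2 * (|α| * Real.sqrt δ) := by
  have hn' : (2 : ℝ) ≤ n := by exact_mod_cast hn
  have hn0 : (n : ℝ) ≠ 0 := by linarith
  have hμ := PP_prob n α h
  have h1 : Sn n α h - Fintype.card (Edge n) * (u * (1 - u)) = ∑ e : Edge n, EE (PP n α h) (fun x =>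
      pr (PP n α h) e x * (1 - pr (PP n α h) e x) - u * (1 - u)) := by
    simp only [EE_sub, EE_const hμ, Finset.sum_sub_distrib, Finset.sum_const, Finset.card_univ,
      nsmul_eq_mul, Sn]
  rw [h1]
  have h2 : ∀ e : Edge n, |EE (PP n α h) (fun x =>
      pr (PP n α h) e x * (1 - pr (PP n α h) e x) - u * (1 - u))| ≤ |α| * Real.sqrt δ := by
    intro e
    refine (abs_EE_le hμ _).trans ?_
    have h3 : ∀ x, |pr (PP n α h) e x * (1 - pr (PP n α h) e x) - u * (1 - u)|
        ≤ |α| * |cE x e / n - u ^ 2| := by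
      intro x
      rw [PP_pr]
      have := sig_deriv_lip (h + α / n * cE x e) (h + α * u ^ 2)
      rw [hfix] at this
      refine this.trans ?_
      rw [show h + α / n * cE x e - (h + α * u ^ 2) = α * (cE x e / n - u ^ 2) by ring, abs_mul]
      have : 0 ≤ |α| * |cE x e / n - u ^ 2| := by positivity
      linarith
    refine (EE_mono hμ h3).trans ?_
    rw [EE_mul_left]
    exact mul_le_mul_of_nonneg_left ((EE_abs_le_sqrt hμ _).trans (Real.sqrt_le_sqrt (hD.1 e)))
      (abs_nonneg _)
  refine (Finset.abs_sum_le_sum_abs _ _).trans ((Finset.sum_le_sum fun e _ => h2 e).trans ?_)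
  rw [Finset.sum_const, Finset.card_univ, nsmul_eq_mul]
  have := card_edge_le (n := n)
  gcongr
  nlinarith [sq_nonneg (n : ℝ)]

end VarT

section VarLim

lemma Cv_div_le {Ω : Type*} [Fintype Ω] {μ : Ω → ℝ} (hμ : IsProb μ) (f g : Ω → ℝ) {a b : ℝ}
    (ha : 0 < a) (hb : 0 < b) :
    |Cv μ f g / (a * b)| ≤ Real.sqrt (Vr μ f / a ^ 2) * Real.sqrt (Vr μ g / b ^ 2) := by
  rw [Real.sqrt_div (Vr_nonneg hμ f), Real.sqrt_div (Vr_nonneg hμ g), Real.sqrt_sq ha.le,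
    Real.sqrt_sq hb.le, div_mul_div_comm, abs_div, abs_of_pos (mul_pos ha hb)]
  have := Cv_abs_le hμ f g
  gcongr

lemma tendsto_Cv {α h K : ℝ} (f g : ∀ n, Config n → ℝ) (a b : ℕ → ℝ)
    (hab : ∀ᶠ n in atTop, 0 < a n ∧ 0 < b n)
    (hf : Tendsto (fun n => Vr (PP n α h) (f n) / a n ^ 2) atTop (𝓝 0))
    (hg : ∀ᶠ n in atTop, Vr (PP n α h) (g n) / b n ^ 2 ≤ K) :
    Tendsto (fun n => Cv (PP n α h) (f n) (g n) / (a n * b n)) atTop (𝓝 0) := by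
  apply squeeze_zero_norm'
    (a := fun n => Real.sqrt (Vr (PP n α h) (f n) / a n ^ 2) * Real.sqrt K)
  · filter_upwards [hab, hg] with n h1 h2
    rw [Real.norm_eq_abs]
    exact (Cv_div_le (PP_prob n α h) (f n) (g n) h1.1 h1.2).trans
      (mul_le_mul_of_nonneg_left (Real.sqrt_le_sqrt h2) (Real.sqrt_nonneg _))
  · have h1 := ((Real.continuous_sqrt.tendsto 0).comp hf).mul_const (Real.sqrt K)
    simpa [Function.comp_def] using h1

lemma tendsto_c_div_pow (c : ℝ) {k : ℕ} (hk : k ≠ 0) :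
    Tendsto (fun n : ℕ => c / (n : ℝ) ^ k) atTop (𝓝 0) := by
  have h1 : Tendsto (fun n : ℕ => (n : ℝ) ^ k) atTop atTop :=
    (tendsto_pow_atTop hk).comp tendsto_natCast_atTop_atTop
  exact h1.const_div_atTop c

variable {α h u s0 : ℝ} {us : ℝ → ℝ}

lemma Dev_nonneg {n : ℕ} {δ : ℝ} (hn : 2 ≤ n) (hD : Dev n α h u δ) : 0 ≤ δ := by
  obtain ⟨e⟩ := edge_nonempty hn
  exact (EE_nonneg (PP_prob n α h) fun x => sq_nonneg _).trans (hD.1 e)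

lemma tendsto_Sn (hG : Good α h u us s0) (hα : -2 < α) :
    Tendsto (fun n : ℕ => Sn n α h / n ^ 2) atTop (𝓝 (u * (1 - u) / 2)) := by
  obtain ⟨δ, hδ, hD⟩ := exists_Dev hG hα
  have h1 : Tendsto (fun n : ℕ => Sn n α h / n ^ 2 - (1 - 1 / n) * (u * (1 - u) / 2)) atTop (𝓝 0) := by
    apply squeeze_zero_norm' (a := fun n => |α| * Real.sqrt (δ n))
    · filter_upwards [hD, eventually_ge_atTop 2] with n hDn hn
      have hn' : (2 : ℝ) ≤ n := by exact_mod_cast hn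
      have hn0 : (0 : ℝ) < n := by linarith
      have h2 := Sn_near hDn hG.fix hn
      have h3 := card_edge (n := n)
      have h4 : Sn n α h / n ^ 2 - (1 - 1 / n) * (u * (1 - u) / 2)
          = (Sn n α h - Fintype.card (Edge n) * (u * (1 - u))) / n ^ 2 := by
        have : (Fintype.card (Edge n) : ℝ) = n * (n - 1) / 2 := by linarith
        rw [this]; field_simp
      rw [h4, Real.norm_eq_abs, abs_div, abs_of_pos (pow_pos hn0 2), div_le_iff₀ (pow_pos hn0 2)]
      linarith
    · have := ((Real.continuous_sqrt.tendsto 0).comp hδ).const_mul |α|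
      simpa [Function.comp_def] using this
  have h2 : Tendsto (fun n : ℕ => (1 - 1 / (n : ℝ)) * (u * (1 - u) / 2)) atTop
      (𝓝 ((1 - 0) * (u * (1 - u) / 2))) := ((tendsto_c_div 1).const_sub 1).mul_const _
  have h3 := h1.add h2
  simpa using h3

lemma tendsto_VrR (hG : Good α h u us s0) (hα : -2 < α) :
    Tendsto (fun n : ℕ => Vr (PP n α h) (fun x => Tr x - u ^ 2 * n * Ec x) / ((n : ℝ) ^ 2) ^ 2)
      atTop (𝓝 0) := by
  obtain ⟨C, hC, hP⟩ := graph_poincare hG hα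
  obtain ⟨δ, hδ, hD⟩ := exists_Dev hG hα
  refine squeeze_zero' (g := fun n : ℕ => 1 / (n : ℝ) ^ 4 + C * δ n)
    (Eventually.of_forall fun n => div_nonneg (Vr_nonneg (PP_prob n α h) _) (by positivity)) ?_ ?_
  · filter_upwards [hP, hD, eventually_ge_atTop 2] with n hPn hDn hn
    have hn0 : (0 : ℝ) < n := by exact_mod_cast (by omega : 0 < n)
    rw [div_le_iff₀ (by positivity)]
    refine (Vr_R hC hPn hDn (Dev_nonneg hn hDn) hn hG.pos hG.lt).trans (le_of_eq ?_)
    field_simp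
  · simpa using (tendsto_c_div_pow 1 (k := 4) (by norm_num)).add (hδ.const_mul C)

lemma tendsto_VrW (hG : Good α h u us s0) (hα : -2 < α) :
    Tendsto (fun n : ℕ => Vr (PP n α h) (fun x => ∑ e, cE x e - 2 * u * n * Ec x)
      / ((n : ℝ) ^ 2) ^ 2) atTop (𝓝 0) := by
  obtain ⟨C, hC, hP⟩ := graph_poincare hG hα
  obtain ⟨δ, hδ, hD⟩ := exists_Dev hG hα
  refine squeeze_zero' (g := fun n : ℕ => 1 / (n : ℝ) ^ 4 + C * (3 * δ n + 6 / (n : ℝ) ^ 2))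
    (Eventually.of_forall fun n => div_nonneg (Vr_nonneg (PP_prob n α h) _) (by positivity)) ?_ ?_
  · filter_upwards [hP, hD, eventually_ge_atTop 2] with n hPn hDn hn
    have hn0 : (0 : ℝ) < n := by exact_mod_cast (by omega : 0 < n)
    rw [div_le_iff₀ (by positivity)]
    refine (Vr_W hC hPn hDn (Dev_nonneg hn hDn) hn hG.pos hG.lt).trans (le_of_eq ?_)
    field_simp
  · simpa using (tendsto_c_div_pow 1 (k := 4) (by norm_num)).add
      (((hδ.const_mul 3).add (tendsto_c_div_pow 6 (k := 2) (by norm_num))).const_mul C)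

lemma tendsto_VrG (hG : Good α h u us s0) (hα : -2 < α) :
    Tendsto (fun n : ℕ => Vr (PP n α h) (Gf α h (u * (1 - u))) / (n : ℝ) ^ 2) atTop (𝓝 0) := by
  obtain ⟨C, hC, hP⟩ := graph_poincare hG hα
  obtain ⟨δ, hδ, hD⟩ := exists_Dev hG hα
  refine squeeze_zero' (g := fun n : ℕ => 1 / (n : ℝ) ^ 2 +
      C * (16 * α ^ 4 * (δ n + 4 / (n : ℝ) ^ 2)))
    (Eventually.of_forall fun n => div_nonneg (Vr_nonneg (PP_prob n α h) _) (by positivity)) ?_ ?_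
  · filter_upwards [hP, hD, eventually_ge_atTop 2, eventually_ge_atTop ⌈1 + |α|⌉₊]
      with n hPn hDn hn hnα
    have hn0 : (0 : ℝ) < n := by exact_mod_cast (by omega : 0 < n)
    rw [div_le_iff₀ (by positivity)]
    refine (Vr_Gf hC hPn hDn (Dev_nonneg hn hDn) hn (Nat.ceil_le.1 hnα) hG.pos hG.lt hG.fix).trans
      (le_of_eq ?_)
    field_simp
  · simpa using (tendsto_c_div_pow 1 (k := 2) (by norm_num)).add
      (((hδ.add (tendsto_c_div_pow 4 (k := 2) (by norm_num))).const_mul (16 * α ^ 4)).const_mul C)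

lemma eventually_VrE (hG : Good α h u us s0) (hα : -2 < α) :
    ∃ K : ℝ, ∀ᶠ n : ℕ in atTop, Vr (PP n α h) Ec / (n : ℝ) ^ 2 ≤ K := by
  obtain ⟨C, hC, hP⟩ := graph_poincare hG hα
  refine ⟨1 + C, ?_⟩
  filter_upwards [hP, eventually_ge_atTop 2] with n hPn hn
  have hn0 : (0 : ℝ) < n := by exact_mod_cast (by omega : 0 < n)
  rw [div_le_iff₀ (by positivity)]
  exact Vr_Ec hC hPn hn

lemma tendsto_VrE (hG : Good α h u us s0) (hα : -2 < α) :
    Tendsto (fun n : ℕ => Vr (PP n α h) Ec / (n : ℝ) ^ 2) atTop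
      (𝓝 (u * (1 - u) / 2 / (1 - 2 * α * u * (u * (1 - u))))) := by
  obtain ⟨K, hK⟩ := eventually_VrE hG hα
  have hpos : ∀ᶠ n : ℕ in atTop, (0 : ℝ) < n :=
    (eventually_gt_atTop 0).mono fun n hn => by exact_mod_cast hn
  have c1 := tendsto_Cv (fun n => Gf (n := n) α h (u * (1 - u))) (fun n => Ec) (fun n => (n : ℝ))
    (fun n => (n : ℝ)) (hpos.mono fun n hn => ⟨hn, hn⟩) (tendsto_VrG hG hα) hK
  have c2 := tendsto_Cv (fun n x => ∑ e, cE x e - 2 * u * n * Ec x) (fun n => Ec)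
    (fun n => (n : ℝ) ^ 2)
    (fun n => (n : ℝ)) (hpos.mono fun n hn => ⟨by positivity, hn⟩) (tendsto_VrW hG hα) hK
  have c3 := ((tendsto_Sn hG hα).add (c1.add (c2.const_mul (u * (1 - u) * α)))).div_const
    (1 - 2 * α * u * (u * (1 - u)))
  simp only [mul_zero, add_zero] at c3
  refine c3.congr' ?_
  filter_upwards [hpos, eventually_ge_atTop 2] with n hn hn2
  rw [div_eq_iff hG.nondeg.ne', ← Ec_identity (u := u) hn2]
  field_simp
  ring

/-- The limit of the rescaled variance of the triangle count. -/
theorem tendsto_VrT (hG : Good α h u us s0) (hα : -2 < α) :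
    Tendsto (fun n : ℕ => Vr (PP n α h) Tr / (n : ℝ) ^ 4) atTop
      (𝓝 (u ^ 4 * (u * (1 - u) / 2 / (1 - 2 * α * u * (u * (1 - u)))))) := by
  obtain ⟨K, hK⟩ := eventually_VrE hG hα
  have hpos : ∀ᶠ n : ℕ in atTop, (0 : ℝ) < n :=
    (eventually_gt_atTop 0).mono fun n hn => by exact_mod_cast hn
  have c1 := tendsto_Cv (fun n x => Tr x - u ^ 2 * n * Ec x) (fun n => Ec)
    (fun n => (n : ℝ) ^ 2)
    (fun n => (n : ℝ)) (hpos.mono fun n hn => ⟨by positivity, hn⟩) (tendsto_VrR hG hα) hK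
  have c3 := ((tendsto_VrR hG hα).add (c1.const_mul (2 * u ^ 2))).add
    ((tendsto_VrE hG hα).const_mul (u ^ 4))
  simp only [mul_zero, add_zero, zero_add] at c3
  refine c3.congr' ?_
  filter_upwards [hpos] with n hn
  have h1 := Vr_add (μ := PP n α h) (fun x => Tr x - u ^ 2 * n * Ec x) (fun x => u ^ 2 * n * Ec x)
  have h2 : Cv (PP n α h) (fun x => Tr x - u ^ 2 * n * Ec x) (fun x => u ^ 2 * n * Ec x)
      = u ^ 2 * n * Cv (PP n α h) (fun x => Tr x - u ^ 2 * n * Ec x) Ec := by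
    unfold Cv
    rw [← EE_mul_left, EE_mul_left (PP n α h) (u ^ 2 * n) Ec]
    exact EE_congr fun x => by ring
  have h3 : (fun x : Config n => Tr x - u ^ 2 * n * Ec x + u ^ 2 * n * Ec x) = Tr := by
    funext x; ring
  rw [h2, h3, Vr_mul_left] at h1
  have h1' : Vr (PP n α h) Tr = Vr (PP n α h) (fun x => Tr x - u ^ 2 * n * Ec x) +
    2 * (u ^ 2 * n * Cv (PP n α h) (fun x => Tr x - u ^ 2 * n * Ec x) Ec)
      + (u ^ 2 * n) ^ 2 * Vr (PP n α h) Ec := h1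
  rw [h1']
  field_simp

/-- The centred and rescaled triangle count. -/
def Xn (n : ℕ) (α h : ℝ) (x : Config n) : ℝ := (Tr x - EE (PP n α h) Tr) / (n : ℝ) ^ 2

lemma EE_Xn (n : ℕ) (α h : ℝ) : EE (PP n α h) (Xn n α h) = 0 := by
  unfold Xn
  rw [EE_div, EE_sub, EE_const (PP_prob n α h)]
  simp

lemma EE_Xn_sq (n : ℕ) (α h : ℝ) :
    EE (PP n α h) (fun x => Xn n α h x ^ 2) = Vr (PP n α h) Tr / (n : ℝ) ^ 4 := by
  unfold Xn Vr
  rw [← EE_div]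
  exact EE_congr fun x => by ring

lemma Xn_Dl {n : ℕ} (x : Config n) (e : Edge n) (hn : 2 ≤ n) :
    0 ≤ Dl e (Xn n α h) x ∧ Dl e (Xn n α h) x ≤ 1 / n := by
  have hn0 : (0 : ℝ) < n := by exact_mod_cast (by omega : 0 < n)
  have h1 : Dl e (Xn n α h) x = Dl e Tr x / (n : ℝ) ^ 2 := by unfold Dl Xn; ring
  rw [h1, Tr_Dl]
  refine ⟨div_nonneg (cE_nonneg x e) (by positivity), ?_⟩
  rw [div_le_div_iff₀ (by positivity) hn0]
  nlinarith [cE_le x e]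

/-- Test functions with bounded second moment and bounded Dirichlet energy. -/
def Tame (n : ℕ) (α h K : ℝ) (Y : Config n → ℝ) : Prop :=
  EE (PP n α h) (fun x => Y x ^ 2) ≤ K ∧
  ∑ e, EE (PP n α h) (fun x => Dl e Y x ^ 2) ≤ K

lemma Tame_one {n : ℕ} {K : ℝ} (hK : 1 ≤ K) : Tame n α h K (fun _ => 1) := by
  constructor
  · rw [EE_const (PP_prob n α h)]; simpa using hK
  · simp [Dl, EE_const (PP_prob n α h)]; linarith

lemma Xn_abs_le {n : ℕ} (hn : 2 ≤ n) (x : Config n) : |Xn n α h x| ≤ n := by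
  have hn0 : (0 : ℝ) < n := by exact_mod_cast (by omega : 0 < n)
  have hμ := PP_prob n α h
  unfold Xn
  rw [abs_div, abs_of_pos (pow_pos hn0 2), div_le_iff₀ (pow_pos hn0 2)]
  have a1 := Tr_nonneg x
  have a2 := Tr_le x
  have a3 := EE_nonneg hμ (Tr_nonneg (n := n))
  have a4 := EE_le_const hμ (Tr_le (n := n))
  rw [abs_le]; constructor <;> nlinarith

lemma sum_le_card {n : ℕ} (f : Edge n → ℝ) {c : ℝ} (hc : 0 ≤ c) (hf : ∀ e, f e ≤ c / n ^ 2)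
    (hn : 2 ≤ n) : ∑ e, f e ≤ c / 2 := by
  have hn0 : (0 : ℝ) < n := by exact_mod_cast (by omega : 0 < n)
  refine (Finset.sum_le_sum fun e _ => hf e).trans ?_
  rw [Finset.sum_const, Finset.card_univ, nsmul_eq_mul]
  calc (Fintype.card (Edge n) : ℝ) * (c / n ^ 2) ≤ (n : ℝ) ^ 2 / 2 * (c / n ^ 2) := by
        have := card_edge_le (n := n)
        gcongr
    _ = c / 2 := by field_simp

/-- The observables `1`, `X`, `X²` are tame for the rescaled triangle count `X`. -/
theorem exists_Tame (hG : Good α h u us s0) (hα : -2 < α) : ∃ K : ℝ, 1 ≤ K ∧ ∀ᶠ n : ℕ in atTop,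
    Tame n α h K (fun _ => 1) ∧ Tame n α h K (Xn n α h) ∧ Tame n α h K (fun x => Xn n α h x ^ 2) := by
  obtain ⟨C, hC, hP⟩ := graph_poincare hG hα
  have hT := tendsto_VrT hG hα
  set L := u ^ 4 * (u * (1 - u) / 2 / (1 - 2 * α * u * (u * (1 - u))))
  have hT1 := hT.eventually (gt_mem_nhds (lt_add_one L))
  have hT2 : ∀ᶠ n : ℕ in atTop, Vr (PP n α h) Tr / (n : ℝ) ^ 4 ≤ |L| + 1 :=
    hT1.mono fun n hn => hn.le.trans (by linarith [le_abs_self L])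
  set B := |L| + 1
  have hB : 1 ≤ B := by simp only [B]; linarith [abs_nonneg L]
  refine ⟨1 + B + B ^ 2 + (C + 1) * (4 * B + 4), by nlinarith, ?_⟩
  filter_upwards [hP, hT2, eventually_ge_atTop 2] with n hPn hTn hn
  have hn' : (2 : ℝ) ≤ n := by exact_mod_cast hn
  have hn0 : (0 : ℝ) < n := by linarith
  have hμ := PP_prob n α h
  have hX2 : EE (PP n α h) (fun x => Xn n α h x ^ 2) ≤ B := by rw [EE_Xn_sq]; exact hTn
  have hD1 : ∑ e, EE (PP n α h) (fun x => Dl e (Xn n α h) x ^ 2) ≤ 1 / 2 := by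
    refine sum_le_card _ zero_le_one (fun e => ?_) hn
    refine EE_le_const hμ fun x => ?_
    obtain ⟨d0, d1⟩ := Xn_Dl (α := α) (h := h) x e hn
    calc Dl e (Xn n α h) x ^ 2 ≤ (1 / (n : ℝ)) ^ 2 := by gcongr
      _ = _ := by ring
  have hD2 : ∑ e, EE (PP n α h) (fun x => Dl e (fun x => Xn n α h x ^ 2) x ^ 2) ≤ 4 * B + 4 := by
    have : 4 * B + 4 = (8 * B + 8) / 2 := by ring
    rw [this]
    refine sum_le_card _ (by linarith) (fun e => ?_) hn
    have key : ∀ x, Dl e (fun x => Xn n α h x ^ 2) x ^ 2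
        ≤ 1 / n ^ 2 * (8 * Xn n α h x ^ 2 + 8) := by
      intro x
      obtain ⟨d0, d1⟩ := Xn_Dl (α := α) (h := h) x e hn
      have d2 := one_div_le_self hn
      have h3 := up_self x e
      have e1 : Dl e (fun x => Xn n α h x ^ 2) x
          = Dl e (Xn n α h) x * (Xn n α h (up x e true) + Xn n α h (up x e false)) := by
        simp only [Dl]; ring
      have e2 : (Xn n α h (up x e true) + Xn n α h (up x e false)) ^ 2 ≤ 8 * Xn n α h x ^ 2 + 8 := by
        simp only [Dl] at d0 d1
        cases hx : x e
        · rw [hx] at h3; rw [h3] at d0 d1 ⊢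
          set a := Xn n α h x
          have e3 : Xn n α h (up x e true) = a + (Xn n α h (up x e true) - a) := by ring
          rw [e3]
          set t := Xn n α h (up x e true) - a
          have : t ^ 2 ≤ 1 := by nlinarith
          nlinarith [sq_nonneg (2 * a - t)]
        · rw [hx] at h3; rw [h3] at d0 d1 ⊢
          set a := Xn n α h x
          have e3 : Xn n α h (up x e false) = a - (a - Xn n α h (up x e false)) := by ring
          rw [e3]
          set t := a - Xn n α h (up x e false)
          have : t ^ 2 ≤ 1 := by nlinarith
          nlinarith [sq_nonneg (2 * a + t)]
      rw [e1, mul_pow]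
      have e4 : Dl e (Xn n α h) x ^ 2 ≤ 1 / n ^ 2 := by
        calc Dl e (Xn n α h) x ^ 2 ≤ (1 / (n : ℝ)) ^ 2 := by gcongr
          _ = _ := by ring
      exact mul_le_mul e4 e2 (sq_nonneg _) (by positivity)
    refine (EE_mono hμ key).trans ?_
    rw [EE_mul_left, EE_add, EE_mul_left, EE_const hμ, one_div_mul_eq_div]
    gcongr
  have hX4 : EE (PP n α h) (fun x => (Xn n α h x ^ 2) ^ 2) ≤ 1 + C * (4 * B + 4) + B ^ 2 := by
    have h1 := Vr_eq hμ (fun x => Xn n α h x ^ 2)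
    have h2 := hPn (fun x => Xn n α h x ^ 2) (fun x => by
      have := Xn_abs_le (α := α) (h := h) hn x
      rw [abs_of_nonneg (sq_nonneg _), ← sq_abs]
      calc |Xn n α h x| ^ 2 ≤ (n : ℝ) ^ 2 := by gcongr
        _ ≤ (n : ℝ) ^ 6 := pow_le_pow_right₀ (by linarith) (by norm_num))
    have h3 := mul_le_mul_of_nonneg_left hD2 hC.le
    have h4 : (EE (PP n α h) fun x => Xn n α h x ^ 2) ^ 2 ≤ B ^ 2 := by
      have := EE_nonneg hμ (fun x => sq_nonneg (Xn n α h x))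
      gcongr
    linarith [one_div_le_self hn]
  refine ⟨Tame_one (by nlinarith), ⟨?_, ?_⟩, ⟨?_, ?_⟩⟩ <;> nlinarith

end VarLim

/-! ### Phases of the triangle count -/

section Phase

/-- The unit complex number `e^{it}`. -/
def ei (t : ℝ) : ℂ := Complex.exp (Complex.I * t)

lemma ei_zero : ei 0 = 1 := by simp [ei]

lemma ei_add (a b : ℝ) : ei (a + b) = ei a * ei b := by
  simp only [ei, ← Complex.exp_add]; congr 1; push_cast; ring

@[simp] lemma norm_ei (t : ℝ) : ‖ei t‖ = 1 := Complex.norm_exp_I_mul_ofReal t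

lemma norm_ei_sub (a b : ℝ) : ‖ei a - ei b‖ ≤ |a - b| := by
  have h1 : ei a - ei b = ei b * (ei (a - b) - 1) := by
    rw [mul_sub, ← ei_add]; simp
  rw [h1, norm_mul, norm_ei, one_mul]
  exact Real.norm_exp_I_mul_ofReal_sub_one_le

lemma norm_ei_sub_one_le (t : ℝ) : ‖ei t - 1‖ ≤ 2 := by
  refine (norm_sub_le _ _).trans ?_
  simp; norm_num

lemma ei_conj (t : ℝ) : (starRingEnd ℂ) (ei t) * ei t = 1 := by
  rw [← Complex.normSq_eq_conj_mul_self, Complex.normSq_eq_norm_sq]; simp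

lemma norm_ei_sub_one_sq (t : ℝ) :
    ((‖ei t - 1‖ ^ 2 : ℝ) : ℂ) = (ei t - 1) * ((starRingEnd ℂ) (ei t) - 1) := by
  rw [← Complex.normSq_eq_norm_sq, Complex.normSq_eq_conj_mul_self]
  simp; ring

variable {n : ℕ} {α h θ : ℝ}

/-- The phase `e^{iθ c_e}` by which the edge `e` multiplies `e^{iθT}`. -/
def zz (θ : ℝ) (x : Config n) (e : Edge n) : ℂ := ei (θ * cE x e)

/-- The phase `e^{iθT}`. -/
def ph (θ : ℝ) (x : Config n) : ℂ := ei (θ * Tr x)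

@[simp] lemma zz_up (x : Config n) (e : Edge n) (b : Bool) : zz θ (up x e b) e = zz θ x e := by
  simp [zz]

@[simp] lemma norm_zz (x : Config n) (e : Edge n) : ‖zz θ x e‖ = 1 := norm_ei _

@[simp] lemma norm_ph (x : Config n) : ‖ph θ x‖ = 1 := norm_ei _

lemma norm_zz_sub_one_le (x : Config n) (e : Edge n) : ‖zz θ x e - 1‖ ≤ 2 := norm_ei_sub_one_le _

lemma ph_up_true (x : Config n) (e : Edge n) :
    ph θ (up x e true) = ph θ (up x e false) * zz θ x e := by
  have := Tr_Dl x e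
  simp only [Dl] at this
  rw [ph, ph, zz, ← ei_add, ← this]; congr 1; ring

lemma zz_Dl (x : Config n) (f e : Edge n) :
    ‖zz θ (up x f true) e - zz θ (up x f false) e‖ ≤ |θ| * Dl f (fun x => cE x e) x := by
  refine (norm_ei_sub _ _).trans ?_
  rw [← mul_sub, abs_mul]
  exact mul_le_mul_of_nonneg_left (abs_of_nonneg (cE_Dl_nonneg x f e)).le (abs_nonneg _)

lemma zz_up_near (x : Config n) (f e : Edge n) (b : Bool) :
    ‖zz θ (up x f b) e - 1‖ ≤ ‖zz θ x e - 1‖ + 2 * |θ| := by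
  have h1 : ‖zz θ (up x f b) e - zz θ x e‖ ≤ 2 * |θ| := by
    refine (norm_ei_sub _ _).trans ?_
    rw [← mul_sub, abs_mul, mul_comm]
    exact mul_le_mul_of_nonneg_right (cE_up_near x f e b) (abs_nonneg _)
  calc ‖zz θ (up x f b) e - 1‖ = ‖(zz θ x e - 1) + (zz θ (up x f b) e - zz θ x e)‖ := by
        congr 1; ring
    _ ≤ _ := (norm_add_le _ _).trans (by linarith)

lemma PP_pr_Dl (hn : 2 ≤ n) (x : Config n) (f e : Edge n) :
    |pr (PP n α h) e (up x f true) - pr (PP n α h) e (up x f false)|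
      ≤ |α| / (4 * n) * Dl f (fun x => cE x e) x := by
  rw [PP_pr, PP_pr]
  refine (sig_lip _ _).trans (le_of_eq ?_)
  have h0 := cE_Dl_nonneg x f e
  simp only [Dl] at h0 ⊢
  rw [show h + α / n * cE (up x f true) e - (h + α / n * cE (up x f false) e)
    = α / n * (cE (up x f true) e - cE (up x f false) e) by ring, abs_mul, abs_of_nonneg h0, abs_div,
    Nat.abs_cast]
  ring

lemma PP_pq_Dl (hn : 2 ≤ n) (x : Config n) (f e : Edge n) :
    |pr (PP n α h) e (up x f true) * (1 - pr (PP n α h) e (up x f true))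
      - pr (PP n α h) e (up x f false) * (1 - pr (PP n α h) e (up x f false))|
      ≤ |α| / (4 * n) * Dl f (fun x => cE x e) x := by
  simp only [PP_pr]
  refine (sig_deriv_lip _ _).trans (le_of_eq ?_)
  have h0 := cE_Dl_nonneg x f e
  simp only [Dl] at h0 ⊢
  rw [show h + α / n * cE (up x f true) e - (h + α / n * cE (up x f false) e)
    = α / n * (cE (up x f true) e - cE (up x f false) e) by ring, abs_mul, abs_of_nonneg h0, abs_div,
    Nat.abs_cast]
  ring

lemma pq_le {μ : Config n → ℝ} (hμ : IsProb μ) (e : Edge n) (x : Config n) :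
    pr μ e x * (1 - pr μ e x) ≤ 1 / 4 := by
  nlinarith [sq_nonneg (pr μ e x - 1 / 2)]

lemma pq_nonneg {μ : Config n → ℝ} (hμ : IsProb μ) (e : Edge n) (x : Config n) :
    0 ≤ pr μ e x * (1 - pr μ e x) :=
  mul_nonneg (pr_pos hμ e x).le (by linarith [pr_lt_one hμ e x])

/-- The coefficient `(z̄_e - 1)(1 - p_e + p_e z_e)` of `x_e - p_e` in `Mt`. -/
def aa (μ : Config n → ℝ) (θ : ℝ) (x : Config n) (e : Edge n) : ℂ :=
  ((starRingEnd ℂ) (zz θ x e) - 1) * (1 - (pr μ e x : ℂ) + pr μ e x * zz θ x e)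

/-- The weight `p_e (1 - p_e) |z_e - 1|²`. -/
def ww (μ : Config n → ℝ) (θ : ℝ) (x : Config n) (e : Edge n) : ℝ :=
  pr μ e x * (1 - pr μ e x) * ‖zz θ x e - 1‖ ^ 2

/-- The sum of centred spins `∑ (x_e - p_e) a_e`. -/
def Mt (μ : Config n → ℝ) (θ : ℝ) (x : Config n) : ℂ :=
  ∑ e, (xr x e - pr μ e x) • aa μ θ x e

/-- The total weight `∑ w_e`. -/
def Vt (μ : Config n → ℝ) (θ : ℝ) (x : Config n) : ℝ := ∑ e, ww μ θ x e

/-- `∑_e E|e^{iθ c_e} - 1|²`. -/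
def Lam (μ : Config n → ℝ) (θ : ℝ) : ℝ := ∑ e : Edge n, EE μ (fun x => ‖zz θ x e - 1‖ ^ 2)

lemma aa_up (μ : Config n → ℝ) (x : Config n) (e : Edge n) (b : Bool) :
    aa μ θ (up x e b) e = aa μ θ x e := by simp [aa]

lemma norm_bary_le {p : ℝ} (h0 : 0 ≤ p) (h1 : p ≤ 1) {z : ℂ} (hz : ‖z‖ = 1) :
    ‖1 - (p : ℂ) + p * z‖ ≤ 1 := by
  refine (norm_add_le _ _).trans ?_
  rw [norm_mul, hz, mul_one, show (1 : ℂ) - p = ((1 - p : ℝ) : ℂ) by push_cast; ring,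
    Complex.norm_real, Complex.norm_real, Real.norm_of_nonneg h0, Real.norm_of_nonneg (by linarith)]
  linarith

lemma norm_conj_sub_one (z : ℂ) : ‖(starRingEnd ℂ) z - 1‖ = ‖z - 1‖ := by
  rw [← Complex.norm_conj (z - 1)]; simp

lemma norm_aa_le {μ : Config n → ℝ} (hμ : IsProb μ) (x : Config n) (e : Edge n) :
    ‖aa μ θ x e‖ ≤ ‖zz θ x e - 1‖ := by
  rw [aa, norm_mul, norm_conj_sub_one]
  exact mul_le_of_le_one_right (norm_nonneg _)
    (norm_bary_le (pr_pos hμ e x).le (pr_lt_one hμ e x).le (norm_zz x e))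

/-- The exact identity `E[(x_e-p_e) a_e Y e^{iθT}] - E[w_e Y e^{iθT}] = E[p(1-p)(z̄-1) z (D_e Y) e^{iθT⁻}]`,
where `T⁻` is the triangle count with the edge `e` removed. -/
lemma phase_identity {μ : Config n → ℝ} (hμ : IsProb μ) (Y : Config n → ℝ) (e : Edge n) :
    EE μ (fun x => (xr x e - pr μ e x) • (aa μ θ x e * (Y x * ph θ x)))
      - EE μ (fun x => (ww μ θ x e : ℂ) * (Y x * ph θ x))
    = EE μ (fun x => (pr μ e x * (1 - pr μ e x)) • (((starRingEnd ℂ) (zz θ x e) - 1) * zz θ x e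
        * ((Dl e Y x : ℝ) * ph θ (up x e false)))) := by
  rw [EE_ibp hμ e, EE_eq_cond hμ e (fun x => (ww μ θ x e : ℂ) * (Y x * ph θ x)), ← EE_sub]
  refine EE_congr fun x => ?_
  have hw : ∀ b, ww μ θ (up x e b) e = ww μ θ x e := fun b => by simp [ww]
  have hw2 : ((ww μ θ x e : ℝ) : ℂ) = (pr μ e x : ℂ) * (1 - pr μ e x) *
      ((zz θ x e - 1) * ((starRingEnd ℂ) (zz θ x e) - 1)) := by
    rw [zz, ← norm_ei_sub_one_sq, ww, zz]; push_cast; ring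
  simp only [Dl, aa_up, hw, hw2, ph_up_true, Complex.real_smul, aa, zz_up, pr_up]
  push_cast
  ring

end Phase

/-! ### Decay of the nonzero Fourier modes -/

section PhaseBounds
variable {n : ℕ} {α h θ τ K C : ℝ}

lemma sum_EE_mul_le {μ : Config n → ℝ} (hμ : IsProb μ) (f g : Edge n → Config n → ℝ) :
    ∑ e, EE μ (fun x => f e x * g e x) ≤ Real.sqrt (∑ e, EE μ (fun x => f e x ^ 2))
      * Real.sqrt (∑ e, EE μ (fun x => g e x ^ 2)) := by
  refine (Finset.sum_le_sum fun e _ => EE_mul_le hμ (f e) (g e)).trans ?_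
  refine (Real.sum_mul_le_sqrt_mul_sqrt _ _ _).trans (le_of_eq ?_)
  congr 2 <;> refine Finset.sum_congr rfl fun e _ => ?_ <;>
    exact Real.sq_sqrt (EE_nonneg hμ fun _ => sq_nonneg _)

lemma Lam_nonneg {μ : Config n → ℝ} (hμ : IsProb μ) : 0 ≤ Lam μ θ :=
  Finset.sum_nonneg fun e _ => EE_nonneg hμ fun _ => sq_nonneg _

/-- Summation over edges of the right side of `phase_identity`. -/
lemma phase_error {Y : Config n → ℝ} (hY : Tame n α h K Y) :
    ‖EE (PP n α h) (fun x => Mt (PP n α h) θ x * (Y x * ph θ x))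
      - EE (PP n α h) (fun x => (Vt (PP n α h) θ x : ℂ) * (Y x * ph θ x))‖
      ≤ 1 / 4 * (Real.sqrt (Lam (PP n α h) θ) * Real.sqrt K) := by
  set μ := PP n α h with hμd
  have hμ : IsProb μ := PP_prob n α h
  have e1 : EE μ (fun x => Mt μ θ x * (Y x * ph θ x))
      = ∑ e, EE μ (fun x => (xr x e - pr μ e x) • (aa μ θ x e * (Y x * ph θ x))) := by
    rw [← EE_sum]
    refine EE_congr fun x => ?_
    rw [Mt, Finset.sum_mul]
    exact Finset.sum_congr rfl fun e _ => by rw [smul_mul_assoc]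
  have e2 : EE μ (fun x => (Vt μ θ x : ℂ) * (Y x * ph θ x))
      = ∑ e, EE μ (fun x => (ww μ θ x e : ℂ) * (Y x * ph θ x)) := by
    rw [← EE_sum]
    refine EE_congr fun x => ?_
    rw [Vt, Complex.ofReal_sum, Finset.sum_mul]
  rw [e1, e2, ← Finset.sum_sub_distrib]
  simp only [phase_identity hμ]
  refine (norm_sum_le _ _).trans ?_
  have e3 : ∀ e : Edge n, ‖EE μ (fun x => (pr μ e x * (1 - pr μ e x)) •
      (((starRingEnd ℂ) (zz θ x e) - 1) * zz θ x e * ((Dl e Y x : ℝ) * ph θ (up x e false))))‖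
      ≤ 1 / 4 * EE μ (fun x => ‖zz θ x e - 1‖ * |Dl e Y x|) := by
    intro e
    refine (norm_EE_le hμ _).trans ?_
    rw [← EE_mul_left]
    refine EE_mono hμ fun x => ?_
    rw [norm_smul, Real.norm_of_nonneg (pq_nonneg hμ e x), norm_mul, norm_mul, norm_mul,
      norm_conj_sub_one, norm_zz, norm_ph, mul_one, mul_one, Complex.norm_real, Real.norm_eq_abs]
    exact mul_le_mul_of_nonneg_right (pq_le hμ e x) (by positivity)
  refine (Finset.sum_le_sum fun e _ => e3 e).trans ?_
  rw [← Finset.mul_sum]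
  refine mul_le_mul_of_nonneg_left ?_ (by norm_num)
  refine (sum_EE_mul_le hμ (fun e x => ‖zz θ x e - 1‖) (fun e x => |Dl e Y x|)).trans ?_
  refine mul_le_mul_of_nonneg_left (Real.sqrt_le_sqrt ?_) (Real.sqrt_nonneg _)
  simpa only [sq_abs] using hY.2

lemma abs_sub_le_one {s p : ℝ} (hs0 : 0 ≤ s) (hs1 : s ≤ 1) (hp0 : 0 ≤ p) (hp1 : p ≤ 1) :
    |s - p| ≤ 1 := abs_le.2 ⟨by linarith, by linarith⟩

lemma coeff_lip {s p0 p1 : ℝ} {z0 z1 : ℂ} (hs0 : 0 ≤ s) (hs1 : s ≤ 1) (h00 : 0 ≤ p0) (h01 : p0 ≤ 1)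
    (h10 : 0 ≤ p1) (h11 : p1 ≤ 1) (hz0 : ‖z0‖ = 1) (hz1 : ‖z1‖ = 1) :
    ‖(s - p1) • (((starRingEnd ℂ) z1 - 1) * (1 - (p1 : ℂ) + p1 * z1))
      - (s - p0) • (((starRingEnd ℂ) z0 - 1) * (1 - (p0 : ℂ) + p0 * z0))‖
      ≤ 3 * ‖z1 - z0‖ + 6 * |p1 - p0| := by
  have two : ∀ z : ℂ, ‖z‖ = 1 → ‖z - 1‖ ≤ 2 := fun z hz => (norm_sub_le _ _).trans (by
    rw [hz]; simp; norm_num)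
  have e1 : (s - p1) • (((starRingEnd ℂ) z1 - 1) * (1 - (p1 : ℂ) + p1 * z1))
      - (s - p0) • (((starRingEnd ℂ) z0 - 1) * (1 - (p0 : ℂ) + p0 * z0))
      = (s - p1) • ((starRingEnd ℂ) (z1 - z0) * (1 - (p1 : ℂ) + p1 * z1)
          + ((starRingEnd ℂ) z0 - 1) * ((p1 - p0 : ℝ) * (z1 - 1) + p0 * (z1 - z0)))
        + (p0 - p1) • (((starRingEnd ℂ) z0 - 1) * (1 - (p0 : ℂ) + p0 * z0)) := by
    simp only [Complex.real_smul, map_sub]; push_cast; ring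
  rw [e1]
  have b1 : ‖(starRingEnd ℂ) (z1 - z0) * (1 - (p1 : ℂ) + p1 * z1)‖ ≤ ‖z1 - z0‖ := by
    rw [norm_mul, Complex.norm_conj]
    exact mul_le_of_le_one_right (norm_nonneg _) (norm_bary_le h10 h11 hz1)
  have b2 : ‖((p1 - p0 : ℝ) : ℂ) * (z1 - 1) + p0 * (z1 - z0)‖ ≤ 2 * |p1 - p0| + ‖z1 - z0‖ := by
    refine (norm_add_le _ _).trans (add_le_add ?_ ?_)
    · rw [norm_mul, Complex.norm_real, Real.norm_eq_abs, mul_comm]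
      exact mul_le_mul_of_nonneg_right (two z1 hz1) (abs_nonneg _)
    · rw [norm_mul, Complex.norm_real, Real.norm_of_nonneg h00]
      exact mul_le_of_le_one_left (norm_nonneg _) h01
  have b3 : ‖((starRingEnd ℂ) z0 - 1) * ((p1 - p0 : ℝ) * (z1 - 1) + p0 * (z1 - z0))‖
      ≤ 2 * (2 * |p1 - p0| + ‖z1 - z0‖) := by
    rw [norm_mul, norm_conj_sub_one]
    exact mul_le_mul (two z0 hz0) b2 (norm_nonneg _) (by norm_num)
  have b4 : ‖((starRingEnd ℂ) z0 - 1) * (1 - (p0 : ℂ) + p0 * z0)‖ ≤ 2 := by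
    rw [norm_mul, norm_conj_sub_one]
    nlinarith [two z0 hz0, norm_bary_le h00 h01 hz0, norm_nonneg (z0 - 1)]
  refine (norm_add_le _ _).trans ?_
  rw [norm_smul, norm_smul, Real.norm_eq_abs, Real.norm_eq_abs, abs_sub_comm p0 p1]
  have b5 := mul_le_of_le_one_left (norm_nonneg ((starRingEnd ℂ) (z1 - z0) * (1 - (p1 : ℂ) + p1 * z1)
          + ((starRingEnd ℂ) z0 - 1) * ((p1 - p0 : ℝ) * (z1 - 1) + p0 * (z1 - z0))))
          (abs_sub_le_one hs0 hs1 h10 h11)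
  have b6 := norm_add_le ((starRingEnd ℂ) (z1 - z0) * (1 - (p1 : ℂ) + p1 * z1))
    (((starRingEnd ℂ) z0 - 1) * ((p1 - p0 : ℝ) * (z1 - 1) + p0 * (z1 - z0)))
  have b7 := mul_le_mul_of_nonneg_left b4 (abs_nonneg (p1 - p0))
  linarith

lemma Mt_Dl_le (hn : 2 ≤ n) (hθ : |θ| ≤ τ / n) (x : Config n) (e : Edge n) :
    ‖Dl e (Mt (PP n α h) θ) x‖ ≤ ‖zz θ x e - 1‖ + 2 * (3 * τ + 2 * |α|) := by
  have hn0 : (0 : ℝ) < n := by exact_mod_cast (by omega : 0 < n)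
  set μ := PP n α h with hμd
  have hμ : IsProb μ := PP_prob n α h
  have hτ : 0 ≤ τ := by
    have := (abs_nonneg θ).trans hθ
    by_contra hc; push Not at hc
    linarith [div_neg_of_neg_of_pos hc hn0]
  have hL0 : 0 ≤ 3 * τ + 2 * |α| := by positivity
  have e0 : Dl e (Mt μ θ) x = ∑ f, ((xr (up x e true) f - pr μ f (up x e true)) • aa μ θ (up x e true) f
      - (xr (up x e false) f - pr μ f (up x e false)) • aa μ θ (up x e false) f) := by
    rw [Finset.sum_sub_distrib]; rfl
  have e1 : ∀ f : Edge n, ‖(xr (up x e true) f - pr μ f (up x e true)) • aa μ θ (up x e true) f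
      - (xr (up x e false) f - pr μ f (up x e false)) • aa μ θ (up x e false) f‖
      ≤ (if f = e then ‖zz θ x e - 1‖ else 0)
        + (3 * τ + 2 * |α|) / n * Dl e (fun x => cE x f) x := by
    intro f
    have hD0 := cE_Dl_nonneg x e f
    by_cases hf : f = e
    · subst hf
      rw [if_pos rfl, aa_up, aa_up, pr_up, pr_up, xr_up_same, xr_up_same, ← sub_smul]
      simp only [if_true, Bool.false_eq_true, if_false]
      rw [show (1 - pr μ f x - (0 - pr μ f x)) = 1 by ring, one_smul]
      have := norm_aa_le (θ := θ) hμ x f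
      have : 0 ≤ (3 * τ + 2 * |α|) / n * Dl f (fun x => cE x f) x := by positivity
      linarith
    · rw [if_neg hf, zero_add, xr_up_ne x hf, xr_up_ne x hf]
      refine (coeff_lip (xr_nonneg x f) (xr_le_one x f) (pr_pos hμ f _).le (pr_lt_one hμ f _).le
        (pr_pos hμ f _).le (pr_lt_one hμ f _).le (norm_zz _ _) (norm_zz _ _)).trans ?_
      have a1 := zz_Dl (θ := θ) x e f
      have a2 := PP_pr_Dl (α := α) (h := h) hn x e f
      have a3 := mul_le_mul_of_nonneg_right hθ hD0
      have a4 : (3 * τ + 2 * |α|) / n * Dl e (fun x => cE x f) x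
          = 3 * (τ / n * Dl e (fun x => cE x f) x)
            + 8 * (|α| / (4 * n) * Dl e (fun x => cE x f) x) := by field_simp; ring
      have a5 : 0 ≤ |α| / (4 * n) * Dl e (fun x => cE x f) x := by positivity
      linarith
  rw [e0]
  refine (norm_sum_le _ _).trans ((Finset.sum_le_sum fun f _ => e1 f).trans ?_)
  rw [Finset.sum_add_distrib, Finset.sum_ite_eq' Finset.univ e, if_pos (Finset.mem_univ _),
    ← Finset.mul_sum]
  have := mul_le_mul_of_nonneg_left (sum_cE_Dl_le' x e) (div_nonneg hL0 hn0.le)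
  have e2 : (3 * τ + 2 * |α|) / n * (2 * n) = 2 * (3 * τ + 2 * |α|) := by field_simp
  linarith

lemma EE_Mt_sq_le (hn : 2 ≤ n) (hθ : |θ| ≤ τ / n) :
    EE (PP n α h) (fun x => ‖Mt (PP n α h) θ x‖ ^ 2) ≤ Lam (PP n α h) θ / 4
      + (3 * τ + 2 * |α|) / 2 * (n * Real.sqrt (Lam (PP n α h) θ)) := by
  have hn0 : (0 : ℝ) < n := by exact_mod_cast (by omega : 0 < n)
  set μ := PP n α h with hμd
  have hμ : IsProb μ := PP_prob n α h
  set L := 3 * τ + 2 * |α| with hL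
  have hτ : 0 ≤ τ := by
    have := (abs_nonneg θ).trans hθ
    by_contra hc; push Not at hc
    linarith [div_neg_of_neg_of_pos hc hn0]
  have hL0 : 0 ≤ L := by positivity
  have e1 : EE μ (fun x => Mt μ θ x * (starRingEnd ℂ) (Mt μ θ x))
      = ∑ e, EE μ (fun x => (xr x e - pr μ e x) • (aa μ θ x e * (starRingEnd ℂ) (Mt μ θ x))) := by
    rw [← EE_sum]
    refine EE_congr fun x => ?_
    conv_lhs => rw [Mt, Finset.sum_mul]
    exact Finset.sum_congr rfl fun e _ => by rw [smul_mul_assoc]; rfl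
  have e2 : EE μ (fun x => ‖Mt μ θ x‖ ^ 2) ≤ ‖EE μ (fun x => Mt μ θ x * (starRingEnd ℂ) (Mt μ θ x))‖ := by
    have : EE μ (fun x => Mt μ θ x * (starRingEnd ℂ) (Mt μ θ x))
        = ((EE μ (fun x => ‖Mt μ θ x‖ ^ 2) : ℝ) : ℂ) := by
      simp only [EE, Complex.ofReal_sum]
      refine Finset.sum_congr rfl fun x _ => ?_
      rw [Complex.mul_conj, Complex.normSq_eq_norm_sq]
      simp
    rw [this, Complex.norm_real]
    exact le_abs_self _
  refine e2.trans ?_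
  rw [e1]
  have e3 : ∀ e : Edge n, ‖EE μ (fun x => (xr x e - pr μ e x) • (aa μ θ x e * (starRingEnd ℂ) (Mt μ θ x)))‖
      ≤ 1 / 4 * EE μ (fun x => ‖zz θ x e - 1‖ ^ 2) + L / 2 * EE μ (fun x => ‖zz θ x e - 1‖ * 1) := by
    intro e
    rw [EE_ibp hμ e]
    refine (norm_EE_le hμ _).trans ?_
    rw [← EE_mul_left, ← EE_mul_left, ← EE_add]
    refine EE_mono hμ fun x => ?_
    have a1 : Dl e (fun x => aa μ θ x e * (starRingEnd ℂ) (Mt μ θ x)) x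
        = aa μ θ x e * (starRingEnd ℂ) (Dl e (Mt μ θ) x) := by
      simp only [Dl, aa_up, map_sub]; ring
    rw [a1, norm_smul, Real.norm_of_nonneg (pq_nonneg hμ e x), norm_mul, Complex.norm_conj]
    have a2 : ‖aa μ θ x e‖ * ‖Dl e (Mt μ θ) x‖ ≤ ‖zz θ x e - 1‖ * (‖zz θ x e - 1‖ + 2 * L) :=
      mul_le_mul (norm_aa_le hμ x e) (Mt_Dl_le hn hθ x e) (norm_nonneg _) (norm_nonneg _)
    have a3 := mul_le_mul (pq_le hμ e x) a2 (by positivity) (by norm_num)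
    refine a3.trans (le_of_eq (by ring))
  refine (norm_sum_le _ _).trans ((Finset.sum_le_sum fun e _ => e3 e).trans ?_)
  rw [Finset.sum_add_distrib, ← Finset.mul_sum, ← Finset.mul_sum]
  have e4 := sum_EE_mul_le hμ (fun (e : Edge n) x => ‖zz θ x e - 1‖) (fun _ _ => 1)
  simp only [one_pow, EE_const hμ, Finset.sum_const, Finset.card_univ, nsmul_eq_mul, mul_one] at e4
  have e5 : Real.sqrt (Fintype.card (Edge n)) ≤ n := by
    rw [Real.sqrt_le_left hn0.le]
    linarith [card_edge_le (n := n), sq_nonneg (n : ℝ)]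
  have e6 : ∑ e : Edge n, EE μ (fun x => ‖zz θ x e - 1‖ * 1) ≤ n * Real.sqrt (Lam μ θ) := by
    simp only [mul_one]
    refine e4.trans ?_
    rw [mul_comm]
    exact mul_le_mul_of_nonneg_right e5 (Real.sqrt_nonneg _)
  have e7 := mul_le_mul_of_nonneg_left e6 (by positivity : 0 ≤ L / 2)
  have e8 : ∑ e : Edge n, EE μ (fun x => ‖zz θ x e - 1‖ ^ 2) = Lam μ θ := rfl
  rw [e8]; linarith

end PhaseBounds

section PhaseVar
variable {n : ℕ} {α h θ τ K C : ℝ}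

/-- Schur's test for the matrix `D_f c_e`, whose row and column sums are at most `2n`. -/
lemma schur_cE (x : Config n) (g : Edge n → ℝ) :
    ∑ f, (∑ e, Dl f (fun x => cE x e) x * g e) ^ 2 ≤ 4 * (n : ℝ) ^ 2 * ∑ e, g e ^ 2 := by
  set d : Edge n → Edge n → ℝ := fun f e => Dl f (fun x => cE x e) x with hd
  have hd0 : ∀ f e, 0 ≤ d f e := fun f e => cE_Dl_nonneg x f e
  have t2 : ∀ f, (∑ e, d f e * g e) ^ 2 ≤ 2 * n * ∑ e, d f e * g e ^ 2 := by
    intro f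
    have cs : (∑ e, d f e * g e) ^ 2 ≤ (∑ e, d f e) * ∑ e, d f e * g e ^ 2 := by
      have := Finset.sum_mul_sq_le_sq_mul_sq Finset.univ (fun e => Real.sqrt (d f e))
        (fun e => Real.sqrt (d f e) * g e)
      simp only [← mul_assoc, Real.mul_self_sqrt (hd0 f _), mul_pow, Real.sq_sqrt (hd0 f _)]
        at this
      exact this
    exact cs.trans (mul_le_mul_of_nonneg_right (sum_cE_Dl_le' x f)
      (Finset.sum_nonneg fun e _ => mul_nonneg (hd0 f e) (sq_nonneg _)))
  refine (Finset.sum_le_sum fun f _ => t2 f).trans ?_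
  rw [← Finset.mul_sum, Finset.sum_comm]
  have t3 : ∑ e, ∑ f, d f e * g e ^ 2 ≤ ∑ e, 2 * n * g e ^ 2 := by
    refine Finset.sum_le_sum fun e _ => ?_
    rw [← Finset.sum_mul]
    exact mul_le_mul_of_nonneg_right (sum_cE_Dl_le x e) (sq_nonneg _)
  rw [← Finset.mul_sum] at t3
  have := mul_le_mul_of_nonneg_left t3 (by positivity : (0 : ℝ) ≤ 2 * n)
  linarith

lemma tau_nonneg (hn : 2 ≤ n) (hθ : |θ| ≤ τ / n) : 0 ≤ τ := by
  have hn0 : (0 : ℝ) < n := by exact_mod_cast (by omega : 0 < n)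
  have := (abs_nonneg θ).trans hθ
  by_contra hc; push Not at hc
  linarith [div_neg_of_neg_of_pos hc hn0]

lemma ww_Dl_le (hn : 2 ≤ n) (hθ : |θ| ≤ τ / n) (x : Config n) (f e : Edge n) :
    |ww (PP n α h) θ (up x f true) e - ww (PP n α h) θ (up x f false) e|
      ≤ Dl f (fun x => cE x e) x * ((3 * τ + 2 * |α|) / n * (‖zz θ x e - 1‖ + (3 * τ + 2 * |α|) / n)) := by
  have hn0 : (0 : ℝ) < n := by exact_mod_cast (by omega : 0 < n)
  have hτ := tau_nonneg hn hθ
  set μ := PP n α h with hμd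
  have hμ : IsProb μ := PP_prob n α h
  set D := Dl f (fun x => cE x e) x with hD
  have hD0 : 0 ≤ D := cE_Dl_nonneg x f e
  set q1 := pr μ e (up x f true) * (1 - pr μ e (up x f true)) with hq1
  set q0 := pr μ e (up x f false) * (1 - pr μ e (up x f false)) with hq0
  set r1 := ‖zz θ (up x f true) e - 1‖ with hr1
  set r0 := ‖zz θ (up x f false) e - 1‖ with hr0
  set r := ‖zz θ x e - 1‖ with hr
  have a1 : |q1 - q0| ≤ |α| / (4 * n) * D := PP_pq_Dl hn x f e
  have a2 : |r1 - r0| ≤ τ / n * D := by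
    refine (abs_norm_sub_norm_le _ _).trans ?_
    rw [sub_sub_sub_cancel_right]
    exact (zz_Dl x f e).trans (mul_le_mul_of_nonneg_right hθ hD0)
  have a3 : r1 ≤ r + 2 * (τ / n) := (zz_up_near x f e true).trans (by linarith)
  have a4 : r0 ≤ r + 2 * (τ / n) := (zz_up_near x f e false).trans (by linarith)
  have a5 : r1 ≤ 2 := norm_zz_sub_one_le _ _
  have a6 : 0 ≤ q0 := pq_nonneg hμ e _
  have a7 : q0 ≤ 1 / 4 := pq_le hμ e _
  have r1n : 0 ≤ r1 := norm_nonneg _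
  have r0n : 0 ≤ r0 := norm_nonneg _
  have e1 : ww μ θ (up x f true) e - ww μ θ (up x f false) e
      = (q1 - q0) * r1 ^ 2 + q0 * ((r1 - r0) * (r1 + r0)) := by
    simp only [ww]; ring
  rw [e1]
  set R := r + 2 * (τ / n) with hR
  have hR0 : 0 ≤ R := r1n.trans a3
  have b1 : |(q1 - q0) * r1 ^ 2| ≤ |α| / (4 * n) * D * (2 * R) := by
    rw [abs_mul, abs_of_nonneg (sq_nonneg r1)]
    exact mul_le_mul a1 (by nlinarith) (sq_nonneg _) (by positivity)
  have b2 : |q0 * ((r1 - r0) * (r1 + r0))| ≤ 1 / 4 * (τ / n * D * (2 * R)) := by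
    rw [abs_mul q0, abs_mul (r1 - r0), abs_of_nonneg a6, abs_of_nonneg (by linarith : 0 ≤ r1 + r0)]
    exact mul_le_mul a7 (mul_le_mul a2 (by linarith) (by positivity) (by positivity)) (by positivity)
      (by norm_num)
  refine (abs_add_le _ _).trans ((add_le_add b1 b2).trans ?_)
  have c1 : |α| / (4 * n) * D * (2 * R) + 1 / 4 * (τ / n * D * (2 * R))
      = D * (((τ + |α|) / 2) / n * R) := by field_simp; ring
  rw [c1]
  refine mul_le_mul_of_nonneg_left (mul_le_mul ?_ ?_ hR0 (by positivity)) hD0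
  · gcongr; linarith [abs_nonneg α]
  · rw [hR, ← mul_div_assoc]; gcongr; linarith [abs_nonneg α]

/-- By the Poincaré inequality and the Schur test, the total weight fluctuates on the scale of
`√(Lam + 1)`. -/
lemma Vr_Vt_le (hC : 0 < C) (hP : HasPoincare α h C n) (hn : 2 ≤ n) (hθ : |θ| ≤ τ / n) :
    Vr (PP n α h) (Vt (PP n α h) θ) ≤ 1 + C * (8 * (3 * τ + 2 * |α|) ^ 2 *
      (Lam (PP n α h) θ + (3 * τ + 2 * |α|) ^ 2)) := by
  have hn' : (2 : ℝ) ≤ n := by exact_mod_cast hn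
  have hn0 : (0 : ℝ) < n := by linarith
  have hτ := tau_nonneg hn hθ
  set μ := PP n α h with hμd
  have hμ : IsProb μ := PP_prob n α h
  set L := 3 * τ + 2 * |α| with hL
  have hL0 : 0 ≤ L := by positivity
  have hcard := card_edge_le (n := n)
  have hb : ∀ x, |Vt μ θ x| ≤ (n : ℝ) ^ 6 := by
    intro x
    have h1 : ∀ e : Edge n, |ww μ θ x e| ≤ 1 := by
      intro e
      have a0 := pq_nonneg hμ e x
      have a1 := pq_le hμ e x
      have a2 : ‖zz θ x e - 1‖ ^ 2 ≤ 4 := by nlinarith [norm_zz_sub_one_le (θ := θ) x e, norm_nonneg (zz θ x e - 1)]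
      rw [ww, abs_of_nonneg (by positivity)]
      nlinarith [sq_nonneg ‖zz θ x e - 1‖]
    refine (Finset.abs_sum_le_sum_abs _ _).trans ((Finset.sum_le_sum fun e _ => h1 e).trans ?_)
    rw [Finset.sum_const, Finset.card_univ, nsmul_eq_mul, mul_one]
    have : (n : ℝ) ^ 2 ≤ n ^ 6 := pow_le_pow_right₀ (by linarith) (by norm_num)
    nlinarith
  refine (hP _ hb).trans (add_le_add (one_div_le_self hn) (mul_le_mul_of_nonneg_left ?_ hC.le))
  have key : ∀ x, ∑ f, Dl f (Vt μ θ) x ^ 2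
      ≤ 8 * L ^ 2 * ∑ e : Edge n, (‖zz θ x e - 1‖ ^ 2 + L ^ 2 / n ^ 2) := by
    intro x
    have s1 : ∀ f, |Dl f (Vt μ θ) x| ≤ |∑ e, Dl f (fun x => cE x e) x * (L / n * (‖zz θ x e - 1‖ + L / n))| := by
      intro f
      have : Dl f (Vt μ θ) x = ∑ e, (ww μ θ (up x f true) e - ww μ θ (up x f false) e) := by
        rw [Finset.sum_sub_distrib]; rfl
      rw [this]
      refine (Finset.abs_sum_le_sum_abs _ _).trans
        ((Finset.sum_le_sum fun e _ => ww_Dl_le hn hθ x f e).trans (le_abs_self _))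
    refine (Finset.sum_le_sum fun f _ => sq_le_sq.2 (s1 f)).trans ((schur_cE x _).trans ?_)
    rw [Finset.mul_sum, Finset.mul_sum]
    refine Finset.sum_le_sum fun e _ => ?_
    have : 4 * (n : ℝ) ^ 2 * (L / n * (‖zz θ x e - 1‖ + L / n)) ^ 2
      = 4 * L ^ 2 * (‖zz θ x e - 1‖ + L / n) ^ 2 := by field_simp
    rw [this, show L ^ 2 / (n : ℝ) ^ 2 = (L / n) ^ 2 by rw [div_pow]]
    nlinarith [mul_nonneg (sq_nonneg L) (sq_nonneg (‖zz θ x e - 1‖ - L / n))]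
  have e1 : ∑ f, EE μ (fun x => Dl f (Vt μ θ) x ^ 2) ≤ 8 * L ^ 2 * ∑ e : Edge n,
      (EE μ (fun x => ‖zz θ x e - 1‖ ^ 2) + L ^ 2 / n ^ 2) := by
    rw [← EE_sum]
    refine (EE_mono hμ key).trans (le_of_eq ?_)
    rw [EE_mul_left, EE_sum]
    congr 1
    refine Finset.sum_congr rfl fun e _ => ?_
    rw [EE_add, EE_const hμ]
  refine e1.trans (mul_le_mul_of_nonneg_left ?_ (by positivity))
  rw [Finset.sum_add_distrib, Finset.sum_const, Finset.card_univ, nsmul_eq_mul]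
  refine add_le_add le_rfl ?_
  rw [← mul_div_assoc, div_le_iff₀ (by positivity)]
  nlinarith [sq_nonneg L, sq_nonneg (n : ℝ)]

lemma decay_arith {K L C c p n s Λ a b d Z : ℝ} (hK0 : 0 ≤ K) (hL0 : 0 ≤ L) (hC : 0 < C) (hc : 0 < c)
    (hp : 0 < p) (hn0 : 0 < n) (hs2 : s ^ 2 = Λ) (hs1 : 1 ≤ s) (hsc : Real.sqrt (c * n) ≤ s)
    (hcn : 1 ≤ c * n) (hLam : c * n ≤ Λ)
    (ha2 : a ^ 2 ≤ (Λ / 4 + L / 2 * (n * s)) * K) (hb2 : b ^ 2 ≤ Λ / 16 * K)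
    (hd2 : d ^ 2 ≤ (1 + C * (8 * L ^ 2 * (Λ + L ^ 2))) * K) (hZ : 0 ≤ Z)
    (tri : p * Λ * Z ≤ a + b + d) :
    Z ^ 2 ≤ 3 * K * (2 + L / (2 * c) + C * (8 * L ^ 2 * (1 + L ^ 2))) / (p ^ 2 * Real.sqrt (c * n)) := by
  have hns : n * s ≤ s ^ 3 / c := by
    rw [le_div_iff₀ hc]
    have : s ^ 3 = Λ * s := by rw [← hs2]; ring
    rw [this]; nlinarith
  have s23 : s ^ 2 ≤ s ^ 3 := by nlinarith [sq_nonneg s]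
  have s13 : 1 ≤ s ^ 3 := one_le_pow₀ hs1
  set Q := 2 + L / (2 * c) + C * (8 * L ^ 2 * (1 + L ^ 2)) with hQ
  have tot : a ^ 2 + b ^ 2 + d ^ 2 ≤ K * Q * s ^ 3 := by
    have t1 : Λ / 4 + L / 2 * (n * s) + Λ / 16 + (1 + C * (8 * L ^ 2 * (Λ + L ^ 2))) ≤ Q * s ^ 3 := by
      have u1 : L / 2 * (n * s) ≤ L / (2 * c) * s ^ 3 := by
        calc L / 2 * (n * s) ≤ L / 2 * (s ^ 3 / c) := mul_le_mul_of_nonneg_left hns (by positivity)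
          _ = _ := by field_simp
      have u2 : C * (8 * L ^ 2 * (Λ + L ^ 2)) ≤ C * (8 * L ^ 2 * (1 + L ^ 2)) * s ^ 3 := by
        have : C * (8 * L ^ 2 * (1 + L ^ 2)) * s ^ 3 = C * (8 * L ^ 2 * (s ^ 3 + L ^ 2 * s ^ 3)) := by ring
        rw [this, ← hs2]
        have : L ^ 2 ≤ L ^ 2 * s ^ 3 := le_mul_of_one_le_right (sq_nonneg L) s13
        gcongr
      have u3 : Q * s ^ 3 = 2 * s ^ 3 + L / (2 * c) * s ^ 3 + C * (8 * L ^ 2 * (1 + L ^ 2)) * s ^ 3 := by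
        rw [hQ]; ring
      rw [u3]; linarith
    calc a ^ 2 + b ^ 2 + d ^ 2 ≤ K * (Λ / 4 + L / 2 * (n * s) + Λ / 16 + (1 + C * (8 * L ^ 2 * (Λ + L ^ 2)))) := by
          linarith
      _ ≤ K * (Q * s ^ 3) := mul_le_mul_of_nonneg_left t1 hK0
      _ = _ := by ring
  have hs0 : 0 < s := by linarith
  have h1 : (p * s ^ 2 * Z) ^ 2 ≤ 3 * (K * Q * s ^ 3) := by
    rw [← hs2] at tri
    calc _ ≤ (a + b + d) ^ 2 := pow_le_pow_left₀ (by positivity) tri 2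
      _ ≤ 3 * (a ^ 2 + b ^ 2 + d ^ 2) := by
        nlinarith [sq_nonneg (a - b), sq_nonneg (b - d), sq_nonneg (a - d)]
      _ ≤ _ := by linarith
  have hr0 : 0 < Real.sqrt (c * n) := Real.sqrt_pos.2 (by linarith)
  rw [le_div_iff₀ (by positivity)]
  have h2 : Z ^ 2 * (p ^ 2 * s) * s ^ 3 ≤ 3 * K * Q * s ^ 3 := by linarith [h1]
  have h3 := le_of_mul_le_mul_right h2 (by positivity)
  refine le_trans ?_ h3
  gcongr

/-- If the total squared phase increment `Lam` is at least `c n`, then `E[Y e^{iθT}]` is small. -/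
theorem phase_decay {c p : ℝ} (hC : 0 < C) (hP : HasPoincare α h C n) (hn : 2 ≤ n) (hθ : |θ| ≤ τ / n)
    (hc : 0 < c) (hp : 0 < p) (hpq : ∀ (e : Edge n) x, p ≤ pr (PP n α h) e x * (1 - pr (PP n α h) e x))
    (hcn : 1 ≤ c * n) (hLam : c * n ≤ Lam (PP n α h) θ) {Y : Config n → ℝ} (hY : Tame n α h K Y) :
    ‖EE (PP n α h) (fun x => (Y x : ℂ) * ph θ x)‖ ^ 2 ≤
      3 * K * (2 + (3 * τ + 2 * |α|) / (2 * c) + C * (8 * (3 * τ + 2 * |α|) ^ 2 *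
      (1 + (3 * τ + 2 * |α|) ^ 2))) / (p ^ 2 * Real.sqrt (c * n)) := by
  have hn' : (2 : ℝ) ≤ n := by exact_mod_cast hn
  have hn0 : (0 : ℝ) < n := by linarith
  have hτ := tau_nonneg hn hθ
  have hVr := Vr_Vt_le hC hP hn hθ
  have hM := EE_Mt_sq_le (α := α) (h := h) hn hθ
  have hE := phase_error (θ := θ) hY
  set μ := PP n α h with hμd
  have hμ : IsProb μ := PP_prob n α h
  set L := 3 * τ + 2 * |α| with hL
  have hL0 : 0 ≤ L := by positivity
  set Λ := Lam μ θ with hΛ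
  set s := Real.sqrt Λ with hs
  have hΛ0 : 0 ≤ Λ := Lam_nonneg hμ
  have hs2 : s ^ 2 = Λ := Real.sq_sqrt hΛ0
  have hs1 : 1 ≤ s := Real.one_le_sqrt.2 (hcn.trans hLam)
  have hsc : Real.sqrt (c * n) ≤ s := Real.sqrt_le_sqrt hLam
  have hK0 : 0 ≤ K := (EE_nonneg hμ fun x => sq_nonneg (Y x)).trans hY.1
  set Z := EE μ (fun x => (Y x : ℂ) * ph θ x) with hZ
  set mV := EE μ (Vt μ θ) with hmV
  have csC : ∀ F : Config n → ℂ, ‖EE μ (fun x => F x * ((Y x : ℂ) * ph θ x))‖ ^ 2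
      ≤ EE μ (fun x => ‖F x‖ ^ 2) * K := by
    intro F
    have b1 : ‖EE μ (fun x => F x * ((Y x : ℂ) * ph θ x))‖ ≤ EE μ (fun x => ‖F x‖ * |Y x|) := by
      refine (norm_EE_le hμ _).trans (le_of_eq (EE_congr fun x => ?_))
      rw [norm_mul, norm_mul, norm_ph, mul_one, Complex.norm_real, Real.norm_eq_abs]
    have b2 := EE_mul_sq_le hμ (fun x => ‖F x‖) (fun x => |Y x|)
    simp only [sq_abs] at b2
    calc _ ≤ (EE μ (fun x => ‖F x‖ * |Y x|)) ^ 2 := pow_le_pow_left₀ (norm_nonneg _) b1 2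
      _ ≤ _ := b2
      _ ≤ _ := mul_le_mul_of_nonneg_left hY.1 (EE_nonneg hμ fun _ => sq_nonneg _)
  have hmVge : p * Λ ≤ mV := by
    have : mV = ∑ e, EE μ (fun x => ww μ θ x e) := by rw [← EE_sum]; rfl
    rw [this, hΛ, Lam, Finset.mul_sum]
    refine Finset.sum_le_sum fun e _ => ?_
    rw [← EE_mul_left]
    exact EE_mono hμ fun x => mul_le_mul_of_nonneg_right (hpq e x) (sq_nonneg _)
  have split : (mV : ℂ) * Z = EE μ (fun x => Mt μ θ x * (Y x * ph θ x))
      - (EE μ (fun x => Mt μ θ x * (Y x * ph θ x)) - EE μ (fun x => (Vt μ θ x : ℂ) * (Y x * ph θ x)))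
      - EE μ (fun x => ((Vt μ θ x - mV : ℝ) : ℂ) * (Y x * ph θ x)) := by
    rw [hZ, ← EE_mul_leftC, sub_sub_cancel, ← EE_sub]
    refine EE_congr fun x => ?_
    push_cast; ring
  set a := ‖EE μ (fun x => Mt μ θ x * (Y x * ph θ x))‖ with ha
  set b := ‖EE μ (fun x => Mt μ θ x * (Y x * ph θ x)) - EE μ (fun x => (Vt μ θ x : ℂ) * (Y x * ph θ x))‖ with hb
  set d := ‖EE μ (fun x => ((Vt μ θ x - mV : ℝ) : ℂ) * (Y x * ph θ x))‖ with hd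
  have hmV0 : 0 ≤ mV := le_trans (by positivity) hmVge
  have tri : mV * ‖Z‖ ≤ a + b + d := by
    have : ‖(mV : ℂ) * Z‖ = mV * ‖Z‖ := by rw [norm_mul, Complex.norm_real, Real.norm_of_nonneg hmV0]
    rw [← this, split]
    exact (norm_sub_le _ _).trans (add_le_add (norm_sub_le _ _) le_rfl)
  have ha2 : a ^ 2 ≤ (Λ / 4 + L / 2 * (n * s)) * K :=
    (csC (Mt μ θ)).trans (mul_le_mul_of_nonneg_right hM hK0)
  have hd2 : d ^ 2 ≤ (1 + C * (8 * L ^ 2 * (Λ + L ^ 2))) * K := by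
    refine (csC (fun x => ((Vt μ θ x - mV : ℝ) : ℂ))).trans (mul_le_mul_of_nonneg_right ?_ hK0)
    refine le_trans (le_of_eq ?_) hVr
    rw [Vr]
    refine EE_congr fun x => ?_
    rw [Complex.norm_real, Real.norm_eq_abs, sq_abs]
  have hb2 : b ^ 2 ≤ Λ / 16 * K := by
    calc b ^ 2 ≤ (1 / 4 * (s * Real.sqrt K)) ^ 2 := pow_le_pow_left₀ (norm_nonneg _) hE 2
      _ = Λ / 16 * K := by rw [mul_pow, mul_pow, hs2, Real.sq_sqrt hK0]; ring
  refine decay_arith hK0 hL0 hC hc hp hn0 hs2 hs1 hsc hcn hLam ha2 hb2 hd2 (norm_nonneg _) ?_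
  exact (mul_le_mul_of_nonneg_right hmVge (norm_nonneg _)).trans tri

end PhaseVar

/-! ### Lower bound for the phase increments -/

section PhaseLower
variable {n : ℕ} {α h θ : ℝ} {v w : Fin n}

/-- The vertices other than `v` and `w`. -/
abbrev Oth (v w : Fin n) := {y : Fin n // y ≠ v ∧ y ≠ w}

/-- The edge from `v` to a third vertex. -/
def fE (y : Oth v w) : Edge n := mkE v y.1 y.2.1.symm

lemma fE_inj {y y' : Oth v w} (hy : fE y = fE y') : y = y' := by
  have h1 : s(v, y.1) = s(v, y'.1) := congrArg Subtype.val hy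
  exact Subtype.ext (by rcases Sym2.eq_iff.1 h1 with h2 | h2; exacts [h2.2, h2.2.trans h2.1])

lemma A_up_fE (hvw : v ≠ w) (x : Config n) (y : Oth v w) (b : Bool) (a : Fin n) :
    A (up x (fE y) b) w a = A x w a := by
  refine A_up_ne x _ b ?_
  rw [Ne, Sym2.eq_iff]
  rintro (⟨h1, -⟩ | ⟨h1, -⟩)
  · exact hvw h1.symm
  · exact y.2.2 h1.symm

lemma cod_Dl_fE (hvw : v ≠ w) (x : Config n) (y : Oth v w) :
    cod (up x (fE y) true) v w = cod (up x (fE y) false) v w + A x w y := by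
  simp only [cod, A_up_fE hvw]
  rw [← sub_eq_iff_eq_add', ← Finset.sum_sub_distrib, Finset.sum_eq_single y.1]
  · rw [A_up, A_up, if_pos (show s(v, y.1) = (fE y).1 from rfl),
      if_pos (show s(v, y.1) = (fE y).1 from rfl)]; simp
  · intro z _ hz
    have : s(v, z) ≠ (fE y).1 := by
      intro h1
      have h2 : s(v, z) = s(v, y.1) := h1
      exact hz (by rcases Sym2.eq_iff.1 h2 with h3 | h3; exacts [h3.2, h3.2.trans h3.1])
    rw [A_up, A_up, if_neg this, if_neg this, sub_self]
  · simp

lemma card_Oth (hvw : v ≠ w) : (Fintype.card (Oth v w) : ℝ) = n - 2 := by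
  have h1 : Fintype.card (Oth v w) = n - 2 := by
    rw [Fintype.card_subtype]
    have : (Finset.univ.filter fun y : Fin n => y ≠ v ∧ y ≠ w) = Finset.univ \ {v, w} := by
      ext y; simp
    rw [this, Finset.card_sdiff_of_subset (Finset.subset_univ _), Finset.card_pair hvw]; simp
  have h2 : 2 ≤ n := by
    have := Finset.card_le_univ ({v, w} : Finset (Fin n))
    rw [Finset.card_pair hvw] at this; simpa using this
  rw [h1, Nat.cast_sub h2]; norm_num

/-- The test function `∑_y (x_{vy} - p_{vy}) A_{wy}` used to bound `E|e^{iθ c_e} - 1|²` below. -/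
def Gt (α h : ℝ) (v w : Fin n) (x : Config n) : ℝ :=
  ∑ y : Oth v w, (xr x (fE y) - pr (PP n α h) (fE y) x) * A x w y

lemma Gt_Dl_le (hn : 2 ≤ n) (hvw : v ≠ w) (x : Config n) (y : Oth v w) :
    |Dl (fE y) (Gt α h v w) x| ≤ 1 + |α| := by
  have hn0 : (0 : ℝ) < n := by exact_mod_cast (by omega : 0 < n)
  have e0 : Dl (fE y) (Gt α h v w) x = ∑ y' : Oth v w,
      ((xr (up x (fE y) true) (fE y') - pr (PP n α h) (fE y') (up x (fE y) true)) * A x w y'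
      - (xr (up x (fE y) false) (fE y') - pr (PP n α h) (fE y') (up x (fE y) false)) * A x w y') := by
    rw [Finset.sum_sub_distrib]; simp only [Dl, Gt, A_up_fE hvw]
  have e1 : ∀ y' : Oth v w, |(xr (up x (fE y) true) (fE y') - pr (PP n α h) (fE y') (up x (fE y) true)) * A x w y'
      - (xr (up x (fE y) false) (fE y') - pr (PP n α h) (fE y') (up x (fE y) false)) * A x w y'|
      ≤ (if y' = y then 1 else 0) + |α| / n := by
    intro y'
    have hA0 := A_nonneg x w y'.1
    have hA1 := A_le_one x w y'.1
    have hα : 0 ≤ |α| / n := by positivity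
    rw [← sub_mul, abs_mul, abs_of_nonneg hA0]
    refine (mul_le_of_le_one_right (abs_nonneg _) hA1).trans ?_
    by_cases hy : y' = y
    · subst hy
      rw [pr_up, pr_up, xr_up_same, xr_up_same, if_pos rfl]
      simp only [if_true, Bool.false_eq_true, if_false]
      rw [show (1 - pr (PP n α h) (fE y') x - (0 - pr (PP n α h) (fE y') x)) = 1 by ring, abs_one]
      linarith
    · have hne : fE y' ≠ fE y := fun h1 => hy (fE_inj h1)
      rw [if_neg hy, xr_up_ne x hne, xr_up_ne x hne, zero_add, sub_sub_sub_cancel_left, abs_sub_comm]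
      refine (PP_pr_Dl hn x (fE y) (fE y')).trans ?_
      have := mul_le_mul_of_nonneg_left (cE_Dl_le_two x (fE y) (fE y'))
        (by positivity : 0 ≤ |α| / (4 * n))
      refine this.trans ?_
      rw [show |α| / (4 * n) * 2 = |α| / n / 2 by field_simp; norm_num]
      linarith
  rw [e0]
  refine (Finset.abs_sum_le_sum_abs _ _).trans ((Finset.sum_le_sum fun f _ => e1 f).trans ?_)
  rw [Finset.sum_add_distrib, Finset.sum_ite_eq' Finset.univ y, if_pos (Finset.mem_univ _),
    Finset.sum_const, Finset.card_univ, nsmul_eq_mul, card_Oth hvw]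
  have : ((n : ℝ) - 2) * (|α| / n) ≤ |α| := by
    rw [← mul_div_assoc, div_le_iff₀ hn0]; nlinarith [abs_nonneg α]
  linarith

lemma EE_Gt_sq_le (hn : 2 ≤ n) (hvw : v ≠ w) :
    EE (PP n α h) (fun x => Gt α h v w x ^ 2) ≤ n * (1 + |α|) := by
  have hn0 : (0 : ℝ) < n := by exact_mod_cast (by omega : 0 < n)
  set μ := PP n α h with hμd
  have hμ : IsProb μ := PP_prob n α h
  have e1 : EE μ (fun x => Gt α h v w x ^ 2)
      = ∑ y : Oth v w, EE μ (fun x => (xr x (fE y) - pr μ (fE y) x) * (A x w y * Gt α h v w x)) := by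
    rw [← EE_sum]
    refine EE_congr fun x => ?_
    rw [sq]
    conv_lhs => rw [Gt, Finset.sum_mul]
    exact Finset.sum_congr rfl fun e _ => by rw [mul_assoc]; rfl
  rw [e1]
  have e2 : ∀ y : Oth v w, EE μ (fun x => (xr x (fE y) - pr μ (fE y) x) * (A x w y * Gt α h v w x))
      ≤ 1 + |α| := by
    intro y
    rw [EE_ibp_real hμ]
    refine EE_le_const hμ fun x => ?_
    have a1 : Dl (fE y) (fun x => A x w y * Gt α h v w x) x = A x w y * Dl (fE y) (Gt α h v w) x := by
      simp only [Dl, A_up_fE hvw]; ring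
    rw [a1]
    have a2 := abs_le.1 (Gt_Dl_le (α := α) (h := h) hn hvw x y)
    have a3 := pq_nonneg hμ (fE y) x
    have a4 := pq_le hμ (fE y) x
    have a5 := A_nonneg x w y.1
    have a6 := A_le_one x w y.1
    have a7 : A x w y * Dl (fE y) (Gt α h v w) x ≤ 1 + |α| := by nlinarith [abs_nonneg α]
    nlinarith [abs_nonneg α]
  refine (Finset.sum_le_sum fun y _ => e2 y).trans ?_
  rw [Finset.sum_const, Finset.card_univ, nsmul_eq_mul, card_Oth hvw]
  nlinarith [abs_nonneg α]

lemma zz_Dl_fE (hvw : v ≠ w) {e : Edge n} (he : e.1 = s(v, w)) (x : Config n) (y : Oth v w) :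
    (A x w y : ℂ) * (zz θ (up x (fE y) true) e - zz θ (up x (fE y) false) e)
      = (ei θ - 1) * (A x w y * zz θ (up x (fE y) false) e) := by
  have h1 : zz θ (up x (fE y) true) e = zz θ (up x (fE y) false) e * ei (θ * A x w y) := by
    rw [zz, zz, ← ei_add, cE_eq _ he, cE_eq _ he, cod_Dl_fE hvw]; congr 1; ring
  rw [h1]
  rcases A_zero_or_one x w y.1 with h2 | h2 <;> rw [h2] <;> simp <;> ring

/-- For `e = vw`, `E|e^{iθ c_e} - 1|²` is at least of order `1/n`: against the test function
`Gt`, whose second moment is `O(n)`, the expectation of `e^{iθ c_e} - 1` is at least of constant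
order. This uses integration by parts along the edges `vy`, each changing `c_e` by `A_{wy}`. -/
lemma zeta_lower {p b : ℝ} (hn : 4 ≤ n) (hp : 0 < p) (hb : 0 < b)
    (hpq : ∀ (e : Edge n) x, p ≤ pr (PP n α h) e x * (1 - pr (PP n α h) e x))
    (hpb : ∀ (e : Edge n) x, b ≤ pr (PP n α h) e x) (hθ : 2 * |θ| ≤ p * b)
    (hei : 4 / n ≤ ‖ei θ - 1‖) (e : Edge n) :
    (p * b) ^ 2 / (n * (1 + |α|)) ≤ EE (PP n α h) (fun x => ‖zz θ x e - 1‖ ^ 2) := by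
  have hn' : (4 : ℝ) ≤ n := by exact_mod_cast hn
  have hn0 : (0 : ℝ) < n := by linarith
  obtain ⟨v, w, hvw, he⟩ := edge_cases e
  have hG := EE_Gt_sq_le (α := α) (h := h) (by omega) hvw
  set μ := PP n α h with hμd
  have hμ : IsProb μ := PP_prob n α h
  set ζ := EE μ (fun x => ‖zz θ x e - 1‖ ^ 2) with hζ
  have hβ : 0 < p * b := mul_pos hp hb
  have hζ0 : 0 ≤ ζ := EE_nonneg hμ fun _ => sq_nonneg _
  have hα1 : 1 ≤ n * (1 + |α|) := by nlinarith [abs_nonneg α]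
  by_cases hbig : p * b ≤ Real.sqrt ζ
  · have h1 : (p * b) ^ 2 ≤ ζ := by
      have := pow_le_pow_left₀ hβ.le hbig 2
      rwa [Real.sq_sqrt hζ0] at this
    exact (div_le_self (sq_nonneg _) hα1).trans h1
  push Not at hbig
  have e1 : EE μ (fun x => (Gt α h v w x : ℂ) * (zz θ x e - 1))
      = (ei θ - 1) * ∑ y : Oth v w, EE μ (fun x => (pr μ (fE y) x * (1 - pr μ (fE y) x)) •
          ((A x w y : ℂ) * zz θ (up x (fE y) false) e)) := by
    have a1 : EE μ (fun x => (Gt α h v w x : ℂ) * (zz θ x e - 1))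
        = ∑ y : Oth v w, EE μ (fun x => (xr x (fE y) - pr μ (fE y) x) •
          ((A x w y : ℂ) * (zz θ x e - 1))) := by
      rw [← EE_sum]
      refine EE_congr fun x => ?_
      rw [Gt, Complex.ofReal_sum, Finset.sum_mul]
      refine Finset.sum_congr rfl fun y _ => ?_
      rw [Complex.real_smul]; push_cast; ring
    rw [a1, Finset.mul_sum]
    refine Finset.sum_congr rfl fun y _ => ?_
    rw [EE_ibp hμ, ← EE_mul_leftC]
    refine EE_congr fun x => ?_
    have : Dl (fE y) (fun x => (A x w y : ℂ) * (zz θ x e - 1)) x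
        = (A x w y : ℂ) * (zz θ (up x (fE y) true) e - zz θ (up x (fE y) false) e) := by
      simp only [Dl, A_up_fE hvw]; ring
    rw [this, zz_Dl_fE hvw he, mul_smul_comm]
  have e2 : ∀ y : Oth v w, ‖EE μ (fun x => (pr μ (fE y) x * (1 - pr μ (fE y) x)) •
          ((A x w y : ℂ) * zz θ (up x (fE y) false) e))
        - ((EE μ (fun x => pr μ (fE y) x * (1 - pr μ (fE y) x) * A x w y) : ℝ) : ℂ)‖ ≤ p * b / 2 := by
    intro y
    have a0 : ((EE μ (fun x => pr μ (fE y) x * (1 - pr μ (fE y) x) * A x w y) : ℝ) : ℂ)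
        = EE μ (fun x => ((pr μ (fE y) x * (1 - pr μ (fE y) x) * A x w y : ℝ) : ℂ)) := by
      simp [EE]
    rw [a0, ← EE_sub]
    refine (norm_EE_le hμ _).trans ?_
    have a1 : EE μ (fun x => ‖zz θ x e - 1‖) ≤ Real.sqrt ζ := by
      have := EE_abs_le_sqrt hμ (fun x => ‖zz θ x e - 1‖)
      simpa only [abs_norm] using this
    calc _ ≤ EE μ (fun x => 1 / 4 * ‖zz θ x e - 1‖ + 1 / 4 * (2 * |θ|)) := EE_mono hμ fun x => by
          have a2 : (pr μ (fE y) x * (1 - pr μ (fE y) x)) • ((A x w y : ℂ) * zz θ (up x (fE y) false) e)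
              - ((pr μ (fE y) x * (1 - pr μ (fE y) x) * A x w y : ℝ) : ℂ)
              = ((pr μ (fE y) x * (1 - pr μ (fE y) x) * A x w y : ℝ) : ℂ)
                * (zz θ (up x (fE y) false) e - 1) := by
            rw [Complex.real_smul]; push_cast; ring
          have a3 := pq_nonneg hμ (fE y) x
          have a4 := pq_le hμ (fE y) x
          have a5 := A_nonneg x w y.1
          have a6 := A_le_one x w y.1
          rw [a2, norm_mul, Complex.norm_real, Real.norm_of_nonneg (mul_nonneg a3 a5), ← mul_add]
          refine mul_le_mul ?_ (zz_up_near x (fE y) e false) (norm_nonneg _) (by norm_num)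
          nlinarith
      _ = 1 / 4 * EE μ (fun x => ‖zz θ x e - 1‖) + 1 / 4 * (2 * |θ|) := by
          rw [EE_add, EE_mul_left, EE_const hμ]
      _ ≤ p * b / 2 := by linarith
  have e3 : ∀ y : Oth v w, p * b ≤ EE μ (fun x => pr μ (fE y) x * (1 - pr μ (fE y) x) * A x w y) := by
    intro y
    have a1 : b ≤ EE μ (fun x => A x w y) := by
      have : EE μ (fun x => A x w y) = EE μ (fun x => pr μ (mkE w y.1 y.2.2.symm) x) := by
        rw [EE_pr, ← EE_xr_qn α h (mkE w y.1 y.2.2.symm)]; exact EE_congr fun x => A_mkE x y.2.2.symm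
      rw [this]; exact EE_ge_const hμ fun x => hpb _ x
    calc p * b ≤ p * EE μ (fun x => A x w y) := mul_le_mul_of_nonneg_left a1 hp.le
      _ = EE μ (fun x => p * A x w y) := by rw [EE_mul_left]
      _ ≤ _ := EE_mono hμ fun x => mul_le_mul_of_nonneg_right (hpq _ x) (A_nonneg _ _ _)
  have e4 : (n - 2) * (p * b / 2) ≤ ‖∑ y : Oth v w, EE μ (fun x => (pr μ (fE y) x * (1 - pr μ (fE y) x)) •
          ((A x w y : ℂ) * zz θ (up x (fE y) false) e))‖ := by
    set S1 := ∑ y : Oth v w, EE μ (fun x => (pr μ (fE y) x * (1 - pr μ (fE y) x)) •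
          ((A x w y : ℂ) * zz θ (up x (fE y) false) e)) with hS1
    set S0 := ∑ y : Oth v w, EE μ (fun x => pr μ (fE y) x * (1 - pr μ (fE y) x) * A x w y) with hS0
    have b1 : ‖S1 - (S0 : ℂ)‖ ≤ (n - 2) * (p * b / 2) := by
      rw [hS1, hS0, Complex.ofReal_sum, ← Finset.sum_sub_distrib]
      refine (norm_sum_le _ _).trans ((Finset.sum_le_sum fun y _ => e2 y).trans (le_of_eq ?_))
      rw [Finset.sum_const, Finset.card_univ, nsmul_eq_mul, card_Oth hvw]
    have b2 : (n - 2) * (p * b) ≤ S0 := by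
      rw [← card_Oth hvw, ← nsmul_eq_mul, ← Finset.card_univ, ← Finset.sum_const]
      exact Finset.sum_le_sum fun y _ => e3 y
    have b3 : S0 ≤ ‖(S0 : ℂ)‖ := by rw [Complex.norm_real]; exact le_abs_self _
    have b4 := norm_sub_norm_le (S0 : ℂ) S1
    rw [norm_sub_rev] at b4
    linarith
  have e5 : p * b ≤ ‖EE μ (fun x => (Gt α h v w x : ℂ) * (zz θ x e - 1))‖ := by
    rw [e1, norm_mul]
    refine le_trans ?_ (mul_le_mul hei e4 (by nlinarith) (norm_nonneg _))
    rw [div_mul_eq_mul_div, le_div_iff₀ hn0]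
    nlinarith
  have e6 : ‖EE μ (fun x => (Gt α h v w x : ℂ) * (zz θ x e - 1))‖ ≤ EE μ (fun x => |Gt α h v w x| * ‖zz θ x e - 1‖) := by
    refine (norm_EE_le hμ _).trans (le_of_eq (EE_congr fun x => ?_))
    rw [norm_mul, Complex.norm_real, Real.norm_eq_abs]
  have e7 := EE_mul_sq_le hμ (fun x => |Gt α h v w x|) (fun x => ‖zz θ x e - 1‖)
  simp only [sq_abs] at e7
  rw [div_le_iff₀ (by linarith), mul_comm ζ]
  calc (p * b) ^ 2 ≤ (EE μ (fun x => |Gt α h v w x| * ‖zz θ x e - 1‖)) ^ 2 :=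
        pow_le_pow_left₀ hβ.le (e5.trans e6) 2
    _ ≤ _ := e7
    _ ≤ _ := mul_le_mul_of_nonneg_right hG hζ0

end PhaseLower

/-! ### Equidistribution of `T / n` modulo one -/

section Equi
variable {α h u s0 : ℝ} {us : ℝ → ℝ} {n : ℕ}

lemma PP_arg_abs_le (hn : 0 < n) (x : Config n) (e : Edge n) : |α / n * cE x e| ≤ |α| := by
  have hn' : (0 : ℝ) < n := by exact_mod_cast hn
  have h1 := cE_nonneg x e
  have h2 := cE_le x e
  rw [abs_mul, abs_div, abs_of_nonneg h1, Nat.abs_cast, div_mul_eq_mul_div, div_le_iff₀ hn']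
  exact mul_le_mul_of_nonneg_left h2 (abs_nonneg _)

lemma PP_pr_ge (hn : 0 < n) (x : Config n) (e : Edge n) :
    Real.sigmoid (h - |α|) ≤ pr (PP n α h) e x := by
  rw [PP_pr]
  have := abs_le.1 (PP_arg_abs_le (α := α) hn x e)
  exact Real.sigmoid_monotone (by linarith)

lemma PP_pr_le (hn : 0 < n) (x : Config n) (e : Edge n) :
    pr (PP n α h) e x ≤ Real.sigmoid (h + |α|) := by
  rw [PP_pr]
  have := abs_le.1 (PP_arg_abs_le (α := α) hn x e)
  exact Real.sigmoid_monotone (by linarith)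

/-- Jordan's inequality for the chord `|e^{iθ} - 1|` at `θ = 2πk/n`. -/
lemma norm_ei_sub_one_ge {k : ℤ} (hk : k ≠ 0) (hn : 2 * |(k : ℝ)| ≤ n) :
    4 / (n : ℝ) ≤ ‖ei (2 * Real.pi * k / n) - 1‖ := by
  have hk1 : (1 : ℝ) ≤ |(k : ℝ)| := by
    have := Int.one_le_abs hk
    exact_mod_cast this
  have hn0 : (0 : ℝ) < n := by linarith
  unfold ei
  rw [Complex.norm_exp_I_mul_ofReal_sub_one, Real.norm_eq_abs, abs_mul, abs_two]
  have e1 : 2 * Real.pi * k / n / 2 = Real.pi * k / n := by ring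
  have e0 : ∀ t : ℝ, |Real.sin t| = |Real.sin (|t|)| := fun t => by
    rcases abs_choice t with ht | ht <;> rw [ht]
    rw [Real.sin_neg, abs_neg]
  rw [e1, e0]
  have hpi := Real.pi_pos
  have e2 : |Real.pi * k / n| = Real.pi * |(k : ℝ)| / n := by
    rw [abs_div, abs_mul, abs_of_pos hpi, Nat.abs_cast]
  rw [e2]
  have h0 : 0 ≤ Real.pi * |(k : ℝ)| / n := by positivity
  have h1 : Real.pi * |(k : ℝ)| / n ≤ Real.pi / 2 := by
    rw [div_le_div_iff₀ hn0 two_pos]; nlinarith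
  have h2 := Real.mul_le_sin h0 h1
  have h3 : 2 / Real.pi * (Real.pi * |(k : ℝ)| / n) = 2 * |(k : ℝ)| / n := by
    field_simp
  rw [h3] at h2
  have h4 := le_abs_self (Real.sin (Real.pi * |(k : ℝ)| / n))
  have h5 : 4 / (n : ℝ) ≤ 2 * (2 * |(k : ℝ)| / n) := by
    rw [← mul_div_assoc]; gcongr; linarith
  linarith

/-- Every nonzero Fourier mode of `T / n` decouples from a tame observable. -/
theorem phase_tendsto (hG : Good α h u us s0) (hα : -2 < α) {k : ℤ} (hk : k ≠ 0) {K : ℝ}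
    (Y : ∀ n, Config n → ℝ) (hY : ∀ᶠ n : ℕ in atTop, Tame n α h K (Y n)) :
    Tendsto (fun n : ℕ => EE (PP n α h) (fun x => (Y n x : ℂ) * ph (2 * Real.pi * k / n) x))
      atTop (𝓝 0) := by
  obtain ⟨C, hC, hP⟩ := graph_poincare hG hα
  set b := Real.sigmoid (h - |α|) with hb
  set p := b * (1 - Real.sigmoid (h + |α|)) with hp
  have hb0 : 0 < b := Real.sigmoid_pos _
  have hp0 : 0 < p := mul_pos hb0 (by linarith [Real.sigmoid_lt_one (h + |α|)])
  have hβ : 0 < p * b := mul_pos hp0 hb0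
  set c := (p * b) ^ 2 / (4 * (1 + |α|)) with hc
  have ha : 0 ≤ |α| := abs_nonneg α
  have hc0 : 0 < c := by positivity
  set τ := 2 * Real.pi * |(k : ℝ)| with hτ
  set M := 3 * K * (2 + (3 * τ + 2 * |α|) / (2 * c) + C * (8 * (3 * τ + 2 * |α|) ^ 2 *
      (1 + (3 * τ + 2 * |α|) ^ 2))) with hM
  have hlim : Tendsto (fun n : ℕ => M / (p ^ 2 * Real.sqrt (c * n))) atTop (𝓝 0) := by
    refine Tendsto.div_atTop tendsto_const_nhds ?_
    refine Tendsto.const_mul_atTop (by positivity) ?_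
    refine Real.tendsto_sqrt_atTop.comp ?_
    exact Tendsto.const_mul_atTop hc0 tendsto_natCast_atTop_atTop
  have hsq : Tendsto (fun n : ℕ => ‖EE (PP n α h)
      (fun x => (Y n x : ℂ) * ph (2 * Real.pi * k / n) x)‖ ^ 2) atTop (𝓝 0) := by
    refine squeeze_zero' (Eventually.of_forall fun n => sq_nonneg _) ?_ hlim
    have l1 : ∀ᶠ n : ℕ in atTop, 2 * |(k : ℝ)| ≤ n :=
      tendsto_natCast_atTop_atTop.eventually_ge_atTop _
    have l2 : ∀ᶠ n : ℕ in atTop, 1 ≤ c * n :=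
      (Tendsto.const_mul_atTop hc0 tendsto_natCast_atTop_atTop).eventually_ge_atTop _
    have l3 : ∀ᶠ n : ℕ in atTop, 2 * τ / (p * b) ≤ n :=
      tendsto_natCast_atTop_atTop.eventually_ge_atTop _
    filter_upwards [hP, hY, l1, l2, l3, eventually_ge_atTop 4] with n hPn hYn m1 m2 m3 m4
    have hn0 : 0 < n := by omega
    have hn4 : (4 : ℝ) ≤ n := by exact_mod_cast m4
    have hnr : (0 : ℝ) < n := by linarith
    have hθ : |2 * Real.pi * k / n| = τ / n := by
      rw [abs_div, abs_mul, abs_of_pos (by positivity), Nat.abs_cast]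
    have hpb : ∀ (e : Edge n) x, b ≤ pr (PP n α h) e x := fun e x => PP_pr_ge hn0 x e
    have hpq : ∀ (e : Edge n) x, p ≤ pr (PP n α h) e x * (1 - pr (PP n α h) e x) := by
      intro e x
      have q1 := PP_pr_le (α := α) (h := h) hn0 x e
      exact mul_le_mul (hpb e x) (by linarith) (by linarith [Real.sigmoid_lt_one (h + |α|)])
        (pr_pos (PP_prob n α h) e x).le
    have hθ2 : 2 * |2 * Real.pi * k / n| ≤ p * b := by
      rw [hθ]
      rw [div_le_iff₀ hβ] at m3
      rw [← mul_div_assoc, div_le_iff₀ hnr]; linarith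
    have hz := zeta_lower (α := α) (h := h) m4 hp0 hb0 hpq hpb hθ2 (norm_ei_sub_one_ge hk m1)
    have hLam : c * n ≤ Lam (PP n α h) (2 * Real.pi * k / n) := by
      have s1 := Finset.sum_le_sum (s := Finset.univ) fun (e : Edge n) _ => hz e
      rw [Finset.sum_const, Finset.card_univ, nsmul_eq_mul] at s1
      refine le_trans ?_ s1
      have hN := card_edge (n := n)
      have hN2 : (n : ℝ) ^ 2 / 4 ≤ Fintype.card (Edge n) := by nlinarith
      calc c * n = (n : ℝ) ^ 2 / 4 * ((p * b) ^ 2 / (n * (1 + |α|))) := by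
            rw [hc]; field_simp
        _ ≤ _ := mul_le_mul_of_nonneg_right hN2 (by positivity)
    exact phase_decay hC hPn (by omega) hθ.le hc0 hp0 hpq m2 hLam hYn
  have h3 := hsq.sqrt
  simp only [Real.sqrt_sq (norm_nonneg _), Real.sqrt_zero] at h3
  exact tendsto_zero_iff_norm_tendsto_zero.2 h3

end Equi

section Circle
variable {α h u s0 : ℝ} {us : ℝ → ℝ} {n : ℕ}

lemma EE_ofReal' {Ω : Type*} [Fintype Ω] (μ : Ω → ℝ) (f : Ω → ℝ) :
    EE μ (fun x => ((f x : ℝ) : ℂ)) = ((EE μ f : ℝ) : ℂ) := by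
  simp [EE]

/-- The class of `T(x) / n` in `ℝ / ℤ`. -/
def psi (n : ℕ) (x : Config n) : AddCircle (1 : ℝ) := ((Tr x / n : ℝ) : AddCircle (1 : ℝ))

lemma fourier_psi (k : ℤ) (x : Config n) : fourier k (psi n x) = ph (2 * Real.pi * k / n) x := by
  rw [psi, fourier_coe_apply, ph, ei]
  congr 1
  push_cast
  ring

lemma circle_integrable (G : C(AddCircle (1 : ℝ), ℂ)) : Integrable G AddCircle.haarAddCircle :=
  G.continuous.integrable_of_hasCompactSupport (HasCompactSupport.of_compactSpace _)

/-- For continuous `G` on the circle and tame `Y`, `E[Y G(T/n)] - (∫ G) E[Y] → 0`. -/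
theorem circle_tendsto (hG : Good α h u us s0) (hα : -2 < α) {K : ℝ}
    (Y : ∀ n, Config n → ℝ) (hY : ∀ᶠ n : ℕ in atTop, Tame n α h K (Y n))
    (G : C(AddCircle (1 : ℝ), ℂ)) :
    Tendsto (fun n : ℕ => EE (PP n α h) (fun x => (Y n x : ℂ) * G (psi n x))
      - (∫ t, G t ∂AddCircle.haarAddCircle) * EE (PP n α h) (fun x => (Y n x : ℂ)))
      atTop (𝓝 0) := by
  have key : ∀ P ∈ Submodule.span ℂ (Set.range (fourier (T := (1 : ℝ)))),
      Tendsto (fun n : ℕ => EE (PP n α h) (fun x => (Y n x : ℂ) * P (psi n x))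
      - (∫ t, P t ∂AddCircle.haarAddCircle) * EE (PP n α h) (fun x => (Y n x : ℂ)))
      atTop (𝓝 0) := by
    intro P hP
    induction hP using Submodule.span_induction with
    | mem P hP =>
      obtain ⟨k, rfl⟩ := hP
      by_cases hk : k = 0
      · subst hk
        refine tendsto_const_nhds.congr fun n => ?_
        simp
      · have h0 : ∫ t, fourier k t ∂(AddCircle.haarAddCircle (T := (1 : ℝ))) = 0 :=
          integral_eq_zero_of_add_right_eq_neg (fourier_add_half_inv_index hk one_pos)
        rw [h0]
        simp only [zero_mul, sub_zero, fourier_psi]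
        exact phase_tendsto hG hα hk Y hY
    | zero =>
      refine tendsto_const_nhds.congr fun n => ?_
      simp [EE]
    | add P Q _ _ hP hQ =>
      have := hP.add hQ
      rw [add_zero] at this
      refine this.congr fun n => ?_
      simp only [ContinuousMap.add_apply, mul_add]
      rw [EE_add, integral_add (circle_integrable P) (circle_integrable Q)]
      ring
    | smul c P _ hP =>
      have := hP.const_mul c
      rw [mul_zero] at this
      refine this.congr fun n => ?_
      have e1 : ∀ x : Config n, (Y n x : ℂ) * (c • P) (psi n x) = c * ((Y n x : ℂ) * P (psi n x)) :=
        fun x => by rw [ContinuousMap.smul_apply, smul_eq_mul]; ring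
      have e2 : ∫ t, (c • P) t ∂AddCircle.haarAddCircle
          = c * ∫ t, P t ∂AddCircle.haarAddCircle := integral_const_mul c _
      rw [EE_congr e1, EE_mul_leftC, e2]
      ring
  rw [Metric.tendsto_atTop']
  intro ε hε
  set R := Real.sqrt K + 1 with hR
  have hR0 : 0 < R := by positivity
  have hmem : G ∈ closure (Submodule.span ℂ (Set.range (fourier (T := (1 : ℝ)))) : Set _) := by
    have := span_fourier_closure_eq_top (T := (1 : ℝ))
    rw [← Submodule.topologicalClosure_coe, this]; trivial
  obtain ⟨P, hP, hd⟩ := Metric.mem_closure_iff.1 hmem (ε / (4 * R)) (by positivity)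
  have h1 := (Metric.tendsto_atTop'.1 (key P hP)) (ε / 2) (by positivity)
  obtain ⟨N1, hN1⟩ := h1
  obtain ⟨N2, hN2⟩ := eventually_atTop.1 hY
  refine ⟨max N1 N2, fun n hn => ?_⟩
  have a1 := hN1 n (lt_of_le_of_lt (le_max_left _ _) hn)
  have a2 := hN2 n (le_of_lt (lt_of_le_of_lt (le_max_right _ _) hn))
  have hμ := PP_prob n α h
  set μ := PP n α h
  rw [dist_zero_right] at a1 ⊢
  have hbd : ∀ t, ‖(G - P) t‖ ≤ ε / (4 * R) := fun t => by
    refine ((G - P).norm_coe_le_norm t).trans ?_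
    rw [← dist_eq_norm]; exact hd.le
  have hEY : EE μ (fun x => |Y n x|) ≤ R := by
    refine (EE_abs_le_sqrt hμ _).trans ?_
    have := Real.sqrt_le_sqrt a2.1
    linarith
  have hEYC : ‖EE μ (fun x => (Y n x : ℂ))‖ ≤ R := by
    refine (norm_EE_le hμ _).trans (le_trans (le_of_eq (EE_congr fun x => ?_)) hEY)
    simp
  have b1 : ‖EE μ (fun x => (Y n x : ℂ) * (G - P) (psi n x))‖ ≤ ε / 4 := by
    calc _ ≤ EE μ (fun x => ‖(Y n x : ℂ) * (G - P) (psi n x)‖) := norm_EE_le hμ _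
      _ ≤ EE μ (fun x => ε / (4 * R) * |Y n x|) := EE_mono hμ fun x => by
          rw [norm_mul, Complex.norm_real, Real.norm_eq_abs, mul_comm]
          exact mul_le_mul_of_nonneg_right (hbd _) (abs_nonneg _)
      _ = ε / (4 * R) * EE μ (fun x => |Y n x|) := by rw [EE_mul_left]
      _ ≤ ε / (4 * R) * R := mul_le_mul_of_nonneg_left hEY (by positivity)
      _ = ε / 4 := by field_simp
  have b2 : ‖∫ t, (G - P) t ∂AddCircle.haarAddCircle‖ ≤ ε / (4 * R) := by
    have := norm_integral_le_of_norm_le_const (μ := AddCircle.haarAddCircle (T := (1 : ℝ)))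
      (Eventually.of_forall hbd)
    simpa using this
  have b3 : ‖(∫ t, (G - P) t ∂AddCircle.haarAddCircle) * EE μ (fun x => (Y n x : ℂ))‖ ≤ ε / 4 := by
    rw [norm_mul]
    calc _ ≤ ε / (4 * R) * R := mul_le_mul b2 hEYC (norm_nonneg _) (by positivity)
      _ = ε / 4 := by field_simp
  have e : EE μ (fun x => (Y n x : ℂ) * G (psi n x))
      - (∫ t, G t ∂AddCircle.haarAddCircle) * EE μ (fun x => (Y n x : ℂ))
      = (EE μ (fun x => (Y n x : ℂ) * P (psi n x))
      - (∫ t, P t ∂AddCircle.haarAddCircle) * EE μ (fun x => (Y n x : ℂ)))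
      + EE μ (fun x => (Y n x : ℂ) * (G - P) (psi n x))
      - (∫ t, (G - P) t ∂AddCircle.haarAddCircle) * EE μ (fun x => (Y n x : ℂ)) := by
    simp only [ContinuousMap.sub_apply, mul_sub]
    rw [EE_sub, integral_sub (circle_integrable G) (circle_integrable P)]
    ring
  rw [e]
  have n1 := norm_sub_le ((EE μ (fun x => (Y n x : ℂ) * P (psi n x))
      - (∫ t, P t ∂AddCircle.haarAddCircle) * EE μ (fun x => (Y n x : ℂ)))
      + EE μ (fun x => (Y n x : ℂ) * (G - P) (psi n x)))
      ((∫ t, (G - P) t ∂AddCircle.haarAddCircle) * EE μ (fun x => (Y n x : ℂ)))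
  have n2 := norm_add_le (EE μ (fun x => (Y n x : ℂ) * P (psi n x))
      - (∫ t, P t ∂AddCircle.haarAddCircle) * EE μ (fun x => (Y n x : ℂ)))
      (EE μ (fun x => (Y n x : ℂ) * (G - P) (psi n x)))
  linarith

/-- Real form of `circle_tendsto`. -/
theorem circle_tendsto_real (hG : Good α h u us s0) (hα : -2 < α) {K : ℝ}
    (Y : ∀ n, Config n → ℝ) (hY : ∀ᶠ n : ℕ in atTop, Tame n α h K (Y n))
    (G : AddCircle (1 : ℝ) → ℝ) (hGc : Continuous G) :
    Tendsto (fun n : ℕ => EE (PP n α h) (fun x => Y n x * G (psi n x))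
      - (∫ t, G t ∂AddCircle.haarAddCircle) * EE (PP n α h) (Y n))
      atTop (𝓝 0) := by
  have h1 := circle_tendsto hG hα Y hY ⟨fun t => ((G t : ℝ) : ℂ), Complex.continuous_ofReal.comp hGc⟩
  have h2 := (Complex.continuous_re.tendsto 0).comp h1
  rw [Complex.zero_re] at h2
  refine h2.congr fun n => ?_
  have e1 : ∫ t, ((G t : ℝ) : ℂ) ∂(AddCircle.haarAddCircle (T := (1 : ℝ)))
      = ((∫ t, G t ∂AddCircle.haarAddCircle : ℝ) : ℂ) := integral_ofReal
  simp only [Function.comp_apply, ContinuousMap.coe_mk]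
  rw [e1, EE_ofReal']
  have e2 : EE (PP n α h) (fun x => (Y n x : ℂ) * ((G (psi n x) : ℝ) : ℂ))
      = ((EE (PP n α h) (fun x => Y n x * G (psi n x)) : ℝ) : ℂ) := by
    rw [← EE_ofReal']; exact EE_congr fun x => by push_cast; rfl
  rw [e2, ← Complex.ofReal_mul, ← Complex.ofReal_sub, Complex.ofReal_re]

end Circle

/-! ### Comparison of the two Gibbs measures -/

section Weight
variable {α h u s0 : ℝ} {us : ℝ → ℝ} {n : ℕ}

/-- A tent of height one and half-width `1/m` at the origin of `ℝ / ℤ`. -/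
def tent (m : ℝ) (t : AddCircle (1 : ℝ)) : ℝ := max 0 (1 - m * ‖t‖)

lemma tent_nonneg (m : ℝ) (t : AddCircle (1 : ℝ)) : 0 ≤ tent m t := le_max_left _ _

lemma tent_le_one {m : ℝ} (hm : 0 < m) (t : AddCircle (1 : ℝ)) : tent m t ≤ 1 :=
  max_le zero_le_one (by nlinarith [norm_nonneg t])

lemma tent_zero (m : ℝ) : tent m 0 = 1 := by simp [tent]

lemma continuous_tent (m : ℝ) : Continuous (tent m) := by unfold tent; fun_prop

lemma integral_tent_le {m : ℝ} (hm : 0 < m) : ∫ t, tent m t ∂AddCircle.haarAddCircle ≤ 2 / m := by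
  rw [AddCircle.integral_haarAddCircle, inv_one, one_smul]
  have h1 : ∀ t, tent m t ≤ (Metric.closedBall (0 : AddCircle (1 : ℝ)) (1 / m)).indicator (fun _ => (1 : ℝ)) t := by
    intro t
    by_cases ht : t ∈ Metric.closedBall (0 : AddCircle (1 : ℝ)) (1 / m)
    · rw [Set.indicator_of_mem ht]; exact tent_le_one hm t
    · rw [Set.indicator_of_notMem ht]
      rw [mem_closedBall_zero_iff, not_le, div_lt_iff₀ hm] at ht
      exact max_le le_rfl (by linarith)
  have h2 : Integrable (tent m) :=
    (continuous_tent m).integrable_of_hasCompactSupport (HasCompactSupport.of_compactSpace _)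
  have hms : MeasurableSet (Metric.closedBall (0 : AddCircle (1 : ℝ)) (1 / m)) :=
    Metric.isClosed_closedBall.measurableSet
  have h3 : Integrable ((Metric.closedBall (0 : AddCircle (1 : ℝ)) (1 / m)).indicator (fun _ => (1 : ℝ))) :=
    (integrable_const 1).indicator hms
  refine (integral_mono h2 h3 h1).trans ?_
  rw [integral_indicator_const _ hms, smul_eq_mul, mul_one, Measure.real, AddCircle.volume_closedBall,
    ENNReal.toReal_ofReal (le_min zero_le_one (by positivity))]
  refine (min_le_right _ _).trans (le_of_eq (by ring))

/-- The density `e^{-α{T/n}}` of the floored Gibbs measure against the edge-triangle one. -/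
def fwt (n : ℕ) (α : ℝ) (x : Config n) : ℝ := Real.exp (-α * fracTn n x)

lemma fracTn_nonneg (x : Config n) : 0 ≤ fracTn n x := by
  unfold fracTn floorTn
  have := Nat.cast_div_le (α := ℝ) (m := triangleCount n x) (n := n)
  linarith

lemma fracTn_lt_one (hn : 0 < n) (x : Config n) : fracTn n x < 1 := by
  unfold fracTn floorTn
  have hn' : (0 : ℝ) < n := by exact_mod_cast hn
  have h1 : triangleCount n x < (triangleCount n x / n + 1) * n := by
    rw [mul_comm]; exact Nat.lt_mul_div_succ _ hn
  have h2 : (triangleCount n x : ℝ) < ((triangleCount n x / n : ℕ) + 1) * n := by exact_mod_cast h1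
  rw [← div_lt_iff₀ hn'] at h2
  linarith

lemma coe_fracTn (x : Config n) : ((fracTn n x : ℝ) : AddCircle (1 : ℝ)) = psi n x := by
  unfold fracTn floorTn psi Tr
  rw [AddCircle.coe_sub]
  have : (((triangleCount n x / n : ℕ) : ℝ) : AddCircle (1 : ℝ)) = 0 := by
    rw [AddCircle.coe_eq_zero_iff]
    exact ⟨((triangleCount n x / n : ℕ) : ℤ), by
      rw [zsmul_eq_mul, mul_one, Int.cast_natCast]⟩
  rw [this, sub_zero]

lemma fwt_abs (hn : 0 < n) (x : Config n) : |-α * fracTn n x| ≤ |α| := by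
  rw [abs_mul, abs_neg, abs_of_nonneg (fracTn_nonneg x)]
  exact mul_le_of_le_one_right (abs_nonneg _) (fracTn_lt_one hn x).le

lemma fwt_le (hn : 0 < n) (x : Config n) : fwt n α x ≤ Real.exp |α| :=
  Real.exp_le_exp.2 ((le_abs_self _).trans (fwt_abs hn x))

lemma fwt_ge (hn : 0 < n) (x : Config n) : Real.exp (-|α|) ≤ fwt n α x :=
  Real.exp_le_exp.2 ((abs_le.1 (fwt_abs hn x)).1)

lemma fwt_pos (x : Config n) : 0 < fwt n α x := Real.exp_pos _

/-- The density with its jump at `0 ∈ ℝ / ℤ` cut out by a tent. -/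
def cutWt (α m : ℝ) : AddCircle (1 : ℝ) → ℝ :=
  AddCircle.liftIco 1 0 (fun r : ℝ => Real.exp (-α * r) * (1 - tent m (r : AddCircle (1 : ℝ))))

lemma continuous_cutWt (α m : ℝ) : Continuous (cutWt α m) := by
  refine AddCircle.liftIco_continuous ?_ ?_
  · have h1 : ((0 + 1 : ℝ) : AddCircle (1 : ℝ)) = 0 := by rw [zero_add]; exact AddCircle.coe_period 1
    rw [h1, AddCircle.coe_zero, tent_zero]; simp
  · refine Continuous.continuousOn ?_
    have h1 := (continuous_tent m).comp (AddCircle.continuous_mk' (1 : ℝ))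
    refine Continuous.mul (by fun_prop) (continuous_const.sub h1)

lemma cutWt_psi (hn : 0 < n) (m : ℝ) (x : Config n) :
    cutWt α m (psi n x) = fwt n α x - fwt n α x * tent m (psi n x) := by
  have hmem : fracTn n x ∈ Set.Ico (0 : ℝ) (0 + 1) := ⟨fracTn_nonneg x, by
    rw [zero_add]; exact fracTn_lt_one hn x⟩
  rw [← coe_fracTn x, cutWt, AddCircle.liftIco_coe_apply hmem, fwt]
  ring

lemma Tame_abs_EE {K : ℝ} {Y : Config n → ℝ} (hY : Tame n α h K Y) :
    |EE (PP n α h) Y| ≤ Real.sqrt K :=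
  Real.abs_le_sqrt ((EE_sq_le (PP_prob n α h) Y).trans hY.1)

/-- A continuous function of `T / n` modulo one is asymptotically uncorrelated with tame
observables. -/
lemma circle_cov (hG : Good α h u us s0) (hα : -2 < α) {K : ℝ} (hK : 1 ≤ K)
    (h1 : ∀ᶠ n : ℕ in atTop, Tame n α h K (fun _ => 1))
    (Y : ∀ n, Config n → ℝ) (hY : ∀ᶠ n : ℕ in atTop, Tame n α h K (Y n))
    (G : AddCircle (1 : ℝ) → ℝ) (hGc : Continuous G) :
    Tendsto (fun n : ℕ => Cv (PP n α h) (Y n) (fun x => G (psi n x))) atTop (𝓝 0) := by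
  have a1 := circle_tendsto_real hG hα Y hY G hGc
  have a2 := circle_tendsto_real hG hα (fun _ _ => 1) h1 G hGc
  have a3 : Tendsto (fun n : ℕ => (EE (PP n α h) (fun x => 1 * G (psi n x))
      - (∫ t, G t ∂AddCircle.haarAddCircle) * EE (PP n α h) (fun _ => 1)) * EE (PP n α h) (Y n))
      atTop (𝓝 0) := by
    have a4 := (a2.abs).mul_const (Real.sqrt K)
    rw [abs_zero, zero_mul] at a4
    refine squeeze_zero_norm' ?_ a4
    filter_upwards [hY] with n hn
    rw [Real.norm_eq_abs, abs_mul]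
    exact mul_le_mul_of_nonneg_left (Tame_abs_EE hn) (abs_nonneg _)
  have a5 := a1.sub a3
  rw [sub_zero] at a5
  refine a5.congr fun n => ?_
  rw [Cv_eq (PP_prob n α h), EE_const (PP_prob n α h)]
  simp only [one_mul]
  ring

/-- The density `e^{-α{T/n}}` is asymptotically uncorrelated with every tame observable. -/
theorem weight_cov (hG : Good α h u us s0) (hα : -2 < α) {K : ℝ} (hK : 1 ≤ K)
    (h1 : ∀ᶠ n : ℕ in atTop, Tame n α h K (fun _ => 1))
    (Y : ∀ n, Config n → ℝ) (hY : ∀ᶠ n : ℕ in atTop, Tame n α h K (Y n)) :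
    Tendsto (fun n : ℕ => Cv (PP n α h) (Y n) (fwt n α)) atTop (𝓝 0) := by
  rw [Metric.tendsto_nhds]
  intro ε hε
  set B := Real.exp |α| with hB
  have hB0 : 0 < B := Real.exp_pos _
  have hsK : 0 ≤ Real.sqrt K := Real.sqrt_nonneg _
  set η := ε / (2 * B * (Real.sqrt K + 1)) with hη
  have hη0 : 0 < η := by positivity
  set m := 3 / η ^ 2 with hm
  have hm0 : 0 < m := by positivity
  have c1 := circle_cov hG hα hK h1 Y hY _ (continuous_cutWt α m)
  have c2 := circle_tendsto_real hG hα (fun _ _ => 1) h1 _ (continuous_tent m)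
  have d1 := Metric.tendsto_nhds.1 c1 (ε / 2) (by positivity)
  have d2 := Metric.tendsto_nhds.1 c2 (1 / m) (by positivity)
  filter_upwards [d1, d2, hY, eventually_gt_atTop 0] with n e1 e2 hYn hn
  have hμ := PP_prob n α h
  set μ := PP n α h
  rw [Real.dist_eq, sub_zero] at e1 e2 ⊢
  simp only [one_mul, EE_const hμ, mul_one] at e2
  have e3 : EE μ (fun x => tent m (psi n x)) ≤ η ^ 2 := by
    have := integral_tent_le hm0
    have e4 := (abs_lt.1 e2).2
    have e5 : 2 / m + 1 / m = η ^ 2 := by rw [hm]; field_simp; norm_num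
    linarith
  have e6 : Cv μ (Y n) (fwt n α) = Cv μ (Y n) (fun x => cutWt α m (psi n x))
      + Cv μ (Y n) (fun x => fwt n α x * tent m (psi n x)) := by
    rw [Cv_eq hμ, Cv_eq hμ, Cv_eq hμ]
    simp only [cutWt_psi hn, mul_sub]
    rw [EE_sub, EE_sub]; ring
  have e7 : |Cv μ (Y n) (fun x => fwt n α x * tent m (psi n x))| ≤ ε / 2 := by
    refine (Cv_abs_le hμ _ _).trans ?_
    have v1 : Vr μ (Y n) ≤ K := by
      rw [Vr_eq hμ]; have := hYn.1; nlinarith [sq_nonneg (EE μ (Y n))]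
    have v2 : Vr μ (fun x => fwt n α x * tent m (psi n x)) ≤ (B * η) ^ 2 := by
      rw [Vr_eq hμ]
      have w1 : EE μ (fun x => (fwt n α x * tent m (psi n x)) ^ 2) ≤ B ^ 2 * η ^ 2 := by
        calc _ ≤ EE μ (fun x => B ^ 2 * tent m (psi n x)) := EE_mono hμ fun x => by
              rw [mul_pow]
              have t0 := tent_nonneg m (psi n x)
              have t1 := tent_le_one hm0 (psi n x)
              have t2 := pow_le_pow_left₀ (fwt_pos (α := α) x).le (fwt_le hn x) 2
              exact mul_le_mul t2 (by nlinarith) (sq_nonneg _) (sq_nonneg _)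
          _ = B ^ 2 * EE μ (fun x => tent m (psi n x)) := by rw [EE_mul_left]
          _ ≤ _ := mul_le_mul_of_nonneg_left e3 (sq_nonneg _)
      nlinarith [sq_nonneg (EE μ (fun x => fwt n α x * tent m (psi n x)))]
    have v3 := Real.sqrt_le_sqrt v1
    have v4 := Real.sqrt_le_sqrt v2
    rw [Real.sqrt_sq (by positivity)] at v4
    calc _ ≤ (Real.sqrt K + 1) * (B * η) :=
          mul_le_mul (by linarith) v4 (Real.sqrt_nonneg _) (by linarith)
      _ = ε / 2 := by rw [hη]; field_simp
  rw [e6]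
  have := abs_add_le (Cv μ (Y n) (fun x => cutWt α m (psi n x)))
    (Cv μ (Y n) (fun x => fwt n α x * tent m (psi n x)))
  linarith

/-- The Gibbs measure of the floored Hamiltonian. -/
def Phat (n : ℕ) (α h : ℝ) : Config n → ℝ := gib (hamHat n α h)

lemma Phat_prob (n : ℕ) (α h : ℝ) : IsProb (Phat n α h) := gib_prob _

lemma expHat_eq (f : Config n → ℝ) : expHat n α h f = EE (Phat n α h) f := by
  simp only [expHat, EE, Phat, gib, Zhat, Finset.sum_div, smul_eq_mul]
  exact Finset.sum_congr rfl fun x _ => by ring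

lemma varHat_eq (f : Config n → ℝ) : varHat n α h f = Vr (Phat n α h) f := by
  rw [varHat, expHat_eq, expHat_eq]; rfl

lemma EE_Phat (f : Config n → ℝ) :
    EE (Phat n α h) f = EE (PP n α h) (fun x => f x * fwt n α x) / EE (PP n α h) (fwt n α) := by
  have h1 : ∀ x : Config n, Real.exp (hamHat n α h x) = Real.exp (HH α (fun _ => h) x) * fwt n α x := by
    intro x
    rw [HH_const, fwt, ← Real.exp_add]
    congr 1
    unfold hamHat ham fracTn
    ring
  have hZ : 0 < ∑ x : Config n, Real.exp (HH α (fun _ => h) x) :=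
    Finset.sum_pos (fun y _ => Real.exp_pos _) Finset.univ_nonempty
  have h2 : 0 < ∑ x : Config n, Real.exp (HH α (fun _ => h) x) * fwt n α x :=
    Finset.sum_pos (fun y _ => mul_pos (Real.exp_pos _) (fwt_pos y)) Finset.univ_nonempty
  have e1 : ∀ g : Config n → ℝ, EE (PP n α h) g
      = (∑ x : Config n, Real.exp (HH α (fun _ => h) x) * g x) / ∑ x : Config n, Real.exp (HH α (fun _ => h) x) := by
    intro g
    simp only [EE, PP, gib, smul_eq_mul, Finset.sum_div]
    exact Finset.sum_congr rfl fun x _ => by ring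
  rw [e1, e1, div_div_div_cancel_right₀ hZ.ne']
  simp only [EE, Phat, gib, h1, smul_eq_mul, Finset.sum_div]
  exact Finset.sum_congr rfl fun x _ => by ring

/-- Tame observables have asymptotically equal means under the two Gibbs measures. -/
theorem Phat_sub_PP (hG : Good α h u us s0) (hα : -2 < α) {K : ℝ} (hK : 1 ≤ K)
    (h1 : ∀ᶠ n : ℕ in atTop, Tame n α h K (fun _ => 1))
    (Y : ∀ n, Config n → ℝ) (hY : ∀ᶠ n : ℕ in atTop, Tame n α h K (Y n)) :
    Tendsto (fun n : ℕ => EE (Phat n α h) (Y n) - EE (PP n α h) (Y n)) atTop (𝓝 0) := by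
  have c1 := ((weight_cov hG hα hK h1 Y hY).abs).const_mul (Real.exp |α|)
  rw [abs_zero, mul_zero] at c1
  refine squeeze_zero_norm' ?_ c1
  filter_upwards [eventually_gt_atTop 0] with n hn
  have hμ := PP_prob n α h
  have hw : Real.exp (-|α|) ≤ EE (PP n α h) (fwt n α) := EE_ge_const hμ fun x => fwt_ge hn x
  have hw0 : 0 < EE (PP n α h) (fwt n α) := (Real.exp_pos _).trans_le hw
  have e1 : EE (Phat n α h) (Y n) - EE (PP n α h) (Y n)
      = Cv (PP n α h) (Y n) (fwt n α) / EE (PP n α h) (fwt n α) := by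
    rw [EE_Phat, Cv_eq hμ]; field_simp
  rw [e1, Real.norm_eq_abs, abs_div, abs_of_pos hw0, div_le_iff₀ hw0]
  have e2 : 1 ≤ Real.exp |α| * EE (PP n α h) (fwt n α) := by
    calc (1 : ℝ) = Real.exp |α| * Real.exp (-|α|) := by rw [← Real.exp_add]; simp
      _ ≤ _ := mul_le_mul_of_nonneg_left hw (Real.exp_pos _).le
  nlinarith [abs_nonneg (Cv (PP n α h) (Y n) (fwt n α))]

end Weight

/-! ### The limiting variance -/

section Final
variable {α h u s0 : ℝ} {us : ℝ → ℝ} {n : ℕ}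

lemma Vr_add_const {Ω : Type*} [Fintype Ω] {μ : Ω → ℝ} (hμ : IsProb μ) (f : Ω → ℝ) (c : ℝ) :
    Vr μ (fun x => f x + c) = Vr μ f := by
  unfold Vr
  refine EE_congr fun x => ?_
  rw [EE_add, EE_const hμ]; ring

lemma Vr_Phat_Xn (hG : Good α h u us s0) (hα : -2 < α) :
    Tendsto (fun n : ℕ => Vr (Phat n α h) (Xn n α h)) atTop
      (𝓝 (u ^ 4 * (u * (1 - u) / 2 / (1 - 2 * α * u * (u * (1 - u)))))) := by
  obtain ⟨K, hK, hT⟩ := exists_Tame hG hα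
  have h1 := hT.mono fun n hn => hn.1
  have a1 := Phat_sub_PP hG hα hK h1 (fun n => Xn n α h) (hT.mono fun n hn => hn.2.1)
  have a2 := Phat_sub_PP hG hα hK h1 (fun n x => Xn n α h x ^ 2) (hT.mono fun n hn => hn.2.2)
  simp only [EE_Xn, EE_Xn_sq, sub_zero] at a1 a2
  have a3 := (a2.add (tendsto_VrT hG hα)).sub (a1.pow 2)
  simp only [sub_add_cancel, zero_add, ne_eq, OfNat.ofNat_ne_zero, not_false_eq_true, zero_pow,
    sub_zero] at a3
  exact a3.congr fun n => (Vr_eq (Phat_prob n α h) _).symm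

/-- `⌊T/n⌋ / n` differs from `T / n²` by at most `1 / n`, so the two have the same limiting
variance. -/
theorem tendsto_varHat (hG : Good α h u us s0) (hα : -2 < α) :
    Tendsto (fun n : ℕ => 6 / (n : ℝ) ^ 2 * varHat n α h (floorTn n)) atTop
      (𝓝 (6 * (u ^ 4 * (u * (1 - u) / 2 / (1 - 2 * α * u * (u * (1 - u))))))) := by
  have a1 := Vr_Phat_Xn hG hα
  set L := u ^ 4 * (u * (1 - u) / 2 / (1 - 2 * α * u * (u * (1 - u))))
  set R : ∀ n : ℕ, Config n → ℝ := fun n x => -(1 / n) * fracTn n x with hR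
  have hV : ∀ᶠ n : ℕ in atTop, Vr (Phat n α h) (R n) ≤ 1 / (n : ℝ) ^ 2 := by
    filter_upwards [eventually_gt_atTop 0] with n hn
    have hμ := Phat_prob n α h
    rw [hR, Vr_mul_left]
    have : Vr (Phat n α h) (fracTn n) ≤ 1 := by
      rw [Vr_eq hμ]
      have b1 : EE (Phat n α h) (fun x => fracTn n x ^ 2) ≤ 1 := EE_le_const hμ fun x => by
        have := fracTn_nonneg x
        have := fracTn_lt_one hn x
        nlinarith
      nlinarith [sq_nonneg (EE (Phat n α h) (fracTn n))]
    calc (-(1 / (n : ℝ))) ^ 2 * Vr (Phat n α h) (fracTn n) ≤ (-(1 / (n : ℝ))) ^ 2 * 1 :=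
          mul_le_mul_of_nonneg_left this (sq_nonneg _)
      _ = _ := by ring
  have hVR : Tendsto (fun n : ℕ => Vr (Phat n α h) (R n)) atTop (𝓝 0) :=
    squeeze_zero' (Eventually.of_forall fun n => Vr_nonneg (Phat_prob n α h) _) hV
      (tendsto_c_div_pow 1 two_ne_zero)
  have hCv : Tendsto (fun n : ℕ => Cv (Phat n α h) (Xn n α h) (R n)) atTop (𝓝 0) := by
    have b1 := a1.sqrt.mul hVR.sqrt
    rw [Real.sqrt_zero, mul_zero] at b1
    exact squeeze_zero_norm (fun n => Cv_abs_le (Phat_prob n α h) _ _) b1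
  have a2 := (((a1.add (hCv.const_mul 2)).add hVR)).const_mul 6
  rw [mul_zero, add_zero, add_zero] at a2
  refine a2.congr' ?_
  filter_upwards [eventually_gt_atTop 0] with n hn
  have hn0 : (n : ℝ) ≠ 0 := by positivity
  have hμ := Phat_prob n α h
  rw [← Vr_add, varHat_eq]
  have e1 : Vr (Phat n α h) (floorTn n) = (n : ℝ) ^ 2 * Vr (Phat n α h) (fun x => Xn n α h x + R n x) := by
    rw [← Vr_mul_left, ← Vr_add_const hμ (fun x => (n : ℝ) * (Xn n α h x + R n x)) (EE (PP n α h) Tr / n)]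
    congr 1
    funext x
    simp only [hR, Xn, fracTn, Tr]
    field_simp
    ring
  rw [e1]
  field_simp

end Final

/-! ### Consequences of the maximizer being differentiable -/

section Maximizer

/-- The first-order condition for an interior maximizer is the mean-field equation. -/
lemma fix_of_max {a b u : ℝ} (hu : u ∈ Set.Ioo (0 : ℝ) 1)
    (hmax : ∀ p ∈ Set.Icc (0 : ℝ) 1, phiET a b p ≤ phiET a b u) :
    Real.sigmoid (b + a * u ^ 2) = u := by
  obtain ⟨h0, h1⟩ := hu
  have h1' : 0 < 1 - u := by linarith
  have hloc : IsLocalMax (phiET a b) u := by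
    filter_upwards [Ioo_mem_nhds h0 h1] with p hp
    exact hmax p ⟨hp.1.le, hp.2.le⟩
  have d1 : HasDerivAt (fun p : ℝ => p * Real.log p) (Real.log u + 1) u :=
    Real.hasDerivAt_mul_log h0.ne'
  have d2 : HasDerivAt (fun p : ℝ => (1 - p) * Real.log (1 - p)) ((Real.log (1 - u) + 1) * (-1)) u := by
    have e1 : HasDerivAt (fun p : ℝ => 1 - p) (-1) u := by
      simpa using (hasDerivAt_id u).const_sub 1
    exact HasDerivAt.comp u (h₂ := fun q : ℝ => q * Real.log q) (Real.hasDerivAt_mul_log h1'.ne') e1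
  have d3 : HasDerivAt (phiET a b) (a / 6 * (3 * u ^ 2) + b / 2
      - 1 / 2 * (Real.log u + 1 + (Real.log (1 - u) + 1) * (-1))) u := by
    have e1 : HasDerivAt (fun p : ℝ => p ^ 3) (3 * u ^ 2) u := by
      simpa using hasDerivAt_pow 3 u
    have e2 := ((e1.const_mul (a / 6)).add ((hasDerivAt_id u).const_mul (b / 2))).sub
      ((d1.add d2).const_mul (1 / 2))
    rw [mul_one] at e2
    exact e2
  have h3 := hloc.hasDerivAt_eq_zero d3
  have h4 : b + a * u ^ 2 = Real.log u - Real.log (1 - u) := by linarith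
  rw [h4, Real.sigmoid_def, neg_sub, Real.exp_sub, Real.exp_log h0, Real.exp_log h1']
  field_simp
  ring

/-- Implicit differentiation of the mean-field equation along a curve of parameters. -/
lemma implicit_deriv {w a b : ℝ → ℝ} {t w' a' b' : ℝ} (hw : HasDerivAt w w' t)
    (ha : HasDerivAt a a' t) (hb : HasDerivAt b b' t)
    (hfix : ∀ᶠ s in 𝓝 t, Real.sigmoid (b s + a s * w s ^ 2) = w s) :
    w' * (1 - 2 * a t * w t * (w t * (1 - w t))) = w t * (1 - w t) * (b' + a' * w t ^ 2) := by
  have d1 : HasDerivAt (fun s => b s + a s * w s ^ 2) (b' + (a' * w t ^ 2 + a t * (2 * w t * w'))) t := by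
    have e1 : HasDerivAt (fun s => w s ^ 2) (2 * w t * w') t := by
      have := hw.pow 2
      simp only [Nat.cast_ofNat, Nat.add_one_sub_one, pow_one] at this
      exact this
    exact hb.add (ha.mul e1)
  have d2 := HasDerivAt.comp t (Real.hasDerivAt_sigmoid (b t + a t * w t ^ 2)) d1
  have d3 : HasDerivAt w _ t := d2.congr_of_eventuallyEq (hfix.mono fun s hs => hs.symm)
  have h1 := hw.unique d3
  rw [hfix.self_of_nhds] at h1
  linear_combination h1

variable {α h : ℝ} {U : Set (ℝ × ℝ)} {ustar : ℝ × ℝ → ℝ}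

/-- The hypotheses on the maximizer supply the mean-field data, including nondegeneracy: the
derivative of `u*` in `h` is nonnegative because maximizers increase with `h`, and its product
with `1 - 2αu²(1-u)` equals `u(1-u) > 0`. -/
theorem exists_Good (hUopen : IsOpen U) (hmemU : (α, h) ∈ U) (hC1 : ContDiffOn ℝ 1 ustar U)
    (hrange : ∀ p ∈ U, ustar p ∈ Set.Ioo (0 : ℝ) 1)
    (hmax : ∀ p ∈ U, ∀ u ∈ Set.Icc (0 : ℝ) 1, phiET p.1 p.2 u ≤ phiET p.1 p.2 (ustar p)) :
    ∃ s0, Good α h (ustar (α, h)) (fun s => ustar (α, h + s)) s0 := by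
  have hfix : ∀ p ∈ U, Real.sigmoid (p.2 + p.1 * ustar p ^ 2) = ustar p := fun p hp =>
    fix_of_max (hrange p hp) (hmax p hp)
  have hdiff : DifferentiableAt ℝ ustar (α, h) :=
    (hC1.contDiffAt (hUopen.mem_nhds hmemU)).differentiableAt one_ne_zero
  have hcurve : HasDerivAt (fun s : ℝ => ((α, h + s) : ℝ × ℝ)) (0, 1) 0 :=
    (hasDerivAt_const 0 α).prodMk ((hasDerivAt_id (0 : ℝ)).const_add h)
  have hev : ∀ᶠ s : ℝ in 𝓝 0, ((α, h + s) : ℝ × ℝ) ∈ U := by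
    apply hcurve.continuousAt
    simpa using hUopen.mem_nhds hmemU
  obtain ⟨r, hr, hball⟩ := Metric.eventually_nhds_iff.1 hev
  have hmem : ∀ s, |s| ≤ r / 2 → ((α, h + s) : ℝ × ℝ) ∈ U := fun s hs => by
    apply hball; rw [Real.dist_eq, sub_zero]; linarith
  have hu := hrange _ hmemU
  have hdw : DifferentiableAt ℝ (fun s : ℝ => ustar (α, h + s)) 0 := by
    have h1 : DifferentiableAt ℝ ustar ((fun s : ℝ => ((α, h + s) : ℝ × ℝ)) 0) := by simpa using hdiff
    exact h1.comp (0 : ℝ) hcurve.differentiableAt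
  set w : ℝ → ℝ := fun s => ustar (α, h + s) with hw
  have hw0 : w 0 = ustar (α, h) := by simp [hw]
  have himp := implicit_deriv hdw.hasDerivAt (hasDerivAt_const 0 α)
    ((hasDerivAt_id (0 : ℝ)).const_add h) (hev.mono fun s hs => hfix _ hs)
  rw [hw0, zero_mul, add_zero, mul_one] at himp
  set u := ustar (α, h) with hud
  have hmono : ∀ᶠ s in 𝓝 (0 : ℝ), 0 ≤ slope w 0 s := by
    filter_upwards [hev] with s hs
    have m1 := hmax _ hmemU (w s) ⟨(hrange _ hs).1.le, (hrange _ hs).2.le⟩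
    have m2 := hmax _ hs u ⟨hu.1.le, hu.2.le⟩
    have m3 : 0 ≤ s * (w s - u) := by
      simp only [phiET] at m1 m2
      simp only [hw]
      nlinarith
    rw [slope_def_field, hw0, sub_zero]
    rcases eq_or_ne s 0 with rfl | h0
    · simp
    · have : (w s - u) / s = s * (w s - u) / s ^ 2 := by field_simp
      rw [this]; positivity
  have hd0 : 0 ≤ deriv w 0 :=
    ge_of_tendsto (hasDerivAt_iff_tendsto_slope.1 hdw.hasDerivAt) (hmono.filter_mono nhdsWithin_le_nhds)
  have hv : 0 < u * (1 - u) := mul_pos hu.1 (by linarith [hu.2])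
  have hnd : 0 < 1 - 2 * α * u * (u * (1 - u)) := by
    by_contra hc
    push Not at hc
    have := mul_nonpos_of_nonneg_of_nonpos hd0 hc
    linarith
  exact ⟨r / 2, hu.1, hu.2, hmax _ hmemU, hfix _ hmemU, hnd, by positivity, hw0,
    hdw.continuousAt, fun s hs => ⟨(hrange _ (hmem s hs)).1.le, (hrange _ (hmem s hs)).2.le⟩,
    fun s hs => hmax _ (hmem s hs)⟩

/-- `∂_α u* = u³(1-u) / (1 - 2αu²(1-u))`, in product form. -/
lemma deriv_ustar (hUopen : IsOpen U) (hmemU : (α, h) ∈ U) (hC1 : ContDiffOn ℝ 1 ustar U)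
    (hrange : ∀ p ∈ U, ustar p ∈ Set.Ioo (0 : ℝ) 1)
    (hmax : ∀ p ∈ U, ∀ u ∈ Set.Icc (0 : ℝ) 1, phiET p.1 p.2 u ≤ phiET p.1 p.2 (ustar p)) :
    deriv (fun a => ustar (a, h)) α
        * (1 - 2 * α * ustar (α, h) * (ustar (α, h) * (1 - ustar (α, h))))
      = ustar (α, h) * (1 - ustar (α, h)) * ustar (α, h) ^ 2 := by
  have hdiff : DifferentiableAt ℝ ustar (α, h) :=
    (hC1.contDiffAt (hUopen.mem_nhds hmemU)).differentiableAt one_ne_zero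
  have hcurve : HasDerivAt (fun a : ℝ => ((a, h) : ℝ × ℝ)) (1, 0) α :=
    (hasDerivAt_id α).prodMk (hasDerivAt_const α h)
  have hev : ∀ᶠ a : ℝ in 𝓝 α, ((a, h) : ℝ × ℝ) ∈ U :=
    hcurve.continuousAt (hUopen.mem_nhds hmemU)
  have hdw : DifferentiableAt ℝ (fun a : ℝ => ustar (a, h)) α :=
    DifferentiableAt.comp (g := ustar) (f := fun a : ℝ => ((a, h) : ℝ × ℝ)) α hdiff hcurve.differentiableAt
  have himp := implicit_deriv hdw.hasDerivAt (hasDerivAt_id α) (hasDerivAt_const α h)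
    (hev.mono fun a ha => fix_of_max (hrange _ ha) (hmax _ ha))
  simpa using himp

end Maximizer

end ETri

theorem var_floor_triangle_limit
    (α h : ℝ) (hα : α > -2)
    (U : Set (ℝ × ℝ)) (hUopen : IsOpen U) (hmemU : (α, h) ∈ U)
    (ustar : ℝ × ℝ → ℝ) (hC1 : ContDiffOn ℝ 1 ustar U)
    (hrange : ∀ p ∈ U, ustar p ∈ Set.Ioo (0 : ℝ) 1)
    (hmax : ∀ p ∈ U, ∀ u ∈ Set.Icc (0 : ℝ) 1, phiET p.1 p.2 u ≤ phiET p.1 p.2 (ustar p))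
    (huniq : ∀ p ∈ U, ∀ u ∈ Set.Icc (0 : ℝ) 1,
      (∀ w ∈ Set.Icc (0 : ℝ) 1, phiET p.1 p.2 w ≤ phiET p.1 p.2 u) → u = ustar p)
    (hanal : AnalyticOnNhd ℝ (fun p : ℝ × ℝ => freeEnergy p.1 p.2) U) :
    Tendsto (fun n : ℕ => 6 / (n : ℝ) ^ 2 * varHat n α h (floorTn n)) atTop
      (𝓝 (3 * ustar (α, h) ^ 2 * deriv (fun a => ustar (a, h)) α)) := by
  obtain ⟨s0, hG⟩ := ETri.exists_Good hUopen hmemU hC1 hrange hmax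
  have hd := ETri.deriv_ustar hUopen hmemU hC1 hrange hmax
  have hnd := hG.nondeg
  convert ETri.tendsto_varHat hG hα using 2
  rw [← eq_div_iff hnd.ne'] at hd
  rw [hd]
  ring
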